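/- Let p ≥ 3 be a prime, let d be an integer with 2 ≤ d ≤ p−1, and let K be a number field containing a primitive p-th root of unity. Then there exist a constant c = c(K,p) > 0 and X₀ > 0 such that for every X ≥ X₀, the number of intermediate fields L of a fixed algebraic closure K̄ over K satisfying [L:K] = d, rank_p Cl(L) ≥ 3 + rank_p Cl(K), and D(L/K) ≤ X is at least c · X^{(p−1)/(2p(d−1))} / log X. -/

import Mathlib

/-!
The fields counted are `L = K(η)`, where `η` is a root of the monic polynomial
`g(T) = T (T + ε) ^ (d - 1) - s ^ p (b ^ p + τ ^ p T)` with `b ^ p = 1 + τ ^ p ε` and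
`τ = (1 - ζ) ^ 2 u`. The element `x = b ^ p + τ ^ p η` satisfies
`(x - b ^ p) (x - 1) ^ (d - 1) = (τ ^ d s) ^ p x`.

Three Kummer generators over `L` are used: `U`, a `p`-th root of `η`; `W`, a `p`-th root of
`η + ε`; and `Δ h`, where `Δ ^ p = twist(b, τ U) · twist(1, τ W) ^ (d - 1)` with
`twist(B, V) = ∏ (B + ζ ^ i V) ^ i`, and where `h` is supplied by Hilbert 90 (`twist_descends`).
The extension `M = L(U, W, Δ h)` of `L` is unramified everywhere (`tame_inertia` away from `p`,
`fixUW_wild` and `fixΔ_wild` above `p`), the three radicals are independent (`ind2`, by an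
Artin–Schreier argument above `p`, and `ind01`, by residue symbols), and all primes above suitable
representatives of the ideal classes of `K` split completely in `M / L` (`core_cl`).

Class field theory is replaced by `norm_classes_proper`: in an unramified cyclic extension of
degree `p` of a totally complex field the norm on ideal classes is not surjective. This follows
from the Herbrand quotient of the units (`herbrand`, `norm_not_surj`). It yields `rank_of_kummer`:
in the class group of `L`, the subgroup generated by the `p`-th powers and the image of the class
group of `K` has index at least `p ^ 3`. Otherwise two primes would generate the quotient, and a
nontrivial combination `z` of the three radicals would be fixed by both Frobenius elements, so that
the proper subgroup containing the classes of norms from `L(z)` would be everything. As extension of ideals from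
`K` to `L` followed by the norm is the `d`-th power map and `p ∤ d`, the bound on the `p`-rank
follows (`rank_lemma`, `rank_of_good`).

Good parameters exist, and `s` may vary in a whole residue class (`exists_params`). For the count,
`s` runs through about `A ^ (p - 1)` elements all of whose conjugates have size comparable to `A`
(`exists_box`); the discriminant quantity is then at most `C A ^ (p d)` (`relDq_param`). The map
from `s` to the field `L` has bounded fibres (`fibre_bound`): for two parameters with the same field
and the same archimedean type, `b ^ p x_s / x_{s'}` is integral with bounded conjugates. Since
`p d ≤ 2 p (d - 1)`, this gives the exponent (`final_calc`); the factor `1 / log X` is not needed.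
-/

open NumberField

/-- The `n`-rank of a commutative group `G`: the largest `r` such that `G` contains a
subgroup isomorphic to `(ℤ/nℤ)^r`, i.e. such that there is an injective homomorphism
`(ℤ/nℤ)^r → G`. -/
noncomputable def nRank (n : ℕ) (G : Type*) [CommGroup G] : ℕ :=
  sSup {r : ℕ | ∃ φ : (Fin r → ZMod n) →+ Additive G, Function.Injective φ}

/-- `relDq K L = |N_{K/ℚ} Δ(L/K)|^{1/[K:ℚ]}`, where `Δ(L/K)` is the relative discriminant
ideal of `O_L` over `O_K`, i.e. the ideal norm (from `O_L` to `O_K`) of the different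
ideal of `O_L/O_K`, and `|N_{K/ℚ}·|` is the absolute norm of an ideal of `O_K`. -/
noncomputable def relDq (K : Type*) [Field K] [NumberField K]
    (L : IntermediateField K (AlgebraicClosure K)) : ℝ := by
  classical
  exact if h : FiniteDimensional ℚ L then
    letI : FiniteDimensional ℚ L := h
    letI : NumberField L := { to_charZero := inferInstance, to_finiteDimensional := h }
    (Ideal.absNorm (Ideal.spanNorm (𝓞 K) (differentIdeal (𝓞 K) (𝓞 L))) : ℝ) ^
      ((Module.finrank ℚ K : ℝ)⁻¹)
  else 0

/-! ### Herbrand quotients -/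

namespace ClRank
open AddSubgroup

section Herb
variable {C C' : Type*} [AddCommGroup C'] [AddCommGroup C]

/-- The Herbrand-type quotient `|coker φ| / |ker φ|` of an endomorphism of an abelian group. -/
noncomputable def hq (φ : C →+ C) : ℚ := (φ.range.index : ℚ) / Nat.card φ.ker

/-- Multiplicativity of `hq` under composition. -/
lemma hq_comp (φ ψ : C →+ C) (h1 : φ.range.index ≠ 0) (h2 : ψ.range.index ≠ 0)
    (h3 : Finite φ.ker) (h4 : Finite ψ.ker) :
    (φ.comp ψ).range.index ≠ 0 ∧ Finite (φ.comp ψ).ker ∧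
      hq (φ.comp ψ) = hq φ * hq ψ := by
  have e1 : (φ.comp ψ).range.index = (ψ.range ⊔ φ.ker).index * φ.range.index := by
    rw [← AddSubgroup.index_map, AddMonoidHom.range_comp]
  have e2 : ψ.range.relIndex φ.ker * (ψ.range ⊔ φ.ker).index = ψ.range.index := by
    rw [← AddSubgroup.relIndex_sup_left (K := ψ.range)]
    exact AddSubgroup.relIndex_mul_index le_sup_left
  have e3 : Nat.card (φ.comp ψ).ker = Nat.card ψ.ker * Nat.card (φ.ker ⊓ ψ.range : AddSubgroup C) := by
    have a1 : (φ.comp ψ).ker = φ.ker.comap ψ := rfl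
    have a2 : ψ.ker ≤ φ.ker.comap ψ := fun x hx => by
      rw [AddSubgroup.mem_comap, (AddMonoidHom.mem_ker).1 hx]; exact zero_mem _
    have a3 := AddSubgroup.relIndex_mul_relIndex (⊥ : AddSubgroup C) ψ.ker (φ.ker.comap ψ) bot_le a2
    rw [AddSubgroup.relIndex_bot_left, AddSubgroup.relIndex_bot_left, AddSubgroup.relIndex_ker,
      AddSubgroup.map_comap_eq, inf_comm] at a3
    rw [a1, ← a3]
  have e4 : Nat.card (φ.ker ⊓ ψ.range : AddSubgroup C) * ψ.range.relIndex φ.ker = Nat.card φ.ker := by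
    have := AddSubgroup.relIndex_mul_relIndex (⊥ : AddSubgroup C) (φ.ker ⊓ ψ.range) φ.ker bot_le inf_le_left
    rwa [AddSubgroup.relIndex_bot_left, AddSubgroup.relIndex_bot_left, inf_comm,
      AddSubgroup.inf_relIndex_right, inf_comm] at this
  have k1 : Nat.card φ.ker ≠ 0 := Nat.card_pos.ne'
  have k2 : Nat.card ψ.ker ≠ 0 := Nat.card_pos.ne'
  have k3 : Nat.card (φ.ker ⊓ ψ.range : AddSubgroup C) ≠ 0 := fun h => k1 (by rw [← e4, h, zero_mul])
  have k4 : ψ.range.relIndex φ.ker ≠ 0 := fun h => k1 (by rw [← e4, h, mul_zero])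
  have k5 : (ψ.range ⊔ φ.ker).index ≠ 0 := fun h => h2 (by rw [← e2, h, mul_zero])
  refine ⟨by rw [e1]; exact mul_ne_zero k5 h1, Nat.finite_of_card_ne_zero (by rw [e3]; exact mul_ne_zero k2 k3), ?_⟩
  unfold hq
  rw [e1, e3, ← e2, ← e4]
  push_cast
  field_simp

lemma hq_finite [Finite C] (φ : C →+ C) : φ.range.index = Nat.card φ.ker := by
  have h1 := φ.range.card_mul_index
  have h2 := φ.ker.card_mul_index
  rw [AddSubgroup.index_ker] at h2
  have : 0 < Nat.card φ.range := Nat.card_pos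
  nlinarith

lemma int_rank_nullity [Module.Finite ℤ C] (φ : C →+ C') :
    Module.finrank ℤ φ.range + Module.finrank ℤ φ.ker = Module.finrank ℤ C := by
  have := Submodule.finrank_quotient_add_finrank (R := ℤ) (LinearMap.ker φ.toIntLinearMap)
  rw [← this, φ.toIntLinearMap.quotKerEquivRange.finrank_eq]
  rfl

lemma finrank_of_finite [Finite C] : Module.finrank ℤ C = 0 := by
  rw [Module.finrank_eq_zero_iff_isTorsion]
  intro x
  have := isOfFinAddOrder_of_finite x
  exact ⟨⟨addOrderOf x, mem_nonZeroDivisors_of_ne_zero (by exact_mod_cast this.addOrderOf_pos.ne')⟩, by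
        simp [Submonoid.smul_def]⟩

lemma nsmul_equiv (p : ℕ) (g : C ≃+ C') :
      (nsmulAddMonoidHom (α := C) p).range.index = (nsmulAddMonoidHom (α := C') p).range.index ∧
      Nat.card (nsmulAddMonoidHom (α := C) p).ker = Nat.card (nsmulAddMonoidHom (α := C') p).ker := by
  constructor
  · rw [← AddSubgroup.index_map_equiv _ g]
    congr 1
    ext x
    simp only [AddSubgroup.mem_map, AddMonoidHom.mem_range]
    constructor
    · rintro ⟨_, ⟨y, rfl⟩, rfl⟩
      exact ⟨g y, by simp⟩
    · rintro ⟨y, rfl⟩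
      exact ⟨_, ⟨g.symm y, rfl⟩, by simp⟩
  · refine Nat.card_congr (g.toEquiv.subtypeEquiv fun a => ?_)
    simp only [AddMonoidHom.mem_ker, nsmulAddMonoidHom_apply, AddEquiv.toEquiv_eq_coe, EquivLike.coe_coe]
    rw [← map_nsmul, map_eq_zero_iff g g.injective]

lemma fg_index (p : ℕ) (hp : 0 < p) [Module.Finite ℤ C] :
    (nsmulAddMonoidHom (α := C) p).range.index =
      p ^ Module.finrank ℤ C * Nat.card (nsmulAddMonoidHom (α := C) p).ker ∧
    Finite (nsmulAddMonoidHom (α := C) p).ker := by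
  have : AddGroup.FG C := by
    rw [← Module.Finite.iff_addGroup_fg]; infer_instance
  obtain ⟨n, ι, _, q, hq, e, ⟨f⟩⟩ := AddCommGroup.equiv_free_prod_directSum_zmod C
  classical
  have : ∀ i, NeZero (q i ^ e i) := fun i => ⟨pow_ne_zero _ (hq i).ne_zero⟩
  have hfin : Finite (DirectSum ι fun i => ZMod (q i ^ e i)) :=
    Finite.of_equiv _ (DirectSum.addEquivProd (fun i => ZMod (q i ^ e i))).symm.toEquiv
  set T := DirectSum ι fun i => ZMod (q i ^ e i)
  let F := Fin n → ℤ
  have f' : C ≃+ F × T := f.trans ((Finsupp.linearEquivFunOnFinite ℤ ℤ (Fin n)).toAddEquiv.prodCongr (AddEquiv.refl T))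
  have hr : Module.finrank ℤ C = n := by
    rw [f'.toIntLinearEquiv.finrank_eq, ← int_rank_nullity (AddMonoidHom.fst F T)]
    have : Finite (AddMonoidHom.fst F T).ker := by
      refine Finite.of_injective (fun x => x.1.2) fun x y h => ?_
      have hx := x.2; have hy := y.2
      rw [AddMonoidHom.mem_ker] at hx hy
      exact Subtype.ext (Prod.ext (hx.trans hy.symm) h)
    rw [finrank_of_finite (C := (AddMonoidHom.fst F T).ker),
      (AddMonoidHom.range_eq_top (f := AddMonoidHom.fst F T)).2 Prod.fst_surjective]
    have : Module.finrank ℤ (⊤ : AddSubgroup F) = Module.finrank ℤ F := finrank_top ℤ F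
    rw [this]; simp [F]
  obtain ⟨h1, h2⟩ := nsmul_equiv p f'
  have hF : (nsmulAddMonoidHom (α := F) p).range.index = p ^ n := by
    have : (nsmulAddMonoidHom (α := F) p).range =
        AddSubgroup.pi Set.univ (fun _ : Fin n => AddSubgroup.zmultiples (p : ℤ)) := by
      ext x
      constructor
      · rintro ⟨y, rfl⟩ i _
        exact Int.mem_zmultiples_iff.2 ⟨y i, (nsmul_eq_mul p (y i))⟩
      · intro h
        have h' : ∀ i, ∃ y, x i = p * y := fun i => Int.mem_zmultiples_iff.1 (h i trivial)
        choose y hy using h'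
        exact ⟨y, funext fun i => (nsmul_eq_mul p (y i)).trans (hy i).symm⟩
    rw [this, AddSubgroup.index_pi]
    simp
  have hR : (nsmulAddMonoidHom (α := F × T) p).range =
      (nsmulAddMonoidHom (α := F) p).range.prod (nsmulAddMonoidHom (α := T) p).range := by
    ext ⟨x, y⟩
    simp only [AddMonoidHom.mem_range, AddSubgroup.mem_prod]
    constructor
    · rintro ⟨⟨a, b⟩, h⟩
      exact ⟨⟨a, congrArg Prod.fst h⟩, ⟨b, congrArg Prod.snd h⟩⟩
    · rintro ⟨⟨a, ha⟩, ⟨b, hb⟩⟩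
      exact ⟨(a, b), Prod.ext ha hb⟩
  have hK : Nat.card (nsmulAddMonoidHom (α := F × T) p).ker = Nat.card (nsmulAddMonoidHom (α := T) p).ker := by
    refine Nat.card_congr ⟨fun x => ⟨x.1.2, congrArg Prod.snd x.2⟩,
      fun y => ⟨(0, y.1), Prod.ext (smul_zero p) y.2⟩, fun x => ?_, fun y => rfl⟩
    refine Subtype.ext (Prod.ext ?_ rfl)
    have : p • x.1.1 = 0 := congrArg Prod.fst x.2
    exact ((smul_eq_zero.1 this).resolve_left hp.ne').symm
  have hE : (nsmulAddMonoidHom (α := C) p).range.index =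
      p ^ Module.finrank ℤ C * Nat.card (nsmulAddMonoidHom (α := C) p).ker := by
    rw [h1, h2, hR, AddSubgroup.index_prod, hF, hK, hr, hq_finite]
  refine ⟨hE, Nat.finite_of_card_ne_zero ?_⟩
  rw [h2, hK]
  exact Nat.card_pos.ne'
lemma hq_pow (φ : AddMonoid.End C) (h1 : AddSubgroup.index (AddMonoidHom.range φ) ≠ 0)
    (h3 : Finite (AddMonoidHom.ker φ)) (n : ℕ) :
    AddSubgroup.index (AddMonoidHom.range (φ ^ n)) ≠ 0 ∧ Finite (AddMonoidHom.ker (φ ^ n)) ∧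
      hq (φ ^ n) = hq φ ^ n := by
  induction n with
  | zero =>
    have hr : AddMonoidHom.range (1 : AddMonoid.End C) = ⊤ :=
      AddMonoidHom.range_eq_top.2 fun x => ⟨x, rfl⟩
    have hk : AddMonoidHom.ker (1 : AddMonoid.End C) = ⊥ := (AddMonoidHom.ker_eq_bot_iff _).2 fun x y h => h
    rw [pow_zero]
    refine ⟨by rw [hr]; simp, by rw [hk]; infer_instance, by unfold hq; rw [hr, hk]; simp⟩
  | succ n ih =>
    obtain ⟨a, b, c⟩ := hq_comp (φ ^ n) φ ih.1 h1 ih.2.1 h3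
    rw [pow_succ]
    exact ⟨a, b, by rw [pow_succ, ← ih.2.2]; exact c⟩

lemma hq_unit (u : (AddMonoid.End C)ˣ) : AddSubgroup.index (AddMonoidHom.range u.1) ≠ 0 ∧
    Finite (AddMonoidHom.ker u.1) ∧ hq u.1 = 1 := by
  have h1 : ∀ x, u.1 (u⁻¹.1 x) = x := fun x => DFunLike.congr_fun (show u.1 * u⁻¹.1 = 1 by simp) x
  have h2 : ∀ x, u⁻¹.1 (u.1 x) = x := fun x => DFunLike.congr_fun (show u⁻¹.1 * u.1 = 1 by simp) x
  have hr : AddMonoidHom.range u.1 = ⊤ :=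
      AddMonoidHom.range_eq_top.2 fun x => ⟨_, h1 x⟩
  have hk : AddMonoidHom.ker u.1 = ⊥ := (AddMonoidHom.ker_eq_bot_iff _).2
    (Function.LeftInverse.injective h2)
  refine ⟨by rw [hr]; simp, by rw [hk]; infer_instance, by unfold hq; rw [hr, hk]; simp⟩

open Polynomial in
/-- In a ring in which `Φ_p(S) = 0`, the element `p` is a unit times `(S - 1)^(p-1)`. -/
lemma p_eq_unit_mul_pow (p : ℕ) (hp : p.Prime) {A : Type*} [Ring A] (S : A)
    (hS : ∑ i ∈ Finset.range p, S ^ i = 0) :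
    ∃ u : Aˣ, (p : A) = u * (S - 1) ^ (p - 1) ∧ (p : A) = (S - 1) ^ (p - 1) * u := by
  have := Fact.mk hp
  let Φ := cyclotomic p ℤ
  have hprime : Prime Φ := (cyclotomic.irreducible hp.pos).prime
  have : IsDomain (AdjoinRoot Φ) := AdjoinRoot.isDomain_of_prime hprime
  have hinj : Function.Injective (AdjoinRoot.of Φ) :=
    AdjoinRoot.of.injective_of_degree_ne_zero (by
      rw [degree_cyclotomic]; exact_mod_cast (Nat.totient_pos.2 hp.pos).ne')
  have : NeZero (p : AdjoinRoot Φ) := ⟨fun h => hp.ne_zero (by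
    have := hinj (a₁ := (p : ℤ)) (a₂ := 0) (by simpa using h)
    exact_mod_cast this)⟩
  have hμ : IsPrimitiveRoot (AdjoinRoot.root Φ) p := by
    rw [← isRoot_cyclotomic_iff]
    have := AdjoinRoot.isRoot_root Φ
    rwa [map_cyclotomic] at this
  let μ := AdjoinRoot.root Φ
  have hass : Associated ((μ - 1) ^ (p - 1)) (p : AdjoinRoot Φ) := by
    have h1 : ∏ k ∈ Finset.range (p - 1), (1 - μ ^ (k + 1)) = (p : AdjoinRoot Φ) := by
      have : p - 1 + 1 = p := Nat.sub_add_cancel hp.one_le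
      have h2 := IsPrimitiveRoot.prod_one_sub_pow_eq_order (n := p - 1) (μ := μ) (by rwa [this])
      rw [h2]; exact_mod_cast congrArg (Nat.cast : ℕ → AdjoinRoot Φ) this
    rw [← h1, ← Finset.card_range (p - 1), ← Finset.prod_const, Finset.card_range]
    refine Associated.prod _ _ _ fun k hk => ?_
    rw [Finset.mem_range] at hk
    have h3 := hμ.associated_sub_one_pow_sub_one_of_coprime (j := k + 1)
      ((Nat.Prime.coprime_iff_not_dvd hp).2 (fun h => by
        have := Nat.le_of_dvd (Nat.succ_pos k) h; omega)).symm
    rw [← neg_sub (μ ^ (k + 1))]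
    exact h3.trans (Associated.neg_right (Associated.refl _))
  obtain ⟨u, hu⟩ := hass
  let ρ : ℤ[X] →+* A := (aeval S : ℤ[X] →ₐ[ℤ] A).toRingHom
  let ψ : AdjoinRoot Φ →+* A := Ideal.Quotient.lift (Ideal.span {Φ}) ρ (by
    have h0 : ρ Φ = 0 := by
      simp only [ρ, Φ, cyclotomic_prime]
      simpa using hS
    intro a ha
    obtain ⟨c, rfl⟩ := Ideal.mem_span_singleton'.1 ha
    rw [map_mul, h0, mul_zero])
  have hψ : ψ μ = S := by
    show ρ X = S
    simp [ρ]
  have h1 := congrArg ψ hu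
  have h2 := congrArg ψ ((mul_comm _ _).trans hu)
  exact ⟨Units.map ψ.toMonoidHom u, by simpa [hψ] using h2.symm, by simpa [hψ] using h1.symm⟩

/-- Herbrand quotient of a finitely generated `ℤ[C_p]`-module in terms of ranks. -/
theorem herbrand (p : ℕ) (hp : p.Prime) [Module.Finite ℤ C] (σ : AddMonoid.End C) (D N : C →+ C)
    (hσ : σ ^ p = 1)
    (hD : ∀ x, D x = σ x - x) (hN : ∀ x, N x = ∑ i ∈ Finset.range p, (σ ^ i) x) (s : ℕ)
    (h1 : Module.finrank ℤ C + 1 = p * s)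
    (h2 : Module.finrank ℤ D.ker + 1 = s) :
    D.range.relIndex N.ker = p * N.range.relIndex D.ker ∧ N.range.relIndex D.ker ≠ 0 := by
  have hN' : ∀ x, N x = (∑ i ∈ Finset.range p, σ ^ i : AddMonoid.End C) x := fun x => by
    rw [hN]; exact (AddMonoidHom.finsetSum_apply (fun i => σ ^ i) (Finset.range p) x).symm
  have hND : ∀ x, N (D x) = 0 := fun x => by
    have := DFunLike.congr_fun (geom_sum_mul σ p) x
    rw [hσ, sub_self] at this
    rw [hN', hD]; exact this
  have hDN : ∀ x, D (N x) = 0 := fun x => by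
    have := DFunLike.congr_fun (mul_geom_sum σ p) x
    rw [hσ, sub_self] at this
    rw [hN', hD]; exact this
  have hNσ : ∀ x, N (σ x) = σ (N x) := fun x => by
    have := hND x
    rw [hD, map_sub, sub_eq_zero] at this
    have h3 := hDN x
    rw [hD, sub_eq_zero] at h3
    rw [this, h3]
  have hNA : ∀ x, D x = 0 → N x = p • x := by
    intro x hx
    have hx' : σ x = x := by
      rw [hD] at hx; exact sub_eq_zero.1 hx
    have : ∀ i, (σ ^ i) x = x := by
      intro i
      induction i with
      | zero => rfl
      | succ i ih => rw [pow_succ]; show (σ ^ i) (σ x) = x; rw [hx', ih]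
    rw [hN]
    simp [this]
  set A : AddSubgroup C := D.ker with hA
  set B : AddSubgroup C := N.ker with hB
  have hσB : ∀ x : B, σ x.1 ∈ B := by
    intro x
    refine (AddMonoidHom.mem_ker).2 ?_
    rw [hNσ, (AddMonoidHom.mem_ker).1 x.2, map_zero]
  -- the restriction of `σ` to the kernel of the norm
  let S : AddMonoid.End B := (AddMonoidHom.comp σ B.subtype).codRestrict B hσB
  have hSpow : ∀ (i : ℕ) (x : B), ((S ^ i) x : C) = (σ ^ i) x := by
    intro i
    induction i with
    | zero => intro x; rfl
    | succ i ih => intro x; rw [pow_succ, pow_succ]; exact ih (S x)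
  have hS0 : ∑ i ∈ Finset.range p, S ^ i = 0 := by
    ext x
    have h3 : (∑ i ∈ Finset.range p, S ^ i) x = ∑ i ∈ Finset.range p, (S ^ i) x :=
      AddMonoidHom.finsetSum_apply _ _ _
    rw [h3, AddSubgroup.val_finsetSum]
    simp only [hSpow]
    rw [← hN]
    exact x.2
  obtain ⟨u, hu, hu'⟩ := p_eq_unit_mul_pow p hp S hS0
  have hpB : (p : AddMonoid.End B) = nsmulAddMonoidHom (α := B) p := by
    refine AddMonoidHom.ext fun x => ?_
    exact AddMonoid.End.natCast_apply p x
  have : Module.Finite ℤ B := inferInstanceAs (Module.Finite ℤ (AddSubgroup.toIntSubmodule B))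
  have : Module.Finite ℤ A := inferInstanceAs (Module.Finite ℤ (AddSubgroup.toIntSubmodule A))
  obtain ⟨hB1, hB2⟩ := fg_index (C := B) p hp.pos
  obtain ⟨hA1, hA2⟩ := fg_index (C := A) p hp.pos
  have hB3 : (nsmulAddMonoidHom (α := B) p).range.index ≠ 0 := by
    rw [hB1]; exact mul_ne_zero (pow_ne_zero _ hp.ne_zero) Nat.card_pos.ne'
  have hA3 : (nsmulAddMonoidHom (α := A) p).range.index ≠ 0 := by
    rw [hA1]; exact mul_ne_zero (pow_ne_zero _ hp.ne_zero) Nat.card_pos.ne'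
  have hp1 : p - 1 = p - 2 + 1 := by have := hp.two_le; omega
  let T : B →+ B := (S - 1 : AddMonoid.End B)
  have hT : ∀ x : B, (T x : C) = D x := fun x => (hD x).symm
  have hTr : T.range.index ≠ 0 := by
    have hle : (nsmulAddMonoidHom (α := B) p).range ≤ T.range := by
      rintro _ ⟨x, rfl⟩
      rw [hp1, pow_succ', mul_assoc] at hu'
      exact ⟨(((S - 1) ^ (p - 2) * u : AddMonoid.End B)) x, by
        rw [← hpB, hu']; rfl⟩
    intro h0
    have := AddSubgroup.index_dvd_of_le hle
    rw [h0] at this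
    exact hB3 (Nat.eq_zero_of_zero_dvd this)
  have hTk : Finite T.ker := by
    have hle : T.ker ≤ (nsmulAddMonoidHom (α := B) p).ker := by
      intro x hx
      rw [hp1, pow_succ, ← mul_assoc] at hu
      rw [AddMonoidHom.mem_ker] at hx ⊢
      rw [← hpB, hu]
      show (u.1 * (S - 1) ^ (p - 2)) (T x) = 0
      rw [hx, map_zero]
    exact Finite.of_injective _ (AddSubgroup.inclusion_injective hle)
  -- On `ker N` multiplication by `p` is a unit times `(σ - 1) ^ (p - 1)`, so that `hq` of it is
  -- the `(p - 1)`-st power of `hq T`, while it equals `p ^ rank` as well.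
  have hq1 : hq T ^ (p - 1) = (p : ℚ) ^ Module.finrank ℤ B := by
    obtain ⟨a1, a2, a3⟩ := hq_pow (C := B) (S - 1) hTr hTk (p - 1)
    obtain ⟨b1, b2, b3⟩ := hq_unit u
    obtain ⟨-, -, c⟩ := hq_comp (u.1 : AddMonoid.End B) ((S - 1) ^ (p - 1) : AddMonoid.End B) b1 a1 b2 a2
    have c' : hq (nsmulAddMonoidHom (α := B) p) = hq T ^ (p - 1) := by
      rw [← hpB, hu, ← one_mul (hq T ^ (p - 1)), ← b3]
      exact c.trans (by rw [a3])
    rw [← c']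
    unfold hq
    rw [hB1]
    have : (Nat.card (nsmulAddMonoidHom (α := B) p).ker : ℚ) ≠ 0 := by
      exact_mod_cast Nat.card_pos.ne'
    push_cast
    field_simp
  have hNr : N.range ≤ A := by
    rintro _ ⟨x, rfl⟩; exact hDN x
  have hAN : A.map N ≤ N.range := by
    rw [AddMonoidHom.range_eq_map]; exact AddSubgroup.map_mono le_top
  -- the ranks
  have hrN : Module.finrank ℤ N.range = Module.finrank ℤ A := by
    apply le_antisymm
    · exact Submodule.finrank_mono (s := AddSubgroup.toIntSubmodule N.range)
        (t := AddSubgroup.toIntSubmodule A) hNr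
    · have h3 := int_rank_nullity (N.comp A.subtype)
      have : Finite (N.comp A.subtype).ker := by
        refine Finite.of_injective (β := (nsmulAddMonoidHom (α := A) p).ker)
          (fun x => ⟨x.1, ?_⟩) fun x y h => by
            have h' := congrArg (fun w : (nsmulAddMonoidHom (α := A) p).ker => (w : A)) h
            exact Subtype.ext h'
        have hx : N x.1.1 = 0 := x.2
        rw [hNA _ x.1.2] at hx
        exact Subtype.ext hx
      rw [finrank_of_finite (C := (N.comp A.subtype).ker), add_zero] at h3
      rw [← h3]
      have : Module.Finite ℤ N.range := inferInstanceAs (Module.Finite ℤ (AddSubgroup.toIntSubmodule N.range))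
      refine Submodule.finrank_mono (s := AddSubgroup.toIntSubmodule (N.comp A.subtype).range)
        (t := AddSubgroup.toIntSubmodule N.range) ?_
      rintro _ ⟨x, rfl⟩
      exact ⟨x.1, rfl⟩
  have hrB : Module.finrank ℤ B = (p - 1) * s := by
    have h3 := int_rank_nullity N
    have h4 : (p - 1) * s + s = p * s := by
      rw [← Nat.succ_mul]; congr 1; omega
    change _ + Module.finrank ℤ B = _ at h3
    omega
  have hqT : hq T = (p : ℚ) ^ s := by
    have h0 : 0 ≤ hq T := by unfold hq; positivity
    rw [hrB, mul_comm, pow_mul] at hq1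
    exact (pow_left_inj₀ h0 (by positivity) (by omega)).1 hq1
  -- The Herbrand quotient is read off from the indices in the chains `N(A) ⊆ N(C) ⊆ A` and
  -- `D(B) ⊆ D(C) ⊆ B`.
  have i1 : (A.map N).relIndex N.range * N.range.relIndex A = (A.map N).relIndex A :=
    AddSubgroup.relIndex_mul_relIndex _ _ _ hAN hNr
  have hDB : B.map D ≤ D.range := by
    rw [AddMonoidHom.range_eq_map]; exact AddSubgroup.map_mono le_top
  have hDr : D.range ≤ B := by
    rintro _ ⟨x, rfl⟩; exact hND x
  have i2 : (B.map D).relIndex D.range * D.range.relIndex B = (B.map D).relIndex B :=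
    AddSubgroup.relIndex_mul_relIndex _ _ _ hDB hDr
  have i3 : (A.map N).relIndex N.range = (B.map D).relIndex D.range := by
    rw [AddMonoidHom.range_eq_map N, AddMonoidHom.range_eq_map D,
      AddSubgroup.relIndex_map_map, AddSubgroup.relIndex_map_map]
    show (A ⊔ B).relIndex (⊤ ⊔ _) = (B ⊔ A).relIndex (⊤ ⊔ _)
    rw [sup_comm A B, top_sup_eq, top_sup_eq]
  have i4 : (A.map N).relIndex A = (nsmulAddMonoidHom (α := A) p).range.index := by
    rw [← AddSubgroup.relIndex_top_right, ← AddSubgroup.relIndex_map_map_of_injective _ _ A.subtype_injective]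
    congr 1
    · ext x
      constructor
      · rintro ⟨y, hy, rfl⟩
        exact ⟨p • ⟨y, hy⟩, ⟨⟨y, hy⟩, rfl⟩, (hNA y hy).symm⟩
      · rintro ⟨_, ⟨y, rfl⟩, rfl⟩
        exact ⟨y.1, y.2, hNA y.1 y.2⟩
    · rw [← AddMonoidHom.range_eq_map, AddSubgroup.range_subtype]
  have i5 : (B.map D).relIndex B = T.range.index := by
    rw [← AddSubgroup.relIndex_top_right, ← AddSubgroup.relIndex_map_map_of_injective _ _ B.subtype_injective]
    congr 1
    · ext x
      constructor
      · rintro ⟨y, hy, rfl⟩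
        exact ⟨T ⟨y, hy⟩, ⟨⟨y, hy⟩, rfl⟩, hT ⟨y, hy⟩⟩
      · rintro ⟨_, ⟨y, rfl⟩, rfl⟩
        exact ⟨y.1, y.2, (hT y).symm⟩
    · rw [← AddMonoidHom.range_eq_map, AddSubgroup.range_subtype]
  have i6 : Nat.card (nsmulAddMonoidHom (α := A) p).ker = Nat.card T.ker := by
    refine Nat.card_congr ⟨fun x => ⟨⟨x.1.1, ?_⟩, ?_⟩, fun y => ⟨⟨y.1.1, ?_⟩, ?_⟩, fun x => rfl, fun y => rfl⟩
    · have : p • x.1.1 = 0 := congrArg Subtype.val x.2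
      exact (hNA _ x.1.2).trans this
    · refine Subtype.ext ((hT _).trans ?_)
      exact x.1.2
    · exact (hT _).symm.trans (congrArg Subtype.val y.2)
    · refine Subtype.ext ((hNA y.1.1 ((hT _).symm.trans (congrArg Subtype.val y.2))).symm.trans y.1.2)
  have i7 : T.range.index = p ^ s * Nat.card T.ker := by
    have : (Nat.card T.ker : ℚ) ≠ 0 := by exact_mod_cast Nat.card_pos.ne'
    unfold hq at hqT
    rw [div_eq_iff this] at hqT
    exact_mod_cast hqT
  rw [i4, hA1, i6] at i1
  rw [i5, i7, ← i3] at i2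
  have hk : 0 < Nat.card T.ker := Nat.card_pos
  have hne : (A.map N).relIndex N.range * N.range.relIndex A ≠ 0 := by
    rw [i1]; exact mul_ne_zero (pow_ne_zero _ hp.ne_zero) hk.ne'
  refine ⟨?_, right_ne_zero_of_mul hne⟩
  have hm := left_ne_zero_of_mul hne
  apply Nat.eq_of_mul_eq_mul_left (Nat.pos_of_ne_zero hm)
  rw [i2, ← h2, pow_succ]
  calc _ = p * (p ^ Module.finrank ℤ A * Nat.card T.ker) := by ring
    _ = _ := by rw [← i1]; ring
end Herb
end ClRank

/-! ### Ideal classes and maps between class groups -/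

namespace ClRank
open scoped nonZeroDivisors
section ClMap
variable {R S : Type*} [CommRing R] [IsDedekindDomain R]
  [CommRing S] [IsDedekindDomain S]

/-- The class of a nonzero ideal. -/
noncomputable def cl (I : Ideal R) (hI : I ≠ ⊥) : ClassGroup R :=
  ClassGroup.mk0 ⟨I, mem_nonZeroDivisors_of_ne_zero hI⟩

lemma cl_surj (c : ClassGroup R) : ∃ I : Ideal R, ∃ hI : I ≠ ⊥, cl I hI = c := by
  obtain ⟨I, rfl⟩ := ClassGroup.mk0_surjective c
  exact ⟨I.1, nonZeroDivisors.ne_zero I.2, rfl⟩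

lemma cl_eq_iff {I J : Ideal R} (hI : I ≠ ⊥) (hJ : J ≠ ⊥) : cl I hI = cl J hJ ↔
    ∃ x y : R, x ≠ 0 ∧ y ≠ 0 ∧ Ideal.span {x} * I = Ideal.span {y} * J := by
  unfold cl
  rw [ClassGroup.mk0_eq_mk0_iff]
  constructor
  · rintro ⟨x, y, hx, hy, h⟩; exact ⟨x, y, hx, hy, h⟩
  · rintro ⟨x, y, hx, hy, h⟩; exact ⟨x, y, hx, hy, h⟩

lemma cl_mul {I J : Ideal R} (hI : I ≠ ⊥) (hJ : J ≠ ⊥) (hIJ : I * J ≠ ⊥) :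
    cl (I * J) hIJ = cl I hI * cl J hJ := by
  unfold cl; rw [← map_mul]; rfl

lemma cl_span {x : R} (hx : Ideal.span {x} ≠ ⊥) : cl (Ideal.span {x}) hx = 1 := by
  unfold cl; rw [ClassGroup.mk0_eq_one_iff]; exact ⟨x, rfl⟩

lemma cl_eq_one {I : Ideal R} (hI : I ≠ ⊥) (h : cl I hI = 1) : ∃ x, x ≠ 0 ∧ I = Ideal.span {x} := by
  unfold cl at h; rw [ClassGroup.mk0_eq_one_iff] at h
  obtain ⟨x, hx⟩ := h
  refine ⟨x, ?_, hx⟩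
  rintro rfl; apply hI; simp [hx]

lemma cl_inv {I : Ideal R} (hI : I ≠ ⊥) : ∃ J : Ideal R, J ≠ ⊥ ∧ ∃ w : R, w ≠ 0 ∧
    I * J = Ideal.span {w} := by
  obtain ⟨J, hJ, h⟩ := cl_surj (cl I hI)⁻¹
  refine ⟨J, hJ, ?_⟩
  have hIJ : I * J ≠ ⊥ := mul_ne_zero hI hJ
  apply cl_eq_one hIJ
  rw [cl_mul hI hJ, h, mul_inv_cancel]

/-- The homomorphism of class groups induced by a multiplicative map of ideals that preserves
nonzero ideals and principal ideals. -/
noncomputable def clMap (f : Ideal R →* Ideal S) (h0 : ∀ I, I ≠ ⊥ → f I ≠ ⊥)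
    (h1 : ∀ x : R, ∃ y, f (Ideal.span {x}) = Ideal.span {y}) : ClassGroup R →* ClassGroup S :=
  MonoidHom.mk' (fun c => cl (f (cl_surj c).choose) (h0 _ (cl_surj c).choose_spec.choose)) (by
    intro a b
    set I := (cl_surj a).choose
    set J := (cl_surj b).choose
    set T := (cl_surj (a * b)).choose
    have hI : I ≠ ⊥ := (cl_surj a).choose_spec.choose
    have hJ : J ≠ ⊥ := (cl_surj b).choose_spec.choose
    have hT : T ≠ ⊥ := (cl_surj (a * b)).choose_spec.choose
    have hIJ : I * J ≠ ⊥ := mul_ne_zero hI hJ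
    rw [← cl_mul _ _ (by rw [← map_mul]; exact h0 _ hIJ)]
    rw [cl_eq_iff]
    have : cl T hT = cl (I * J) hIJ := by
      rw [cl_mul hI hJ, (cl_surj a).choose_spec.choose_spec, (cl_surj b).choose_spec.choose_spec,
        (cl_surj (a * b)).choose_spec.choose_spec]
    rw [cl_eq_iff] at this
    obtain ⟨x, y, hx, hy, hxy⟩ := this
    obtain ⟨x', hx'⟩ := h1 x
    obtain ⟨y', hy'⟩ := h1 y
    have hx0 : x' ≠ 0 := by
      rintro rfl
      exact h0 (Ideal.span {x}) (by simpa using hx) (by simp [hx'])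
    have hy0 : y' ≠ 0 := by
      rintro rfl
      exact h0 (Ideal.span {y}) (by simpa using hy) (by simp [hy'])
    refine ⟨x', y', hx0, hy0, ?_⟩
    rw [← hx', ← hy', ← map_mul, hxy, map_mul, map_mul])

lemma clMap_cl (f : Ideal R →* Ideal S) (h0 : ∀ I, I ≠ ⊥ → f I ≠ ⊥)
    (h1 : ∀ x : R, ∃ y, f (Ideal.span {x}) = Ideal.span {y}) (I : Ideal R) (hI : I ≠ ⊥) :
    clMap f h0 h1 (cl I hI) = cl (f I) (h0 I hI) := by
  unfold clMap
  rw [MonoidHom.mk'_apply, cl_eq_iff]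
  have := (cl_surj (cl I hI)).choose_spec.choose_spec
  rw [cl_eq_iff] at this
  obtain ⟨x, y, hx, hy, hxy⟩ := this
  obtain ⟨x', hx'⟩ := h1 x
  obtain ⟨y', hy'⟩ := h1 y
  have hx0 : x' ≠ 0 := by
    rintro rfl
    exact h0 (Ideal.span {x}) (by simpa using hx) (by simp [hx'])
  have hy0 : y' ≠ 0 := by
    rintro rfl
    exact h0 (Ideal.span {y}) (by simpa using hy) (by simp [hy'])
  refine ⟨x', y', hx0, hy0, ?_⟩
  rw [← hx', ← hy', ← map_mul, hxy, map_mul]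

end ClMap

lemma index_le_of_fiber {G T : Type*} [Group G] (H : Subgroup G) [Finite T] (f : G → T)
    (h : ∀ a b, f a = f b → a⁻¹ * b ∈ H) : H.index ≤ Nat.card T := by
  unfold Subgroup.index
  refine Nat.card_le_card_of_injective (fun q : G ⧸ H => f q.out) ?_
  intro a b hab
  have := h _ _ hab
  rw [← QuotientGroup.eq] at this
  simpa using this

lemma index_le_of_fiber_add {G T : Type*} [AddGroup G] (H : AddSubgroup G) [Finite T] (f : G → T)
    (h : ∀ a b, f a = f b → -a + b ∈ H) : H.index ≤ Nat.card T := by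
  unfold AddSubgroup.index
  refine Nat.card_le_card_of_injective (fun q : G ⧸ H => f q.out) ?_
  intro a b hab
  have := h _ _ hab
  rw [← QuotientAddGroup.eq] at this
  simpa using this

section NormNotSurj
variable {A B : Type*} [CommRing A] [IsDedekindDomain A]
  [CommRing B] [IsDedekindDomain B] [Algebra A B] [FaithfulSMul A B]

/-- Extension of ideals as a multiplicative map. -/
noncomputable def extId (A B : Type*) [CommRing A] [CommRing B] [Algebra A B] : Ideal A →* Ideal B where
  toFun I := I.map (algebraMap A B)
  map_one' := by simp [Ideal.one_eq_top, Ideal.map_top]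
  map_mul' I J := Ideal.map_mul _ I J

/-- The action of an automorphism on ideals as a multiplicative map. -/
noncomputable def autId (σ : B ≃+* B) : Ideal B →* Ideal B where
  toFun I := I.map σ
  map_one' := by simp [Ideal.one_eq_top, Ideal.map_top]
  map_mul' I J := Ideal.map_mul _ I J

/-- The map `Cl(A) → Cl(B)` induced by extension of ideals. -/
noncomputable def clExt (A B : Type*) [CommRing A] [IsDedekindDomain A]
  [CommRing B] [IsDedekindDomain B] [Algebra A B] [FaithfulSMul A B] :
    ClassGroup A →* ClassGroup B :=
  clMap (extId A B) (fun I hI => by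
    intro h
    exact hI ((Ideal.map_eq_bot_iff_of_injective (FaithfulSMul.algebraMap_injective A B)).1 h))
    (fun x => ⟨algebraMap A B x, by simp [extId, Ideal.map_span]⟩)

/-- The action of an automorphism on the class group. -/
noncomputable def clAut (σ : B ≃+* B) : ClassGroup B →* ClassGroup B :=
  clMap (autId σ) (fun I hI => by
    intro h
    exact hI ((Ideal.map_eq_bot_iff_of_injective σ.injective).1 h))
    (fun x => ⟨σ x, by simp [autId, Ideal.map_span]⟩)

lemma autId_ne_bot (σ : B ≃+* B) {I : Ideal B} (hI : I ≠ ⊥) : autId σ I ≠ ⊥ := fun h =>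
  hI ((Ideal.map_eq_bot_iff_of_injective σ.injective).1 h)

lemma extId_ne_bot {I : Ideal A} (hI : I ≠ ⊥) : extId A B I ≠ ⊥ := fun h =>
  hI ((Ideal.map_eq_bot_iff_of_injective (FaithfulSMul.algebraMap_injective A B)).1 h)

lemma clAut_cl (σ : B ≃+* B) (I : Ideal B) (hI : I ≠ ⊥) :
    clAut σ (cl I hI) = cl (autId σ I) (autId_ne_bot σ hI) := clMap_cl _ _ _ _ _

lemma clExt_cl (I : Ideal A) (hI : I ≠ ⊥) :
    clExt A B (cl I hI) = cl (extId A B I) (extId_ne_bot hI) := clMap_cl _ _ _ _ _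

lemma autId_span (σ : B ≃+* B) (x : B) : autId σ (Ideal.span {x}) = Ideal.span {σ x} := by
  simp [autId, Ideal.map_span]

lemma extId_span (x : A) : extId A B (Ideal.span {x}) = Ideal.span {algebraMap A B x} := by
  simp [extId, Ideal.map_span]

end NormNotSurj
end ClRank

/-! ### Unramified cyclic extensions: the norm on classes is not surjective -/

namespace ClRank
open scoped nonZeroDivisors
section NormNotSurj
variable {A B : Type*} [CommRing A] [IsDedekindDomain A]
  [CommRing B] [IsDedekindDomain B] [Algebra A B] [FaithfulSMul A B]

lemma span_mul_cancel {x : B} (hx : x ≠ 0) {I J : Ideal B}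
    (h : Ideal.span {x} * I = Ideal.span {x} * J) : I = J :=
  mul_left_cancel₀ (by simpa using hx) h

/-- The endomorphism of the unit group, written additively, induced by an automorphism. -/
noncomputable def unitEnd (σ : B ≃ₐ[A] B) : AddMonoid.End (Additive Bˣ) :=
  MonoidHom.toAdditive (Units.map (σ : B →* B))

lemma unitEnd_pow_apply (σ : B ≃ₐ[A] B) (i : ℕ) (u : Additive Bˣ) :
    ((unitEnd σ ^ i) u).toMul.1 = (σ ^ i) u.toMul.1 := by
  induction i with
  | zero => simp
  | succ n ih => rw [pow_succ', pow_succ', AlgEquiv.mul_apply, ← ih]; rfl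

lemma autId_mul (σ τ : B ≃ₐ[A] B) (I : Ideal B) :
    autId (σ * τ).toRingEquiv I = autId σ.toRingEquiv (autId τ.toRingEquiv I) := by
  have : I.map ((σ * τ).toRingEquiv : B →+* B) =
      (I.map (τ.toRingEquiv : B →+* B)).map (σ.toRingEquiv : B →+* B) := by
    rw [Ideal.map_map]; rfl
  exact this

lemma autId_one (I : Ideal B) : autId (1 : B ≃ₐ[A] B).toRingEquiv I = I := by
  have : I.map ((1 : B ≃ₐ[A] B).toRingEquiv : B →+* B) = I := Ideal.map_id I
  exact this

lemma prod_range_shift {M : Type*} [CommMonoid M] (a : ℕ → M) (p : ℕ) (h : a p = a 0) :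
    ∏ i ∈ Finset.range p, a (i + 1) = ∏ i ∈ Finset.range p, a i := by
  cases p with
  | zero => simp
  | succ n => rw [Finset.prod_range_succ, h, ← Finset.prod_range_succ' a n]

lemma units_norm_apply (σ : B ≃ₐ[A] B) (p : ℕ) (u : Bˣ) :
    ((∑ i ∈ Finset.range p, (unitEnd σ ^ i) (Additive.ofMul u)).toMul : Bˣ).1 =
      ∏ i ∈ Finset.range p, (σ ^ i) u.1 := by
  rw [toMul_sum, Units.coe_prod]
  exact Finset.prod_congr rfl fun i _ => unitEnd_pow_apply σ i _

/-- In an everywhere unramified cyclic extension of prime degree (with the unit ranks of totally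
complex fields) the norm of ideal classes is not surjective: the Herbrand quotient of the units
gives `|H¹| = p |Ĥ⁰|`, classes of `H¹` capitulate, and this bounds the number of invariant classes. -/
theorem norm_not_surj [Finite (ClassGroup A)] [Finite (ClassGroup B)]
    (σ : B ≃ₐ[A] B) (p : ℕ) (hp : p.Prime) (hσ : σ ^ p = 1)
    (hF : ∀ x : B, σ x = x → ∃ a, algebraMap A B a = x)
    (h90 : ∀ x y : B, x ≠ 0 → y ≠ 0 →
      ∏ i ∈ Finset.range p, (σ ^ i) x = ∏ i ∈ Finset.range p, (σ ^ i) y →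
      ∃ b : B, b ≠ 0 ∧ σ b * y = x * b)
    (hInv : ∀ I : Ideal B, I ≠ ⊥ → autId σ.toRingEquiv I = I → ∃ J : Ideal A, J ≠ ⊥ ∧ extId A B J = I)
    (nm : ClassGroup B →* ClassGroup A) (hnm : ∀ c, nm (clAut σ.toRingEquiv c) = nm c)
    [Module.Finite ℤ (Additive Bˣ)] (s : ℕ)
    (h1 : Module.finrank ℤ (Additive Bˣ) + 1 = p * s)
    (h2 : Module.finrank ℤ (Additive Aˣ) + 1 = s) : ¬ Function.Surjective nm := by
  intro hsurj
  set S : AddMonoid.End (Additive Bˣ) := unitEnd σ with hS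
  set D : Additive Bˣ →+ Additive Bˣ := (S - 1 : AddMonoid.End (Additive Bˣ)) with hD
  set N : Additive Bˣ →+ Additive Bˣ := ((∑ i ∈ Finset.range p, S ^ i : AddMonoid.End _)) with hN
  have hDa : ∀ x, D x = S x - x := fun x => rfl
  have hNa : ∀ x, N x = ∑ i ∈ Finset.range p, (S ^ i) x := fun x =>
    AddMonoidHom.finsetSum_apply (fun i => S ^ i) (Finset.range p) x
  have hSv : ∀ x : Additive Bˣ, (S x).toMul.1 = σ x.toMul.1 := fun x => rfl
  have hNv : ∀ x : Additive Bˣ, (N x).toMul.1 = ∏ i ∈ Finset.range p, (σ ^ i) x.toMul.1 := fun x => by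
    rw [hNa]; exact units_norm_apply σ p x.toMul
  have hSp : S ^ p = 1 := by
    ext u
    have := unitEnd_pow_apply σ p u
    rw [hσ] at this
    exact this
  -- units of `A`
  have hA : Module.finrank ℤ D.ker = Module.finrank ℤ (Additive Aˣ) := by
    let f : Additive Aˣ →+ D.ker := (MonoidHom.toAdditive (Units.map (algebraMap A B : A →* B))).codRestrict
      D.ker (by
        intro u
        rw [AddMonoidHom.mem_ker, hDa, sub_eq_zero]
        apply Additive.toMul.injective
        ext
        rw [hSv]
        exact σ.commutes _)
    have hf : Function.Bijective f := by
      constructor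
      · intro u v huv
        have h3 : algebraMap A B u.toMul.1 = algebraMap A B v.toMul.1 :=
          congrArg (fun w : D.ker => (w.1.toMul : Bˣ).1) huv
        apply Additive.toMul.injective
        ext
        exact FaithfulSMul.algebraMap_injective A B h3
      · rintro ⟨u, hu⟩
        have hfix : ∀ u : Additive Bˣ, D u = 0 → σ u.toMul.1 = u.toMul.1 := by
          intro u hu
          rw [hDa, sub_eq_zero] at hu
          rw [← hSv, hu]
        rw [AddMonoidHom.mem_ker] at hu
        obtain ⟨a, ha⟩ := hF _ (hfix u hu)
        obtain ⟨b, hb⟩ := hF _ (hfix (-u) (by rw [map_neg, hu, neg_zero]))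
        have hab : a * b = 1 := by
          apply FaithfulSMul.algebraMap_injective A B
          rw [map_mul, ha, hb, map_one]
          simp
        refine ⟨Additive.ofMul ⟨a, b, hab, by rw [mul_comm, hab]⟩, ?_⟩
        apply Subtype.ext
        apply Additive.toMul.injective
        ext
        exact ha
    exact (AddEquiv.ofBijective f hf).toIntLinearEquiv.finrank_eq.symm
  obtain ⟨key, key0⟩ := herbrand p hp S D N hSp hDa hNa s h1 (by rw [hA]; exact h2)
  -- `H¹` of the units injects into the capitulation kernel
  have step1 : D.range.relIndex N.ker ≤ Nat.card (clExt A B).ker := by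
    have hb : ∀ u : N.ker, ∃ b : B, ∃ J : Ideal A, ∃ hJ : J ≠ ⊥, b ≠ 0 ∧ σ b = u.1.toMul.1 * b ∧
        extId A B J = Ideal.span {b} ∧ clExt A B (cl J hJ) = 1 := by
      intro u
      have hu : N u.1 = 0 := u.2
      obtain ⟨b, hb0, hb⟩ := h90 u.1.toMul.1 1 (Units.ne_zero _) one_ne_zero (by
        rw [← hNv, hu]; simp)
      rw [mul_one] at hb
      have hsp : Ideal.span {b} ≠ ⊥ := by simpa using hb0
      obtain ⟨J, hJ, hJb⟩ := hInv (Ideal.span {b}) hsp (by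
        rw [autId_span]
        show Ideal.span {σ b} = _
        rw [hb, Ideal.span_singleton_eq_span_singleton]
        exact ⟨(u.1.toMul)⁻¹, by rw [mul_comm, Units.inv_mul_cancel_left]⟩)
      refine ⟨b, J, hJ, hb0, hb, hJb, ?_⟩
      rw [clExt_cl]
      have : ∀ (I : Ideal B) (hI : I ≠ ⊥), I = Ideal.span {b} → cl I hI = 1 := by
        rintro _ hI rfl; exact cl_span hI
      exact this _ _ hJb
    choose b J hJ hb0 hb hJb hJ1 using hb
    refine index_le_of_fiber_add (D.range.addSubgroupOf N.ker)
      (fun u => (⟨cl (J u) (hJ u), hJ1 u⟩ : (clExt A B).ker)) ?_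
    intro u v huv
    have huv' : cl (J u) (hJ u) = cl (J v) (hJ v) := congrArg (fun w : (clExt A B).ker => w.1) huv
    rw [cl_eq_iff] at huv'
    obtain ⟨x, y, hx, hy, hxy⟩ := huv'
    have h3 := congrArg (extId A B) hxy
    rw [map_mul, map_mul, extId_span, extId_span, hJb, hJb, Ideal.span_singleton_mul_span_singleton,
      Ideal.span_singleton_mul_span_singleton, Ideal.span_singleton_eq_span_singleton] at h3
    obtain ⟨e, he⟩ := h3
    have h4 := congrArg σ he
    rw [map_mul, map_mul, map_mul, hb, hb, σ.commutes, σ.commutes, ← mul_assoc _ (u.1.toMul.1)] at h4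
    rw [AddSubgroup.mem_addSubgroupOf]
    refine ⟨Additive.ofMul e, ?_⟩
    rw [hDa]
    apply Additive.toMul.injective
    ext
    have h5 : u.1.toMul.1 * σ e.1 = v.1.toMul.1 * e.1 := by
      have hne : algebraMap A B x * b u ≠ 0 := mul_ne_zero
        (by rwa [Ne, FaithfulSMul.algebraMap_eq_zero_iff]) (hb0 u)
      apply mul_left_cancel₀ hne
      calc _ = _ := by ring
        _ = _ := h4
        _ = v.1.toMul.1 * (algebraMap A B y * b v) := by ring
        _ = _ := by rw [← he]; ring
    have h6 : Units.map (σ : B →* B) e * e⁻¹ = (u.1.toMul)⁻¹ * v.1.toMul := by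
      rw [mul_inv_eq_iff_eq_mul, mul_assoc, eq_inv_mul_iff_mul_eq]
      ext
      exact h5
    have h7 := congrArg Units.val h6
    convert h7 using 1
    · rw [toMul_sub, div_eq_mul_inv]; rfl
    · rfl
  -- invariant classes
  set ca := clAut σ.toRingEquiv with hca
  let Dc : Additive (ClassGroup B) →+ Additive (ClassGroup B) :=
    (MonoidHom.toAdditive ca) - AddMonoidHom.id _
  let G : Subgroup (ClassGroup B) := (AddSubgroup.toSubgroup' Dc.ker)
  have hG : ∀ c, c ∈ G ↔ ca c = c := by
    intro c
    show Dc (Additive.ofMul c) = 0 ↔ _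
    show ca c / c = 1 ↔ _
    rw [div_eq_one]
  have hjG : (clExt A B).range ≤ G := by
    rintro _ ⟨c, rfl⟩
    rw [hG]
    obtain ⟨I, hI, rfl⟩ := cl_surj c
    rw [clExt_cl, hca, clAut_cl]
    congr 1
    show Ideal.map σ.toRingEquiv (Ideal.map (algebraMap A B) I) = Ideal.map (algebraMap A B) I
    have : (Ideal.map (algebraMap A B) I).map (σ.toRingEquiv : B →+* B) = Ideal.map (algebraMap A B) I := by
      rw [Ideal.map_map]
      congr 1
      ext x
      exact σ.commutes x
    exact this
  -- Invariant classes modulo extended ones inject into `Ĥ⁰` of the units: if `x · σ(I) = y · I`,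
  -- then the ratio of the norms of `y` and `x` is an invariant unit.
  have step2 : ((clExt A B).range.subgroupOf G).index ≤ N.range.relIndex D.ker := by
    let P : B → B := fun x => ∏ i ∈ Finset.range p, (σ ^ i) x
    have hPσ : ∀ x, σ (P x) = P x := by
      intro x
      show σ (∏ i ∈ Finset.range p, (σ ^ i) x) = _
      rw [map_prod]
      refine Eq.trans ?_ (prod_range_shift (fun i => (σ ^ i) x) p (by simp [hσ]))
      exact Finset.prod_congr rfl fun i _ => by rw [pow_succ', AlgEquiv.mul_apply]
    have hP0 : ∀ x, x ≠ 0 → P x ≠ 0 := fun x hx => by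
      refine Finset.prod_ne_zero_iff.2 fun i _ => ?_
      rwa [Ne, EmbeddingLike.map_eq_zero_iff]
    have hPm : ∀ x y, P (x * y) = P x * P y := fun x y => by
      simp only [P, map_mul, Finset.prod_mul_distrib]
    have hc : ∀ g : G, ∃ (I : Ideal B) (hI : I ≠ ⊥) (x y : B) (u : D.ker), x ≠ 0 ∧ y ≠ 0 ∧
        cl I hI = g.1 ∧ Ideal.span {x} * autId σ.toRingEquiv I = Ideal.span {y} * I ∧
        P y = P x * u.1.toMul.1 := by
      intro g
      obtain ⟨I, hI, hIg⟩ := cl_surj g.1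
      have hg := (hG g.1).1 g.2
      rw [← hIg, hca, clAut_cl, cl_eq_iff] at hg
      obtain ⟨x, y, hx, hy, hxy⟩ := hg
      have hPP : Ideal.span {P x} = Ideal.span {P y} := by
        have h3 : ∀ i : ℕ, Ideal.span {(σ ^ i) x} * autId (σ ^ (i + 1)).toRingEquiv I =
            Ideal.span {(σ ^ i) y} * autId (σ ^ i).toRingEquiv I := by
          intro i
          have h4 := congrArg (autId (σ ^ i).toRingEquiv) hxy
          rw [map_mul, map_mul, autId_span, autId_span] at h4
          rw [pow_succ, autId_mul]
          exact h4
        have h4 := Finset.prod_congr (rfl : Finset.range p = Finset.range p) fun i _ => h3 i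
        rw [Finset.prod_mul_distrib, Finset.prod_mul_distrib,
          prod_range_shift (fun i => autId (σ ^ i).toRingEquiv I) p (by rw [hσ, pow_zero]),
          Ideal.prod_span_singleton, Ideal.prod_span_singleton] at h4
        refine mul_right_cancel₀ ?_ h4
        exact Finset.prod_ne_zero_iff.2 fun i _ => autId_ne_bot _ hI
      rw [Ideal.span_singleton_eq_span_singleton] at hPP
      obtain ⟨u, hu⟩ := hPP
      refine ⟨I, hI, x, y, ⟨Additive.ofMul u, ?_⟩, hx, hy, hIg, hxy, hu.symm⟩
      rw [AddMonoidHom.mem_ker, hDa, sub_eq_zero]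
      apply Additive.toMul.injective
      ext
      rw [hSv]
      have h5 := congrArg σ hu
      rw [map_mul, hPσ, hPσ, ← hu] at h5
      exact mul_left_cancel₀ (hP0 x hx) h5
    choose I hI x y u hx hy hIg hxy hPu using hc
    have hfin : Finite (D.ker ⧸ N.range.addSubgroupOf D.ker) := by
      have : (N.range.addSubgroupOf D.ker).FiniteIndex := ⟨key0⟩
      infer_instance
    refine index_le_of_fiber ((clExt A B).range.subgroupOf G)
      (fun g => (QuotientAddGroup.mk (u g) : D.ker ⧸ N.range.addSubgroupOf D.ker)) ?_
    intro g h hgh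
    rw [QuotientAddGroup.eq, AddSubgroup.mem_addSubgroupOf] at hgh
    obtain ⟨v, hv⟩ := hgh
    obtain ⟨I', hI', w, hw, hww⟩ := cl_inv (hI g)
    -- `h / g` is the class of `I h * I'`, which becomes invariant after scaling
    have hv1 : (u h).1.toMul.1 = (u g).1.toMul.1 * P v.toMul.1 := by
      have h3 : P v.toMul.1 = (N v).toMul.1 := (hNv v).symm
      rw [h3, hv, ← Units.val_mul, ← toMul_add]
      congr 2
      show (u h).1 = (u g).1 + (-(u g).1 + (u h).1)
      abel
    have hσw : autId σ.toRingEquiv I' * (Ideal.span {y g} * Ideal.span {w}) =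
        Ideal.span {x g} * Ideal.span {σ w} * I' := by
      have h3 := congrArg (autId σ.toRingEquiv) hww
      rw [map_mul, autId_span] at h3
      rw [← hww]
      calc autId σ.toRingEquiv I' * (Ideal.span {y g} * (I g * I'))
          = (Ideal.span {y g} * I g) * (autId σ.toRingEquiv I' * I') := by ring
        _ = (Ideal.span {x g} * (autId σ.toRingEquiv (I g) * autId σ.toRingEquiv I')) * I' := by
            rw [← hxy]; ring
        _ = _ := by rw [h3]; rfl
    set T := I h * I' with hT
    have hT0 : T ≠ ⊥ := mul_ne_zero (hI h) hI'
    have hTX : autId σ.toRingEquiv T * Ideal.span {x h * y g * w * v.toMul.1} =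
        Ideal.span {y h * x g * σ w} * T := by
      have hv2 : Ideal.span {x h * y g * w * v.toMul.1} = Ideal.span {x h * y g * w} :=
        Ideal.span_singleton_mul_right_unit v.toMul.isUnit _
      rw [hv2, hT, map_mul]
      simp only [← Ideal.span_singleton_mul_span_singleton]
      calc _ = (Ideal.span {x h} * autId σ.toRingEquiv (I h)) *
            (autId σ.toRingEquiv I' * (Ideal.span {y g} * Ideal.span {w})) := by ring
        _ = _ := by rw [hxy, hσw]; ring
    have hX0 : x h * y g * w * v.toMul.1 ≠ 0 :=
      mul_ne_zero (mul_ne_zero (mul_ne_zero (hx h) (hy g)) hw) (Units.ne_zero _)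
    have hY0 : y h * x g * σ w ≠ 0 :=
      mul_ne_zero (mul_ne_zero (hy h) (hx g)) (by rwa [Ne, EmbeddingLike.map_eq_zero_iff])
    have hPw : P (σ w) = P w := by
      show ∏ i ∈ Finset.range p, (σ ^ i) (σ w) = ∏ i ∈ Finset.range p, (σ ^ i) w
      refine Eq.trans ?_ (prod_range_shift (fun i => (σ ^ i) w) p (by simp [hσ]))
      exact Finset.prod_congr rfl fun i _ => by rw [pow_succ, AlgEquiv.mul_apply]
    obtain ⟨β, hβ0, hβ⟩ := h90 (x h * y g * w * v.toMul.1) (y h * x g * σ w) hX0 hY0 (by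
      show P _ = P _
      rw [hPm, hPm, hPm, hPm, hPm, hPw, hPu, hPu, hv1]; ring)
    set X := x h * y g * w * v.toMul.1
    set Y := y h * x g * σ w
    have hβT : autId σ.toRingEquiv (Ideal.span {β} * T) = Ideal.span {β} * T := by
      rw [map_mul, autId_span]
      have h3 : Ideal.span {σ β} * Ideal.span {Y} = Ideal.span {X} * Ideal.span {β} := by
        rw [Ideal.span_singleton_mul_span_singleton, Ideal.span_singleton_mul_span_singleton, hβ]
      have h4 : (Ideal.span {X} * Ideal.span {Y} : Ideal B) ≠ 0 :=
        mul_ne_zero (by simpa using hX0) (by simpa using hY0)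
      refine mul_right_cancel₀ h4 ?_
      calc Ideal.span {σ β} * autId σ.toRingEquiv T * (Ideal.span {X} * Ideal.span {Y})
          = (Ideal.span {σ β} * Ideal.span {Y}) * (autId σ.toRingEquiv T * Ideal.span {X}) := by ring
        _ = _ := by rw [h3, hTX]; ring
    have hβ1 : Ideal.span {β} ≠ ⊥ := by simpa using hβ0
    obtain ⟨J, hJ, hJT⟩ := hInv _ (mul_ne_zero hβ1 hT0) hβT
    rw [Subgroup.mem_subgroupOf]
    refine ⟨cl J hJ, ?_⟩
    rw [clExt_cl]
    have h5 : ∀ (Z : Ideal B) (hZ : Z ≠ ⊥), Z = Ideal.span {β} * T → cl Z hZ = g.1⁻¹ * h.1 := by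
      rintro _ hZ rfl
      have h6 : cl I' hI' = g.1⁻¹ := by
        rw [eq_inv_iff_mul_eq_one, ← hIg g, mul_comm, ← cl_mul _ _ (mul_ne_zero (hI g) hI')]
        have : ∀ (Z : Ideal B) (hZ : Z ≠ ⊥), Z = Ideal.span {w} → cl Z hZ = 1 := by
          rintro _ hZ rfl; exact cl_span hZ
        exact this _ _ hww
      rw [cl_mul hβ1 hT0, cl_span, one_mul, cl_mul (hI h) hI', h6, hIg, mul_comm]
    exact h5 _ _ hJT
  -- A surjective norm factors through the quotient of the class group above by the image of `σ -
  -- 1`, which has as many elements as the subgroup of invariant classes.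
  have step3 : Nat.card (ClassGroup A) ≤ Nat.card G := by
    have h3 : (MonoidHom.toAdditive nm).ker.index = Nat.card (ClassGroup A) := by
      rw [AddSubgroup.index_ker]
      have : (MonoidHom.toAdditive nm).range = ⊤ := by
        rw [AddMonoidHom.range_eq_top]; exact hsurj
      rw [this]
      exact Nat.card_congr AddSubgroup.topEquiv.toEquiv
    have h4 : Dc.range ≤ (MonoidHom.toAdditive nm).ker := by
      rintro _ ⟨c, rfl⟩
      rw [AddMonoidHom.mem_ker]
      show nm (ca c.toMul / c.toMul) = 1
      rw [map_div, hnm, div_self']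
    have h5 := hq_finite Dc
    have : Finite (Additive (ClassGroup B)) := inferInstanceAs (Finite (ClassGroup B))
    calc Nat.card (ClassGroup A) = (MonoidHom.toAdditive nm).ker.index := h3.symm
      _ ≤ Dc.range.index := by
        refine Nat.le_of_dvd ?_ (AddSubgroup.index_dvd_of_le h4)
        exact Nat.pos_of_ne_zero AddSubgroup.FiniteIndex.index_ne_zero
      _ = Nat.card Dc.ker := h5
      _ = Nat.card G := rfl
  have e1 : Nat.card (clExt A B).ker * Nat.card (clExt A B).range = Nat.card (ClassGroup A) := by
    rw [← Subgroup.index_ker, Subgroup.card_mul_index]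
  have e2 : Nat.card (clExt A B).range * ((clExt A B).range.subgroupOf G).index = Nat.card G := by
    rw [← Subgroup.card_mul_index ((clExt A B).range.subgroupOf G)]
    congr 1
    exact Nat.card_congr (Subgroup.subgroupOfEquivOfLe hjG).toEquiv.symm
  have hpos : 0 < Nat.card (ClassGroup A) := Nat.card_pos
  have hp2 := hp.two_le
  have : p * Nat.card (ClassGroup A) ≤ Nat.card (ClassGroup A) := by
    calc p * Nat.card (ClassGroup A) ≤ p * (Nat.card (clExt A B).range * N.range.relIndex D.ker) := by
          gcongr
          exact step3.trans (e2 ▸ Nat.mul_le_mul_left _ step2)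
      _ = D.range.relIndex N.ker * Nat.card (clExt A B).range := by rw [key]; ring
      _ ≤ _ := by rw [← e1]; gcongr
  nlinarith
end NormNotSurj
end ClRank

/-! ### Rings of integers: Hilbert 90 and descent of invariant ideals -/

namespace ClRank
open scoped nonZeroDivisors
open NumberField Module

/-- Hilbert's Theorem 90 for a cyclic group of automorphisms. -/
lemma h90_field {L M : Type*} [Field L] [Field M] [Algebra L M] (σ : M ≃ₐ[L] M) (p : ℕ)
    (hp : 0 < p) (hσ : orderOf σ = p) (α : M) (hα : ∏ i ∈ Finset.range p, (σ ^ i) α = 1) :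
    ∃ b : M, b ≠ 0 ∧ σ b = α * b := by
  have hα0 : α ≠ 0 := by
    rintro rfl
    rw [Finset.prod_eq_zero (Finset.mem_range.2 hp) (by simp)] at hα
    exact zero_ne_one hα
  let c : ℕ → M := fun i => ∏ j ∈ Finset.range i, (σ ^ j) α⁻¹
  have hc : ∀ i, α⁻¹ * σ (c i) = c (i + 1) := fun i => by
    simp only [c]
    rw [Finset.prod_range_succ', map_prod, mul_comm]
    congr 1
    refine Finset.prod_congr rfl fun j _ => ?_
    rw [pow_succ', AlgEquiv.mul_apply]
  have hc0 : c 0 = 1 := by simp [c]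
  have hcp : c p = 1 := by
    simp only [c, map_inv₀, Finset.prod_inv_distrib, hα, inv_one]
  have hli := linearIndependent_monoidHom M M
  have hinj : Function.Injective (fun i : Fin p => ((σ ^ (i : ℕ) : M ≃ₐ[L] M) : M →* M)) := by
    intro i j hij
    have : σ ^ (i : ℕ) = σ ^ (j : ℕ) := by
      ext x; exact DFunLike.congr_fun hij x
    exact Fin.ext (pow_injOn_Iio_orderOf (by simp [hσ]) (by simp [hσ]) this)
  have hli2 := hli.comp _ hinj
  rw [Fintype.linearIndependent_iff] at hli2
  have : ∃ z : M, ∑ i : Fin p, c i * (σ ^ (i : ℕ)) z ≠ 0 := by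
    by_contra! h
    have h3 := hli2 (fun i => c i) (by
      ext z
      simpa [Finset.sum_apply] using h z) ⟨0, hp⟩
    rw [hc0] at h3
    exact one_ne_zero h3
  obtain ⟨z, hz⟩ := this
  refine ⟨_, hz, ?_⟩
  rw [Fin.sum_univ_eq_sum_range (fun i => c i * (σ ^ i) z), map_sum, Finset.mul_sum]
  let a : ℕ → M := fun i => α * (c i * (σ ^ i) z)
  have ha : ∀ n, ∑ i ∈ Finset.range n, a (i + 1) + a 0 = ∑ i ∈ Finset.range n, a i + a n := by
    intro n; rw [← Finset.sum_range_succ, Finset.sum_range_succ']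
  have h0 : a p = a 0 := by
    simp only [a]; rw [hc0, hcp, ← hσ, pow_orderOf_eq_one, pow_zero]
  have h5 := ha p
  rw [h0, add_left_inj] at h5
  rw [← h5]
  refine Finset.sum_congr rfl fun i _ => ?_
  simp only [a]
  rw [← hc i, map_mul, pow_succ', AlgEquiv.mul_apply]
  field_simp

section NF
variable {L M : Type*} [Field L] [NumberField L] [Field M] [NumberField M] [Algebra L M]

/-- The automorphism of rings of integers induced by a field automorphism. -/
noncomputable def oAut (σ : M ≃ₐ[L] M) : 𝓞 M ≃ₐ[𝓞 L] 𝓞 M := RingOfIntegers.mapAlgEquiv σ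

lemma oAut_coe (σ : M ≃ₐ[L] M) (x : 𝓞 M) : ((oAut σ x : 𝓞 M) : M) = σ (x : M) := rfl

lemma oAut_pow_coe (σ : M ≃ₐ[L] M) (i : ℕ) (x : 𝓞 M) : (((oAut σ ^ i) x : 𝓞 M) : M) = (σ ^ i) (x : M) := by
  induction i with
  | zero => simp
  | succ n ih => rw [pow_succ', pow_succ', AlgEquiv.mul_apply, AlgEquiv.mul_apply, ← ih]; rfl

lemma oAut_pow (σ : M ≃ₐ[L] M) (i : ℕ) : oAut σ ^ i = oAut (σ ^ i) := by
  ext x; rw [oAut_pow_coe]; rfl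

lemma exists_int_mul (b : M) : ∃ n : ℤ, n ≠ 0 ∧ ∃ c : 𝓞 M, (c : M) = n * b := by
  obtain ⟨n, hn0, hn⟩ := exists_integral_multiples ℤ ℚ ({b} : Finset M)
  refine ⟨n, hn0, ⟨_, hn b (by simp)⟩, ?_⟩
  show n • b = _
  rw [zsmul_eq_mul]

/-- Dirichlet's unit theorem for a totally complex field. -/
lemma rank_add_one (F : Type*) [Field F] [NumberField F] [IsTotallyComplex F] :
    finrank ℤ (Additive (𝓞 F)ˣ) + 1 = InfinitePlace.nrComplexPlaces F := by
  rw [Units.finrank_eq, Units.rank, InfinitePlace.card_eq_nrRealPlaces_add_nrComplexPlaces,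
    IsTotallyComplex.nrRealPlaces_eq_zero, zero_add]
  have h1 := IsTotallyComplex.finrank (K := F)
  have h2 : 0 < finrank ℚ F := finrank_pos
  omega

/-- Integral form of Hilbert 90 for two elements of equal norm, with denominators cleared. -/
lemma h90_int (σ : M ≃ₐ[L] M) (p : ℕ) (hp : 0 < p) (hσ : orderOf σ = p) (x y : 𝓞 M)
    (hy : y ≠ 0)
    (h : ∏ i ∈ Finset.range p, (oAut σ ^ i) x = ∏ i ∈ Finset.range p, (oAut σ ^ i) y) :
    ∃ b : 𝓞 M, b ≠ 0 ∧ oAut σ b * y = x * b := by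
  have hy' : (y : M) ≠ 0 := by simpa using hy
  have hne : ∏ i ∈ Finset.range p, (σ ^ i) (y : M) ≠ 0 :=
    Finset.prod_ne_zero_iff.2 fun i _ => by
      rwa [Ne, EmbeddingLike.map_eq_zero_iff]
  obtain ⟨b, hb0, hb⟩ := h90_field σ p hp hσ ((x : M) / y) (by
    simp only [map_div₀, Finset.prod_div_distrib]
    rw [div_eq_one_iff_eq hne]
    have h3 := congrArg (algebraMap (𝓞 M) M) h
    rw [map_prod, map_prod] at h3
    simpa only [oAut_pow_coe] using h3)
  obtain ⟨n, hn0, c, hc⟩ := exists_int_mul b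
  have hn' : (n : M) ≠ 0 := by exact_mod_cast hn0
  refine ⟨c, ?_, ?_⟩
  · rintro rfl
    have h0 : ((0 : 𝓞 M) : M) = 0 := rfl
    exact mul_ne_zero hn' hb0 (hc.symm.trans h0)
  · apply RingOfIntegers.ext
    show ((oAut σ c : 𝓞 M) : M) * (y : M) = (x : M) * (c : M)
    rw [oAut_coe, hc, map_mul, map_intCast, hb]
    field_simp

/-- In an unramified Galois extension an ideal invariant under a generator of the Galois group is
extended from the base. -/
lemma inv_descends [IsGalois L M] (σ : M ≃ₐ[L] M) (hg : ∀ τ : M ≃ₐ[L] M, ∃ i : ℕ, σ ^ i = τ)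
    (hunr : ∀ q : Ideal (𝓞 L), q.IsMaximal → (extId (𝓞 L) (𝓞 M) q).IsRadical)
    (I : Ideal (𝓞 M)) (hI : I ≠ ⊥) (hσ : autId (oAut σ).toRingEquiv I = I) :
    ∃ J : Ideal (𝓞 L), J ≠ ⊥ ∧ extId (𝓞 L) (𝓞 M) J = I := by
  induction I using WellFoundedGT.induction with
  | ind I ih =>
  by_cases hT : I = ⊤
  · exact ⟨⊤, top_ne_bot, by rw [hT]; exact Ideal.map_top _⟩
  obtain ⟨P, hP, hIP⟩ := Ideal.exists_le_maximal I hT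
  set q := P.under (𝓞 L) with hq
  have hqm : q.IsMaximal := Ideal.IsMaximal.under _ P
  have hq0 : q ≠ ⊥ := by
    intro h
    have : P = ⊥ := Ideal.eq_bot_of_comap_eq_bot (R := 𝓞 L) h
    exact hI (le_bot_iff.1 (this ▸ hIP))
  have hpow : ∀ i : ℕ, autId (oAut σ ^ i).toRingEquiv I = I := by
    intro i
    induction i with
    | zero => rw [pow_zero, autId_one]
    | succ n ihn => rw [pow_succ, autId_mul, hσ, ihn]
  have hle : I ≤ extId (𝓞 L) (𝓞 M) q := by
    rw [← (hunr q hqm).radical, Ideal.radical_eq_sInf]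
    refine le_sInf ?_
    rintro P' ⟨hP', hP'p⟩
    have hunder : q = P'.under (𝓞 L) := by
      refine hqm.eq_of_le ?_ (Ideal.map_le_iff_le_comap.1 hP')
      exact (Ideal.IsPrime.under _ P').ne_top
    obtain ⟨τ, hτ⟩ := Algebra.IsInvariant.exists_smul_of_under_eq (𝓞 L) (𝓞 M) (M ≃ₐ[L] M) P P' hunder
    obtain ⟨i, hi⟩ := hg τ
    have h1 := hpow i
    rw [oAut_pow, hi] at h1
    rw [hτ, ← h1]
    exact Ideal.map_mono hIP
  obtain ⟨I', hI'⟩ := Ideal.dvd_iff_le.2 hle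
  have hI'0 : I' ≠ ⊥ := by
    rintro rfl
    exact hI (by rw [hI', Ideal.mul_bot])
  have hq1 : extId (𝓞 L) (𝓞 M) q ≠ ⊥ := extId_ne_bot hq0
  have hlt : I < I' := by
    refine lt_of_le_of_ne (hI'.le.trans Ideal.mul_le_right) ?_
    intro h
    rw [h] at hI'
    have h3 : (1 : Ideal (𝓞 M)) = extId (𝓞 L) (𝓞 M) q := by
      refine mul_right_cancel₀ (b := I') hI'0 ?_
      rw [one_mul]; exact hI'
    have h4 : extId (𝓞 L) (𝓞 M) q ≤ P := Ideal.map_le_iff_le_comap.2 le_rfl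
    rw [← h3, Ideal.one_eq_top, top_le_iff] at h4
    exact hP.ne_top h4
  have hfix : autId (oAut σ).toRingEquiv (extId (𝓞 L) (𝓞 M) q) = extId (𝓞 L) (𝓞 M) q := by
    have : (Ideal.map (algebraMap (𝓞 L) (𝓞 M)) q).map ((oAut σ).toRingEquiv : 𝓞 M →+* 𝓞 M) =
        Ideal.map (algebraMap (𝓞 L) (𝓞 M)) q := by
      rw [Ideal.map_map]
      congr 1
      ext x
      exact congrArg _ ((oAut σ).commutes x)
    exact this
  obtain ⟨J, hJ, hJI⟩ := ih I' hlt hI'0 (by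
    rw [hI', map_mul, hfix] at hσ
    exact mul_left_cancel₀ hq1 hσ)
  exact ⟨q * J, mul_ne_zero hq0 hJ, by rw [map_mul, hJI, hI']⟩


/-- In an unramified cyclic extension of prime degree of a totally complex field, the norm is not
surjective on class groups. -/
theorem norm_classes_proper [IsGalois L M] [IsTotallyComplex L] (p : ℕ) (hp : p.Prime)
    (hdeg : finrank L M = p)
    (hunr : ∀ q : Ideal (𝓞 L), q.IsMaximal → (extId (𝓞 L) (𝓞 M) q).IsRadical) :
    ∃ H : Subgroup (ClassGroup (𝓞 L)), H ≠ ⊤ ∧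
      ∀ (P : Ideal (𝓞 M)) (_ : P ≠ ⊥) (h : Ideal.relNorm (𝓞 L) P ≠ ⊥),
        cl (Ideal.relNorm (𝓞 L) P) h ∈ H := by
  have : Fact p.Prime := ⟨hp⟩
  have hcard : Nat.card (M ≃ₐ[L] M) = p := by rw [IsGalois.card_aut_eq_finrank, hdeg]
  obtain ⟨σ, hσ⟩ : ∃ σ : M ≃ₐ[L] M, σ ≠ 1 := by
    by_contra! h
    have : Subsingleton (M ≃ₐ[L] M) := ⟨fun a b => by rw [h a, h b]⟩
    rw [Nat.card_of_subsingleton (1 : M ≃ₐ[L] M)] at hcard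
    exact hp.one_lt.ne hcard
  have hord : orderOf σ = p := orderOf_eq_prime (hcard ▸ pow_card_eq_one') hσ
  have hg : ∀ τ : M ≃ₐ[L] M, ∃ i : ℕ, σ ^ i = τ := fun τ => by
    have := mem_powers_of_prime_card (g := σ) (g' := τ) hcard hσ
    exact this
  have hnormbot : ∀ I : Ideal (𝓞 M), I ≠ ⊥ → Ideal.relNorm (𝓞 L) I ≠ ⊥ := fun I hI h =>
    hI ((Ideal.relNorm_eq_bot_iff).1 h)
  let nm : ClassGroup (𝓞 M) →* ClassGroup (𝓞 L) := clMap (Ideal.relNorm (𝓞 L) : Ideal (𝓞 M) →*₀ Ideal (𝓞 L)).toMonoidHom hnormbot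
    (fun x => ⟨_, Ideal.relNorm_singleton _ x⟩)
  have : IsTotallyComplex M := isTotallyComplex_of_algebra L M
  have hnot := norm_not_surj (oAut σ) p hp (by
      rw [oAut_pow, ← hord, pow_orderOf_eq_one]; rfl)
    (fun x hx => by
      have hx' : (x : M) ∈ IntermediateField.fixedField (⊤ : Subgroup (M ≃ₐ[L] M)) := by
        rw [IntermediateField.mem_fixedField_iff]
        intro τ _
        obtain ⟨i, rfl⟩ := hg τ
        rw [← oAut_pow_coe]
        congr 1
        induction i with
        | zero => simp
        | succ n ih => rw [pow_succ, AlgEquiv.mul_apply, hx, ih trivial]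
      rw [InfiniteGalois.fixedField_bot, IntermediateField.mem_bot] at hx'
      obtain ⟨a, ha⟩ := hx'
      have hInt : IsIntegral (𝓞 L) a := by
        have h1 : IsIntegral (𝓞 L) (algebraMap L M a) := by
          rw [ha]
          exact (RingOfIntegers.isIntegral_coe x).tower_top
        exact (isIntegral_algebraMap_iff (algebraMap L M).injective).1 h1
      obtain ⟨a', ha'⟩ := IsIntegrallyClosed.isIntegral_iff.1 hInt
      refine ⟨a', RingOfIntegers.ext ?_⟩
      rw [← ha, ← ha']
      rfl)
    (fun x y hx hy h => h90_int σ p hp.pos hord x y hy h)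
    (fun I hI h => inv_descends σ hg hunr I hI h)
    nm (fun c => by
      obtain ⟨I, hI, rfl⟩ := cl_surj c
      rw [clAut_cl, clMap_cl, clMap_cl]
      congr 1
      exact Ideal.relNorm_map_algEquiv (oAut σ) I)
    (InfinitePlace.nrComplexPlaces L)
    (by
      rw [rank_add_one M, ← Nat.mul_left_cancel_iff (by norm_num : 0 < 2), ← IsTotallyComplex.finrank,
        ← finrank_mul_finrank ℚ L M, IsTotallyComplex.finrank, hdeg]
      ring)
    (rank_add_one L)
  refine ⟨nm.range, fun h => hnot (MonoidHom.range_eq_top.1 h), fun P hP h => ⟨cl P hP, ?_⟩⟩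
  rw [clMap_cl]; rfl

end NF
end ClRank

/-! ### p-ranks of finite abelian groups -/

namespace ClRank
section GroupRank

lemma elementary_structure (p : ℕ) [Fact p.Prime] (T : Type*) [AddCommGroup T] [Finite T]
    (hTp : ∀ x : T, p • x = 0) :
    ∃ n, Nat.card T = p ^ n ∧ Nonempty ((Fin n → ZMod p) ≃+ T) := by
  letI : Module (ZMod p) T := AddCommGroup.zmodModule hTp
  have h1 : Module.Finite (ZMod p) T := @Module.Finite.of_finite (ZMod p) T _ _ _ _
  have h2 : Module.Free (ZMod p) T := Module.Free.of_divisionRing _ _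
  let b := @Module.finBasis (ZMod p) T _ _ _ h2 inferInstance h1
  refine ⟨Module.finrank (ZMod p) T, ?_, ⟨b.equivFun.symm.toAddEquiv⟩⟩
  have h := @Module.natCard_eq_pow_finrank (ZMod p) T _ _ _ h1
  rwa [Nat.card_zmod] at h

/-- For a prime `p`, the `p`-rank of a finite abelian group is the dimension of its `p`-torsion. -/
lemma pow_nRank (p : ℕ) (hp : p.Prime) (G : Type*) [CommGroup G] [Finite G] :
    p ^ nRank p G = Nat.card (powMonoidHom p : G →* G).ker := by
  have : Fact p.Prime := ⟨hp⟩
  set T := Additive (powMonoidHom p : G →* G).ker with hT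
  have hTp : ∀ x : T, p • x = 0 := by
    intro x
    have h := (x.toMul).2
    rw [MonoidHom.mem_ker, powMonoidHom_apply] at h
    apply Additive.toMul.injective
    rw [toMul_nsmul, toMul_zero]
    exact Subtype.ext h
  have : Finite T := inferInstanceAs (Finite (powMonoidHom p : G →* G).ker)
  obtain ⟨n, hcard', ⟨e⟩⟩ := elementary_structure p T hTp
  have hcard : Nat.card (powMonoidHom p : G →* G).ker = p ^ n := hcard'
  have hset : {r : ℕ | ∃ φ : (Fin r → ZMod p) →+ Additive G, Function.Injective φ} = Set.Iic n := by
    ext r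
    constructor
    · rintro ⟨φ, hφ⟩
      have h1 : Nat.card (Fin r → ZMod p) ≤ Nat.card (powMonoidHom p : G →* G).ker := by
        refine Nat.card_le_card_of_injective
          (fun v => (⟨(φ v).toMul, ?_⟩ : (powMonoidHom p : G →* G).ker)) ?_
        · rw [MonoidHom.mem_ker, powMonoidHom_apply, ← toMul_nsmul, ← map_nsmul]
          have : p • v = 0 := by ext i; simp
          rw [this, map_zero, toMul_zero]
        · intro v w h
          exact hφ (Additive.toMul.injective (congrArg Subtype.val h))
      rw [hcard, Nat.card_fun, Nat.card_zmod, Nat.card_fin] at h1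
      exact (Nat.pow_le_pow_iff_right hp.one_lt).1 h1
    · intro hr
      rw [Set.mem_Iic] at hr
      let ψ : (Fin r → ZMod p) →ₗ[ZMod p] (Fin n → ZMod p) :=
        Function.ExtendByZero.linearMap (ZMod p) (Fin.castLE hr)
      refine ⟨(MonoidHom.toAdditive (powMonoidHom p : G →* G).ker.subtype).comp
        (e.toAddMonoidHom.comp ψ.toAddMonoidHom), ?_⟩
      intro v w h
      have h1 : e (ψ v) = e (ψ w) := Subtype.ext h
      have h2 := e.injective h1
      ext i
      have h3 : Function.extend (Fin.castLE hr) v 0 = Function.extend (Fin.castLE hr) w 0 := h2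
      have := congrFun h3 (Fin.castLE hr i)
      rwa [(Fin.castLE_injective hr).extend_apply, (Fin.castLE_injective hr).extend_apply] at this
  rw [nRank, hset, csSup_Iic, hcard]

lemma index_range_eq_card_ker (p : ℕ) (G : Type*) [CommGroup G] [Finite G] :
    (powMonoidHom p : G →* G).range.index = Nat.card (powMonoidHom p : G →* G).ker := by
  have h1 := (powMonoidHom p : G →* G).range.index_mul_card
  have h2 := (powMonoidHom p : G →* G).ker.index_mul_card
  rw [Subgroup.index_ker] at h2
  have h3 : 0 < Nat.card (powMonoidHom p : G →* G).range := Nat.card_pos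
  rw [← h2, mul_comm] at h1
  exact Nat.eq_of_mul_eq_mul_left h3 h1

/-- Comparison of `p`-ranks through a transfer pair `j`, `N` with `N ∘ j` the `d`-th power map. -/
lemma rank_lemma (p : ℕ) (hp : p.Prime) (d : ℕ) (hd : d.Coprime p) {G G₀ : Type*} [CommGroup G]
    [CommGroup G₀] [Finite G] [Finite G₀] (j : G₀ →* G) (N : G →* G₀)
    (hNj : ∀ c, N (j c) = c ^ d)
    (hidx : p ^ 3 ≤ ((powMonoidHom p : G →* G).range ⊔ j.range).index) :
    3 + nRank p G₀ ≤ nRank p G := by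
  rw [← Nat.pow_le_pow_iff_right hp.one_lt, pow_add, pow_nRank p hp, pow_nRank p hp,
    ← index_range_eq_card_ker, ← index_range_eq_card_ker]
  set A := (powMonoidHom p : G →* G).range
  set A₀ := (powMonoidHom p : G₀ →* G₀).range
  rw [← Subgroup.relIndex_mul_index (le_sup_left : A ≤ A ⊔ j.range), mul_comm]
  refine Nat.mul_le_mul ?_ hidx
  rw [sup_comm, Subgroup.relIndex_sup_right]
  have h1 : A.relIndex j.range = (A.comap j).index := by
    rw [Subgroup.index_comap]
  rw [h1]
  refine Nat.le_of_dvd (Nat.pos_of_ne_zero Subgroup.index_ne_zero_of_finite)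
    (Subgroup.index_dvd_of_le ?_)
  rintro c ⟨g, hg⟩
  have h2 : c ^ d ∈ A₀ := by
    rw [← hNj, ← hg]
    exact ⟨N g, by simp⟩
  have h3 : c ^ p ∈ A₀ := ⟨c, rfl⟩
  have h4 : c ^ ((d : ℤ) * d.gcdA p + p * d.gcdB p) ∈ A₀ := by
    rw [zpow_add, zpow_mul, zpow_mul, zpow_natCast, zpow_natCast]
    exact mul_mem (zpow_mem h2 _) (zpow_mem h3 _)
  rw [← Nat.gcd_eq_gcd_ab, hd] at h4
  simpa using h4

/-- If `G/H` is an elementary abelian `p`-group of order less than `p³`, two elements of any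
generating set generate `G` modulo `H`. -/
lemma two_generators (p : ℕ) (hp : p.Prime) {G : Type*} [CommGroup G] [Finite G] (H : Subgroup G)
    (hH : ∀ g : G, g ^ p ∈ H) (S : Set G) (hS : Subgroup.closure S = ⊤) (hne : S.Nonempty)
    (hidx : H.index < p ^ 3) :
    ∃ s ∈ S, ∃ s' ∈ S, ∀ H' : Subgroup G, H ≤ H' → s ∈ H' → s' ∈ H' → H' = ⊤ := by
  have : Fact p.Prime := ⟨hp⟩
  by_contra! hcon
  have hstep : ∀ H₁ : Subgroup G, H₁ ≠ ⊤ → ∃ s ∈ S, s ∉ H₁ := by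
    intro H₁ h
    by_contra! h'
    exact h (top_le_iff.1 (hS ▸ (Subgroup.closure_le _).2 h'))
  have key : ∀ s ∈ S, ∀ s' ∈ S, H ⊔ Subgroup.zpowers s ⊔ Subgroup.zpowers s' ≠ ⊤ := by
    intro s hs s' hs' h
    obtain ⟨H', h1, h2, h3, h4⟩ := hcon s hs s' hs'
    refine h4 (top_le_iff.1 (h ▸ ?_))
    simp [h1, h2, h3]
  obtain ⟨s₀, hs₀⟩ := hne
  -- If no two elements of `S` generate the quotient, there is a strictly increasing chain of
  -- subgroups above `H` with three steps, each of index at least `p`.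
  obtain ⟨s, hs, hsH⟩ := hstep H (fun h => key s₀ hs₀ s₀ hs₀ (by simp [h]))
  obtain ⟨s', hs', hsH'⟩ := hstep (H ⊔ Subgroup.zpowers s) (fun h => key s hs s₀ hs₀ (by simp [h]))
  have h3 := key s hs s' hs'
  set H₁ := H ⊔ Subgroup.zpowers s
  set H₂ := H₁ ⊔ Subgroup.zpowers s'
  have h01 : H ≤ H₁ := le_sup_left
  have h12 : H₁ ≤ H₂ := le_sup_left
  have hpg : IsPGroup p (G ⧸ H) := fun x => by
    obtain ⟨g, rfl⟩ := QuotientGroup.mk_surjective x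
    exact ⟨1, by rw [pow_one, ← QuotientGroup.mk_pow]; exact (QuotientGroup.eq_one_iff _).2 (hH g)⟩
  obtain ⟨k, hk⟩ := IsPGroup.iff_card.1 hpg
  have hk' : H.index = p ^ k := hk
  have hmul : H.relIndex H₁ * H₁.relIndex H₂ * H₂.index = H.index := by
    rw [Subgroup.relIndex_mul_relIndex _ _ _ h01 h12,
      Subgroup.relIndex_mul_index (h01.trans h12)]
  have hge : ∀ m, m ∣ H.index → m ≠ 1 → p ≤ m := by
    intro m hm hm1
    rw [hk', Nat.dvd_prime_pow hp] at hm
    obtain ⟨i, -, rfl⟩ := hm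
    exact Nat.le_self_pow (by rintro rfl; exact hm1 (pow_zero p)) p
  have e1 : p ≤ H.relIndex H₁ := hge _ (hmul ▸ ⟨H₁.relIndex H₂ * H₂.index, by ring⟩) (by
    rw [Ne, Subgroup.relIndex_eq_one]
    exact fun h => hsH (h (Subgroup.mem_sup_right (Subgroup.mem_zpowers s))))
  have e2 : p ≤ H₁.relIndex H₂ := hge _ (hmul ▸ ⟨H.relIndex H₁ * H₂.index, by ring⟩) (by
    rw [Ne, Subgroup.relIndex_eq_one]
    exact fun h => hsH' (h (Subgroup.mem_sup_right (Subgroup.mem_zpowers s'))))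
  have e3 : p ≤ H₂.index := hge _ (hmul ▸ ⟨H.relIndex H₁ * H₁.relIndex H₂, by ring⟩) (by
    rwa [Ne, Subgroup.index_eq_one])
  have := Nat.mul_le_mul (Nat.mul_le_mul e1 e2) e3
  rw [hmul] at this
  exact absurd hidx (not_lt.2 (by simpa [pow_succ] using this))

end GroupRank
end ClRank

/-! ### Inertia and Frobenius in towers -/

namespace ClRank
open NumberField Module

lemma card_le_of_pow_eq {k : Type*} [Field k] [Finite k] (N : ℕ) (hN : 1 < N)
    (h : ∀ x : k, x ^ N = x) : Nat.card k ≤ N := by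
  classical
  have := Fintype.ofFinite k
  have hne := FiniteField.X_pow_card_sub_X_ne_zero k hN
  have h1 := Polynomial.card_le_degree_of_subset_roots (p := (Polynomial.X ^ N - Polynomial.X : Polynomial k))
    (Z := Finset.univ) (fun x _ => by
      rw [Polynomial.mem_roots hne]
      simp [h x])
  rwa [FiniteField.X_pow_card_sub_X_natDegree_eq k hN, Finset.card_univ,
    ← Nat.card_eq_fintype_card] at h1

section Tower
variable {L F M : Type*} [Field L] [NumberField L] [Field F] [NumberField F] [Field M]
  [NumberField M] [Algebra L F] [Algebra F M] [Algebra L M] [IsScalarTower L F M]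

/-- If the inertia groups of a Galois extension `M/L` fix the intermediate field `F`, then `F/L` is
unramified: extensions of primes of `L` to `F` are radical. -/
lemma radical_of_inertia_fixes [IsGalois L M]
    (h : ∀ (P : Ideal (𝓞 M)), P.IsMaximal → ∀ g : M ≃ₐ[L] M,
      (∀ r : 𝓞 M, oAut g r - r ∈ P) → ∀ x : F, g (algebraMap F M x) = algebraMap F M x)
    (q : Ideal (𝓞 L)) (hq : q.IsMaximal) : (extId (𝓞 L) (𝓞 F) q).IsRadical := by
  have hGal : IsGalois F M := IsGalois.tower_top_of_isGalois L F M
  have hqbot : q ≠ ⊥ := Ring.ne_bot_of_isMaximal_of_not_isField hq (RingOfIntegers.not_isField L)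
  have hbot : Ideal.map (algebraMap (𝓞 L) (𝓞 F)) q ≠ ⊥ := extId_ne_bot hqbot
  have key : ∀ Q : Ideal (𝓞 F), Q.IsPrime → Q.LiesOver q → Q.ramificationIdx (𝓞 L) = 1 := by
    intro Q hQ hQq
    have hQm : Q.IsMaximal := hQ.isMaximal (Ideal.ne_bot_of_liesOver_of_ne_bot hqbot Q)
    obtain ⟨⟨P, hP, hPQ⟩⟩ := (inferInstance : Nonempty (Q.primesOver (𝓞 M)))
    have hPm : P.IsMaximal := hP.isMaximal
      (Ideal.ne_bot_of_liesOver_of_ne_bot (Ring.ne_bot_of_isMaximal_of_not_isField hQm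
        (RingOfIntegers.not_isField F)) P)
    have hPq : P.LiesOver q := Ideal.LiesOver.trans P Q q
    have : Finite (𝓞 L ⧸ q) := Ring.HasFiniteQuotients.finiteQuotient hqbot
    have : Finite (𝓞 F ⧸ Q) := Ring.HasFiniteQuotients.finiteQuotient (Ring.ne_bot_of_isMaximal_of_not_isField hQm
        (RingOfIntegers.not_isField F))
    have e1 := Ideal.card_inertia_eq_ramificationIdxIn (G := M ≃ₐ[L] M) q P
    have e2 := Ideal.card_inertia_eq_ramificationIdxIn (G := M ≃ₐ[F] M) Q P
    rw [Ideal.ramificationIdxIn_eq_ramificationIdx q P (M ≃ₐ[L] M)] at e1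
    rw [Ideal.ramificationIdxIn_eq_ramificationIdx Q P (M ≃ₐ[F] M)] at e2
    have hle : Nat.card (P.inertia (M ≃ₐ[L] M)) ≤ Nat.card (P.inertia (M ≃ₐ[F] M)) := by
      refine Nat.card_le_card_of_injective (fun g => ⟨AlgEquiv.ofRingEquiv (f := g.1.toRingEquiv)
        (fun x => h P hPm g.1 g.2 x), g.2⟩) ?_
      intro a b hab
      ext x
      exact DFunLike.congr_fun (congrArg Subtype.val hab) x
    rw [e1, e2, Ideal.ramificationIdx_tower (R := 𝓞 L) Q P] at hle
    have h1 := Ideal.ramificationIdx_pos P (𝓞 F)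
    have h2 := Ideal.ramificationIdx_pos Q (𝓞 L)
    nlinarith
  have hsq : Squarefree (Ideal.map (algebraMap (𝓞 L) (𝓞 F)) q) := by
    rw [UniqueFactorizationMonoid.squarefree_iff_nodup_normalizedFactors hbot,
      Multiset.nodup_iff_count_le_one]
    intro Q
    by_cases hQ : Q ∈ UniqueFactorizationMonoid.normalizedFactors
        (Ideal.map (algebraMap (𝓞 L) (𝓞 F)) q)
    · have hQp : Q.IsPrime := Ideal.isPrime_of_prime
        (UniqueFactorizationMonoid.prime_of_normalized_factor Q hQ)
      have hQq : Q.LiesOver q := ⟨hq.eq_of_le (Ideal.IsPrime.under _ Q).ne_top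
        (Ideal.map_le_iff_le_comap.1
          (Ideal.dvd_iff_le.1 (UniqueFactorizationMonoid.dvd_of_mem_normalizedFactors hQ)))⟩
      rw [← Ideal.IsDedekindDomain.ramificationIdx_eq_normalizedFactors_count q Q hbot, key Q hQp hQq]
    · rw [Multiset.count_eq_zero_of_notMem hQ]; exact zero_le_one
  rintro a ⟨n, hn⟩
  have h1 := (isRadical_iff_squarefree_of_ne_zero hbot).2 hsq n (Ideal.span {a}) (by
    rw [Ideal.span_singleton_pow, Ideal.dvd_span_singleton]; exact hn)
  rwa [Ideal.dvd_span_singleton] at h1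

/-- A prime of `L` having a Frobenius element that fixes `F` is a relative norm from `F`. -/
lemma exists_relNorm_eq (P : Ideal (𝓞 M)) (hP : P.IsMaximal) (g : M ≃ₐ[L] M)
    (hg : ∀ r : 𝓞 M, oAut g r - r ^ Nat.card (𝓞 L ⧸ P.under (𝓞 L)) ∈ P)
    (h : ∀ x : F, g (algebraMap F M x) = algebraMap F M x) :
    ∃ Q : Ideal (𝓞 F), Q ≠ ⊥ ∧ Ideal.relNorm (𝓞 L) Q = P.under (𝓞 L) := by
  set q := P.under (𝓞 L)
  set Q := P.under (𝓞 F)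
  have hQm : Q.IsMaximal := Ideal.IsMaximal.under _ P
  have hqm : q.IsMaximal := Ideal.IsMaximal.under _ P
  have hQbot : Q ≠ ⊥ := Ring.ne_bot_of_isMaximal_of_not_isField hQm (RingOfIntegers.not_isField F)
  have hqbot : q ≠ ⊥ := Ring.ne_bot_of_isMaximal_of_not_isField hqm (RingOfIntegers.not_isField L)
  have hQq : Q.LiesOver q := ⟨(Ideal.under_under (A := 𝓞 L) (B := 𝓞 F) P).symm⟩
  have : Finite (𝓞 L ⧸ q) := Ring.HasFiniteQuotients.finiteQuotient hqbot
  have hfin : Finite (𝓞 F ⧸ Q) := Ring.HasFiniteQuotients.finiteQuotient hQbot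
  refine ⟨Q, hQbot, ?_⟩
  have hdeg : Q.inertiaDeg (𝓞 L) = 1 := by
    have hN1 : 1 < Nat.card (𝓞 L ⧸ q) := by
      have : Nontrivial (𝓞 L ⧸ q) := Ideal.Quotient.nontrivial_iff.2 hqm.ne_top
      exact Finite.one_lt_card
    rw [Ideal.inertiaDeg_eq_of_isMaximal q Q]
    letI : Field (𝓞 L ⧸ q) := Ideal.Quotient.field q
    letI : Field (𝓞 F ⧸ Q) := Ideal.Quotient.field Q
    have h1 : Nat.card (𝓞 F ⧸ Q) ≤ Nat.card (𝓞 L ⧸ q) := by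
      refine card_le_of_pow_eq _ hN1 fun x => ?_
      obtain ⟨r, rfl⟩ := Ideal.Quotient.mk_surjective x
      rw [← map_pow, eq_comm, Ideal.Quotient.eq]
      show algebraMap (𝓞 F) (𝓞 M) _ ∈ P
      have h2 : oAut g (algebraMap (𝓞 F) (𝓞 M) r) = algebraMap (𝓞 F) (𝓞 M) r :=
        RingOfIntegers.ext (h r)
      have h3 := hg (algebraMap (𝓞 F) (𝓞 M) r)
      rwa [h2, ← map_pow, ← map_sub] at h3
    have h4 : Module.Finite (𝓞 L ⧸ q) (𝓞 F ⧸ Q) := Module.Finite.of_finite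
    have h5 := @Module.natCard_eq_pow_finrank (𝓞 L ⧸ q) (𝓞 F ⧸ Q) _ _ _ h4
    have h6 : 0 < finrank (𝓞 L ⧸ q) (𝓞 F ⧸ Q) := finrank_pos
    rw [h5] at h1
    have h7 : Nat.card (𝓞 L ⧸ q) ^ finrank (𝓞 L ⧸ q) (𝓞 F ⧸ Q) ≤ Nat.card (𝓞 L ⧸ q) ^ 1 := by
      rwa [pow_one]
    have h8 := (Nat.pow_le_pow_iff_right hN1).1 h7
    omega
  rw [Ideal.relNorm_eq_pow_of_isMaximal Q q, hdeg, pow_one]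

end Tower
end ClRank

/-! ### The rank bound from three Kummer classes -/

namespace ClRank
open NumberField Module IntermediateField

/-- Adjoining a `p`-th root that does not lie in `L` gives a Galois extension of degree `p`. -/
lemma kummer_ext {L M : Type*} [Field L] [Field M] [Algebra L M] {p : ℕ} (hp : p.Prime) {ζ : L}
    (hζ : IsPrimitiveRoot ζ p) (y : M) (a : L) (hy : y ^ p = algebraMap L M a)
    (hn : y ∉ Set.range (algebraMap L M)) :
    finrank L L⟮y⟯ = p ∧ IsGalois L L⟮y⟯ := by
  have : NeZero p := ⟨hp.ne_zero⟩
  have hirr : Irreducible (Polynomial.X ^ p - Polynomial.C a : Polynomial L) := by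
    refine X_pow_sub_C_irreducible_of_prime hp fun b hb => hn ?_
    have hb0 : (algebraMap L M b) ≠ 0 := by
      intro h0
      rw [← hb, map_pow, h0, zero_pow hp.ne_zero] at hy
      have := pow_eq_zero_iff hp.ne_zero |>.1 hy
      exact hn ⟨0, by rw [this, map_zero]⟩
    have h1 : (y / algebraMap L M b) ^ p = 1 := by
      rw [div_pow, hy, ← hb, map_pow, div_self (pow_ne_zero _ hb0)]
    obtain ⟨i, -, hi⟩ := (hζ.map_of_injective (algebraMap L M).injective).eq_pow_of_pow_eq_one h1
    exact ⟨ζ ^ i * b, by rw [map_mul, map_pow, hi, div_mul_cancel₀ _ hb0]⟩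
  have hmin : minpoly L y = Polynomial.X ^ p - Polynomial.C a :=
    (minpoly.eq_of_irreducible_of_monic hirr (by simp [hy])
      (Polynomial.monic_X_pow_sub_C _ hp.ne_zero)).symm
  have hInt : IsIntegral L y := by
    refine ⟨_, Polynomial.monic_X_pow_sub_C a hp.ne_zero, ?_⟩
    simp [hy]
  have hfr : finrank L L⟮y⟯ = p := by
    rw [adjoin.finrank hInt, hmin, Polynomial.natDegree_X_pow_sub_C]
  refine ⟨hfr, ?_⟩
  have : FiniteDimensional L L⟮y⟯ := adjoin.finiteDimensional hInt
  have hne : (primitiveRoots (finrank L L⟮y⟯) L).Nonempty := by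
    rw [hfr]; exact ⟨ζ, (mem_primitiveRoots hp.pos).2 hζ⟩
  have hs := isSplittingField_X_pow_sub_C_of_root_adjoin_eq_top hne (a := a)
    (α := AdjoinSimple.gen L y) (by
      rw [hfr]; exact Subtype.ext hy) (by
      apply IntermediateField.lift_injective
      rw [IntermediateField.lift_adjoin_simple, IntermediateField.lift_top, AdjoinSimple.coe_gen])
  exact isGalois_of_isSplittingField_X_pow_sub_C hne (by rwa [hfr]) _

lemma fixes_adjoin {L M : Type*} [Field L] [Field M] [Algebra L M] (g : M ≃ₐ[L] M) (y : M)
    (hg : g y = y) (x : L⟮y⟯) : g (x : M) = x := by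
  have h : (L⟮y⟯ : IntermediateField L M) ≤ IntermediateField.fixedField (Subgroup.zpowers g) := by
    rw [adjoin_simple_le_iff, IntermediateField.mem_fixedField_iff]
    rintro _ ⟨i, rfl⟩
    have : g ∈ MulAction.stabilizer (M ≃ₐ[L] M) y := hg
    exact zpow_mem this i
  exact (IntermediateField.mem_fixedField_iff _ _).1 (h x.2) g (Subgroup.mem_zpowers g)

/-- Two linear conditions modulo `p` on three exponents have a nontrivial solution. -/
lemma exists_exponents (p : ℕ) (hp : p.Prime) (a : Fin 2 → Fin 3 → ℕ) :
    ∃ e : Fin 3 → ℕ, (∃ i, ¬ p ∣ e i) ∧ ∀ k, p ∣ ∑ j, a k j * e j := by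
  have : Fact p.Prime := ⟨hp⟩
  let f := Matrix.toLin' (Matrix.of fun (k : Fin 2) (j : Fin 3) => (a k j : ZMod p))
  have hf : LinearMap.ker f ≠ ⊥ := f.ker_ne_bot_of_finrank_lt (by simp)
  obtain ⟨v, hv, hv0⟩ := Submodule.exists_mem_ne_zero_of_ne_bot hf
  have hcast : ∀ i, ((v i).val : ZMod p) = v i := fun i => ZMod.natCast_zmod_val _
  refine ⟨fun i => (v i).val, ?_, fun k => ?_⟩
  · by_contra! h
    refine hv0 (funext fun i => ?_)
    have := (ZMod.natCast_eq_zero_iff _ _).2 (h i)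
    rwa [hcast] at this
  · rw [← ZMod.natCast_eq_zero_iff]
    push_cast
    simp only [hcast]
    have := congrFun (LinearMap.mem_ker.1 hv) k
    simpa [f, Matrix.mulVec, dotProduct] using this

/-- Ideals all of whose prime factors have classes in `H` have class in `H`. -/
lemma cl_mem_of_primes (L : Type*) [Field L] [NumberField L] (H : Subgroup (ClassGroup (𝓞 L)))
    (I : Ideal (𝓞 L)) (hI : I ≠ ⊥)
    (h : ∀ q : Ideal (𝓞 L), q.IsMaximal → ∀ hq : q ≠ ⊥, I ≤ q → cl q hq ∈ H) : cl I hI ∈ H := by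
  induction I using WellFoundedGT.induction with
  | ind I ih =>
  by_cases hT : I = ⊤
  · subst hT
    have : ∀ (J : Ideal (𝓞 L)) (hJ : J ≠ ⊥), J = Ideal.span {1} → cl J hJ ∈ H := by
      rintro J hJ rfl
      rw [cl_span]; exact one_mem _
    exact this _ _ Ideal.span_singleton_one.symm
  obtain ⟨q, hq, hIq⟩ := Ideal.exists_le_maximal I hT
  have hq0 : q ≠ ⊥ := Ring.ne_bot_of_isMaximal_of_not_isField hq (RingOfIntegers.not_isField L)
  obtain ⟨J, rfl⟩ := Ideal.dvd_iff_le.2 hIq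
  have hJ0 : J ≠ ⊥ := by rintro rfl; simp at hI
  have hlt : q * J < J := by
    refine lt_of_le_of_ne Ideal.mul_le_right fun h' => hq.ne_top ?_
    rw [← Ideal.one_eq_top]
    refine mul_right_cancel₀ (b := J) hJ0 ?_
    rw [h', one_mul]
  rw [cl_mul hq0 hJ0]
  exact mul_mem (h q hq hq0 hIq) (ih J hlt hJ0 fun q' hq' h0 hJq => h q' hq' h0 (hlt.le.trans hJq))

/-- The class group is generated by the classes of the maximal ideals. -/
lemma prime_classes_generate (L : Type*) [Field L] [NumberField L] :
    Subgroup.closure {c : ClassGroup (𝓞 L) | ∃ q : Ideal (𝓞 L), q.IsMaximal ∧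
      ∃ h : q ≠ ⊥, cl q h = c} = ⊤ := by
  rw [eq_top_iff]
  rintro c -
  obtain ⟨I, hI, rfl⟩ := cl_surj c
  exact cl_mem_of_primes L _ I hI fun q hq h0 _ => Subgroup.subset_closure ⟨q, hq, h0, rfl⟩


lemma cl_pow_eq {F : Type*} [Field F] [NumberField F] {I J : Ideal (𝓞 F)} (hI : I ≠ ⊥)
    (hJ : J ≠ ⊥) (n : ℕ) (h : J = I ^ n) : cl J hJ = cl I hI ^ n := by
  subst h
  unfold cl
  rw [← map_pow]; rfl

/-- The norm of an extended ideal is its `n`-th power. -/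
lemma relNorm_extId {F E : Type*} [Field F] [NumberField F] [Field E] [NumberField E] [Algebra F E]
    {n : ℕ} (hn : finrank F E = n) (I : Ideal (𝓞 F)) :
    Ideal.relNorm (𝓞 F) (extId (𝓞 F) (𝓞 E) I) = I ^ n := by
  have h := Ideal.relNorm_algebraMap (𝓞 E) I
  rw [← IsFractionRing.finrank_eq (𝓞 F) F (𝓞 E) E, hn] at h
  exact h

/-- Abstract form of the rank bound: three independent Kummer classes that are unramified everywhere
and split at all primes dividing representatives of the extended classes. -/
theorem rank_of_kummer {K L M : Type*} [Field K] [NumberField K] [Field L] [NumberField L] [Field M]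
    [NumberField M] [Algebra K L] [Algebra L M] [IsGalois L M] [IsTotallyComplex L]
    {p : ℕ} (hp : p.Prime) {ζ : L} (hζ : IsPrimitiveRoot ζ p) {d : ℕ} (hd : finrank K L = d)
    (hdp : d.Coprime p) (y : Fin 3 → M) (hy0 : ∀ i, y i ≠ 0)
    (hyp : ∀ i, ∃ a : L, y i ^ p = algebraMap L M a)
    (hind : ∀ e : Fin 3 → ℕ, ∏ i, y i ^ e i ∈ Set.range (algebraMap L M) → ∀ i, p ∣ e i)
    (hin : ∀ (P : Ideal (𝓞 M)), P.IsMaximal → ∀ g : M ≃ₐ[L] M,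
      (∀ r : 𝓞 M, oAut g r - r ∈ P) → ∀ i, g (y i) = y i)
    (hCl : ∀ c : ClassGroup (𝓞 K), ∃ (I : Ideal (𝓞 K)) (hI : I ≠ ⊥), cl I hI = c ∧
      ∀ P : Ideal (𝓞 M), P.IsMaximal → extId (𝓞 K) (𝓞 L) I ≤ P.under (𝓞 L) →
        ∀ g : M ≃ₐ[L] M, (∀ r ∈ P, oAut g r ∈ P) → ∀ i, g (y i) = y i) :
    3 + nRank p (ClassGroup (𝓞 K)) ≤ nRank p (ClassGroup (𝓞 L)) := by
  classical
  have hnormbot : ∀ I : Ideal (𝓞 L), I ≠ ⊥ → Ideal.relNorm (𝓞 K) I ≠ ⊥ := fun I hI h =>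
    hI ((Ideal.relNorm_eq_bot_iff).1 h)
  let N : ClassGroup (𝓞 L) →* ClassGroup (𝓞 K) :=
    clMap (Ideal.relNorm (𝓞 K) : Ideal (𝓞 L) →*₀ Ideal (𝓞 K)).toMonoidHom hnormbot
      (fun x => ⟨_, Ideal.relNorm_singleton _ x⟩)
  refine rank_lemma p hp d hdp (clExt (𝓞 K) (𝓞 L)) N (fun c => ?_) ?_
  · obtain ⟨I, hI, rfl⟩ := cl_surj c
    rw [clExt_cl, clMap_cl]
    refine cl_pow_eq _ _ d ?_
    exact relNorm_extId hd I
  set H := (powMonoidHom p : ClassGroup (𝓞 L) →* ClassGroup (𝓞 L)).range ⊔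
    (clExt (𝓞 K) (𝓞 L)).range with hH
  -- If the index is smaller than `p ^ 3`, two primes `q₁, q₂` generate the quotient.
  by_contra! hidx
  obtain ⟨q₀, hq₀⟩ := Ideal.exists_maximal (𝓞 L)
  have hbot : ∀ q : Ideal (𝓞 L), q.IsMaximal → q ≠ ⊥ := fun q hq =>
    Ring.ne_bot_of_isMaximal_of_not_isField hq (RingOfIntegers.not_isField L)
  obtain ⟨_, ⟨q₁, hq₁, hq₁0, rfl⟩, _, ⟨q₂, hq₂, hq₂0, rfl⟩, hgen⟩ := two_generators p hp H
    (fun c => Subgroup.mem_sup_left ⟨c, rfl⟩) _ (prime_classes_generate L)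
    ⟨_, q₀, hq₀, hbot q₀ hq₀, rfl⟩ hidx
  -- Frobenius elements
  have hFrob : ∀ P : Ideal (𝓞 M), P.IsMaximal → ∃ g : M ≃ₐ[L] M,
      ∀ r : 𝓞 M, oAut g r - r ^ Nat.card (𝓞 L ⧸ P.under (𝓞 L)) ∈ P := by
    intro P hP
    have : Finite (𝓞 M ⧸ P) := Ring.HasFiniteQuotients.finiteQuotient
      (Ring.ne_bot_of_isMaximal_of_not_isField hP (RingOfIntegers.not_isField M))
    obtain ⟨g, hg⟩ := IsArithFrobAt.exists_of_isInvariant (𝓞 L) (M ≃ₐ[L] M) P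
    exact ⟨g, hg⟩
  have habove : ∀ q : Ideal (𝓞 L), q.IsMaximal → ∃ P : Ideal (𝓞 M), P.IsMaximal ∧
      P.under (𝓞 L) = q := by
    intro q hq
    obtain ⟨P, h1, h2⟩ := Ideal.exists_maximal_ideal_liesOver_of_isIntegral (S := 𝓞 M) q
    exact ⟨P, h1, h2.over.symm⟩
  obtain ⟨P₁, hP₁, hPq₁⟩ := habove q₁ hq₁
  obtain ⟨P₂, hP₂, hPq₂⟩ := habove q₂ hq₂
  obtain ⟨g₁, hg₁⟩ := hFrob P₁ hP₁
  obtain ⟨g₂, hg₂⟩ := hFrob P₂ hP₂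
  have hroot : ∀ (g : M ≃ₐ[L] M) (i : Fin 3), ∃ a : ℕ, g (y i) = algebraMap L M ζ ^ a * y i := by
    intro g i
    obtain ⟨a, ha⟩ := hyp i
    have : NeZero p := ⟨hp.ne_zero⟩
    have h1 : (g (y i) / y i) ^ p = 1 := by
      rw [div_pow, ← map_pow, ha, AlgEquiv.commutes, ← ha, div_self (pow_ne_zero _ (hy0 i))]
    obtain ⟨n, -, hn⟩ := (hζ.map_of_injective (algebraMap L M).injective).eq_pow_of_pow_eq_one h1
    exact ⟨n, by rw [hn, div_mul_cancel₀ _ (hy0 i)]⟩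
  choose a ha using hroot
  -- Three radicals and two Frobenius elements: there are exponents, not all divisible by `p`, for
  -- which the product `z` of powers of radicals is fixed by both Frobenius elements.
  obtain ⟨e, ⟨i₀, hi₀⟩, he⟩ := exists_exponents p hp ![a g₁, a g₂]
  set z := ∏ i, y i ^ e i with hz
  have hfix : ∀ g : M ≃ₐ[L] M, p ∣ ∑ j, a g j * e j → g z = z := by
    intro g hg
    obtain ⟨m, hm⟩ := hg
    rw [hz, map_prod]
    simp only [map_pow, ha, mul_pow, Finset.prod_mul_distrib]
    simp only [← pow_mul, Finset.prod_pow_eq_pow_sum]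
    rw [hm, pow_mul, ← map_pow, hζ.pow_eq_one, map_one, one_pow, one_mul]
  have hf₁ : g₁ z = z := hfix _ (he 0)
  have hf₂ : g₂ z = z := hfix _ (he 1)
  have hzn : z ∉ Set.range (algebraMap L M) := fun h => hi₀ (hind e h i₀)
  choose b hb using hyp
  have hzp : z ^ p = algebraMap L M (∏ i, b i ^ e i) := by
    rw [hz, ← Finset.prod_pow, map_prod]
    exact Finset.prod_congr rfl fun i _ => by rw [pow_right_comm, hb, map_pow]
  obtain ⟨hfin, hgal⟩ := kummer_ext hp hζ z _ hzp hzn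
  have hNF : NumberField L⟮z⟯ := by
    have := IntermediateField.adjoin.finiteDimensional (K := L) (x := z) (Algebra.IsIntegral.isIntegral z)
    exact NumberField.of_module_finite L _
  have hfixy : ∀ g : M ≃ₐ[L] M, (∀ i, g (y i) = y i) → g z = z := by
    intro g hg
    rw [hz, map_prod]
    exact Finset.prod_congr rfl fun i _ => by rw [map_pow, hg]
  -- The extension `L(z) / L` is unramified and cyclic of degree `p`, so the norms of its ideal
  -- classes lie in a proper subgroup.
  obtain ⟨H', hH', hnorm⟩ := norm_classes_proper (L := L) (M := L⟮z⟯) p hp hfin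
    (radical_of_inertia_fixes (M := M) fun P hP g hg x =>
      fixes_adjoin g z (hfixy g (hin P hP g hg)) x)
  have hmem : ∀ P : Ideal (𝓞 M), P.IsMaximal → ∀ g : M ≃ₐ[L] M,
      (∀ r : 𝓞 M, oAut g r - r ^ Nat.card (𝓞 L ⧸ P.under (𝓞 L)) ∈ P) → g z = z →
      ∀ h, cl (P.under (𝓞 L)) h ∈ H' := by
    intro P hP g hg hgz h
    obtain ⟨Q, hQ0, hQ⟩ := exists_relNorm_eq (F := L⟮z⟯) P hP g hg (fun x => fixes_adjoin g z hgz x)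
    have := hnorm Q hQ0 (by rw [hQ]; exact h)
    simpa only [hQ] using this
  -- The subgroup `H'` contains the `p`-th powers, as norms of extended ideals, the classes from
  -- `K`, as their primes split in `L(z)`, and the classes of `q₁` and `q₂`: a contradiction.
  refine hH' (hgen H' ?_ ?_ ?_)
  · rw [hH, sup_le_iff]
    constructor
    · rintro _ ⟨c, rfl⟩
      obtain ⟨I, hI, rfl⟩ := cl_surj c
      have h0 := extId_ne_bot (B := 𝓞 L⟮z⟯) hI
      have h1 : Ideal.relNorm (𝓞 L) (extId (𝓞 L) (𝓞 L⟮z⟯) I) = I ^ p := relNorm_extId hfin I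
      have h2 := hnorm _ h0 (by rw [h1]; exact pow_ne_zero _ hI)
      rw [cl_pow_eq hI _ p h1] at h2
      exact h2
    · rintro _ ⟨c, rfl⟩
      obtain ⟨I, hI, rfl, hI'⟩ := hCl c
      rw [clExt_cl]
      refine cl_mem_of_primes L H' _ _ fun q hq hq0 hle => ?_
      obtain ⟨P, hP, rfl⟩ := habove q hq
      obtain ⟨g, hg⟩ := hFrob P hP
      refine hmem P hP g hg (hfixy g (hI' P hP hle g fun r hr => ?_)) hq0
      have : Finite (𝓞 L ⧸ P.under (𝓞 L)) := Ring.HasFiniteQuotients.finiteQuotient hq0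
      have h3 := P.add_mem (hg r) (P.pow_mem_of_mem hr (Nat.card (𝓞 L ⧸ P.under (𝓞 L)))
        Nat.card_pos)
      rwa [sub_add_cancel] at h3
  · subst hPq₁; exact hmem P₁ hP₁ g₁ hg₁ hf₁ _
  · subst hPq₂; exact hmem P₂ hP₂ g₂ hg₂ hf₂ _

end ClRank

/-! ### Twisted products -/

namespace ClRank
open NumberField Module

section Ring
variable {R : Type*} [CommRing R] [IsDomain R] {p : ℕ} {ζ : R}

lemma root_one_sub_unit (hp : p.Prime) (hζ : IsPrimitiveRoot ζ p) {q : R} (hq : q ^ p = 1)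
    (hq1 : q ≠ 1) : ∃ w : Rˣ, q - 1 = (1 - ζ) * w := by
  have : NeZero p := ⟨hp.ne_zero⟩
  obtain ⟨j, hj, rfl⟩ := hζ.eq_pow_of_pow_eq_one hq
  have hj0 : j ≠ 0 := by rintro rfl; simp at hq1
  have hc : j.Coprime p := (Nat.coprime_of_lt_prime hj0 hj hp).symm
  obtain ⟨w, hw⟩ := hζ.associated_sub_one_pow_sub_one_of_coprime hc
  exact ⟨-w, by rw [← hw]; push_cast; ring⟩

lemma root_sub_one_dvd (hp : p.Prime) (hζ : IsPrimitiveRoot ζ p) {q : R} (hq : q ^ p = 1)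
    (hq1 : q ≠ 1) : q - 1 ∣ (p : R) := by
  have h : ∑ i ∈ Finset.range p, q ^ i = 0 := by
    have := geom_sum_mul q p
    rw [hq, sub_self] at this
    exact (mul_eq_zero.1 this).resolve_right (sub_ne_zero.2 hq1)
  have h2 : q - 1 ∣ ∑ i ∈ Finset.range p, (q ^ i - 1) := Finset.dvd_sum fun i _ => by
    simpa using sub_dvd_pow_sub_pow q 1 i
  rw [Finset.sum_sub_distrib, h] at h2
  simpa using h2

lemma prod_sub_root (hp : p.Prime) (hζ : IsPrimitiveRoot ζ p) (Y V : R) :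
    ∏ i ∈ Finset.range p, (Y - ζ ^ i * V) = Y ^ p - V ^ p := by
  have h := congrArg (Polynomial.eval Y)
    (X_pow_sub_C_eq_prod hζ hp.pos (rfl : V ^ p = V ^ p))
  simpa [Polynomial.eval_prod] using h.symm

lemma prod_add_root (hp : p.Prime) (hp2 : p ≠ 2) (hζ : IsPrimitiveRoot ζ p) (B V : R) :
    ∏ i ∈ Finset.range p, (B + ζ ^ i * V) = B ^ p + V ^ p := by
  have h := prod_sub_root hp hζ B (-V)
  rw [(hp.odd_of_ne_two hp2).neg_pow] at h
  simpa using h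

lemma geom_unit (hp : p.Prime) (hζ : IsPrimitiveRoot ζ p) {k : ℕ} (hk0 : k ≠ 0) (hk : k < p) :
    IsUnit (∑ i ∈ Finset.range k, ζ ^ i) := by
  have hq1 : ζ ^ k ≠ 1 := hζ.pow_ne_one_of_pos_of_lt hk0 hk
  obtain ⟨w, hw⟩ := root_one_sub_unit hp hζ (q := ζ ^ k)
    (by rw [pow_right_comm, hζ.pow_eq_one, one_pow]) hq1
  have h := geom_sum_mul ζ k
  have hz : ζ - 1 ≠ 0 := sub_ne_zero.2 (hζ.ne_one hp.one_lt)
  have : ∑ i ∈ Finset.range k, ζ ^ i = (-w : Rˣ) := by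
    apply mul_right_cancel₀ hz
    rw [h, hw]; push_cast; ring
  rw [this]
  exact Units.isUnit _

/-- `p = (1-ζ)^(p-1) w` for a unit `w ≡ -1` modulo `1-ζ`. -/
lemma p_eq (hp : p.Prime) (hζ : IsPrimitiveRoot ζ p) :
    ∃ w : Rˣ, (p : R) = (1 - ζ) ^ (p - 1) * w ∧ 1 - ζ ∣ (w : R) + 1 := by
  have h1 : ∏ k ∈ Finset.range (p - 1), (1 - ζ ^ (k + 1)) = (p : R) := by
    have hp1 : p - 1 + 1 = p := Nat.succ_pred_prime hp
    have := IsPrimitiveRoot.prod_one_sub_pow_eq_order (n := p - 1) (μ := ζ) (by rwa [hp1])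
    rw [this]; exact_mod_cast congrArg (Nat.cast (R := R)) hp1
  have h2 : ∀ k ∈ Finset.range (p - 1), (1 - ζ ^ (k + 1)) =
      (1 - ζ) * ∑ i ∈ Finset.range (k + 1), ζ ^ i := fun k _ => (mul_neg_geom_sum ζ (k + 1)).symm
  have h3 : IsUnit (∏ k ∈ Finset.range (p - 1), ∑ i ∈ Finset.range (k + 1), ζ ^ i) := by
    refine IsUnit.prod_iff.2 fun k hk => geom_unit hp hζ (Nat.succ_ne_zero k) ?_
    have := Finset.mem_range.1 hk
    omega
  obtain ⟨w, hw⟩ := h3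
  have h4 : (p : R) = (1 - ζ) ^ (p - 1) * w := by
    rw [← h1, Finset.prod_congr rfl h2, Finset.prod_mul_distrib, hw]; simp
  refine ⟨w, h4, ?_⟩
  have hfac : (p : R) ∣ ((p - 1).factorial : R) + 1 := by
    have : Fact p.Prime := ⟨hp⟩
    have := ZMod.wilsons_lemma p
    have h5 : (((p - 1).factorial + 1 : ℕ) : ZMod p) = 0 := by push_cast; rw [this]; ring
    have h6 := (ZMod.natCast_eq_zero_iff _ _).1 h5
    exact_mod_cast Nat.cast_dvd_cast (α := R) h6
  have hlp : 1 - ζ ∣ (p : R) := by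
    rw [h4]; exact Dvd.dvd.mul_right (dvd_pow_self _ (by have := hp.two_le; omega)) _
  have h7 : 1 - ζ ∣ (w : R) - ((p - 1).factorial : R) := by
    rw [hw, ← Finset.prod_range_add_one_eq_factorial]
    rw [← Ideal.mem_span_singleton, ← Ideal.Quotient.eq]
    push_cast
    simp only [map_prod, map_sum, map_pow, map_add, map_natCast, map_one]
    have : Ideal.Quotient.mk (Ideal.span {1 - ζ}) ζ = 1 := by
      rw [← map_one (Ideal.Quotient.mk (Ideal.span {1 - ζ})), eq_comm, Ideal.Quotient.eq]
      exact Ideal.mem_span_singleton_self _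
    simp [this]
  have := dvd_add h7 (hlp.trans hfac)
  convert this using 1
  ring

lemma lam_mem (hp : p.Prime) (hζ : IsPrimitiveRoot ζ p) {P : Ideal R} [hP : P.IsPrime]
    (h : (p : R) ∈ P) : 1 - ζ ∈ P := by
  obtain ⟨w, hw, -⟩ := p_eq hp hζ
  rw [hw] at h
  rcases hP.mem_or_mem h with h | h
  · exact hP.mem_of_pow_mem _ h
  · exact absurd (P.eq_top_of_isUnit_mem h w.isUnit) hP.ne_top

lemma eq_of_pow_eq {M : Type*} [Field M] {r r' : M} (hr : r ≠ 0) {m n : ℕ} (hmn : m.Coprime n)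
    (h1 : r' ^ m = r ^ m) (h2 : r' ^ n = r ^ n) : r' = r := by
  have e : ∀ k, r' ^ k = r ^ k → (r' / r) ^ k = 1 := fun k hk => by
    rw [div_pow, hk, div_self (pow_ne_zero _ hr)]
  have := pow_gcd_eq_one.2 ⟨e m h1, e n h2⟩
  rw [hmn, pow_one, div_eq_one_iff_eq hr] at this
  exact this

end Ring

section Twist

/-- The twisted product `∏_{i<p} (B + ζ^i V)^i`. -/
def twist {R : Type*} [CommRing R] (p : ℕ) (ζ B V : R) : R :=
  ∏ i ∈ Finset.range p, (B + ζ ^ i * V) ^ i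

lemma map_twist {R S : Type*} [CommRing R] [CommRing S] (f : R →+* S) (p : ℕ) (ζ B V : R) :
    f (twist p ζ B V) = twist p (f ζ) (f B) (f V) := by
  simp [twist]

/-- Replacing `V` by `ζ V` multiplies `twist` by `(B + V) ^ p`, up to the full product `∏ (B + ζ ^
i V)`. -/
lemma twist_shift {R : Type*} [CommRing R] {p : ℕ} {ζ : R} (hζ : ζ ^ p = 1) (B V : R) :
    twist p ζ B (ζ * V) * ∏ i ∈ Finset.range p, (B + ζ ^ i * V) = twist p ζ B V * (B + V) ^ p := by
  have h1 : twist p ζ B V * (B + V) ^ p = ∏ i ∈ Finset.range (p + 1), (B + ζ ^ i * V) ^ i := by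
    rw [Finset.prod_range_succ, hζ, one_mul]; rfl
  have h2 : ∏ i ∈ Finset.range p, (B + ζ ^ i * V) = ∏ i ∈ Finset.range p, (B + ζ ^ (i + 1) * V) := by
    rcases p with _ | n
    · rfl
    · rw [Finset.prod_range_succ', Finset.prod_range_succ, hζ, pow_zero]
  rw [h1, h2, Finset.prod_range_succ', pow_zero, mul_one, twist, ← Finset.prod_mul_distrib]
  refine Finset.prod_congr rfl fun i _ => ?_
  rw [pow_succ, pow_succ]
  congr 2 <;> ring

variable {R : Type*} [CommRing R]

lemma twist_sub (p : ℕ) (ζ B B' V : R) : B - B' ∣ twist p ζ B V - twist p ζ B' V := by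
  rw [← Ideal.mem_span_singleton, ← Ideal.Quotient.eq, map_twist, map_twist]
  congr 1
  rw [Ideal.Quotient.eq]
  exact Ideal.mem_span_singleton_self _

open Polynomial in
/-- First order expansion of the twisted product near `1` modulo `p (1 - ζ) ^ 2`. -/
lemma twist_wild [IsDomain R] {p : ℕ} (hp : p.Prime) (hp2 : p ≠ 2) {ζ : R}
    (hζ : IsPrimitiveRoot ζ p) (y : R) :
    (p : R) * (1 - ζ) ^ 2 ∣ twist p ζ 1 ((1 - ζ) ^ 2 * y) - (1 - p * (1 - ζ) * y) := by
  set F : R[X] := twist p (C ζ) 1 X with hF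
  have hζ' : IsPrimitiveRoot (C ζ : R[X]) p := hζ.map_of_injective C_injective
  have key : F.comp (C ζ * X) * (1 + X ^ p) = F * (1 + X) ^ p := by
    have h := twist_shift hζ'.pow_eq_one 1 X
    rw [prod_add_root hp hp2 hζ', one_pow] at h
    rw [← h, hF]
    congr 1
    change compRingHom (C ζ * X) _ = _
    rw [map_twist]
    simp
  have hc0 : F.coeff 0 = 1 := by
    rw [coeff_zero_eq_eval_zero]
    change evalRingHom 0 F = 1
    rw [hF, map_twist]
    simp [twist]
  have hrec : ∀ k, k < p → (ζ ^ k - 1) * F.coeff k =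
      ∑ j ∈ Finset.range k, (p.choose (k - j) : R) * F.coeff j := by
    intro k hk
    have h := congrArg (fun q => coeff q k) key
    rw [mul_add, mul_one, coeff_add, coeff_mul_X_pow', if_neg (by omega), add_zero,
      comp_C_mul_X_coeff, coeff_mul, Finset.Nat.sum_antidiagonal_eq_sum_range_succ
        (fun i j => F.coeff i * ((1 + X) ^ p : R[X]).coeff j), Finset.sum_range_succ] at h
    simp only [coeff_one_add_X_pow, Nat.sub_self, Nat.choose_zero_right, Nat.cast_one,
      mul_one] at h
    rw [sub_mul, one_mul, mul_comm, h, add_sub_cancel_right]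
    exact Finset.sum_congr rfl fun j _ => mul_comm _ _
  have hc1 : (ζ - 1) * F.coeff 1 = p := by
    have := hrec 1 hp.one_lt
    simpa [hc0] using this
  have hck : ∀ k, k ≠ 0 → k < p → (p : R) ∣ (1 - ζ) * F.coeff k := by
    intro k hk0 hk
    obtain ⟨w, hw⟩ := root_one_sub_unit hp hζ (q := ζ ^ k)
      (by rw [pow_right_comm, hζ.pow_eq_one, one_pow]) (hζ.pow_ne_one_of_pos_of_lt hk0 hk)
    have h1 : (p : R) ∣ (ζ ^ k - 1) * F.coeff k := by
      rw [hrec k hk]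
      refine Finset.dvd_sum fun j hj => Dvd.dvd.mul_right (Nat.cast_dvd_cast ?_) _
      have := Finset.mem_range.1 hj
      exact hp.dvd_choose_self (by omega) (by omega)
    rw [hw, mul_right_comm] at h1
    exact (Units.dvd_mul_right).1 h1
  obtain ⟨w, hpw, -⟩ := p_eq hp hζ
  have hev : twist p ζ 1 ((1 - ζ) ^ 2 * y) = F.eval ((1 - ζ) ^ 2 * y) := by
    change _ = evalRingHom _ F
    rw [hF, map_twist]; simp
  rw [hev, eval_eq_sum_range' (n := F.natDegree + 1 + 2) (by omega)]
  rw [Finset.sum_range_succ', Finset.sum_range_succ', hc0]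
  have : ∀ k ∈ Finset.range (F.natDegree + 1), (p : R) * (1 - ζ) ^ 2 ∣
      F.coeff (k + 1 + 1) * ((1 - ζ) ^ 2 * y) ^ (k + 1 + 1) := by
    intro k _
    rcases lt_or_ge (k + 2) p with hk | hk
    · obtain ⟨m, hm⟩ := hck (k + 2) (by omega) hk
      refine ⟨m * (1 - ζ) ^ (2 * k + 1) * y ^ (k + 2), ?_⟩
      clear_value F
      generalize 1 - ζ = l at *
      calc _ = (l * F.coeff (k + 2)) * (l ^ (2 * k + 3) * y ^ (k + 2)) := by ring
        _ = _ := by rw [hm]; ring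
    · obtain ⟨n, hn⟩ := Nat.exists_eq_add_of_le hk
      have hp1 : 2 * (k + 2) = (p - 1) + 2 + (p - 1 + 2 * n) := by have := hp.two_le; omega
      rw [hpw]
      refine ⟨F.coeff (k + 2) * (1 - ζ) ^ (p - 1 + 2 * n) * y ^ (k + 2) * (w⁻¹ : Rˣ), ?_⟩
      have hw1 : (w : R) * (w⁻¹ : Rˣ) = 1 := by simp
      clear_value F
      generalize 1 - ζ = l at *
      calc _ = F.coeff (k + 2) * (l ^ (2 * (k + 2)) * y ^ (k + 2)) := by ring
        _ = F.coeff (k + 2) * (l ^ (2 * (k + 2)) * y ^ (k + 2)) * ((w : R) * (w⁻¹ : Rˣ)) := by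
          rw [hw1, mul_one]
        _ = _ := by rw [hp1]; ring
  have h2 := Finset.dvd_sum this
  convert h2 using 1
  linear_combination (-(1 - ζ) * y) * hc1

end Twist
end ClRank

/-! ### Kummer generators at a prime -/

namespace ClRank
open NumberField Module

section Ring
variable {R : Type*} [CommRing R] [IsDomain R] {p : ℕ} {ζ : R}

lemma exists_root_mul (hp : p.Prime) (hζ : IsPrimitiveRoot ζ p) {Y Y' : R} (h : Y' ^ p = Y ^ p) :
    ∃ i, Y' = ζ ^ i * Y := by
  have h1 := prod_sub_root hp hζ Y' Y
  rw [h, sub_self] at h1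
  obtain ⟨i, -, hi⟩ := Finset.prod_eq_zero_iff.1 h1
  exact ⟨i, sub_eq_zero.1 hi⟩

/-- If `Y = 1 + (1 - ζ) Z` has a fixed `p`-th power and `Z` is fixed modulo `P`, then `Y` is
fixed: `g Y = ζ ^ i Y` with `p ∤ i` would give `g Z - Z ≡ -i` modulo `P`. -/
lemma wild_fix (hp : p.Prime) (hζ : IsPrimitiveRoot ζ p) {P : Ideal R} [hP : P.IsPrime]
    (hl : 1 - ζ ∈ P) (g : R →+* R) (hgζ : g ζ = ζ) {Z : R} (hZ : g Z - Z ∈ P)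
    (hY : g (1 + (1 - ζ) * Z) ^ p = (1 + (1 - ζ) * Z) ^ p) :
    g (1 + (1 - ζ) * Z) = 1 + (1 - ζ) * Z := by
  obtain ⟨i, hi⟩ := exists_root_mul hp hζ hY
  by_cases h1 : ζ ^ i = 1
  · rw [hi, h1, one_mul]
  exfalso
  obtain ⟨w, hw⟩ := root_one_sub_unit hp hζ (q := ζ ^ i)
      (by rw [pow_right_comm, hζ.pow_eq_one, one_pow]) h1
  have hl0 : 1 - ζ ≠ 0 := sub_ne_zero.2 (hζ.ne_one hp.one_lt).symm
  have h2 : g Z - Z = w * (1 + (1 - ζ) * Z) := by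
    apply mul_left_cancel₀ hl0
    have h3 : g (1 + (1 - ζ) * Z) = 1 + (1 - ζ) * g Z := by simp [hgζ]
    rw [h3] at hi
    linear_combination hi + (1 + (1 - ζ) * Z) * hw
  rw [h2] at hZ
  rcases hP.mem_or_mem hZ with h | h
  · exact hP.ne_top (P.eq_top_of_isUnit_mem h w.isUnit)
  · have := P.sub_mem h (P.mul_mem_right Z hl)
    rw [add_sub_cancel_right] at this
    exact hP.ne_top ((Ideal.eq_top_iff_one _).2 this)

/-- Factorisation of `Y ^ p - 1` for `Y = 1 + (1 - ζ) Z`. -/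
lemma wild_prod (hp : p.Prime) (hζ : IsPrimitiveRoot ζ p) (Z : R) :
    (1 - ζ) ^ p * ∏ i ∈ Finset.range p, (Z + ∑ j ∈ Finset.range i, ζ ^ j) =
      (1 + (1 - ζ) * Z) ^ p - 1 := by
  have h := prod_sub_root hp hζ (1 + (1 - ζ) * Z) 1
  rw [one_pow] at h
  rw [← h]
  have : ∀ i ∈ Finset.range p, 1 + (1 - ζ) * Z - ζ ^ i * 1 =
      (1 - ζ) * (Z + ∑ j ∈ Finset.range i, ζ ^ j) := fun i _ => by
    rw [mul_add, mul_neg_geom_sum]; ring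
  rw [Finset.prod_congr rfl this, Finset.prod_mul_distrib]
  simp

/-- By `wild_prod`, if `c ∈ P` then `Z` is congruent to an integer modulo `P`, so it is fixed
modulo `P` by the decomposition group. -/
lemma wild_dec (hp : p.Prime) (hζ : IsPrimitiveRoot ζ p) {P : Ideal R} [hP : P.IsPrime]
    (g : R →+* R) (hgζ : g ζ = ζ) (hg : ∀ r ∈ P, g r ∈ P) {Z c : R}
    (hZ : (1 + (1 - ζ) * Z) ^ p = 1 + (1 - ζ) ^ p * c) (hc : c ∈ P) : g Z - Z ∈ P := by
  have hl0 : 1 - ζ ≠ 0 := sub_ne_zero.2 (hζ.ne_one hp.one_lt).symm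
  have h := wild_prod hp hζ Z
  rw [hZ, add_sub_cancel_left] at h
  have h1 := mul_left_cancel₀ (pow_ne_zero _ hl0) h
  rw [← h1] at hc
  obtain ⟨i, -, hi⟩ := (hP.prod_mem_iff).1 hc
  have h2 := P.sub_mem (hg _ hi) hi
  rw [map_add, map_sum] at h2
  simpa [hgζ] using h2

open Polynomial in
/-- If `Y ^ p ≡ 1` modulo `(1 - ζ) ^ p` then `Y ≡ 1` modulo `1 - ζ`, because the quotient `(Y - 1)
/ (1 - ζ)` is integral. -/
lemma wild_div [IsIntegrallyClosed R] (hp : p.Prime) (hζ : IsPrimitiveRoot ζ p) {Y : R}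
    (h : (1 - ζ) ^ p ∣ Y ^ p - 1) : ∃ Z, Y = 1 + (1 - ζ) * Z := by
  have hl0 : 1 - ζ ≠ 0 := sub_ne_zero.2 (hζ.ne_one hp.one_lt).symm
  obtain ⟨c, hc⟩ := h
  set F := FractionRing R
  have hζ' : IsPrimitiveRoot (algebraMap R F ζ) p := hζ.map_of_injective (IsFractionRing.injective R F)
  have hl0' : 1 - algebraMap R F ζ ≠ 0 := sub_ne_zero.2 (hζ'.ne_one hp.one_lt).symm
  set Z : F := (algebraMap R F Y - 1) / (1 - algebraMap R F ζ) with hZ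
  have hYZ : 1 + (1 - algebraMap R F ζ) * Z = algebraMap R F Y := by
    rw [hZ, mul_div_cancel₀ _ hl0']; ring
  have h1 := wild_prod hp hζ' Z
  have h2 : ∏ i ∈ Finset.range p, (Z + ∑ j ∈ Finset.range i, algebraMap R F ζ ^ j) =
      algebraMap R F c := by
    apply mul_left_cancel₀ (pow_ne_zero p hl0')
    rw [h1, hYZ]
    have := congrArg (algebraMap R F) hc
    simpa using this
  have hInt : IsIntegral R Z := by
    set Q : R[X] := ∏ i ∈ Finset.range p, (X + C (∑ j ∈ Finset.range i, ζ ^ j)) with hQ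
    have hQm : Q.Monic := monic_prod_of_monic _ _ fun i _ => monic_X_add_C _
    have hQd : Q.natDegree = p := by
      rw [hQ, natDegree_prod_of_monic _ _ fun i _ => monic_X_add_C _]
      simp only [natDegree_X_add_C, Finset.sum_const, Finset.card_range, smul_eq_mul, mul_one]
    refine ⟨Q - C c, ?_, ?_⟩
    · refine hQm.sub_of_left (degree_C_le.trans_lt ?_)
      rw [degree_eq_natDegree hQm.ne_zero, hQd]
      exact_mod_cast hp.pos
    · rw [eval₂_sub, eval₂_C, hQ, eval₂_finsetProd, ← h2, sub_eq_zero]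
      refine Finset.prod_congr rfl fun i _ => ?_
      rw [eval₂_add, eval₂_X, eval₂_C, map_sum]
      simp only [map_pow]
  obtain ⟨Z', hZ'⟩ := IsIntegrallyClosed.isIntegral_iff.1 hInt
  refine ⟨Z', IsFractionRing.injective R F ?_⟩
  rw [← hYZ, ← hZ']
  simp

/-- An automorphism preserving a prime away from `p` fixes every Kummer generator that is a
`p`-th root of an element congruent to `1`. -/
lemma tame_dec (hp : p.Prime) (hζ : IsPrimitiveRoot ζ p) {P : Ideal R} [hP : P.IsPrime]
    (hpP : (p : R) ∉ P) (g : R →+* R) (hgζ : g ζ = ζ) (hg : ∀ r ∈ P, g r ∈ P) {Y : R}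
    (hY : Y ^ p - 1 ∈ P) (hgY : g Y ^ p = Y ^ p) : g Y = Y := by
  obtain ⟨i, hi⟩ := exists_root_mul hp hζ hgY
  by_cases h1 : ζ ^ i = 1
  · rw [hi, h1, one_mul]
  exfalso
  have h2 := prod_sub_root hp hζ Y 1
  rw [one_pow] at h2
  rw [← h2] at hY
  obtain ⟨j, -, hj⟩ := (hP.prod_mem_iff).1 hY
  have h3 := P.sub_mem (hg _ hj) hj
  have h4 : g (Y - ζ ^ j * 1) - (Y - ζ ^ j * 1) = (ζ ^ i - 1) * Y := by
    simp only [map_sub, map_mul, map_pow, hgζ, map_one]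
    rw [hi]; ring
  rw [h4] at h3
  rcases hP.mem_or_mem h3 with h | h
  · obtain ⟨m, hm⟩ := root_sub_one_dvd hp hζ (q := ζ ^ i)
      (by rw [pow_right_comm, hζ.pow_eq_one, one_pow]) h1
    exact hpP (hm ▸ P.mul_mem_right m h)
  · have h5 := P.sub_mem h hj
    have h6 : ζ ^ j ∈ P := by convert h5 using 1; ring
    have h7 := hP.mem_of_pow_mem _ h6
    have h8 := P.pow_mem_of_mem h7 p hp.pos
    rw [hζ.pow_eq_one] at h8
    exact hP.ne_top ((Ideal.eq_top_iff_one _).2 h8)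

end Ring
end ClRank

/-! ### Inertia away from p -/

namespace ClRank
open NumberField Module

section Val
variable {M Γ : Type*} [Field M] [LinearOrderedCommGroupWithZero Γ] (v : Valuation M Γ)
  {p : ℕ}

lemma v_eq_one_of_pow {x : M} {n : ℕ} (hn : n ≠ 0) (h : v (x ^ n) = 1) : v x = 1 := by
  rw [map_pow] at h
  exact (pow_eq_one_iff_of_nonneg zero_le hn).1 h

/-- Away from `p`, a `p`-th root of unity congruent to `1` is equal to `1`. -/
lemma v_root (hp : p.Prime) (hvp : v (p : M) = 1) {q : M} (hq : q ^ p = 1) (h : v (q - 1) < 1) :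
    q = 1 := by
  by_contra hq1
  have hvq : v q = 1 := v_eq_one_of_pow v hp.ne_zero (by rw [hq, map_one])
  have h0 : ∑ i ∈ Finset.range p, q ^ i = 0 := by
    have := geom_sum_mul q p
    rw [hq, sub_self] at this
    exact (mul_eq_zero.1 this).resolve_right (sub_ne_zero.2 hq1)
  have h2 : v (∑ i ∈ Finset.range p, (q ^ i - 1)) < 1 := by
    refine v.map_sum_lt one_ne_zero fun i _ => ?_
    rw [← geom_sum_mul, map_mul]
    refine (mul_le_of_le_one_left' (v.map_sum_le fun j _ => ?_)).trans_lt h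
    rw [map_pow, hvq, one_pow]
  rw [Finset.sum_sub_distrib, h0] at h2
  simp [hvp] at h2

/-- Away from `p`, inertia fixes a unit whose `p`-th power it fixes. -/
lemma fix_unit (g : M →+* M) (hg : ∀ r, v r ≤ 1 → v (g r - r) < 1)
    (hp : p.Prime) (hvp : v (p : M) = 1) {r : M} (hr : v r = 1)
    (hgr : g r ^ p = r ^ p) : g r = r := by
  have hr0 : r ≠ 0 := by rintro rfl; simp at hr
  have h := v_root v hp hvp (q := g r / r) (by rw [div_pow, hgr, div_self (pow_ne_zero _ hr0)])
    (by
      rw [div_sub_one hr0, map_div₀, hr, div_one]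
      exact hg r hr.le)
  rwa [div_eq_one_iff_eq hr0] at h

/-- If `C` is a unit, at most one factor `B + ζ ^ i C` is a non-unit, so the valuation of the
twisted product is a power of that of the full product. -/
lemma v_twist (hp : p.Prime) (hvp : v (p : M) = 1) {ζ : M} (hζ : IsPrimitiveRoot ζ p) {B C : M}
    (hC : v C = 1) (hle : ∀ i, v (B + ζ ^ i * C) ≤ 1) :
    ∃ k : ℕ, v (twist p ζ B C) = v (∏ i ∈ Finset.range p, (B + ζ ^ i * C)) ^ k := by
  have hvζ : v ζ = 1 := v_eq_one_of_pow v hp.ne_zero (by rw [hζ.pow_eq_one, map_one])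
  by_cases hall : ∀ i ∈ Finset.range p, v (B + ζ ^ i * C) = 1
  · refine ⟨0, ?_⟩
    rw [pow_zero, twist, map_prod]
    exact Finset.prod_eq_one fun i hi => by rw [map_pow, hall i hi, one_pow]
  push Not at hall
  obtain ⟨i, hi, hvi⟩ := hall
  have hvi := lt_of_le_of_ne (hle i) hvi
  have hone : ∀ j ∈ Finset.range p, j ≠ i → v (B + ζ ^ j * C) = 1 := by
    intro j hj hji
    refine le_antisymm (hle j) (le_of_not_gt fun hvj => hji ?_)
    have h1 : v (ζ ^ j * C - ζ ^ i * C) < 1 := by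
      have := v.map_sub_lt hvj hvi
      rwa [add_sub_add_left_eq_sub] at this
    rw [← sub_mul, map_mul, hC, mul_one] at h1
    have hζ0 : ζ ^ i ≠ 0 := pow_ne_zero _ (hζ.ne_zero hp.ne_zero)
    have h2 := v_root v hp hvp (q := ζ ^ j / ζ ^ i)
      (by rw [div_pow, pow_right_comm, pow_right_comm ζ i, hζ.pow_eq_one, one_pow, one_pow, div_one])
      (by rw [div_sub_one hζ0, map_div₀, map_pow v ζ i, hvζ, one_pow, div_one]; exact h1)
    rw [div_eq_one_iff_eq hζ0] at h2
    exact hζ.pow_inj (Finset.mem_range.1 hj) (Finset.mem_range.1 hi) h2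
  refine ⟨i, ?_⟩
  rw [twist, map_prod, map_prod, Finset.prod_eq_single i, Finset.prod_eq_single i, map_pow]
  · exact fun j hj hji => hone j hj hji
  · exact fun h => absurd hi h
  · exact fun j hj hji => by rw [map_pow, hone j hj hji, one_pow]
  · exact fun h => absurd hi h

/-- Away from `p` inertia fixes the three Kummer generators. -/
theorem tame_inertia (g : M →+* M) (hg : ∀ r, v r ≤ 1 → v (g r - r) < 1)
    (hp : p.Prime) (hp2 : p ≠ 2) (hvp : v (p : M) = 1) {ζ : M}
    (hζ : IsPrimitiveRoot ζ p) {d : ℕ} (hd2 : 2 ≤ d) (hdp : d < p) {b τ ε s U W Δ : M}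
    (hgζ : g ζ = ζ) (hgb : g b = b) (hgτ : g τ = τ) (hgs : g s = s)
    (vb : v b ≤ 1) (vτ : v τ ≤ 1) (vs : v s ≤ 1) (vU : v U ≤ 1) (vW : v W ≤ 1)
    (hs0 : s ≠ 0) (hU0 : U ≠ 0) (hW0 : W ≠ 0) (hΔ0 : Δ ≠ 0)
    (hb : b ^ p = 1 + τ ^ p * ε) (hW : W ^ p = U ^ p + ε)
    (hR : U ^ p * (W ^ p) ^ (d - 1) = s ^ p * (b ^ p + τ ^ p * U ^ p))
    (h3 : v ε < 1 → v s < 1 → v ε ≤ v s ^ (p + 1))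
    (h4 : v b < 1 → v ((τ ^ d * s) ^ p - (-1) ^ (d - 1)) = 1)
    (hgU : g U ^ p = U ^ p) (hgW : g W ^ p = W ^ p)
    (hΔ : Δ ^ p = twist p ζ b (τ * U) * twist p ζ 1 (τ * W) ^ (d - 1)) :
    g U = U ∧ g W = W ∧ g Δ = Δ := by
  have hp0 := hp.ne_zero
  have hvζ : v ζ = 1 := v_eq_one_of_pow v hp.ne_zero (by rw [hζ.pow_eq_one, map_one])
  have hcop : ∀ m, m ≠ 0 → m < p → p.Coprime m := fun m h1 h2 => (Nat.coprime_of_lt_prime h1 h2 hp)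
  -- The quotient `X` is a `p`-th root of `b ^ p + τ ^ p U ^ p = 1 + τ ^ p W ^ p`.
  set X := U * W ^ (d - 1) / s with hX
  have hsX : s * X = U * W ^ (d - 1) := by rw [hX, mul_div_cancel₀ _ hs0]
  have hX0 : X ≠ 0 := div_ne_zero (mul_ne_zero hU0 (pow_ne_zero _ hW0)) hs0
  have hXb : X ^ p = b ^ p + τ ^ p * U ^ p := by
    apply mul_left_cancel₀ (pow_ne_zero p hs0)
    rw [← hR, ← mul_pow, hsX, mul_pow, pow_right_comm]
  have hX1 : X ^ p = 1 + τ ^ p * W ^ p := by rw [hXb, hb, hW]; ring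
  have vXp : v (X ^ p) ≤ 1 := by
    rw [hX1]
    refine v.map_add_le (map_one v).le ?_
    rw [map_mul, map_pow, map_pow]
    exact mul_le_one' (pow_le_one' vτ _) (pow_le_one' vW _)
  have vX : v X ≤ 1 := by
    rw [map_pow] at vXp; exact (pow_le_one_iff hp0).1 vXp
  have hgX : g X ^ p = X ^ p := by
    rw [← map_pow, hXb]; simp only [map_add, map_mul, map_pow, hgb, hgτ, hgU]
  have hgsX : s * g X = g U * g W ^ (d - 1) := by
    rw [← map_pow, ← map_mul, ← hsX, map_mul, hgs]
  have hpr1 : ∏ i ∈ Finset.range p, (b + ζ ^ i * (τ * U)) = X ^ p := by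
    rw [prod_add_root hp hp2 hζ, hXb, mul_pow]
  have hpr2 : ∏ i ∈ Finset.range p, (1 + ζ ^ i * (τ * W)) = X ^ p := by
    rw [prod_add_root hp hp2 hζ, hX1, mul_pow, one_pow]
  have vτU : v (τ * U) ≤ 1 := by rw [map_mul]; exact mul_le_one' vτ vU
  have vτW : v (τ * W) ≤ 1 := by rw [map_mul]; exact mul_le_one' vτ vW
  have vf1 : ∀ i, v (b + ζ ^ i * (τ * U)) ≤ 1 := fun i =>
    v.map_add_le vb (by rw [map_mul, map_pow, hvζ, one_pow, one_mul]; exact vτU)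
  have vf2 : ∀ i, v (1 + ζ ^ i * (τ * W)) ≤ 1 := fun i =>
    v.map_add_le (map_one v).le (by rw [map_mul, map_pow, hvζ, one_pow, one_mul]; exact vτW)
  -- once `U`, `W` are fixed, it suffices to find a fixed element of the same valuation as `Δ`
  have finish : g U = U → g W = W → ∀ Y : M, Y ≠ 0 → g Y = Y → v (Δ ^ p) = v Y ^ p → g Δ = Δ := by
    intro hU' hW' Y hY0 hgY hv
    have h1 : g (Δ / Y) = Δ / Y := by
      refine fix_unit v g hg hp hvp ?_ ?_
      · refine v_eq_one_of_pow v hp0 ?_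
        rw [div_pow, map_div₀, hv, map_pow, div_self]
        exact pow_ne_zero _ ((v.ne_zero_iff).2 hY0)
      · rw [← map_pow, div_pow, map_div₀, hΔ, map_pow, hgY, map_mul, map_pow g (twist _ _ _ _),
          map_twist, map_twist, map_mul, map_mul, hgζ, hgb, hgτ, hU', hW', map_one]
    rw [map_div₀, hgY, div_left_inj' hY0] at h1
    exact h1
  have prodone : ∀ f : ℕ → M, (∀ i, v (f i) ≤ 1) → v (∏ i ∈ Finset.range p, f i) = 1 →
      v (∏ i ∈ Finset.range p, f i ^ i) = 1 := by
    intro f hf h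
    rw [map_prod] at h ⊢
    refine Finset.prod_eq_one fun i hi => ?_
    have : v (f i) = 1 := (Finset.prod_eq_one_iff_of_le_one' (fun i _ => hf i)).1 h i hi
    rw [map_pow, this, one_pow]
  rcases vX.lt_or_eq with hXlt | hXeq
  · -- `X` is divisible by the prime
    have vXplt : v (X ^ p) < 1 := by rw [map_pow]; exact pow_lt_one₀ zero_le hXlt hp0
    have hτW1 : v (τ * W) = 1 := by
      refine v_eq_one_of_pow v hp0 ?_
      have : (τ * W) ^ p = X ^ p - 1 := by rw [hX1]; ring
      rw [this, v.map_sub_swap, v.map_one_sub_of_lt vXplt]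
    have hτ1 : v τ = 1 := by
      refine le_antisymm vτ ?_
      rw [← hτW1, map_mul]; exact mul_le_of_le_one_right' vW
    have hW1 : v W = 1 := by rwa [map_mul, hτ1, one_mul] at hτW1
    have gW : g W = W := fix_unit v g hg hp hvp hW1 hgW
    -- If `b` is a non-unit, then `X` and `b` have the same valuation, by the condition at the
    -- primes dividing `b`.
    rcases vb.lt_or_eq with hblt | hbeq
    · have hd1 : v ((X ^ p - 1) ^ (d - 1)) = 1 := by
        have : X ^ p - 1 = (τ * W) ^ p := by rw [hX1]; ring
        rw [this, map_pow, map_pow, hτW1, one_pow, one_pow]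
      have h5 : v ((X ^ p - 1) ^ (d - 1) - (τ ^ d * s) ^ p) = 1 := by
        have h6 : v ((X ^ p - 1) ^ (d - 1) - (-1) ^ (d - 1)) < 1 := by
          obtain ⟨m, hm⟩ := sub_dvd_pow_sub_pow (X ^ p - 1) (-1) (d - 1)
          have h7 := (Commute.all (X ^ p - 1) (-1)).geom_sum₂_mul (d - 1)
          rw [← h7, map_mul]
          refine (mul_le_of_le_one_left' (v.map_sum_le fun i _ => ?_)).trans_lt
            (by simpa using vXplt)
          have h8 : v (X ^ p - 1) ≤ 1 := v.map_sub_le vXplt.le (map_one v).le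
          rw [map_mul, map_pow, map_pow, v.map_neg, map_one, one_pow, mul_one]
          exact pow_le_one' h8 _
        have h7 := h4 hblt
        have : (X ^ p - 1) ^ (d - 1) - (τ ^ d * s) ^ p =
          ((X ^ p - 1) ^ (d - 1) - (-1) ^ (d - 1)) - ((τ ^ d * s) ^ p - (-1) ^ (d - 1)) := by ring
        rw [this, v.map_sub_eq_of_lt_right (by rw [h7]; exact h6), h7]
      have h6 : X ^ p * ((X ^ p - 1) ^ (d - 1) - (τ ^ d * s) ^ p) = b ^ p * (X ^ p - 1) ^ (d - 1) := by
        have e1 : X ^ p - 1 = τ ^ p * W ^ p := by rw [hX1]; ring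
        have e2 : X ^ p - b ^ p = τ ^ p * U ^ p := by rw [hXb]; ring
        obtain ⟨d', rfl⟩ : ∃ d', d = d' + 1 := ⟨d - 1, by omega⟩
        have e3 : (X ^ p - b ^ p) * (X ^ p - 1) ^ d' = (τ ^ (d' + 1) * s) ^ p * X ^ p := by
          rw [e1, e2]
          rw [add_tsub_cancel_right] at hR
          calc _ = (τ ^ p) ^ (d' + 1) * (U ^ p * (W ^ p) ^ d') := by ring
            _ = _ := by rw [hR, ← hXb]; ring
        rw [add_tsub_cancel_right]
        linear_combination e3
      have h7 := congrArg v h6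
      rw [map_mul, map_mul, h5, hd1, mul_one, mul_one, map_pow, map_pow] at h7
      have hvXb : v X = v b := (pow_left_inj₀ zero_le zero_le hp0).1 h7
      have hb0 : b ≠ 0 := by
        rintro rfl
        rw [map_zero, v.zero_iff] at hvXb
        exact hX0 hvXb
      have gX : g X = X := by
        have h1 : g (X / b) = X / b := by
          refine fix_unit v g hg hp hvp ?_ ?_
          · rw [map_div₀, hvXb, div_self ((v.ne_zero_iff).2 hb0)]
          · rw [map_div₀, hgb, div_pow, div_pow, hgX]
        rw [map_div₀, hgb, div_left_inj' hb0] at h1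
        exact h1
      have gU : g U = U := by
        rw [gX, hsX, gW] at hgsX
        exact (mul_right_cancel₀ (pow_ne_zero _ hW0) hgsX).symm
      refine ⟨gU, gW, ?_⟩
      obtain ⟨k, hk⟩ := v_twist v hp hvp hζ hτW1 vf2
      have vτUb : v (τ * U) ≤ v b := by
        rw [← pow_le_pow_iff_left₀ zero_le zero_le hp0, ← map_pow, ← map_pow, mul_pow]
        have : τ ^ p * U ^ p = X ^ p - b ^ p := by rw [hXb]; ring
        rw [this]
        refine v.map_sub_le ?_ le_rfl
        rw [map_pow, map_pow, hvXb]
      have hall : ∀ i ∈ Finset.range p, v (b + ζ ^ i * (τ * U)) = v b := by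
        have hle : ∀ i, v (b + ζ ^ i * (τ * U)) ≤ v b := fun i =>
          v.map_add_le le_rfl (by rw [map_mul, map_pow, hvζ, one_pow, one_mul]; exact vτUb)
        have hq : ∏ i ∈ Finset.range p, v ((b + ζ ^ i * (τ * U)) / b) = 1 := by
          rw [← map_prod, Finset.prod_div_distrib, hpr1, map_div₀, Finset.prod_const,
            Finset.card_range, map_pow, map_pow, hvXb,
            div_self (pow_ne_zero _ ((v.ne_zero_iff).2 hb0))]
        intro i hi
        have := (Finset.prod_eq_one_iff_of_le_one' (fun i _ => by
          rw [map_div₀]; exact div_le_one_of_le₀ (hle i) zero_le)).1 hq i hi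
        rwa [map_div₀, div_eq_one_iff_eq ((v.ne_zero_iff).2 hb0)] at this
      refine finish gU gW (b ^ ((p - 1) / 2) * X ^ (k * (d - 1)))
        (mul_ne_zero (pow_ne_zero _ hb0) (pow_ne_zero _ hX0)) (by rw [map_mul, map_pow, map_pow, hgb, gX]) ?_
      have h8 : v (twist p ζ b (τ * U)) = v b ^ (p * ((p - 1) / 2)) := by
        rw [twist, map_prod]
        have : ∀ i ∈ Finset.range p, v ((b + ζ ^ i * (τ * U)) ^ i) = v b ^ i := fun i hi => by
          rw [map_pow, hall i hi]
        rw [Finset.prod_congr rfl this, Finset.prod_pow_eq_pow_sum, Finset.sum_range_id]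
        congr 1
        refine Nat.mul_div_assoc _ ?_
        obtain ⟨n, hn⟩ := hp.odd_of_ne_two hp2
        exact ⟨n, by omega⟩
      rw [hΔ, map_mul, h8, map_pow, hk, hpr2, map_pow, map_mul, map_pow, map_pow]
      simp only [mul_pow, ← pow_mul]
      congr 2 <;> ring
    · -- `X` divisible, `b` not divisible
      have hτU1 : v (τ * U) = 1 := by
        refine v_eq_one_of_pow v hp0 ?_
        have : (τ * U) ^ p = X ^ p - b ^ p := by rw [hXb]; ring
        rw [this, v.map_sub_eq_of_lt_right (by rw [map_pow v b, hbeq, one_pow]; exact vXplt), map_pow,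
          hbeq, one_pow]
      have hU1 : v U = 1 := by rwa [map_mul, hτ1, one_mul] at hτU1
      have gU : g U = U := fix_unit v g hg hp hvp hU1 hgU
      have gX : g X = X := by
        apply mul_left_cancel₀ hs0
        rw [hgsX, gU, gW, hsX]
      refine ⟨gU, gW, ?_⟩
      obtain ⟨k, hk⟩ := v_twist v hp hvp hζ hτW1 vf2
      obtain ⟨k', hk'⟩ := v_twist v hp hvp hζ hτU1 vf1
      refine finish gU gW (X ^ (k' + k * (d - 1))) (pow_ne_zero _ hX0) (by rw [map_pow, gX]) ?_
      rw [hΔ, map_mul, hk', map_pow, hk, hpr2, hpr1, map_pow, map_pow]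
      simp only [← pow_mul, ← pow_add]
      congr 1; ring
  · -- `X` is a unit at the prime
    have gX : g X = X := fix_unit v g hg hp hvp hXeq hgX
    have hUW : g U = U ∧ g W = W := by
      rcases vW.lt_or_eq with hWlt | hW1
      · have key : g U = U → g U = U ∧ g W = W := by
          intro gU
          refine ⟨gU, ?_⟩
          rw [gX, hsX, gU] at hgsX
          exact eq_of_pow_eq hW0 (hcop (d - 1) (by omega) (by omega)) hgW
            (mul_left_cancel₀ hU0 hgsX).symm
        apply key
        rcases vU.lt_or_eq with hUlt | hU1
        · have hpos : 0 < v U := zero_lt_iff.2 ((v.ne_zero_iff).2 hU0)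
          have hposW : 0 < v W := zero_lt_iff.2 ((v.ne_zero_iff).2 hW0)
          have vsX : v s = v U * v W ^ (d - 1) := by
            have := congrArg v hsX
            rwa [map_mul, map_mul, map_pow, hXeq, mul_one] at this
          have vsU : v s ≤ v U := by rw [vsX]; exact mul_le_of_le_one_right' (pow_le_one' vW _)
          have vsW : v s ≤ v W := by
            rw [vsX]
            exact (mul_le_of_le_one_left' vU).trans (pow_le_of_le_one zero_le vW (by omega))
          have vslt : v s < 1 := vsU.trans_lt hUlt
          have hεeq : ε = W ^ p - U ^ p := by rw [hW]; ring
          have vεlt : v ε < 1 := by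
            rw [hεeq]
            refine v.map_sub_lt ?_ ?_
            · rw [map_pow]; exact pow_lt_one₀ zero_le hWlt hp0
            · rw [map_pow]; exact pow_lt_one₀ zero_le hUlt hp0
          have hε := h3 vεlt vslt
          have bound : ∀ c : Γ, 0 < c → v s ≤ c → v ε < c ^ p := by
            intro c hc hsc
            refine hε.trans_lt ?_
            rw [pow_succ]
            calc v s ^ p * v s ≤ c ^ p * v s := by gcongr
              _ < c ^ p * 1 := by
                have := pow_pos hc p
                exact mul_lt_mul_of_pos_left vslt this
              _ = _ := mul_one _
          -- If the valuations of `U` and `W` differ, `ε` is too small for the difference `W ^ p -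
          -- U ^ p = ε`.
          have hUW : v U = v W := by
            rcases lt_trichotomy (v U) (v W) with h | h | h
            · exfalso
              have h1 := bound _ hposW vsW
              rw [hεeq, v.map_sub_eq_of_lt_left, map_pow] at h1
              · exact lt_irrefl _ h1
              · rw [map_pow, map_pow]; exact pow_lt_pow_left₀ h zero_le hp0
            · exact h
            · exfalso
              have h1 := bound _ hpos vsU
              rw [hεeq, v.map_sub_eq_of_lt_right, map_pow] at h1
              · exact lt_irrefl _ h1
              · rw [map_pow, map_pow]; exact pow_lt_pow_left₀ h zero_le hp0
          have gq : g (W / U) = W / U := by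
            refine fix_unit v g hg hp hvp ?_ ?_
            · rw [map_div₀, hUW, div_self hposW.ne']
            · rw [map_div₀, div_pow, div_pow, hgW, hgU]
          have e : s * X = U ^ d * (W / U) ^ (d - 1) := by
            obtain ⟨d', rfl⟩ : ∃ d', d = d' + 1 := ⟨d - 1, by omega⟩
            rw [hsX, add_tsub_cancel_right, div_pow]
            field_simp
            ring
          have e2 := congrArg g e
          rw [map_mul, map_mul, map_pow, map_pow, gq, gX, hgs, e] at e2
          exact eq_of_pow_eq hU0 (hcop d (by omega) hdp) hgU
            (mul_right_cancel₀ (pow_ne_zero _ (div_ne_zero hW0 hU0)) e2).symm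
        · exact fix_unit v g hg hp hvp hU1 hgU
      · have gW : g W = W := fix_unit v g hg hp hvp hW1 hgW
        refine ⟨?_, gW⟩
        rw [gX, hsX, gW] at hgsX
        exact (mul_right_cancel₀ (pow_ne_zero _ hW0) hgsX).symm
    obtain ⟨gU, gW⟩ := hUW
    refine ⟨gU, gW, finish gU gW 1 one_ne_zero (map_one g) ?_⟩
    have e : v (X ^ p) = 1 := by rw [map_pow, hXeq, one_pow]
    rw [hΔ, map_mul, map_pow, map_one, one_pow, twist, twist, prodone _ vf1 (by rw [hpr1, e]),
      prodone _ vf2 (by rw [hpr2, e]), one_pow, one_mul]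

end Val
end ClRank

/-! ### Hilbert 90 for the twisted product -/

namespace ClRank
open NumberField Module

section Descent
/-- The partial product `∏_{j<m} (B + ζ^j V)`. -/
def pprod {R : Type*} [CommRing R] (ζ B V : R) (m : ℕ) : R := ∏ j ∈ Finset.range m, (B + ζ ^ j * V)

variable {R : Type*} [CommRing R] [IsDomain R] {p : ℕ} {ζ : R}

lemma pprod_add (B V : R) (m n : ℕ) :
    pprod ζ B V (m + n) = pprod ζ B V m * pprod ζ B (ζ ^ m * V) n := by
  unfold pprod
  rw [Finset.prod_range_add]
  congr 1
  exact Finset.prod_congr rfl fun j _ => by rw [pow_add]; ring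

lemma pprod_full (hp : p.Prime) (hp2 : p ≠ 2) (hζ : IsPrimitiveRoot ζ p) (B V : R) :
    pprod ζ B V p = B ^ p + V ^ p := prod_add_root hp hp2 hζ B V

lemma pprod_add_p (hp : p.Prime) (hp2 : p ≠ 2) (hζ : IsPrimitiveRoot ζ p) (B V : R) (m : ℕ) :
    pprod ζ B V (m + p) = pprod ζ B V m * (B ^ p + V ^ p) := by
  rw [pprod_add, pprod_full hp hp2 hζ, mul_pow, ← pow_mul, mul_comm m p, pow_mul, hζ.pow_eq_one,
    one_pow, one_mul]

lemma pprod_add_p_mul (hp : p.Prime) (hp2 : p ≠ 2) (hζ : IsPrimitiveRoot ζ p) (B V : R) (m k : ℕ) :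
    pprod ζ B V (m + k * p) = pprod ζ B V m * (B ^ p + V ^ p) ^ k := by
  induction k with
  | zero => simp
  | succ k ih => rw [add_mul, one_mul, ← add_assoc, pprod_add_p hp hp2 hζ, ih, pow_succ]; ring

/-- Iterated form of `twist_shift`. -/
lemma twist_shift_pow (hp : p.Prime) (hp2 : p ≠ 2) (hζ : IsPrimitiveRoot ζ p) (B V : R) (a : ℕ) :
    twist p ζ B (ζ ^ a * V) * (B ^ p + V ^ p) ^ a = twist p ζ B V * pprod ζ B V a ^ p := by
  induction a with
  | zero => simp [pprod]
  | succ a ih =>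
    have h := twist_shift hζ.pow_eq_one B (ζ ^ a * V)
    rw [prod_add_root hp hp2 hζ, mul_pow, ← pow_mul, mul_comm a p, pow_mul, hζ.pow_eq_one,
      one_pow, one_mul] at h
    rw [pow_succ, pow_succ', pprod_add, mul_pow, ← mul_assoc (twist p ζ B V), ← ih,
      show (ζ ^ a * ζ * V) = ζ * (ζ ^ a * V) by ring, ← mul_assoc, h]
    simp [pprod]; ring

end Descent

section H90
variable {L E : Type*} [Field L] [Field E] [Algebra L E] [FiniteDimensional L E] [IsGalois L E]

/-- Hilbert 90 applied to the Kummer cocycle attached to the twisted products: after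
multiplication by a suitable `p`-th power, the product of the two twists descends to `L`. -/
lemma twist_descends {p d : ℕ} (hp : p.Prime) (hp2 : p ≠ 2) {ζ b τ s U W : E}
    (hζ : IsPrimitiveRoot ζ p)
    (gζ : ∀ g : E ≃ₐ[L] E, g ζ = ζ) (gb : ∀ g : E ≃ₐ[L] E, g b = b)
    (gτ : ∀ g : E ≃ₐ[L] E, g τ = τ) (gs : ∀ g : E ≃ₐ[L] E, g s = s)
    (hs : s ≠ 0) (hU : U ≠ 0) (hW : W ≠ 0)
    (gU : ∀ g : E ≃ₐ[L] E, g U ^ p = U ^ p) (gW : ∀ g : E ≃ₐ[L] E, g W ^ p = W ^ p)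
    (h1 : (U * W ^ (d - 1) / s) ^ p = b ^ p + (τ * U) ^ p)
    (h2 : (U * W ^ (d - 1) / s) ^ p = 1 ^ p + (τ * W) ^ p) :
    ∃ h : E, h ≠ 0 ∧ twist p ζ b (τ * U) * twist p ζ 1 (τ * W) ^ (d - 1) * h ^ p ∈
      Set.range (algebraMap L E) := by
  set X := U * W ^ (d - 1) / s with hX
  have hX0 : X ≠ 0 := div_ne_zero (mul_ne_zero hU (pow_ne_zero _ hW)) hs
  have hXp : X ^ p ≠ 0 := pow_ne_zero _ hX0
  have hζ0 : ζ ≠ 0 := hζ.ne_zero hp.ne_zero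
  have h3 : X ^ p = 0 ^ p + X ^ p := by rw [zero_pow hp.ne_zero, zero_add]
  have nz : ∀ (B V : E), X ^ p = B ^ p + V ^ p → ∀ m, pprod ζ B V m ≠ 0 := by
    intro B V h m
    rw [pprod, Finset.prod_ne_zero_iff]
    intro j _ h0
    have hdiv : (B + ζ ^ (j % p) * V) ∣ ∏ i ∈ Finset.range p, (B + ζ ^ i * V) :=
      Finset.dvd_prod_of_mem _ (Finset.mem_range.2 (Nat.mod_lt _ hp.pos))
    rw [prod_add_root hp hp2 hζ, ← h, (pow_eq_pow_mod j hζ.pow_eq_one).symm, h0,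
      zero_dvd_iff] at hdiv
    exact hXp hdiv
  let φ : ℕ → ℕ → E := fun m m' =>
    pprod ζ b (τ * U) m * pprod ζ 1 (τ * W) m' ^ (d - 1) / pprod ζ 0 X (m + (d - 1) * m')
  have φnz : ∀ m m', φ m m' ≠ 0 := fun m m' =>
    div_ne_zero (mul_ne_zero (nz _ _ h1 _) (pow_ne_zero _ (nz _ _ h2 _))) (nz _ _ h3 _)
  have per1 : ∀ m', Function.Periodic (fun m => φ m m') p := by
    intro m' m
    simp only [φ]
    rw [pprod_add_p hp hp2 hζ, ← h1, show m + p + (d - 1) * m' = m + (d - 1) * m' + p by ring,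
      pprod_add_p hp hp2 hζ, ← h3]
    have := nz _ _ h3 (m + (d - 1) * m')
    field_simp
  have per2 : ∀ m, Function.Periodic (φ m) p := by
    intro m m'
    simp only [φ]
    rw [pprod_add_p hp hp2 hζ, ← h2,
      show m + (d - 1) * (m' + p) = m + (d - 1) * m' + (d - 1) * p by ring,
      pprod_add_p_mul hp hp2 hζ, ← h3]
    have := nz _ _ h3 (m + (d - 1) * m')
    rw [mul_pow]
    field_simp
  have φcongr : ∀ m n m' n', ζ ^ m = ζ ^ n → ζ ^ m' = ζ ^ n' → φ m m' = φ n n' := by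
    intro m n m' n' e e'
    have e : m % p = n % p := hζ.pow_inj (Nat.mod_lt _ hp.pos) (Nat.mod_lt _ hp.pos)
      (by rw [← pow_eq_pow_mod m hζ.pow_eq_one, ← pow_eq_pow_mod n hζ.pow_eq_one, e])
    have e' : m' % p = n' % p := hζ.pow_inj (Nat.mod_lt _ hp.pos) (Nat.mod_lt _ hp.pos)
      (by rw [← pow_eq_pow_mod m' hζ.pow_eq_one, ← pow_eq_pow_mod n' hζ.pow_eq_one, e'])
    have q1 := (per1 m').map_mod_nat m
    have q2 := (per1 m').map_mod_nat n
    have q3 := (per2 n).map_mod_nat m'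
    have q4 := (per2 n).map_mod_nat n'
    simp only [e] at q1
    rw [← q1, q2, ← q3, ← q4, e']
  have exU : ∀ g : E ≃ₐ[L] E, ∃ i, g U = ζ ^ i * U := fun g => exists_root_mul hp hζ (gU g)
  have exW : ∀ g : E ≃ₐ[L] E, ∃ i, g W = ζ ^ i * W := fun g => exists_root_mul hp hζ (gW g)
  choose a ha using exU
  choose a' ha' using exW
  have gpp : ∀ (g : E ≃ₐ[L] E) B V m, g (pprod ζ B V m) = pprod ζ (g B) (g V) m := by
    intro g B V m
    simp [pprod, map_prod, gζ]
  have gX : ∀ g : E ≃ₐ[L] E, g X = ζ ^ (a g + (d - 1) * a' g) * X := by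
    intro g
    rw [hX, map_div₀, map_mul, map_pow, ha, ha', gs, mul_pow, ← pow_mul, pow_add,
      mul_comm (d - 1)]
    ring
  have gφ : ∀ (g : E ≃ₐ[L] E) m m', φ (a g) (a' g) * g (φ m m') = φ (a g + m) (a' g + m') := by
    intro g m m'
    simp only [φ]
    rw [map_div₀, map_mul, map_pow, gpp, gpp, gpp, gb, map_one, map_zero, map_mul, map_mul, gτ,
      ha, ha', gX, pprod_add _ _ (a g) m, pprod_add _ _ (a' g) m',
      show a g + m + (d - 1) * (a' g + m') = (a g + (d - 1) * a' g) + (m + (d - 1) * m') by ring,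
      pprod_add _ _ (a g + (d - 1) * a' g) (m + (d - 1) * m'), mul_left_comm τ, mul_left_comm τ,
      mul_pow, div_mul_div_comm]
    congr 1
    ring
  let f : (E ≃ₐ[L] E) → Eˣ := fun g => Units.mk0 (φ (a g) (a' g)) (φnz _ _)
  have hf : groupCohomology.IsMulCocycle₁ f := by
    intro g h
    ext
    have e : φ (a (g * h)) (a' (g * h)) = φ (a g + a h) (a' g + a' h) := by
      apply φcongr
      · apply mul_right_cancel₀ hU
        rw [← ha, AlgEquiv.mul_apply, ha h, map_mul, map_pow, gζ, ha g, pow_add]; ring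
      · apply mul_right_cancel₀ hW
        rw [← ha', AlgEquiv.mul_apply, ha' h, map_mul, map_pow, gζ, ha' g, pow_add]; ring
    have : (φ (a (g * h)) (a' (g * h))) = g (φ (a h) (a' h)) * φ (a g) (a' g) := by
      rw [e, ← gφ, mul_comm]
    exact this
  obtain ⟨β, hβ⟩ := groupCohomology.isMulCoboundary₁_of_isMulCocycle₁_of_aut_to_units f hf
  refine ⟨(β⁻¹ : Eˣ), Units.ne_zero _, (IsGalois.mem_range_algebraMap_iff_fixed _).2 fun g => ?_⟩
  have hb : g (β : E) = φ (a g) (a' g) * β := by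
    have := congrArg (fun u : Eˣ => (u : E)) (hβ g)
    simp only [Units.val_div_eq_div_val] at this
    have h' : g (β : E) / β = φ (a g) (a' g) := this
    rw [← h', div_mul_cancel₀ _ (Units.ne_zero _)]
  have gtw : ∀ B V, g (twist p ζ B V) = twist p ζ (g B) (g V) := by
    intro B V
    have := map_twist (g : E →+* E) p ζ B V
    simpa [gζ] using this
  have t1 := twist_shift_pow hp hp2 hζ b (τ * U) (a g)
  have t2 := twist_shift_pow hp hp2 hζ 1 (τ * W) (a' g)
  have t3 : pprod ζ 0 X (a g + (d - 1) * a' g) ^ p = (X ^ p) ^ (a g + (d - 1) * a' g) := by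
    unfold pprod
    rw [← Finset.prod_pow]
    simp [mul_pow, ← pow_mul, mul_comm _ p]
    simp [pow_mul, hζ.pow_eq_one]
  rw [← h1] at t1
  rw [← h2] at t2
  have hβ0 : (β : E) ≠ 0 := Units.ne_zero _
  have hφ := φnz (a g) (a' g)
  have key : g (twist p ζ b (τ * U) * twist p ζ 1 (τ * W) ^ (d - 1)) =
      twist p ζ b (τ * U) * twist p ζ 1 (τ * W) ^ (d - 1) * φ (a g) (a' g) ^ p := by
    simp only [φ]
    rw [div_pow, t3, eq_comm, ← mul_div_assoc, div_eq_iff (pow_ne_zero _ hXp), map_mul, map_pow,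
      gtw, gtw, map_mul, map_mul, gb, map_one, gτ, ha, ha', mul_left_comm τ, mul_left_comm τ,
      mul_pow, pow_add, mul_comm (d - 1), pow_mul]
    calc _ = twist p ζ b (τ * U) * pprod ζ b (τ * U) (a g) ^ p *
          (twist p ζ 1 (τ * W) * pprod ζ 1 (τ * W) (a' g) ^ p) ^ (d - 1) := by ring
      _ = _ := by rw [← t1, ← t2]; ring
  rw [map_mul, key, map_pow, Units.val_inv_eq_inv_val, map_inv₀, hb, inv_pow, inv_pow, mul_pow]
  have := pow_ne_zero p hφ
  field_simp

end H90
end ClRank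

/-! ### Kummer generators at primes above p -/

namespace ClRank
open NumberField Module

/-- The relations between the parameters `b, τ, ε, s` of the family and the Kummer generators
`U, W, Δ`, in a ring containing all of them. -/
structure Conf {R : Type*} [CommRing R] (p d : ℕ) (ζ b τ ε u s U W Δ : R) : Prop where
  hb : b ^ p = 1 + τ ^ p * ε
  hτ : τ = (1 - ζ) ^ 2 * u
  dε : (p : R) ^ 2 * τ ∣ ε
  ds : (p : R) ^ 2 * τ ∣ s - 1
  db : (p : R) ^ 2 * τ ∣ b - 1
  hW : W ^ p = U ^ p + ε
  hR : U ^ p * (W ^ p) ^ (d - 1) = s ^ p * (b ^ p + τ ^ p * U ^ p)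
  hΔ : Δ ^ p = twist p ζ b (τ * U) * twist p ζ 1 (τ * W) ^ (d - 1)

namespace Conf
variable {R : Type*} [CommRing R] {p d : ℕ} {ζ b τ ε u s U W Δ : R}

lemma map (h : Conf p d ζ b τ ε u s U W Δ) {S : Type*} [CommRing S] (f : R →+* S) :
    Conf p d (f ζ) (f b) (f τ) (f ε) (f u) (f s) (f U) (f W) (f Δ) where
  hb := by rw [← map_pow, h.hb]; simp
  hτ := by rw [h.hτ]; simp
  dε := by simpa using map_dvd f h.dε
  ds := by simpa using map_dvd f h.ds
  db := by simpa using map_dvd f h.db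
  hW := by rw [← map_pow, h.hW]; simp
  hR := by simpa using congrArg f h.hR
  hΔ := by rw [← map_pow, h.hΔ, map_mul, map_pow, map_twist, map_twist]; simp

lemma hgΔ (h : Conf p d ζ b τ ε u s U W Δ) (g : R →+* R) (gζ : g ζ = ζ) (gb : g b = b)
    (gτ : g τ = τ) (gU : g U = U) (gW : g W = W) : g Δ ^ p = Δ ^ p := by
  rw [← map_pow, h.hΔ, map_mul, map_pow, map_twist, map_twist, map_mul, map_mul, gζ, gb, gτ, gU,
    gW, map_one]

variable [IsDomain R]

lemma dτ (h : Conf p d ζ b τ ε u s U W Δ) (hp : p.Prime) (hζ : IsPrimitiveRoot ζ p) :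
    (p : R) ^ 2 * τ ∣ τ ^ p := by
  obtain ⟨w, hw, -⟩ := p_eq hp hζ
  refine ⟨(↑(w⁻¹ : Rˣ)) ^ 2 * u ^ (p - 1), ?_⟩
  obtain ⟨k, hk⟩ : ∃ k, p = k + 1 := ⟨p - 1, (Nat.succ_pred_prime hp).symm⟩
  have hw1 : (w : R) * ↑(w⁻¹ : Rˣ) = 1 := w.mul_inv
  rw [h.hτ, hw]
  have : k + 1 - 1 = k := rfl
  rw [hk, this]
  calc ((1 - ζ) ^ 2 * u) ^ (k + 1) = (1 - ζ) ^ (2 * (k + 1)) * u ^ (k + 1) := by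
        rw [mul_pow, pow_mul]
    _ = ((1 - ζ) ^ (2 * (k + 1)) * u ^ (k + 1)) * ((w : R) * ↑(w⁻¹ : Rˣ)) ^ 2 := by
        rw [hw1]; ring
    _ = _ := by ring

/-- The `p`-th powers of `U ^ d` and `W ^ d` are congruent to `1` modulo `p ^ 2 τ`. -/
lemma U_pow (h : Conf p d ζ b τ ε u s U W Δ) (hp : p.Prime) (hζ : IsPrimitiveRoot ζ p)
    (hd : 1 ≤ d) : (p : R) ^ 2 * τ ∣ (U ^ d) ^ p - 1 ∧ (p : R) ^ 2 * τ ∣ (W ^ d) ^ p - 1 := by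
  have h0 := h.dτ hp hζ
  set I := Ideal.span {(p : R) ^ 2 * τ} with hI
  have e : ∀ x y, (p : R) ^ 2 * τ ∣ x - y ↔ Ideal.Quotient.mk I x = Ideal.Quotient.mk I y := by
    intro x y
    rw [Ideal.Quotient.eq, hI, Ideal.mem_span_singleton]
  have e0 : ∀ x, (p : R) ^ 2 * τ ∣ x ↔ Ideal.Quotient.mk I x = 0 := by
    intro x
    rw [Ideal.Quotient.eq_zero_iff_mem, hI, Ideal.mem_span_singleton]
  have hs := (e _ _).1 h.ds
  have hb := (e _ _).1 h.db
  have hε := (e0 _).1 h.dε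
  rw [e0] at h0
  have hW := congrArg (Ideal.Quotient.mk I) h.hW
  have hR := congrArg (Ideal.Quotient.mk I) h.hR
  obtain ⟨d', rfl⟩ : ∃ d', d = d' + 1 := ⟨d - 1, by omega⟩
  simp only [map_add, map_mul, map_pow, hs, hb, hε, map_one] at hW hR h0
  rw [h0, hW] at hR
  simp only [one_pow, add_zero, zero_mul, mul_one, add_tsub_cancel_right] at hR hW
  rw [e, e]
  simp only [map_pow, map_one]
  rw [← pow_mul, ← pow_mul, mul_comm, pow_mul, pow_mul, hW, pow_succ']
  exact ⟨hR, hR⟩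

lemma lam_dvd (hp : p.Prime) (hζ : IsPrimitiveRoot ζ p) (x : R) :
    (1 - ζ) ^ p * (1 - ζ) ∣ (p : R) ^ 2 * ((1 - ζ) ^ 2 * x) := by
  obtain ⟨w, hw, -⟩ := p_eq hp hζ
  obtain ⟨k, hk⟩ : ∃ k, p = k + 1 := ⟨p - 1, (Nat.succ_pred_prime hp).symm⟩
  have : k + 1 - 1 = k := rfl
  rw [hw, hk, this]
  exact ⟨(1 - ζ) ^ k * w ^ 2 * x, by ring⟩

lemma eq_of_pow_d (hp : p.Prime) (hd : 1 ≤ d) (hdp : d < p) {r r' : R} (hr : r ≠ 0)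
    (h1 : r' ^ d = r ^ d) (h2 : r' ^ p = r ^ p) : r' = r := by
  apply IsFractionRing.injective R (FractionRing R)
  refine eq_of_pow_eq (m := d) (n := p) ?_ (Nat.coprime_of_lt_prime (by omega) hdp hp).symm ?_ ?_
  · simpa using hr
  · rw [← map_pow, h1, map_pow]
  · rw [← map_pow, h2, map_pow]

/-- An element whose `d`-th power has `p`-th power congruent to `1` modulo `p ^ 2 τ` is fixed by a
decomposition element above `p` as soon as its `p`-th power is. -/
lemma fix_wild_aux [IsIntegrallyClosed R] (h : Conf p d ζ b τ ε u s U W Δ) (hp : p.Prime)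
    (hζ : IsPrimitiveRoot ζ p) (hd : 1 ≤ d) (hdp : d < p) {P : Ideal R} [hP : P.IsPrime]
    (hl : 1 - ζ ∈ P) (g : R →+* R) (gζ : g ζ = ζ) (hg : ∀ r ∈ P, g r ∈ P) {V : R} (hV : V ≠ 0)
    (hVp : (p : R) ^ 2 * τ ∣ (V ^ d) ^ p - 1) (gV : g V ^ p = V ^ p) : g V = V := by
  refine eq_of_pow_d hp hd hdp hV ?_ gV
  obtain ⟨c, hc⟩ := (lam_dvd hp hζ u).trans (h.hτ ▸ hVp)
  obtain ⟨Z, hZ⟩ := wild_div hp hζ (Y := V ^ d) ⟨(1 - ζ) * c, by rw [hc]; ring⟩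
  have h1 : (1 + (1 - ζ) * Z) ^ p = 1 + (1 - ζ) ^ p * ((1 - ζ) * c) := by
    rw [← hZ, ← mul_assoc, ← hc]; ring
  have h2 := wild_dec hp hζ g gζ hg h1 (P.mul_mem_right _ hl)
  have h3 := wild_fix hp hζ hl g gζ h2
    (by rw [← hZ, map_pow, ← pow_mul, mul_comm d p, pow_mul, gV]; ring)
  rw [← hZ, map_pow] at h3
  exact h3

/-- The decomposition group at a prime above `p` fixes `U` and `W`. -/
lemma fixUW_wild [IsIntegrallyClosed R] (h : Conf p d ζ b τ ε u s U W Δ) (hp : p.Prime)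
    (hζ : IsPrimitiveRoot ζ p) (hd : 1 ≤ d) (hdp : d < p) {P : Ideal R} [hP : P.IsPrime]
    (hl : 1 - ζ ∈ P) (g : R →+* R) (gζ : g ζ = ζ) (hg : ∀ r ∈ P, g r ∈ P) (hU : U ≠ 0)
    (hW : W ≠ 0) (gU : g U ^ p = U ^ p) (gW : g W ^ p = W ^ p) : g U = U ∧ g W = W :=
  ⟨h.fix_wild_aux hp hζ hd hdp hl g gζ hg hU (h.U_pow hp hζ hd).1 gU,
    h.fix_wild_aux hp hζ hd hdp hl g gζ hg hW (h.U_pow hp hζ hd).2 gW⟩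

/-- The radicand of `Δ` is `1 + (1 - ζ) ^ p c` with `c ≡ u (U + (d - 1) W)` modulo `1 - ζ`. Hence
the extension generated by `Δ` is of Artin–Schreier type at the primes above `p`. -/
lemma delta (h : Conf p d ζ b τ ε u s U W Δ) (hp : p.Prime) (hp2 : p ≠ 2)
    (hζ : IsPrimitiveRoot ζ p) :
    ∃ c, Δ ^ p = 1 + (1 - ζ) ^ p * c ∧ (1 - ζ) ∣ c - u * (U + ((d - 1 : ℕ) : R) * W) := by
  obtain ⟨w, hw, w', hw'⟩ := p_eq hp hζ
  have hpl : (p : R) * (1 - ζ) = (1 - ζ) ^ p * w := by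
    rw [hw, mul_right_comm, ← pow_succ, Nat.sub_add_cancel hp.one_le]
  set I := Ideal.span {(p : R) * (1 - ζ) ^ 2} with hI
  have e : ∀ x y, (p : R) * (1 - ζ) ^ 2 ∣ x - y ↔ Ideal.Quotient.mk I x = Ideal.Quotient.mk I y := by
    intro x y
    rw [Ideal.Quotient.eq, hI, Ideal.mem_span_singleton]
  have t1 := (e _ _).1 (twist_wild hp hp2 hζ (u * U))
  have t2 := (e _ _).1 (twist_wild hp hp2 hζ (u * W))
  have hb : (p : R) * (1 - ζ) ^ 2 ∣ b - 1 := by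
    refine Dvd.dvd.trans ⟨p * u, ?_⟩ h.db
    rw [h.hτ]; ring
  have t3 := (e _ _).1 (hb.trans (twist_sub p ζ b 1 (τ * U)))
  have key : (p : R) * (1 - ζ) ^ 2 ∣ Δ ^ p - (1 - p * (1 - ζ) * (u * U)) *
      (1 - p * (1 - ζ) * (u * W)) ^ (d - 1) := by
    rw [e, h.hΔ, map_mul, map_pow, t3, h.hτ, mul_assoc, mul_assoc ((1 - ζ) ^ 2), t1, t2]
    simp
  obtain ⟨k, hk⟩ := key
  obtain ⟨k', hk'⟩ := Polynomial.powAddExpansion 1 (-(p * (1 - ζ) * (u * W))) (d - 1)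
  rw [← sub_eq_add_neg] at hk'
  rw [hk', one_pow, one_pow] at hk
  set D : R := ((d - 1 : ℕ) : R)
  set l := 1 - ζ with hl
  refine ⟨-w * u * (U + D * W) + l * w * (k + p * (u * W) ^ 2 * k' - p * (u * U) * p * (u * W) ^ 2 * k' * l + p * (u * U) * D * (u * W)), ?_, ?_⟩
  · have e2 : Δ ^ p = 1 + p * l * (- u * (U + D * W) + l * (k + p * (u * W) ^ 2 * k' - p * (u * U) * p * (u * W) ^ 2 * k' * l + p * (u * U) * D * (u * W))) := by
      linear_combination hk
    rw [e2, hpl]; ring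
  · refine ⟨-w' * u * (U + D * W) + w * (k + p * (u * W) ^ 2 * k' - p * (u * U) * p * (u * W) ^ 2 * k' * l + p * (u * U) * D * (u * W)), ?_⟩
    linear_combination -u * (U + D * W) * hw'

/-- Inertia at a prime above `p` fixes `Δ`. -/
lemma fixΔ_wild [IsIntegrallyClosed R] (h : Conf p d ζ b τ ε u s U W Δ) (hp : p.Prime)
    (hp2 : p ≠ 2) (hζ : IsPrimitiveRoot ζ p) {P : Ideal R} [hP : P.IsPrime]
    (hl : 1 - ζ ∈ P) (g : R →+* R) (gζ : g ζ = ζ) (hg : ∀ r, g r - r ∈ P)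
    (gΔ : g Δ ^ p = Δ ^ p) : g Δ = Δ := by
  obtain ⟨c, hc, -⟩ := h.delta hp hp2 hζ
  obtain ⟨Z, hZ⟩ := wild_div hp hζ (Y := Δ) ⟨c, by rw [hc]; ring⟩
  have := wild_fix hp hζ hl g gζ (hg Z) (by rw [← hZ, gΔ])
  rwa [← hZ] at this

/-- At a prime where `U ≡ W ≡ 1`, the quotient `(Δ - 1)/(1 - ζ)` satisfies an Artin–Schreier
equation. -/
lemma artin_schreier [IsIntegrallyClosed R] (h : Conf p d ζ b τ ε u s U W Δ) (hp : p.Prime)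
    (hp2 : p ≠ 2) (hd : 1 ≤ d) (hζ : IsPrimitiveRoot ζ p) {P : Ideal R} [hP : P.IsPrime]
    (hl : 1 - ζ ∈ P) (hU : U - 1 ∈ P) (hW : W - 1 ∈ P) :
    ∃ Z, Δ = 1 + (1 - ζ) * Z ∧ Z ^ p - Z - d * u ∈ P := by
  obtain ⟨c, hc, c', hc'⟩ := h.delta hp hp2 hζ
  obtain ⟨Z, hZ⟩ := wild_div hp hζ (Y := Δ) ⟨c, by rw [hc]; ring⟩
  refine ⟨Z, hZ, ?_⟩
  obtain ⟨w, hw, w', hw'⟩ := p_eq hp hζ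
  have hpl : (p : R) * (1 - ζ) = (1 - ζ) ^ p * w := by
    rw [hw, mul_right_comm, ← pow_succ, Nat.sub_add_cancel hp.one_le]
  have hl0 : 1 - ζ ≠ 0 := sub_ne_zero.2 (hζ.ne_one hp.one_lt).symm
  have h1 := add_pow_prime_eq hp 1 ((1 - ζ) * Z)
  rw [← hZ, hc] at h1
  set S := ∑ k ∈ Finset.Ioo 0 p, (1 : R) ^ (k - 1) * ((1 - ζ) * Z) ^ (p - k - 1) * ↑(p.choose k / p)
    with hS
  have hcS : c = Z ^ p + w * Z * S := by
    apply mul_left_cancel₀ (pow_ne_zero p hl0)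
    rw [one_pow, mul_pow] at h1
    linear_combination h1 + Z * S * hpl
  rw [← Ideal.Quotient.eq_zero_iff_mem] at hl hU hW ⊢
  rw [hcS] at hc'
  have e := congrArg (Ideal.Quotient.mk P) hc'
  have ew := congrArg (Ideal.Quotient.mk P) hw'
  have hS1 : Ideal.Quotient.mk P S = 1 := by
    rw [hS, map_sum, Finset.sum_eq_single (p - 1)]
    · rw [show p - (p - 1) - 1 = 0 by have := hp.two_le; omega, pow_zero, one_pow, one_mul, one_mul]
      have : p.choose (p - 1) = p := by
        rw [Nat.choose_symm hp.one_le, Nat.choose_one_right]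
      rw [this, Nat.div_self hp.pos]; simp
    · intro k hk hk1
      rw [Finset.mem_Ioo] at hk
      rw [map_mul, map_mul, map_pow _ ((1 - ζ) * Z), map_mul, hl, zero_mul, zero_pow (by omega)]
      simp
    · intro hk
      exact absurd (Finset.mem_Ioo.2 ⟨by have := hp.two_le; omega, by have := hp.two_le; omega⟩) hk
  have hU1 : Ideal.Quotient.mk P U = 1 := by rw [← sub_eq_zero, ← hU]; simp
  have hW1 : Ideal.Quotient.mk P W = 1 := by rw [← sub_eq_zero, ← hW]; simp
  obtain ⟨d', rfl⟩ : ∃ d', d = d' + 1 := ⟨d - 1, by omega⟩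
  simp only [map_sub, map_add, map_mul, map_pow, hS1, hU1, hW1, hl, map_natCast, map_one, zero_mul,
    add_tsub_cancel_right] at e ew
  simp only [map_sub, map_add, map_mul, map_pow, map_natCast]
  push_cast
  linear_combination e - Ideal.Quotient.mk P Z * ew

/-- At a prime away from `p` that divides `u`, the decomposition group fixes `U`, `W` and `Δ`. -/
lemma fix_tame_dec (h : Conf p d ζ b τ ε u s U W Δ) (hp : p.Prime)
    (hζ : IsPrimitiveRoot ζ p) (hd : 1 ≤ d) (hdp : d < p) {P : Ideal R} [hP : P.IsPrime]
    (hpP : (p : R) ∉ P) (hu : u ∈ P) (g : R →+* R) (gζ : g ζ = ζ) (gb : g b = b)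
    (gτ : g τ = τ) (hg : ∀ r ∈ P, g r ∈ P) (hU : U ≠ 0)
    (hW : W ≠ 0) (gU : g U ^ p = U ^ p) (gW : g W ^ p = W ^ p) :
    g U = U ∧ g W = W ∧ g Δ = Δ := by
  have hτ : τ ∈ P := by rw [h.hτ]; exact P.mul_mem_left _ hu
  have mem : ∀ x, (p : R) ^ 2 * τ ∣ x → x ∈ P := fun x hx =>
    P.mem_of_dvd hx (P.mul_mem_left _ hτ)
  have aux : ∀ V, V ≠ 0 → (p : R) ^ 2 * τ ∣ (V ^ d) ^ p - 1 → g V ^ p = V ^ p → g V = V := by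
    intro V hV hVp gV
    refine eq_of_pow_d hp hd hdp hV ?_ gV
    rw [← map_pow]
    refine tame_dec hp hζ hpP g gζ hg (mem _ hVp) ?_
    rw [map_pow, ← pow_mul, mul_comm d p, pow_mul, gV]; ring
  have g1 := aux U hU (h.U_pow hp hζ hd).1 gU
  have g2 := aux W hW (h.U_pow hp hζ hd).2 gW
  refine ⟨g1, g2, tame_dec hp hζ hpP g gζ hg ?_ (h.hgΔ g gζ gb gτ g1 g2)⟩
  have hb := mem _ h.db
  rw [← Ideal.Quotient.eq_zero_iff_mem] at hb hτ ⊢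
  have hb1 : Ideal.Quotient.mk P b = 1 := by rw [← sub_eq_zero, ← hb]; simp
  rw [h.hΔ, map_sub, map_mul, map_pow, map_twist, map_twist, map_mul, map_mul, hτ, hb1]
  simp [twist]

end Conf
end ClRank

/-! ### Conditions on the parameters -/

namespace ClRank
open NumberField Module

/-- The conditions on the parameters `b, τ = (1-ζ)²u, ε, s` in the base field guaranteeing that
the associated extension of degree `d` has class group of large `p`-rank.

* `h3`: at a common prime of `ε` and `s`, the valuation of `ε` is at least `p + 1` times that
  of `s`.
* `h4`: a condition at the primes dividing `b`, used for inertia there.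
* `h5`: a prime dividing `s` exactly once and dividing `ε`; it forces the degree to be `d`.
* `h6`, `h7`: primes at which residue symbols show that the root `η` of the defining equation and
  `η + ε` are not `p`-th powers.
* `h8`: a prime above `p` at which the trace of `d u` to the prime field is nonzero, so that an
  Artin–Schreier polynomial has no root.
* `hCl`: `u` lies in ideals prime to `p` that represent all ideal classes. -/
structure Good {K : Type*} [Field K] [NumberField K] (p d : ℕ) (ζ b τ ε u s : 𝓞 K) : Prop where
  b0 : b ≠ 0
  s0 : s ≠ 0
  ε0 : ε ≠ 0
  hb : b ^ p = 1 + τ ^ p * ε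
  hτ : τ = (1 - ζ) ^ 2 * u
  dε : (p : 𝓞 K) ^ 2 * τ ∣ ε
  ds : (p : 𝓞 K) ^ 2 * τ ∣ s - 1
  db : (p : 𝓞 K) ^ 2 * τ ∣ b - 1
  h3 : ∀ q : Ideal (𝓞 K), q.IsMaximal → ε ∈ q → s ∈ q → ∃ w, w ∉ q ∧ s ^ (p + 1) ∣ w * ε
  h4 : ∀ q : Ideal (𝓞 K), q.IsMaximal → b ∈ q → (τ ^ d * s) ^ p - (-1) ^ (d - 1) ∉ q
  h5 : ∃ q : Ideal (𝓞 K), q.IsMaximal ∧ s ∈ q ∧ s ∉ q ^ 2 ∧ ε ∈ q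
  h6 : ∃ q : Ideal (𝓞 K), q.IsMaximal ∧ b ∈ q ∧ ∃ c, (∀ y, 1 + c ^ p - y ^ p ∉ q) ∧
    τ ^ d * s - c ^ (d - 1) ∈ q
  h7 : ∃ q : Ideal (𝓞 K), q.IsMaximal ∧ s ∈ q ∧ ∀ y, b ^ p - 1 - y ^ p ∉ q
  h8 : ∃ q : Ideal (𝓞 K), q.IsMaximal ∧ (p : 𝓞 K) ∈ q ∧ ∃ f, Nat.card (𝓞 K ⧸ q) = p ^ f ∧
    ∑ i ∈ Finset.range f, ((d : 𝓞 K) * u) ^ p ^ i ∉ q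
  hCl : ∀ c : ClassGroup (𝓞 K), ∃ (I : Ideal (𝓞 K)) (hI : I ≠ ⊥), cl I hI = c ∧ u ∈ I ∧
    I ⊔ Ideal.span {(p : 𝓞 K)} = ⊤

/-- Form of `tame_inertia` for ideals and ring automorphisms. -/
lemma tame_fix {L M : Type*} [Field L] [NumberField L] [Field M] [NumberField M] [Algebra L M]
    {p d : ℕ} (hp : p.Prime) (hp2 : p ≠ 2) (hd2 : 2 ≤ d) (hdp : d < p)
    {ζ b τ ε u s U W Δ : 𝓞 M} (hζ : IsPrimitiveRoot ζ p) (h : Conf p d ζ b τ ε u s U W Δ)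
    (P : Ideal (𝓞 M)) (hP : P.IsMaximal) (hpP : (p : 𝓞 M) ∉ P) (g : M ≃ₐ[L] M)
    (hg : ∀ r : 𝓞 M, oAut g r - r ∈ P)
    (gζ : oAut g ζ = ζ) (gb : oAut g b = b) (gτ : oAut g τ = τ) (gs : oAut g s = s)
    (hs0 : s ≠ 0) (hU0 : U ≠ 0) (hW0 : W ≠ 0) (hΔ0 : Δ ≠ 0)
    (h3 : ε ∈ P → s ∈ P → ∃ w, w ∉ P ∧ s ^ (p + 1) ∣ w * ε)
    (h4 : b ∈ P → (τ ^ d * s) ^ p - (-1) ^ (d - 1) ∉ P)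
    (gU : oAut g U ^ p = U ^ p) (gW : oAut g W ^ p = W ^ p) :
    oAut g U = U ∧ oAut g W = W ∧ oAut g Δ = Δ := by
  let vP : IsDedekindDomain.HeightOneSpectrum (𝓞 M) := ⟨P, hP.isPrime,
    Ring.ne_bot_of_isMaximal_of_not_isField hP (RingOfIntegers.not_isField M)⟩
  let v := vP.valuation M
  have lt1 : ∀ r : 𝓞 M, v (r : M) < 1 ↔ r ∈ P := fun r => vP.valuation_lt_one_iff_mem r
  have le1 : ∀ r : 𝓞 M, v (r : M) ≤ 1 := fun r => vP.valuation_le_one r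
  have eq1 : ∀ r : 𝓞 M, v (r : M) = 1 ↔ r ∉ P := fun r => vP.valuation_eq_one_iff_notMem
  have hgv : ∀ r : M, v r ≤ 1 → v ((g : M →+* M) r - r) < 1 := by
    intro r hr
    obtain ⟨n, k, hk, hn⟩ : ∃ n : 𝓞 M, ∃ k : 𝓞 M, k ∉ P ∧ r * k = n := by
      obtain ⟨n, k, hnk⟩ := vP.exists_primeCompl_mul_eq_of_integer r hr
      exact ⟨n, k, k.2, hnk⟩
    have hgk : oAut g k ∉ P := fun hk' => hk (by simpa using P.sub_mem hk' (hg k))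
    have e : ((g : M →+* M) r - r) * (oAut g k : 𝓞 M) = ((oAut g n - n : 𝓞 M) : M) -
        r * ((oAut g k - k : 𝓞 M) : M) := by
      have := congrArg g hn
      rw [map_mul] at this
      simp only [map_sub, oAut_coe]
      show (g r - r) * g (k : M) = (g (n : M) - n) - r * (g (k : M) - k)
      rw [← this, ← hn]; ring
    have e2 : v (((g : M →+* M) r - r) * (oAut g k : 𝓞 M)) < 1 := by
      rw [e]
      refine v.map_sub_lt ((lt1 _).2 (hg n)) ?_
      rw [map_mul]
      exact (mul_le_of_le_one_left' hr).trans_lt ((lt1 _).2 (hg k))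
    rw [map_mul, (eq1 _).2 hgk, mul_one] at e2
    exact e2
  have hinj : Function.Injective (algebraMap (𝓞 M) M) := RingOfIntegers.coe_injective
  have hM := h.map (algebraMap (𝓞 M) M)
  have c0 : ∀ r : 𝓞 M, r ≠ 0 → algebraMap (𝓞 M) M r ≠ 0 := fun r hr => by simpa using hr
  have gg : ∀ r r' : 𝓞 M, oAut g r = r' → (g : M →+* M) (algebraMap (𝓞 M) M r) = algebraMap (𝓞 M) M r' := by
    intro r r' hr
    rw [← hr]; rfl
  obtain ⟨h1, h2, h3⟩ := tame_inertia v (g : M →+* M) hgv hp hp2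
    (by have := (eq1 _).2 hpP; simpa using this)
    (hζ.map_of_injective hinj) hd2 hdp (gg _ _ gζ) (gg _ _ gb) (gg _ _ gτ) (gg _ _ gs)
    (le1 b) (le1 τ) (le1 s) (le1 U) (le1 W) (c0 _ hs0) (c0 _ hU0) (c0 _ hW0) (c0 _ hΔ0)
    hM.hb hM.hW hM.hR
    (by
      intro e1 e2
      obtain ⟨w, hw, c, hc⟩ := h3 ((lt1 _).1 e1) ((lt1 _).1 e2)
      have := congrArg v (congrArg (algebraMap (𝓞 M) M) hc)
      simp only [map_mul, map_pow] at this
      rw [(eq1 w).2 hw, one_mul] at this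
      rw [this]
      exact mul_le_of_le_one_right' (le1 c))
    (by
      intro e1
      have := (eq1 _).2 (h4 ((lt1 _).1 e1))
      simpa using this)
    (by have := congrArg (algebraMap (𝓞 M) M) gU; rw [map_pow, map_pow] at this; exact this)
    (by have := congrArg (algebraMap (𝓞 M) M) gW; rw [map_pow, map_pow] at this; exact this)
    hM.hΔ
  exact ⟨hinj h1, hinj h2, hinj h3⟩

end ClRank

/-! ### Degree and minimal polynomial of η -/

namespace ClRank
open NumberField Module

/-- An element of a maximal ideal `q` which is not in `q ^ 2` has valuation at most `[L : K]`
at every prime above `q`. -/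
lemma val_le_finrank {K L : Type*} [Field K] [NumberField K] [Field L] [NumberField L] [Algebra K L]
    (q : Ideal (𝓞 K)) [hq : q.IsMaximal] (Q : Ideal (𝓞 L)) [hQ : Q.IsMaximal] [Q.LiesOver q]
    (s : 𝓞 K) (hs : s ∈ q) (hs2 : s ∉ q ^ 2) (n : ℕ) (hn : algebraMap (𝓞 K) (𝓞 L) s ∈ Q ^ n) :
    n ≤ finrank K L := by
  have hq0 : q ≠ ⊥ := Ring.ne_bot_of_isMaximal_of_not_isField hq (RingOfIntegers.not_isField K)
  obtain ⟨I, hI⟩ := (Ideal.dvd_span_singleton (I := q) (x := s)).2 hs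
  have hIq : ¬ I ≤ q := fun h => hs2 (by
    rw [← Ideal.span_singleton_le_iff_mem, hI, pow_two]
    exact Ideal.mul_mono_right h)
  obtain ⟨i, hi, hiq⟩ := Set.not_subset.1 hIq
  have hle : q.map (algebraMap (𝓞 K) (𝓞 L)) ≤ Q ^ n := by
    rw [Ideal.map_le_iff_le_comap]
    intro r hr
    have h1 : i * r ∈ Ideal.span {s} := by
      rw [hI, mul_comm i]; exact Ideal.mul_mem_mul hr hi
    obtain ⟨c, hc⟩ := Ideal.mem_span_singleton'.1 h1
    have h2 : algebraMap (𝓞 K) (𝓞 L) i * algebraMap (𝓞 K) (𝓞 L) r ∈ Q ^ n := by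
      rw [← map_mul, ← hc, map_mul]; exact Ideal.mul_mem_left _ _ hn
    rcases Ideal.IsPrime.mul_mem_pow Q h2 with h | h
    · exact absurd ((Ideal.mem_of_liesOver Q q i).2 h) hiq
    · exact h
  have hm0 : q.map (algebraMap (𝓞 K) (𝓞 L)) ≠ ⊥ := by
    rw [Ne, Ideal.map_eq_bot_iff_of_injective (FaithfulSMul.algebraMap_injective _ _)]; exact hq0
  have h1 : n ≤ q.ramificationIdx' Q := by
    rw [Ideal.IsDedekindDomain.ramificationIdx'_eq_multiplicity hm0 hQ.isPrime]
    refine FiniteMultiplicity.le_multiplicity_of_pow_dvd ?_ (Ideal.dvd_iff_le.2 hle)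
    refine FiniteMultiplicity.of_prime_left ?_ hm0
    exact (Ideal.prime_iff_isPrime
      (Ring.ne_bot_of_isMaximal_of_not_isField hQ (RingOfIntegers.not_isField L))).2 hQ.isPrime
  haveI : NoZeroSMulDivisors (𝓞 K) (𝓞 L) := ⟨fun {c x} h => by
    rw [Algebra.smul_def, mul_eq_zero] at h
    exact h.imp_left fun h => FaithfulSMul.algebraMap_injective (𝓞 K) (𝓞 L) (by rw [h, map_zero])⟩
  exact h1.trans (Ideal.ramificationIdx_le_finrank (S := 𝓞 L) K L Q)

/-- At a prime above the one in `h5`, with normalised valuation `v`, one has `v(η) · d = p ·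
v(s)`; hence `d` divides the ramification index `v(s)`, which is at most the degree of the field.
-/
lemma d_le_finrank {K L : Type*} [Field K] [NumberField K] [Field L] [NumberField L] [Algebra K L]
    {p d : ℕ} (hp : p.Prime) (hd2 : 2 ≤ d) (hdp : d < p) {ζ b τ ε u s : 𝓞 K}
    (h : Good p d ζ b τ ε u s) (η : 𝓞 L)
    (hη : η * (η + algebraMap _ _ ε) ^ (d - 1) =
      algebraMap (𝓞 K) (𝓞 L) s ^ p * (algebraMap _ _ b ^ p + algebraMap _ _ τ ^ p * η)) :
    d ≤ finrank K L := by
  obtain ⟨q, hq, hsq, hs2, hεq⟩ := h.h5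
  have hbq : b ∉ q := fun hb => by
    have h1 := q.pow_mem_of_mem hb p hp.pos
    rw [h.hb] at h1
    have h2 := q.sub_mem h1 (q.mul_mem_left (τ ^ p) hεq)
    rw [add_sub_cancel_right] at h2
    exact hq.ne_top ((Ideal.eq_top_iff_one q).2 h2)
  have hinj : Function.Injective (algebraMap (𝓞 K) (𝓞 L)) := FaithfulSMul.algebraMap_injective _ _
  obtain ⟨Q, hQ, hQq⟩ := Ideal.exists_ideal_over_maximal_of_isIntegral (S := 𝓞 L) q
    (by rw [(RingHom.injective_iff_ker_eq_bot _).1 hinj]; exact bot_le)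
  haveI : Q.LiesOver q := ⟨hQq.symm⟩
  have mQ : ∀ r, algebraMap (𝓞 K) (𝓞 L) r ∈ Q ↔ r ∈ q := fun r => (Ideal.mem_of_liesOver Q q r).symm
  let vQ : IsDedekindDomain.HeightOneSpectrum (𝓞 L) := ⟨Q, hQ.isPrime,
    Ring.ne_bot_of_isMaximal_of_not_isField hQ (RingOfIntegers.not_isField L)⟩
  let v := vQ.intValuation
  have lt1 : ∀ r : 𝓞 L, v r < 1 ↔ r ∈ Q := fun r => vQ.intValuation_lt_one_iff_mem r
  have le1 : ∀ r : 𝓞 L, v r ≤ 1 := fun r => vQ.intValuation_le_one r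
  have eq1 : ∀ r : 𝓞 L, r ∉ Q → v r = 1 := fun r hr => le_antisymm (le1 r) (not_lt.1 fun h => hr ((lt1 r).1 h))
  set s' := algebraMap (𝓞 K) (𝓞 L) s
  set ε' := algebraMap (𝓞 K) (𝓞 L) ε
  have hs'0 : s' ≠ 0 := by simpa [s'] using h.s0
  have hsQ : s' ∈ Q := (mQ _).2 hsq
  have hεQ : ε' ∈ Q := (mQ _).2 hεq
  have hηQ : η ∈ Q := by
    have h1 : η * (η + ε') ^ (d - 1) ∈ Q := by
      rw [hη]; exact Q.mul_mem_right _ (Q.pow_mem_of_mem hsQ p hp.pos)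
    rcases hQ.isPrime.mem_or_mem h1 with h1 | h1
    · exact h1
    · have := Q.sub_mem (hQ.isPrime.mem_of_pow_mem _ h1) hεQ
      rwa [add_sub_cancel_right] at this
  have hx : v (algebraMap (𝓞 K) (𝓞 L) b ^ p + algebraMap (𝓞 K) (𝓞 L) τ ^ p * η) = 1 := by
    refine eq1 _ fun h1 => ?_
    have h2 := Q.sub_mem h1 (Q.mul_mem_left (algebraMap (𝓞 K) (𝓞 L) τ ^ p) hηQ)
    rw [add_sub_cancel_right] at h2
    exact hbq ((mQ _).1 (hQ.isPrime.mem_of_pow_mem _ h2))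
  have hv := congrArg v hη
  rw [map_mul, map_mul, hx, mul_one, map_pow, map_pow] at hv
  have hvs0 : 0 < v s' := zero_lt_iff.2 (vQ.intValuation_ne_zero _ hs'0)
  have hvs1 : v s' < 1 := (lt1 _).2 hsQ
  have hvε : v ε' ≤ v s' ^ (p + 1) := by
    obtain ⟨w, hw, c, hc⟩ := h.h3 q hq hεq hsq
    have := congrArg (fun r => v (algebraMap (𝓞 K) (𝓞 L) r)) hc
    simp only [map_mul, map_pow] at this
    rw [eq1 _ (fun h1 => hw ((mQ _).1 h1)), one_mul] at this
    rw [this]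
    exact mul_le_of_le_one_right' (le1 _)
  -- By `h3` the element `ε` is negligible against `η`, so `η` and `η + ε` have the same
  -- valuation.
  have hlt : v ε' < v η := by
    by_contra hle
    push Not at hle
    have h1 : v (η + ε') ≤ v s' ^ (p + 1) := (v.map_add_le hle le_rfl).trans hvε
    have h2 : v η * v (η + ε') ^ (d - 1) < v s' ^ p := by
      calc v η * v (η + ε') ^ (d - 1) ≤ v s' ^ (p + 1) * 1 :=
            mul_le_mul' (hle.trans hvε) (pow_le_one' (le1 _) _)
        _ = v s' ^ p * v s' := by rw [mul_one, pow_succ]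
        _ < v s' ^ p * 1 := mul_lt_mul_of_pos_left hvs1 (pow_pos hvs0 p)
        _ = v s' ^ p := mul_one _
    exact h2.ne hv
  rw [v.map_add_eq_of_lt_left hlt, ← pow_succ', show d - 1 + 1 = d by omega] at hv
  have hη0 : η ≠ 0 := fun h0 => by rw [h0, map_zero] at hlt; exact not_lt_zero' hlt
  have e1 := vQ.intValuation_eq_exp_neg_multiplicity hη0
  have e2 := vQ.intValuation_eq_exp_neg_multiplicity hs'0
  change v η = _ at e1
  change v s' = _ at e2
  set m := multiplicity vQ.asIdeal (Ideal.span {η})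
  set n := multiplicity vQ.asIdeal (Ideal.span {s'})
  rw [e1, e2, ← WithZero.exp_nsmul, ← WithZero.exp_nsmul, WithZero.exp_inj] at hv
  have hdn : d * m = p * n := by
    simp only [nsmul_eq_mul, mul_neg, neg_inj] at hv
    exact_mod_cast hv
  have hdn' : d ∣ n := by
    have hc : Nat.Coprime d p := (Nat.coprime_of_lt_prime (by omega) hdp hp).symm
    exact hc.dvd_of_dvd_mul_left ⟨m, hdn.symm⟩
  have hn0 : n ≠ 0 := by
    intro h0
    rw [h0] at e2
    simp at e2
    exact hvs1.ne e2
  have hn : n ≤ finrank K L := by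
    refine val_le_finrank q Q s hsq hs2 n ?_
    exact (vQ.intValuation_le_pow_iff_mem s' n).1 e2.le
  exact (Nat.le_of_dvd (Nat.pos_of_ne_zero hn0) hdn').trans hn

/-- If `r` is a root modulo `q` of the minimal polynomial of `η`, then some prime above `q`
contains `η - r`. -/
lemma exists_prime_sub {K L : Type*} [Field K] [NumberField K] [Field L] [NumberField L] [Algebra K L]
    (η : 𝓞 L) (q : Ideal (𝓞 K)) (hq : q.IsMaximal) (r : 𝓞 K)
    (hm : (minpoly (𝓞 K) η).eval r ∈ q) :
    ∃ Q : Ideal (𝓞 L), Q.IsMaximal ∧ Q.under (𝓞 K) = q ∧ η - algebraMap _ _ r ∈ Q := by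
  have hInt : IsIntegral (𝓞 K) η := Algebra.IsIntegral.isIntegral η
  let A := Algebra.adjoin (𝓞 K) {η}
  have hev : (minpoly (𝓞 K) η).eval₂ (Algebra.ofId (𝓞 K) (𝓞 K ⧸ q) : 𝓞 K →+* 𝓞 K ⧸ q)
      (Ideal.Quotient.mk q r) = 0 := by
    have h1 := Polynomial.eval₂_at_apply (p := minpoly (𝓞 K) η) (Ideal.Quotient.mk q) r
    rw [Ideal.Quotient.eq_zero_iff_mem.2 hm] at h1
    exact h1
  let φ : A →ₐ[𝓞 K] (𝓞 K ⧸ q) := (AdjoinRoot.liftAlgHom (minpoly (𝓞 K) η)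
    (Algebra.ofId (𝓞 K) (𝓞 K ⧸ q)) (Ideal.Quotient.mk q r) hev).comp (minpoly.equivAdjoin hInt).symm.toAlgHom
  have hφη : φ ⟨η, Algebra.self_mem_adjoin_singleton _ _⟩ = Ideal.Quotient.mk q r := by
    have h1 : (minpoly.equivAdjoin hInt).symm ⟨η, Algebra.self_mem_adjoin_singleton _ _⟩ =
        AdjoinRoot.root (minpoly (𝓞 K) η) := by
      rw [AlgEquiv.symm_apply_eq, minpoly.coe_equivAdjoin]
      exact Subtype.ext (by simp [AdjoinRoot.Minpoly.toAdjoin])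
    show AdjoinRoot.liftAlgHom _ _ _ hev ((minpoly.equivAdjoin hInt).symm _) = _
    rw [h1, AdjoinRoot.liftAlgHom_root]
  have hsur : Function.Surjective φ := fun y => by
    obtain ⟨y, rfl⟩ := Ideal.Quotient.mk_surjective y
    exact ⟨algebraMap _ _ y, φ.commutes y⟩
  letI := Ideal.Quotient.field q
  have hmax : (RingHom.ker φ).IsMaximal := RingHom.ker_isMaximal_of_surjective φ hsur
  haveI : Algebra.IsIntegral A (𝓞 L) :=
    ⟨fun x => (Algebra.IsIntegral.isIntegral (R := 𝓞 K) x).tower_top⟩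
  obtain ⟨Q, hQ, hQA⟩ := Ideal.exists_ideal_over_maximal_of_isIntegral (S := 𝓞 L) (RingHom.ker φ)
    (by rw [(RingHom.injective_iff_ker_eq_bot _).1 (FaithfulSMul.algebraMap_injective A (𝓞 L))]
        exact bot_le)
  refine ⟨Q, hQ, ?_, ?_⟩
  · ext y
    have h1 : algebraMap (𝓞 K) A y ∈ Q.comap (algebraMap A (𝓞 L)) ↔ y ∈ q := by
      rw [hQA, RingHom.mem_ker, φ.commutes]
      exact Ideal.Quotient.eq_zero_iff_mem
    exact h1
  · have h1 : (⟨η, Algebra.self_mem_adjoin_singleton _ _⟩ - algebraMap (𝓞 K) A r : A) ∈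
        Q.comap (algebraMap A (𝓞 L)) := by
      rw [hQA, RingHom.mem_ker, map_sub, hφη, φ.commutes]
      exact sub_self _
    exact h1

/-- The monic polynomial `T (T + ε) ^ (d - 1) - s ^ p (b ^ p + τ ^ p T)` of degree `d`. -/
noncomputable def gpoly {R : Type*} [CommRing R] (p d : ℕ) (b τ ε s : R) : Polynomial R :=
  Polynomial.X * (Polynomial.X + Polynomial.C ε) ^ (d - 1) -
    (Polynomial.C (s ^ p * b ^ p) + Polynomial.C (s ^ p * τ ^ p) * Polynomial.X)

section
open Polynomial

lemma gpoly_aux {R : Type*} [CommRing R] [Nontrivial R] {d : ℕ} (hd2 : 2 ≤ d) (ε A B : R) :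
    (X * (X + C ε) ^ (d - 1) - (C A + C B * X)).Monic ∧
    (X * (X + C ε) ^ (d - 1) - (C A + C B * X)).natDegree = d := by
  have h1 : (X * (X + C ε) ^ (d - 1)).Monic := monic_X.mul ((monic_X_add_C ε).pow _)
  have h2 : (X * (X + C ε) ^ (d - 1)).natDegree = d := by
    rw [monic_X.natDegree_mul ((monic_X_add_C ε).pow _), (monic_X_add_C ε).natDegree_pow,
      natDegree_X_add_C, natDegree_X]
    omega
  have h3 : (C A + C B * X).degree < (X * (X + C ε) ^ (d - 1)).degree := by
    rw [degree_eq_natDegree h1.ne_zero, h2]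
    have h4 : (C A + C B * X).degree ≤ 1 := by rw [add_comm]; exact degree_linear_le
    exact h4.trans_lt (by exact_mod_cast hd2)
  refine ⟨h1.sub_of_left h3, ?_⟩
  rw [natDegree_sub_eq_left_of_natDegree_lt, h2]
  rw [h2]
  calc (C A + C B * X).natDegree ≤ 1 := by rw [add_comm]; exact natDegree_linear_le
    _ < d := hd2

lemma gpoly_monic {R : Type*} [CommRing R] [Nontrivial R] {p d : ℕ} (hd2 : 2 ≤ d) (b τ ε s : R) :
    (gpoly p d b τ ε s).Monic := (gpoly_aux hd2 _ _ _).1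

lemma gpoly_natDegree {R : Type*} [CommRing R] [Nontrivial R] {p d : ℕ} (hd2 : 2 ≤ d) (b τ ε s : R) :
    (gpoly p d b τ ε s).natDegree = d := (gpoly_aux hd2 _ _ _).2

lemma gpoly_aeval {R S : Type*} [CommRing R] [CommRing S] [Algebra R S] {p d : ℕ} (b τ ε s : R)
    (y : S) : aeval y (gpoly p d b τ ε s) = y * (y + algebraMap R S ε) ^ (d - 1) -
      algebraMap R S s ^ p * (algebraMap R S b ^ p + algebraMap R S τ ^ p * y) := by
  simp [gpoly]; ring

end

lemma minpoly_eq {K L : Type*} [Field K] [NumberField K] [Field L] [NumberField L] [Algebra K L]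
    {p d : ℕ} (hp : p.Prime) (hd2 : 2 ≤ d) (hdp : d < p) {ζ b τ ε u s : 𝓞 K}
    (h : Good p d ζ b τ ε u s) (η : 𝓞 L) (hη : η * (η + algebraMap _ _ ε) ^ (d - 1) =
      algebraMap (𝓞 K) (𝓞 L) s ^ p * (algebraMap _ _ b ^ p + algebraMap _ _ τ ^ p * η)) :
    minpoly (𝓞 K) η = gpoly p d b τ ε s ∧ finrank K (IntermediateField.adjoin K {(η : L)}) = d := by
  have hInt : IsIntegral (𝓞 K) η := Algebra.IsIntegral.isIntegral η
  have hintK : IsIntegral K (η : L) := Algebra.IsIntegral.isIntegral _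
  let F := IntermediateField.adjoin K {(η : L)}
  haveI : NumberField F := NumberField.of_module_finite K F
  have hle : d ≤ finrank K F := by
    let x : F := ⟨(η : L), IntermediateField.mem_adjoin_simple_self K _⟩
    have hx : IsIntegral ℤ x := by
      rw [← isIntegral_algebraMap_iff (FaithfulSMul.algebraMap_injective F L)]
      exact RingOfIntegers.isIntegral_coe η
    let η' : 𝓞 F := ⟨x, hx⟩
    refine d_le_finrank hp hd2 hdp h η' ?_
    apply RingOfIntegers.ext
    apply FaithfulSMul.algebraMap_injective F L
    have := congrArg (algebraMap (𝓞 L) L) hη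
    simp only [map_mul, map_pow, map_add] at this ⊢
    exact this
  have hdvd : minpoly (𝓞 K) η ∣ gpoly p d b τ ε s := by
    refine minpoly.isIntegrallyClosed_dvd hInt ?_
    rw [gpoly_aeval, hη, sub_self]
  have hdeg : (minpoly (𝓞 K) η).natDegree = finrank K F := by
    rw [IntermediateField.adjoin.finrank hintK]
    have h1 : minpoly K (η : L) = (minpoly (𝓞 K) (η : L)).map (algebraMap (𝓞 K) K) :=
      minpoly.isIntegrallyClosed_eq_field_fractions K L
        (RingOfIntegers.isIntegral_coe η).tower_top
    have h2 : minpoly (𝓞 K) (η : L) = minpoly (𝓞 K) η :=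
      minpoly.algebraMap_eq RingOfIntegers.coe_injective η
    rw [h1, h2, (minpoly.monic hInt).natDegree_map]
  have heq : minpoly (𝓞 K) η = gpoly p d b τ ε s :=
    (Polynomial.eq_of_monic_of_dvd_of_natDegree_le (minpoly.monic hInt) (gpoly_monic hd2 _ _ _ _)
      hdvd (by rw [gpoly_natDegree hd2, hdeg]; exact hle)).symm
  refine ⟨heq, ?_⟩
  rw [← hdeg, heq, gpoly_natDegree hd2]

/-- Specialisation of `exists_prime_sub`: a root modulo `q` of the defining equation. -/
lemma exists_prime_root {K L : Type*} [Field K] [NumberField K] [Field L] [NumberField L]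
    [Algebra K L] {p d : ℕ} (hp : p.Prime) (hd2 : 2 ≤ d) (hdp : d < p) {ζ b τ ε u s : 𝓞 K}
    (h : Good p d ζ b τ ε u s) (η : 𝓞 L) (hη : η * (η + algebraMap _ _ ε) ^ (d - 1) =
      algebraMap (𝓞 K) (𝓞 L) s ^ p * (algebraMap _ _ b ^ p + algebraMap _ _ τ ^ p * η))
    (q : Ideal (𝓞 K)) (hq : q.IsMaximal) (r : 𝓞 K)
    (hr : r * (r + ε) ^ (d - 1) - s ^ p * (b ^ p + τ ^ p * r) ∈ q) :
    ∃ Q : Ideal (𝓞 L), Q.IsMaximal ∧ Q.under (𝓞 K) = q ∧ η - algebraMap _ _ r ∈ Q := by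
  refine exists_prime_sub η q hq r ?_
  rw [(minpoly_eq hp hd2 hdp h η hη).1, ← Polynomial.coe_aeval_eq_eval, gpoly_aeval]
  exact hr
end ClRank

/-! ### Residue fields and Frobenius elements -/

namespace ClRank
open NumberField Module

lemma exists_above {L M : Type*} [Field L] [NumberField L] [Field M] [NumberField M] [Algebra L M]
    (q : Ideal (𝓞 L)) (hq : q.IsMaximal) :
    ∃ P : Ideal (𝓞 M), P.IsMaximal ∧ P.under (𝓞 L) = q := by
  obtain ⟨P, h1, h2⟩ := Ideal.exists_maximal_ideal_liesOver_of_isIntegral (S := 𝓞 M) q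
  exact ⟨P, h1, h2.over.symm⟩

/-- Existence of a Frobenius element at `P`. -/
lemma exists_frob {L M : Type*} [Field L] [NumberField L] [Field M] [NumberField M] [Algebra L M]
    [IsGalois L M] (P : Ideal (𝓞 M)) (hP : P.IsMaximal) : ∃ g : M ≃ₐ[L] M,
      ∀ r : 𝓞 M, oAut g r - r ^ Nat.card (𝓞 L ⧸ P.under (𝓞 L)) ∈ P := by
  have : Finite (𝓞 M ⧸ P) := Ring.HasFiniteQuotients.finiteQuotient
    (Ring.ne_bot_of_isMaximal_of_not_isField hP (RingOfIntegers.not_isField M))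
  obtain ⟨g, hg⟩ := IsArithFrobAt.exists_of_isInvariant (𝓞 L) (M ≃ₐ[L] M) P
  exact ⟨g, hg⟩

/-- The residue field of a prime above `q` in an extension of degree `d` has degree between
`1` and `d` over that of `q`. -/
lemma card_residue {K L : Type*} [Field K] [NumberField K] [Field L] [NumberField L] [Algebra K L]
    (q : Ideal (𝓞 K)) [hq : q.IsMaximal] (Q : Ideal (𝓞 L)) [hQ : Q.IsMaximal] [Q.LiesOver q] :
    1 ≤ finrank (𝓞 K ⧸ q) (𝓞 L ⧸ Q) ∧ finrank (𝓞 K ⧸ q) (𝓞 L ⧸ Q) ≤ finrank K L := by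
  have hq0 : q ≠ ⊥ := Ring.ne_bot_of_isMaximal_of_not_isField hq (RingOfIntegers.not_isField K)
  haveI : NoZeroSMulDivisors (𝓞 K) (𝓞 L) := ⟨fun {c x} h => by
    rw [Algebra.smul_def, mul_eq_zero] at h
    exact h.imp_left fun h => FaithfulSMul.algebraMap_injective (𝓞 K) (𝓞 L) (by rw [h, map_zero])⟩
  have h1 := Ideal.inertiaDeg_le_finrank (S := 𝓞 L) K L Q hq0
  have h2 := Ideal.inertiaDeg'_ne_zero q Q
  rw [Ideal.inertiaDeg'_algebraMap] at h1 h2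
  exact ⟨Nat.one_le_iff_ne_zero.2 h2, h1⟩

/-- A `p`-th power nonresidue remains one in extensions of degree less than `p`. -/
lemma nonres {K L : Type*} [Field K] [NumberField K] [Field L] [NumberField L] [Algebra K L]
    {p : ℕ} (hp : p.Prime) (hd : finrank K L < p)
    (q : Ideal (𝓞 K)) [hq : q.IsMaximal] (Q : Ideal (𝓞 L)) [hQ : Q.IsMaximal] [Q.LiesOver q]
    (a : 𝓞 K) (ha : ∀ y, a - y ^ p ∉ q) (e : ℕ) (B : 𝓞 L)
    (hB : algebraMap (𝓞 K) (𝓞 L) a ^ e - B ^ p ∈ Q) : p ∣ e := by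
  letI := Ideal.Quotient.field q
  letI := Ideal.Quotient.field Q
  have hf := card_residue q Q (K := K) (L := L)
  set f := finrank (𝓞 K ⧸ q) (𝓞 L ⧸ Q)
  have hQ0 : Q ≠ ⊥ := Ring.ne_bot_of_isMaximal_of_not_isField hQ (RingOfIntegers.not_isField L)
  haveI : Finite (𝓞 L ⧸ Q) := Ring.HasFiniteQuotients.finiteQuotient hQ0
  haveI : Module.Finite (𝓞 K ⧸ q) (𝓞 L ⧸ Q) := Module.Finite.of_finite
  have h1 : algebraMap (𝓞 K ⧸ q) (𝓞 L ⧸ Q) (Ideal.Quotient.mk q a ^ e) =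
      Ideal.Quotient.mk Q B ^ p := by
    rw [← map_pow (Ideal.Quotient.mk q), Ideal.Quotient.algebraMap_mk_of_liesOver,
      ← map_pow (Ideal.Quotient.mk Q), Ideal.Quotient.eq, map_pow]
    exact hB
  have h2 := congrArg (Algebra.norm (𝓞 K ⧸ q)) h1
  rw [Algebra.norm_algebraMap, map_pow, ← pow_mul] at h2
  by_contra hpe
  have hc : (e * f).Coprime p := by
    refine Nat.Coprime.mul_left ?_ ?_
    · exact ((Nat.Prime.coprime_iff_not_dvd hp).2 hpe).symm
    · exact (Nat.coprime_of_lt_prime (by omega) (by omega) hp).symm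
  set α := Ideal.Quotient.mk q a
  set β := Algebra.norm (𝓞 K ⧸ q) (Ideal.Quotient.mk Q B)
  have hα0 : α ≠ 0 := fun h0 => ha 0 (by
    rw [zero_pow hp.ne_zero, sub_zero]; exact Ideal.Quotient.eq_zero_iff_mem.1 h0)
  obtain ⟨y, hy⟩ : ∃ y, α = y ^ p := by
    have h3 : ((1 : ℤ)) = (e * f : ℕ) * Nat.gcdA (e * f) p + p * Nat.gcdB (e * f) p := by
      rw [← Nat.gcd_eq_gcd_ab, hc]; rfl
    refine ⟨β ^ Nat.gcdA (e * f) p * α ^ Nat.gcdB (e * f) p, ?_⟩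
    rw [mul_pow, ← zpow_natCast, ← zpow_natCast, ← zpow_mul, ← zpow_mul, mul_comm _ (p : ℤ),
      zpow_mul, zpow_natCast, ← h2, ← zpow_natCast, ← zpow_mul, mul_comm _ (p : ℤ),
      ← zpow_add₀ hα0, ← h3, zpow_one]
  obtain ⟨y, rfl⟩ := Ideal.Quotient.mk_surjective y
  refine ha y ?_
  rw [← Ideal.Quotient.eq, map_pow]
  exact hy

/-- Artin–Schreier elements over finite fields: if `Z ^ p - Z = c` then
`Z ^ (p ^ k) = Z + ∑ c ^ (p ^ i)`. -/
lemma as_iter {F : Type*} [Field F] {p : ℕ} [hp : Fact p.Prime] [CharP F p] {Z c : F}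
    (h : Z ^ p - Z = c) (k : ℕ) : Z ^ p ^ k = Z + ∑ i ∈ Finset.range k, c ^ p ^ i := by
  induction k with
  | zero => simp
  | succ k ih =>
    rw [pow_succ, pow_mul', sub_eq_iff_eq_add.1 h, add_pow_char_pow, ih, Finset.sum_range_succ]
    ring

/-- A trace-type sum over a multiple of the period. -/
lemma sum_periodic {F : Type*} [Field F] {p : ℕ} {c : F} {f₁ : ℕ} (h : c ^ p ^ f₁ = c) (f : ℕ) :
    ∑ i ∈ Finset.range (f₁ * f), c ^ p ^ i = f * ∑ i ∈ Finset.range f₁, c ^ p ^ i := by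
  induction f with
  | zero => simp
  | succ f ih =>
    have h2 : c ^ p ^ (f₁ * f) = c := by
      clear ih
      induction f with
      | zero => simp
      | succ f ih => rw [Nat.mul_succ, pow_add, pow_mul, ih, h]
    rw [Nat.mul_succ, Finset.sum_range_add, ih]
    push_cast
    rw [add_mul, one_mul]
    congr 1
    exact Finset.sum_congr rfl fun i _ => by rw [pow_add, pow_mul, h2]

end ClRank

/-! ### The Kummer tower: inertia and splitting -/

namespace ClRank
open NumberField Module

/-- A tower `M / L / K` in which `L = K(η)` is the extension of degree `d` attached to good
parameters and `M = L(U, W, Δ h)` is the Kummer extension with `U ^ p = η`, `W ^ p = η + ε`. The element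
`Δ ^ p` is the twisted product, `h` is fixed by the automorphisms fixing `U` and `W`, and
`(Δ h) ^ p` lies in `L`. -/
structure Setup (K L M : Type*) [Field K] [NumberField K] [Field L] [NumberField L]
    [Field M] [NumberField M] [Algebra K L] [Algebra L M] (p d : ℕ)
    (ζ b τ ε u s : 𝓞 K) (η : 𝓞 L) (U W Δ : 𝓞 M) (h : M) : Prop where
  hp : p.Prime
  hp2 : p ≠ 2
  hd2 : 2 ≤ d
  hdp : d < p
  hζ : IsPrimitiveRoot ζ p
  good : Good p d ζ b τ ε u s
  hdeg : finrank K L = d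
  hη : η * (η + algebraMap _ _ ε) ^ (d - 1) =
    algebraMap (𝓞 K) (𝓞 L) s ^ p * (algebraMap _ _ b ^ p + algebraMap _ _ τ ^ p * η)
  hU : U ^ p = algebraMap (𝓞 L) (𝓞 M) η
  hW : W ^ p = algebraMap (𝓞 L) (𝓞 M) (η + algebraMap (𝓞 K) (𝓞 L) ε)
  hΔ : Δ ^ p = twist p (algebraMap (𝓞 L) (𝓞 M) (algebraMap (𝓞 K) (𝓞 L) ζ))
      (algebraMap (𝓞 L) (𝓞 M) (algebraMap (𝓞 K) (𝓞 L) b))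
      (algebraMap (𝓞 L) (𝓞 M) (algebraMap (𝓞 K) (𝓞 L) τ) * U) *
    twist p (algebraMap (𝓞 L) (𝓞 M) (algebraMap (𝓞 K) (𝓞 L) ζ)) 1
      (algebraMap (𝓞 L) (𝓞 M) (algebraMap (𝓞 K) (𝓞 L) τ) * W) ^ (d - 1)
  h0 : h ≠ 0
  hfix : ∀ g : M ≃ₐ[L] M, oAut g U = U → oAut g W = W → g h = h
  hy : ∃ c : L, ((Δ : M) * h) ^ p = algebraMap L M c

namespace Setup

variable {K L M : Type*} [Field K] [NumberField K] [Field L] [NumberField L]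
    [Field M] [NumberField M] [Algebra K L] [Algebra L M] {p d : ℕ}
    {ζ b τ ε u s : 𝓞 K} {η : 𝓞 L} {U W Δ : 𝓞 M} {h : M}

/-- The inclusion of `𝓞 K` in `𝓞 M`. -/
noncomputable abbrev inc (K L M : Type*) [Field K] [Field L]
    [Field M] [Algebra K L] [Algebra L M] : 𝓞 K →+* 𝓞 M :=
  (algebraMap (𝓞 L) (𝓞 M)).comp (algebraMap (𝓞 K) (𝓞 L))

lemma inc_inj : Function.Injective (inc K L M) :=
  (FaithfulSMul.algebraMap_injective (𝓞 L) (𝓞 M)).comp (FaithfulSMul.algebraMap_injective _ _)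

lemma g_inc (g : M ≃ₐ[L] M) (r : 𝓞 K) : oAut g (inc K L M r) = inc K L M r := by
  exact (oAut g).commutes _

lemma conf (S : Setup K L M p d ζ b τ ε u s η U W Δ h) :
    Conf p d (inc K L M ζ) (inc K L M b) (inc K L M τ) (inc K L M ε) (inc K L M u) (inc K L M s)
      U W Δ where
  hb := by rw [← map_pow, S.good.hb]; simp
  hτ := by rw [S.good.hτ]; simp
  dε := by simpa using map_dvd (inc K L M) S.good.dε
  ds := by simpa using map_dvd (inc K L M) S.good.ds
  db := by simpa using map_dvd (inc K L M) S.good.db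
  hW := by rw [S.hW, S.hU, map_add]; rfl
  hR := by
    have := congrArg (algebraMap (𝓞 L) (𝓞 M)) S.hη
    rw [S.hW, S.hU]
    simpa using this
  hΔ := S.hΔ

lemma hζM (S : Setup K L M p d ζ b τ ε u s η U W Δ h) : IsPrimitiveRoot (inc K L M ζ) p :=
  S.hζ.map_of_injective inc_inj

lemma hx_aux (hd2 : 2 ≤ d) (good : Good p d ζ b τ ε u s)
    (hη : η * (η + algebraMap _ _ ε) ^ (d - 1) =
      algebraMap (𝓞 K) (𝓞 L) s ^ p * (algebraMap _ _ b ^ p + algebraMap _ _ τ ^ p * η)) : η ≠ 0 ∧ η + algebraMap _ _ ε ≠ 0 ∧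
    algebraMap (𝓞 K) (𝓞 L) b ^ p + algebraMap _ _ τ ^ p * η ≠ 0 := by
  have hinj : Function.Injective (algebraMap (𝓞 K) (𝓞 L)) := FaithfulSMul.algebraMap_injective _ _
  have hs : algebraMap (𝓞 K) (𝓞 L) s ≠ 0 := (map_ne_zero_iff _ hinj).2 good.s0
  have hb : algebraMap (𝓞 K) (𝓞 L) b ≠ 0 := (map_ne_zero_iff _ hinj).2 good.b0
  have h1 : η ≠ 0 := by
    rintro rfl
    rw [zero_mul, mul_zero, add_zero] at hη
    exact mul_ne_zero (pow_ne_zero _ hs) (pow_ne_zero _ hb) hη.symm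
  have h2 : η + algebraMap _ _ ε ≠ 0 := by
    intro h0
    have h3 : algebraMap (𝓞 K) (𝓞 L) b ^ p + algebraMap _ _ τ ^ p * η = 1 := by
      have := congrArg (algebraMap (𝓞 K) (𝓞 L)) good.hb
      simp only [map_pow, map_add, map_one, map_mul] at this
      rw [this, eq_neg_of_add_eq_zero_left h0]; ring
    rw [h0, h3, zero_pow (by omega), mul_zero, mul_one] at hη
    exact pow_ne_zero _ hs hη.symm
  refine ⟨h1, h2, fun h0 => ?_⟩
  rw [h0, mul_zero] at hη
  exact mul_ne_zero h1 (pow_ne_zero _ h2) hη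

lemma hx (S : Setup K L M p d ζ b τ ε u s η U W Δ h) : η ≠ 0 ∧ η + algebraMap _ _ ε ≠ 0 ∧
    algebraMap (𝓞 K) (𝓞 L) b ^ p + algebraMap _ _ τ ^ p * η ≠ 0 :=
  hx_aux S.hd2 S.good S.hη

lemma twist_ne_zero (hp : p.Prime) (hp2 : p ≠ 2) {R : Type*} [CommRing R] [IsDomain R] {ζ B V : R}
    (hζ : IsPrimitiveRoot ζ p) (hB : B ^ p + V ^ p ≠ 0) : twist p ζ B V ≠ 0 := by
  rw [← prod_add_root hp hp2 hζ, Finset.prod_ne_zero_iff] at hB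
  exact Finset.prod_ne_zero_iff.2 fun i hi => pow_ne_zero _ (hB i hi)

lemma ne (S : Setup K L M p d ζ b τ ε u s η U W Δ h) : U ≠ 0 ∧ W ≠ 0 ∧ Δ ≠ 0 := by
  have hinj : Function.Injective (algebraMap (𝓞 L) (𝓞 M)) := FaithfulSMul.algebraMap_injective _ _
  obtain ⟨h1, h2, h3⟩ := S.hx
  have hp0 := S.hp.ne_zero
  refine ⟨?_, ?_, ?_⟩
  · rintro rfl
    have := S.hU
    rw [zero_pow hp0, eq_comm, map_eq_zero_iff _ hinj] at this
    exact h1 this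
  · rintro rfl
    have := S.hW
    rw [zero_pow hp0, eq_comm, map_eq_zero_iff _ hinj] at this
    exact h2 this
  · rintro rfl
    have := S.conf.hΔ
    rw [zero_pow hp0] at this
    have hx : (inc K L M b) ^ p + (inc K L M τ * U) ^ p ≠ 0 := by
      rw [mul_pow, S.hU]
      have := (map_ne_zero_iff _ hinj).2 h3
      simpa using this
    refine mul_ne_zero (twist_ne_zero S.hp S.hp2 S.hζM hx)
      (pow_ne_zero _ (twist_ne_zero S.hp S.hp2 S.hζM ?_)) this.symm
    have e : (1 : 𝓞 M) ^ p + (inc K L M τ * W) ^ p = (inc K L M b) ^ p + (inc K L M τ * U) ^ p := by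
      rw [mul_pow, mul_pow, S.conf.hW, S.conf.hb]; ring
    rwa [e]

lemma gU (S : Setup K L M p d ζ b τ ε u s η U W Δ h) (g : M ≃ₐ[L] M) : oAut g U ^ p = U ^ p := by
  rw [← map_pow, S.hU]; exact (oAut g).commutes _

lemma gW (S : Setup K L M p d ζ b τ ε u s η U W Δ h) (g : M ≃ₐ[L] M) : oAut g W ^ p = W ^ p := by
  rw [← map_pow, S.hW]; exact (oAut g).commutes _

lemma gΔ (S : Setup K L M p d ζ b τ ε u s η U W Δ h) (g : M ≃ₐ[L] M) (hU : oAut g U = U)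
    (hW : oAut g W = W) : oAut g Δ ^ p = Δ ^ p :=
  S.conf.hgΔ (oAut g : 𝓞 M →+* 𝓞 M) (g_inc g ζ) (g_inc g b) (g_inc g τ) hU hW

lemma gy (S : Setup K L M p d ζ b τ ε u s η U W Δ h) (g : M ≃ₐ[L] M) (hU : oAut g U = U)
    (hW : oAut g W = W) (hΔ : oAut g Δ = Δ) (i : Fin 3) :
    g ((![(U : M), (W : M), (Δ : M) * h] : Fin 3 → M) i) = (![(U : M), (W : M), (Δ : M) * h] : Fin 3 → M) i := by
  have h1 := congrArg (algebraMap (𝓞 M) M) hU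
  have h2 := congrArg (algebraMap (𝓞 M) M) hW
  have h3 := congrArg (algebraMap (𝓞 M) M) hΔ
  fin_cases i
  · exact h1
  · exact h2
  · show g ((Δ : M) * h) = (Δ : M) * h
    rw [map_mul, S.hfix g hU hW]
    congr 1

/-- The extension `M / L` is unramified: an inertia element fixes the generators. -/
lemma inertia (S : Setup K L M p d ζ b τ ε u s η U W Δ h) (P : Ideal (𝓞 M)) (hP : P.IsMaximal)
    (g : M ≃ₐ[L] M) (hg : ∀ r : 𝓞 M, oAut g r - r ∈ P) :
    oAut g U = U ∧ oAut g W = W ∧ oAut g Δ = Δ := by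
  obtain ⟨hU0, hW0, hΔ0⟩ := S.ne
  have hd2 := S.hd2
  by_cases hpP : (p : 𝓞 M) ∈ P
  · have hl := lam_mem S.hp S.hζM hpP
    obtain ⟨h1, h2⟩ := S.conf.fixUW_wild S.hp S.hζM (by omega) S.hdp hl (oAut g : 𝓞 M →+* 𝓞 M)
      (g_inc g ζ) (fun r hr => by have := P.add_mem (hg r) hr; rwa [sub_add_cancel] at this)
      hU0 hW0 (S.gU g) (S.gW g)
    exact ⟨h1, h2, S.conf.fixΔ_wild S.hp S.hp2 S.hζM hl (oAut g : 𝓞 M →+* 𝓞 M) (g_inc g ζ) hg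
      (S.gΔ g h1 h2)⟩
  · have hq : (P.comap (inc K L M)).IsMaximal := by
      rw [inc, ← Ideal.comap_comap]
      haveI : (P.comap (algebraMap (𝓞 L) (𝓞 M))).IsMaximal :=
        Ideal.isMaximal_comap_of_isIntegral_of_isMaximal P
      exact Ideal.isMaximal_comap_of_isIntegral_of_isMaximal _
    refine tame_fix S.hp S.hp2 S.hd2 S.hdp S.hζM S.conf P hP hpP g hg (g_inc g ζ) (g_inc g b)
      (g_inc g τ) (g_inc g s) ((map_ne_zero_iff _ inc_inj).2 S.good.s0) hU0 hW0 hΔ0 ?_ ?_ (S.gU g) (S.gW g)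
    · intro h1 h2
      obtain ⟨w, hw, hw'⟩ := S.good.h3 _ hq h1 h2
      exact ⟨inc K L M w, hw, by simpa using map_dvd (inc K L M) hw'⟩
    · intro h1 h2
      refine S.good.h4 _ hq h1 ?_
      rw [Ideal.mem_comap]
      simpa using h2

/-- Every ideal class of `K` has a representative whose prime divisors split completely from `L`
to `M`: the decomposition groups fix the generators. -/
lemma core_cl (S : Setup K L M p d ζ b τ ε u s η U W Δ h) (c : ClassGroup (𝓞 K)) :
    ∃ (I : Ideal (𝓞 K)) (hI : I ≠ ⊥), cl I hI = c ∧
      ∀ P : Ideal (𝓞 M), P.IsMaximal → extId (𝓞 K) (𝓞 L) I ≤ P.under (𝓞 L) →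
        ∀ g : M ≃ₐ[L] M, (∀ r ∈ P, oAut g r ∈ P) →
          oAut g U = U ∧ oAut g W = W ∧ oAut g Δ = Δ := by
  obtain ⟨hU0, hW0, hΔ0⟩ := S.ne
  have hd2 := S.hd2
  obtain ⟨I, hI, hc, hu, htop⟩ := S.good.hCl c
  refine ⟨I, hI, hc, fun P hP hle g hg => ?_⟩
  have hle' : I ≤ P.comap (inc K L M) := by
    have h1 : I.map (algebraMap (𝓞 K) (𝓞 L)) ≤ P.comap (algebraMap (𝓞 L) (𝓞 M)) := hle
    rw [Ideal.map_le_iff_le_comap] at h1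
    exact h1
  have hpP : (p : 𝓞 M) ∉ P := by
    intro hpP
    have h2 : I ⊔ Ideal.span {(p : 𝓞 K)} ≤ P.comap (inc K L M) := by
      refine sup_le hle' ?_
      rw [Ideal.span_singleton_le_iff_mem, Ideal.mem_comap, map_natCast]
      exact hpP
    rw [htop, top_le_iff] at h2
    exact Ideal.comap_ne_top _ hP.ne_top h2
  exact S.conf.fix_tame_dec S.hp S.hζM (by omega) S.hdp hpP (hle' hu) (oAut g : 𝓞 M →+* 𝓞 M)
    (g_inc g ζ) (g_inc g b) (g_inc g τ) hg hU0 hW0 (S.gU g) (S.gW g)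

end Setup
end ClRank

/-! ### Independence of the Kummer generators -/

namespace ClRank
open NumberField Module
namespace Setup

variable {K L M : Type*} [Field K] [NumberField K] [Field L] [NumberField L]
    [Field M] [NumberField M] [Algebra K L] [Algebra L M] {p d : ℕ}
    {ζ b τ ε u s : 𝓞 K} {η : 𝓞 L} {U W Δ : 𝓞 M} {h : M}

lemma under_inc (P : Ideal (𝓞 M)) (Q : Ideal (𝓞 L)) (q : Ideal (𝓞 K)) (h1 : P.under (𝓞 L) = Q)
    (h2 : Q.under (𝓞 K) = q) (r : 𝓞 K) : inc K L M r ∈ P ↔ r ∈ q := by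
  subst h2; subst h1; rfl

/-- An element of `L` with integral `p`-th power is integral. -/
lemma integral_root (hp : p.Prime) (x : L) (y : 𝓞 L) (hxy : x ^ p = y) : ∃ B : 𝓞 L, B ^ p = y := by
  have hx : IsIntegral ℤ x := by
    refine IsIntegral.of_pow hp.pos ?_
    rw [hxy]; exact RingOfIntegers.isIntegral_coe y
  exact ⟨⟨x, hx⟩, RingOfIntegers.ext hxy⟩

/-- The exponent of `Δ h` in a product of generators lying in `L` is divisible by `p`: the
Frobenius element at a prime above `p` acts nontrivially on the Artin–Schreier root attached to
`Δ`. -/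
lemma ind2 [IsGalois L M] (S : Setup K L M p d ζ b τ ε u s η U W Δ h) (e₀ e₁ e₂ : ℕ)
    (he : (U : M) ^ e₀ * (W : M) ^ e₁ * ((Δ : M) * h) ^ e₂ ∈ Set.range (algebraMap L M)) :
    p ∣ e₂ := by
  have hp := S.hp
  have hd2 := S.hd2
  obtain ⟨hU0, hW0, hΔ0⟩ := S.ne
  obtain ⟨q, hq, hpq, f₁, hf₁, htr⟩ := S.good.h8
  have hlq : 1 - ζ ∈ q := lam_mem hp S.hζ hpq
  have hτq : τ ∈ q := by
    rw [S.good.hτ]; exact q.mul_mem_right _ (q.pow_mem_of_mem hlq _ two_pos)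
  have mem : ∀ x, (p : 𝓞 K) ^ 2 * τ ∣ x → x ∈ q := fun x hx =>
    q.mem_of_dvd hx (q.mul_mem_left _ hτq)
  have hεq := mem _ S.good.dε
  -- Since `τ, ε ≡ 0` and `s, b ≡ 1` modulo `q`, the class of `1` is a root of the defining
  -- equation.
  have hroot : (1 : 𝓞 K) * (1 + ε) ^ (d - 1) - s ^ p * (b ^ p + τ ^ p * 1) ∈ q := by
    have e1 : ∀ x : 𝓞 K, x ∈ q → Ideal.Quotient.mk q x = 0 := fun x hx =>
      Ideal.Quotient.eq_zero_iff_mem.2 hx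
    have hs : Ideal.Quotient.mk q s = 1 := by
      rw [← map_one (Ideal.Quotient.mk q), Ideal.Quotient.eq]; exact mem _ S.good.ds
    have hb : Ideal.Quotient.mk q b = 1 := by
      rw [← map_one (Ideal.Quotient.mk q), Ideal.Quotient.eq]; exact mem _ S.good.db
    rw [← Ideal.Quotient.eq_zero_iff_mem]
    simp [hs, hb, e1 _ hεq, e1 _ hτq, hp.ne_zero]
  obtain ⟨Q, hQ, hQq, hηQ⟩ := exists_prime_root hp S.hd2 S.hdp S.good η S.hη q hq 1 hroot
  obtain ⟨P, hP, hPQ⟩ := exists_above (M := M) Q hQ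
  obtain ⟨g, hg⟩ := exists_frob (L := L) P hP
  haveI : Q.LiesOver q := ⟨hQq.symm⟩
  have hinc := under_inc (K := K) P Q q hPQ hQq
  have hQ0 : Q ≠ ⊥ := Ring.ne_bot_of_isMaximal_of_not_isField hQ (RingOfIntegers.not_isField L)
  have hq0 : q ≠ ⊥ := Ring.ne_bot_of_isMaximal_of_not_isField hq (RingOfIntegers.not_isField K)
  haveI : Finite (𝓞 L ⧸ Q) := Ring.HasFiniteQuotients.finiteQuotient hQ0
  haveI : Finite (𝓞 K ⧸ q) := Ring.HasFiniteQuotients.finiteQuotient hq0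
  rw [hPQ] at hg
  have hgP : ∀ r ∈ P, oAut g r ∈ P := fun r hr => by
    have h3 := P.add_mem (hg r) (P.pow_mem_of_mem hr (Nat.card (𝓞 L ⧸ Q)) Nat.card_pos)
    rwa [sub_add_cancel] at h3
  have hlP : 1 - inc K L M ζ ∈ P := by
    have := (hinc (1 - ζ)).2 hlq
    simpa using this
  have hpP : (p : 𝓞 M) ∈ P := by
    have := (hinc p).2 hpq
    simpa using this
  obtain ⟨gU, gW⟩ := S.conf.fixUW_wild hp S.hζM (by omega) S.hdp hlP (oAut g : 𝓞 M →+* 𝓞 M)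
    (g_inc g ζ) hgP hU0 hW0 (S.gU g) (S.gW g)
  change oAut g U = U at gU
  change oAut g W = W at gW
  -- Otherwise the Frobenius element fixes `Δ`, so the trace of `d u` vanishes up to a factor
  -- equal to the residue degree `f`, which is less than `p`.
  by_contra hpe
  -- `g` fixes `Δ`
  have gΔ : oAut g Δ = Δ := by
    have hfixh := S.hfix g gU gW
    have h0 : ∀ y : 𝓞 M, y ≠ 0 → (y : M) ≠ 0 := fun y hy => by simpa using hy
    obtain ⟨c, hc⟩ := he
    have h1 := g.commutes c
    have gU' : g (U : M) = U := congrArg (algebraMap (𝓞 M) M) gU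
    have gW' : g (W : M) = W := congrArg (algebraMap (𝓞 M) M) gW
    rw [hc, map_mul, map_mul, map_pow, map_pow, map_pow, map_mul, gU', gW', hfixh] at h1
    have h2 := mul_left_cancel₀ (mul_ne_zero (pow_ne_zero _ (h0 _ hU0)) (pow_ne_zero _ (h0 _ hW0))) h1
    rw [mul_pow, mul_pow] at h2
    have h3 := mul_right_cancel₀ (pow_ne_zero _ S.h0) h2
    have h4 := congrArg (algebraMap (𝓞 M) M) (S.gΔ g gU gW)
    rw [map_pow, map_pow] at h4
    apply RingOfIntegers.ext
    exact eq_of_pow_eq (h0 _ hΔ0) ((Nat.Prime.coprime_iff_not_dvd hp).2 hpe).symm h3 h4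
  have hU1 : U - 1 ∈ P := by
    have h1 : U ^ p - 1 ∈ P := by
      have : algebraMap (𝓞 L) (𝓞 M) (η - algebraMap (𝓞 K) (𝓞 L) 1) ∈ P := by
        subst hPQ; exact hηQ
      rw [map_one, map_sub, map_one, ← S.hU] at this
      exact this
    haveI := hP
    letI := Ideal.Quotient.field P
    haveI : Fact p.Prime := ⟨hp⟩
    haveI : CharP (𝓞 M ⧸ P) p := (CharP.charP_iff_prime_eq_zero hp).2 (by
      rw [← map_natCast (Ideal.Quotient.mk P)]; exact Ideal.Quotient.eq_zero_iff_mem.2 hpP)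
    rw [← Ideal.Quotient.eq_zero_iff_mem] at h1 ⊢
    rw [map_sub, map_pow, map_one] at h1
    rw [map_sub, map_one]
    have h2 : (Ideal.Quotient.mk P U - 1) ^ p = 0 := by rw [sub_pow_char, one_pow, h1]
    exact pow_eq_zero_iff hp.ne_zero |>.1 h2
  have hW1 : W - 1 ∈ P := by
    haveI := hP
    letI := Ideal.Quotient.field P
    haveI : Fact p.Prime := ⟨hp⟩
    haveI : CharP (𝓞 M ⧸ P) p := (CharP.charP_iff_prime_eq_zero hp).2 (by
      rw [← map_natCast (Ideal.Quotient.mk P)]; exact Ideal.Quotient.eq_zero_iff_mem.2 hpP)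
    have h3 := congrArg (Ideal.Quotient.mk P) S.conf.hW
    rw [map_pow, map_add, map_pow, Ideal.Quotient.eq_zero_iff_mem.2 ((hinc ε).2 hεq), add_zero] at h3
    rw [← Ideal.Quotient.eq_zero_iff_mem] at hU1 ⊢
    rw [map_sub, map_one, sub_eq_zero] at hU1 ⊢
    rw [hU1, one_pow] at h3
    have h2 : (Ideal.Quotient.mk P W - 1) ^ p = 0 := by rw [sub_pow_char, one_pow, h3, sub_self]
    exact sub_eq_zero.1 (pow_eq_zero_iff hp.ne_zero |>.1 h2)
  obtain ⟨Z, hZ, hAS⟩ := S.conf.artin_schreier hp S.hp2 (by omega) S.hζM hlP hU1 hW1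
  have hl0 : 1 - inc K L M ζ ≠ 0 := sub_ne_zero.2 (S.hζM.ne_one hp.one_lt).symm
  have gZ : oAut g Z = Z := by
    rw [hZ, map_add, map_mul, map_sub, map_one, g_inc, add_right_inj] at gΔ
    exact mul_left_cancel₀ hl0 gΔ
  have hZN := hg Z
  rw [gZ] at hZN
  letI := Ideal.Quotient.field P
  letI := Ideal.Quotient.field Q
  letI := Ideal.Quotient.field q
  haveI : Fact p.Prime := ⟨hp⟩
  haveI : CharP (𝓞 M ⧸ P) p := (CharP.charP_iff_prime_eq_zero hp).2 (by
    rw [← map_natCast (Ideal.Quotient.mk P)]; exact Ideal.Quotient.eq_zero_iff_mem.2 hpP)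
  have hf := card_residue q Q (K := K) (L := L)
  set f := finrank (𝓞 K ⧸ q) (𝓞 L ⧸ Q)
  haveI : Module.Finite (𝓞 K ⧸ q) (𝓞 L ⧸ Q) := Module.Finite.of_finite
  have hcard : Nat.card (𝓞 L ⧸ Q) = p ^ (f₁ * f) := by
    rw [Module.natCard_eq_pow_finrank (K := 𝓞 K ⧸ q), hf₁, ← pow_mul]
  set c := Ideal.Quotient.mk P (inc K L M ((d : 𝓞 K) * u)) with hc
  have hAS' : (Ideal.Quotient.mk P Z) ^ p - Ideal.Quotient.mk P Z = c := by
    rw [← map_pow, ← map_sub, hc, Ideal.Quotient.eq]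
    simpa using hAS
  have hcf : c ^ p ^ f₁ = c := by
    rw [← hf₁, hc, ← map_pow, ← map_pow, Ideal.Quotient.eq, ← map_sub, hinc, ← Ideal.Quotient.eq,
      map_pow]
    haveI := Fintype.ofFinite (𝓞 K ⧸ q)
    rw [Nat.card_eq_fintype_card, FiniteField.pow_card]
  have h5 := as_iter hAS' (f₁ * f)
  rw [sum_periodic hcf, ← hcard, ← map_pow, ← sub_eq_iff_eq_add', ← map_sub,
    Ideal.Quotient.eq_zero_iff_mem.2 (by rw [← neg_sub]; exact P.neg_mem hZN)] at h5
  rcases mul_eq_zero.1 h5.symm with h6 | h6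
  · rw [CharP.cast_eq_zero_iff (𝓞 M ⧸ P) p] at h6
    have h7 := Nat.le_of_dvd (by omega) h6
    have h8 := S.hdeg
    have h9 := S.hdp
    omega
  · refine htr ((hinc _).1 ?_)
    rw [← Ideal.Quotient.eq_zero_iff_mem, ← h6]
    simp only [map_sum, hc, map_pow]

/-- The root of the defining polynomial modulo a prime, and the resulting residue symbols, show
that the Kummer radicals `U`, `W` are independent. -/
lemma ind01 (S : Setup K L M p d ζ b τ ε u s η U W Δ h) (e₀ e₁ e₂ : ℕ)
    (he : (U : M) ^ e₀ * (W : M) ^ e₁ * ((Δ : M) * h) ^ e₂ ∈ Set.range (algebraMap L M))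
    (h2 : p ∣ e₂) : p ∣ e₀ ∧ p ∣ e₁ := by
  have hp := S.hp
  have hd2 := S.hd2
  obtain ⟨hU0, hW0, hΔ0⟩ := S.ne
  have hinjL : Function.Injective (algebraMap (𝓞 L) L) := RingOfIntegers.coe_injective
  have hinjM : Function.Injective (algebraMap L M) := (algebraMap L M).injective
  have h0 : ∀ y : 𝓞 M, y ≠ 0 → (y : M) ≠ 0 := fun y hy => by simpa using hy
  have hU' : (U : M) ^ p = algebraMap L M (η : L) := congrArg (algebraMap (𝓞 M) M) S.hU
  have hW' : (W : M) ^ p = algebraMap L M ((η + algebraMap (𝓞 K) (𝓞 L) ε : 𝓞 L) : L) :=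
    congrArg (algebraMap (𝓞 M) M) S.hW
  have key : ∀ a₀ a₁ : ℕ, (U : M) ^ a₀ * (W : M) ^ a₁ ∈ Set.range (algebraMap L M) →
      ∃ B : 𝓞 L, B ^ p = η ^ a₀ * (η + algebraMap (𝓞 K) (𝓞 L) ε) ^ a₁ := by
    rintro a₀ a₁ ⟨x, hx⟩
    refine integral_root hp x _ (hinjM ?_)
    rw [map_pow, hx, mul_pow, pow_right_comm, hU', pow_right_comm, hW']
    simp only [map_mul, map_pow]
  have hUW : (U : M) ^ e₀ * (W : M) ^ e₁ ∈ Set.range (algebraMap L M) := by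
    obtain ⟨k, rfl⟩ := h2
    obtain ⟨c, hc⟩ := S.hy
    obtain ⟨x, hx⟩ := he
    rw [pow_mul, hc] at hx
    have hc0 : algebraMap L M c ≠ 0 := by
      rw [← hc]; exact pow_ne_zero _ (mul_ne_zero (h0 _ hΔ0) S.h0)
    refine ⟨x / c ^ k, ?_⟩
    rw [map_div₀, map_pow, hx, mul_div_cancel_right₀ _ (pow_ne_zero _ hc0)]
  have hb0 : ∀ q : Ideal (𝓞 K), q.IsMaximal → b ∈ q → τ ∉ q := by
    intro q hq hbq hτ
    have h1 := q.pow_mem_of_mem hbq p hp.pos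
    rw [S.good.hb] at h1
    have h3 := q.sub_mem h1 (q.mul_mem_right ε (q.pow_mem_of_mem hτ p hp.pos))
    rw [add_sub_cancel_right] at h3
    exact hq.ne_top ((Ideal.eq_top_iff_one q).2 h3)
  set a := algebraMap (𝓞 K) (𝓞 L) with ha
  have hdL : finrank K L < p := by rw [S.hdeg]; exact S.hdp
  have h0' : p ∣ e₀ := by
    obtain ⟨q, hq, hbq, c, hc, hsc⟩ := S.good.h6
    have hτq := hb0 q hq hbq
    have hcq : c ∉ q := fun hcq => by
      refine hc 1 ?_
      rw [one_pow, add_sub_cancel_left]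
      exact q.pow_mem_of_mem hcq p hp.pos
    obtain ⟨t, i, hi, ht⟩ := hq.exists_inv hτq
    have hmk : ∀ x y, x - y ∈ q ↔ Ideal.Quotient.mk q x = Ideal.Quotient.mk q y :=
      fun x y => Ideal.Quotient.eq.symm
    have ht' : Ideal.Quotient.mk q t * Ideal.Quotient.mk q τ = 1 := by
      rw [← map_mul, ← map_one (Ideal.Quotient.mk q), ← hmk, ← ht]
      have := q.neg_mem hi
      convert this using 1; ring
    have hε : Ideal.Quotient.mk q τ ^ p * Ideal.Quotient.mk q ε = -1 := by
      have h1 := congrArg (Ideal.Quotient.mk q) S.good.hb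
      rw [map_pow, Ideal.Quotient.eq_zero_iff_mem.2 hbq, zero_pow hp.ne_zero] at h1
      simp only [map_add, map_mul, map_pow, map_one] at h1
      linear_combination -h1
    have hts : Ideal.Quotient.mk q τ ^ d * Ideal.Quotient.mk q s = Ideal.Quotient.mk q c ^ (d - 1) := by
      have := (hmk _ _).1 hsc
      simpa using this
    have htp : Ideal.Quotient.mk q t ^ p * Ideal.Quotient.mk q τ ^ p = 1 := by
      rw [← mul_pow, ht', one_pow]
    have hε2 : Ideal.Quotient.mk q ε = - Ideal.Quotient.mk q t ^ p := by
      linear_combination (-Ideal.Quotient.mk q ε) * htp + Ideal.Quotient.mk q t ^ p * hε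
    have hs2 : Ideal.Quotient.mk q s = Ideal.Quotient.mk q t ^ d * Ideal.Quotient.mk q c ^ (d - 1) := by
      have : Ideal.Quotient.mk q t ^ d * Ideal.Quotient.mk q τ ^ d = 1 := by
        rw [← mul_pow, ht', one_pow]
      linear_combination (-Ideal.Quotient.mk q s) * this + Ideal.Quotient.mk q t ^ d * hts
    -- Let `t` be an inverse of `τ` modulo `q`. Then `(1 + c ^ p) t ^ p` is a root of the defining
    -- equation; at the corresponding prime `η + ε ≡ (t c) ^ p` is a `p`-th power while `η` is
    -- not.
    obtain ⟨Q, hQ, hQq, hηQ⟩ := exists_prime_root hp S.hd2 S.hdp S.good η S.hη q hq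
      ((1 + c ^ p) * t ^ p) (by
        rw [hmk]
        simp only [map_add, map_mul, map_pow, map_one, hε2, hs2,
          Ideal.Quotient.eq_zero_iff_mem.2 hbq, zero_pow hp.ne_zero]
        obtain ⟨k, rfl⟩ : ∃ k, d = k + 1 := ⟨d - 1, by omega⟩
        simp only [Nat.add_sub_cancel]
        set T := Ideal.Quotient.mk q t
        set C := Ideal.Quotient.mk q c
        have e1 : (1 + C ^ p) * T ^ p + -T ^ p = T ^ p * C ^ p := by ring
        rw [e1]
        linear_combination (-(1 + C ^ p) * (T ^ (k + 1) * C ^ k) ^ p) * htp)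
    haveI : Q.LiesOver q := ⟨hQq.symm⟩
    obtain ⟨B, hB⟩ := key e₀ e₁ hUW
    letI := Ideal.Quotient.field Q
    obtain ⟨t', i', hi', ht''⟩ := hQ.exists_inv (x := a c) (fun h' => hcq ((Ideal.mem_of_liesOver Q q c).2 h'))
    refine nonres hp hdL q Q (1 + c ^ p) hc e₀ (B * a τ ^ (e₀ + e₁) * t' ^ e₁) ?_
    have hmQ : ∀ x y, x - y ∈ Q ↔ Ideal.Quotient.mk Q x = Ideal.Quotient.mk Q y :=
      fun x y => Ideal.Quotient.eq.symm
    have hlift : ∀ x y, Ideal.Quotient.mk q x = Ideal.Quotient.mk q y →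
        Ideal.Quotient.mk Q (a x) = Ideal.Quotient.mk Q (a y) := by
      intro x y hxy
      rw [← hmk] at hxy
      rw [← hmQ, ← map_sub]
      exact (Ideal.mem_of_liesOver Q q _).1 hxy
    have hη1 := (hmQ _ _).1 hηQ
    have hε3 : Ideal.Quotient.mk Q (a ε) = - Ideal.Quotient.mk Q (a t) ^ p := by
      have := hlift ε (-t ^ p) (by simpa using hε2)
      simpa using this
    have htp3 : Ideal.Quotient.mk Q (a t) ^ p * Ideal.Quotient.mk Q (a τ) ^ p = 1 := by
      have := hlift (t ^ p * τ ^ p) 1 (by simpa using htp)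
      simpa using this
    have ht3 : Ideal.Quotient.mk Q t' * Ideal.Quotient.mk Q (a c) = 1 := by
      rw [← map_mul, ← map_one (Ideal.Quotient.mk Q), ← hmQ, ← ht'']
      have := Q.neg_mem hi'
      convert this using 1; ring
    have hB' := congrArg (Ideal.Quotient.mk Q) hB
    rw [hmQ]
    simp only [map_mul, map_pow, map_add, map_one] at hB' hη1 ⊢
    change _ = _ at hη1
    rw [hη1, hε3] at hB'
    set T := Ideal.Quotient.mk Q (a t)
    set C := Ideal.Quotient.mk Q (a c)
    set V := Ideal.Quotient.mk Q (a τ)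
    set t₁ := Ideal.Quotient.mk Q t'
    rw [mul_pow, mul_pow, hB', show (1 + C ^ p) * T ^ p + -T ^ p = T ^ p * C ^ p by ring]
    calc (1 + C ^ p) ^ e₀ = (1 + C ^ p) ^ e₀ * (T ^ p * V ^ p) ^ (e₀ + e₁) * ((t₁ * C) ^ p) ^ e₁ := by
          rw [htp3, ht3]; simp
      _ = _ := by
          generalize 1 + C ^ p = D
          ring
  refine ⟨h0', ?_⟩
  -- Modulo a prime dividing `s`, `0` is a root of the defining equation, and there `η + ε ≡ ε =
  -- (b ^ p - 1) / τ ^ p` is not a `p`-th power.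
  obtain ⟨q, hq, hsq, hres⟩ := S.good.h7
  obtain ⟨Q, hQ, hQq, hηQ⟩ := exists_prime_root hp S.hd2 S.hdp S.good η S.hη q hq 0 (by
    rw [zero_mul, zero_sub]
    exact q.neg_mem (q.mul_mem_right _ (q.pow_mem_of_mem hsq p hp.pos)))
  haveI : Q.LiesOver q := ⟨hQq.symm⟩
  obtain ⟨B, hB⟩ := key 0 e₁ (by
    obtain ⟨k, rfl⟩ := h0'
    obtain ⟨x, hx⟩ := hUW
    have hη0 : algebraMap L M (η : L) ≠ 0 := by rw [← hU']; exact pow_ne_zero _ (h0 _ hU0)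
    refine ⟨x / (η : L) ^ k, ?_⟩
    rw [map_div₀, map_pow, hx, pow_mul, hU', pow_zero, one_mul,
      mul_div_cancel_left₀ _ (pow_ne_zero _ hη0)])
  refine nonres hp hdL q Q (b ^ p - 1) hres e₁ (B * a τ ^ e₁) ?_
  rw [map_zero, sub_zero] at hηQ
  have hmQ : ∀ x y, x - y ∈ Q ↔ Ideal.Quotient.mk Q x = Ideal.Quotient.mk Q y :=
    fun x y => Ideal.Quotient.eq.symm
  rw [hmQ, mul_pow, hB, S.good.hb, add_sub_cancel_left]
  have e0 : Ideal.Quotient.mk Q η = 0 := Ideal.Quotient.eq_zero_iff_mem.2 hηQ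
  simp only [map_mul, map_pow, map_add, e0]
  rw [zero_add, pow_zero, one_mul]
  ring

/-- The rank bound, from `rank_of_kummer` and the properties of the tower. -/
theorem rank [IsGalois L M] [IsTotallyComplex L] (S : Setup K L M p d ζ b τ ε u s η U W Δ h) :
    3 + nRank p (ClassGroup (𝓞 K)) ≤ nRank p (ClassGroup (𝓞 L)) := by
  obtain ⟨hU0, hW0, hΔ0⟩ := S.ne
  have h0 : ∀ y : 𝓞 M, y ≠ 0 → (y : M) ≠ 0 := fun y hy => by simpa using hy
  have hζL : IsPrimitiveRoot ((algebraMap (𝓞 K) (𝓞 L) ζ : 𝓞 L) : L) p :=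
    (S.hζ.map_of_injective (FaithfulSMul.algebraMap_injective (𝓞 K) (𝓞 L))).map_of_injective
      RingOfIntegers.coe_injective
  have hd2 := S.hd2
  refine rank_of_kummer (M := M) S.hp hζL S.hdeg (Nat.coprime_of_lt_prime (by omega) S.hdp S.hp).symm
    (![(U : M), (W : M), (Δ : M) * h]) ?_ ?_ ?_ ?_ ?_
  · intro i
    fin_cases i
    · exact h0 _ hU0
    · exact h0 _ hW0
    · exact mul_ne_zero (h0 _ hΔ0) S.h0
  · intro i
    fin_cases i
    · exact ⟨_, congrArg (algebraMap (𝓞 M) M) S.hU⟩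
    · exact ⟨_, congrArg (algebraMap (𝓞 M) M) S.hW⟩
    · exact S.hy
  · intro e he
    rw [Fin.prod_univ_three] at he
    have h2 := S.ind2 (e 0) (e 1) (e 2) he
    obtain ⟨h3, h4⟩ := S.ind01 (e 0) (e 1) (e 2) he h2
    intro i
    fin_cases i
    · exact h3
    · exact h4
    · exact h2
  · intro P hP g hg i
    obtain ⟨h1, h2, h3⟩ := S.inertia P hP g hg
    exact S.gy g h1 h2 h3 i
  · intro c
    obtain ⟨I, hI, hc, hP⟩ := S.core_cl c
    refine ⟨I, hI, hc, fun P hP' hle g hg i => ?_⟩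
    obtain ⟨h1, h2, h3⟩ := hP P hP' hle g hg
    exact S.gy g h1 h2 h3 i

end Setup
end ClRank

/-! ### Existence of the tower -/

namespace ClRank
open NumberField Module

section Kummer
variable {L : Type*} [Field L] [CharZero L] {p : ℕ} {ζ : L}

/-- Adjoining finitely many `p`-th roots gives a Galois extension when the `p`-th roots of
unity are present. -/
lemma galois_adjoin (hp : p.Prime) (hζ : IsPrimitiveRoot ζ p) (S : Set (AlgebraicClosure L))
    (hS : ∀ y ∈ S, y ^ p ∈ Set.range (algebraMap L (AlgebraicClosure L))) :
    IsGalois L (IntermediateField.adjoin L S) := by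
  have : Normal L (IntermediateField.adjoin L S) := by
    rw [IntermediateField.normal_iff_forall_map_le]
    intro σ
    rw [IntermediateField.adjoin_map, IntermediateField.adjoin_le_iff]
    rintro _ ⟨y, hy, rfl⟩
    have hyS := IntermediateField.subset_adjoin L S hy
    by_cases hy0 : y = 0
    · subst hy0
      simp
    obtain ⟨c, hc⟩ := hS y hy
    have h1 : (σ y / y) ^ p = 1 := by
      rw [div_pow, ← map_pow, ← hc, AlgHom.commutes, hc, div_self (pow_ne_zero _ hy0)]
    have : NeZero p := ⟨hp.ne_zero⟩
    obtain ⟨i, -, hi⟩ := (hζ.map_of_injective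
      (algebraMap L (AlgebraicClosure L)).injective).eq_pow_of_pow_eq_one h1
    have h2 : σ y = algebraMap L _ (ζ ^ i) * y := by
      rw [map_pow, hi, div_mul_cancel₀ _ hy0]
    rw [h2]
    exact mul_mem (IntermediateField.algebraMap_mem _ _) hyS
  exact ⟨⟩

end Kummer

open NumberField.InfinitePlace in
/-- A number field containing a root of unity of order greater than `2` is totally complex. -/
lemma totallyComplex_of_root {L : Type*} [Field L] [NumberField L] {p : ℕ} (hp3 : 2 < p) {ζ : L}
    (hζ : IsPrimitiveRoot ζ p) : IsTotallyComplex L :=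
  nrRealPlaces_eq_zero_iff.mp (IsPrimitiveRoot.nrRealPlaces_eq_zero_of_two_lt hp3 hζ)

/-- The tower is built inside an algebraic closure of `L`, and `Setup.rank` is applied to it. -/
theorem rank_of_good {K L : Type*} [Field K] [NumberField K] [Field L] [NumberField L]
    [Algebra K L] {p d : ℕ} (hp : p.Prime) (hp3 : 2 < p) (hd2 : 2 ≤ d) (hdp : d < p)
    {ζ b τ ε u s : 𝓞 K} (hζ : IsPrimitiveRoot ζ p) (good : Good p d ζ b τ ε u s)
    (hdeg : finrank K L = d) (η : 𝓞 L)
    (hη : η * (η + algebraMap _ _ ε) ^ (d - 1) =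
      algebraMap (𝓞 K) (𝓞 L) s ^ p * (algebraMap _ _ b ^ p + algebraMap _ _ τ ^ p * η)) :
    3 + nRank p (ClassGroup (𝓞 K)) ≤ nRank p (ClassGroup (𝓞 L)) := by
  let A := AlgebraicClosure L
  have hζL' : IsPrimitiveRoot (algebraMap (𝓞 K) (𝓞 L) ζ) p :=
    hζ.map_of_injective (FaithfulSMul.algebraMap_injective (𝓞 K) (𝓞 L))
  have hζL : IsPrimitiveRoot ((algebraMap (𝓞 K) (𝓞 L) ζ : 𝓞 L) : L) p :=
    hζL'.map_of_injective RingOfIntegers.coe_injective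
  have : IsTotallyComplex L := totallyComplex_of_root hp3 hζL
  obtain ⟨U₀, hU₀⟩ := IsAlgClosed.exists_pow_nat_eq (algebraMap L A (η : L)) hp.pos
  obtain ⟨W₀, hW₀⟩ := IsAlgClosed.exists_pow_nat_eq
    (algebraMap L A ((η + algebraMap (𝓞 K) (𝓞 L) ε : 𝓞 L) : L)) hp.pos
  let E := IntermediateField.adjoin L {U₀, W₀}
  have : IsGalois L E := galois_adjoin hp hζL _ (by
    rintro y (rfl | rfl)
    · exact ⟨_, hU₀.symm⟩
    · exact ⟨_, hW₀.symm⟩)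
  have hInt : ∀ y ∈ ({U₀, W₀} : Set A), IsIntegral L y := fun y _ =>
    Algebra.IsIntegral.isIntegral y
  have : FiniteDimensional L E := IntermediateField.finiteDimensional_adjoin hInt
  let U₁ : E := ⟨U₀, IntermediateField.subset_adjoin _ _ (by simp)⟩
  let W₁ : E := ⟨W₀, IntermediateField.subset_adjoin _ _ (by simp)⟩
  have hU₁ : U₁ ^ p = algebraMap L E η := Subtype.ext hU₀
  have hW₁ : W₁ ^ p = algebraMap L E (η + algebraMap (𝓞 K) (𝓞 L) ε : 𝓞 L) := Subtype.ext hW₀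
  obtain ⟨hη0, hηε0, hx0⟩ := Setup.hx_aux hd2 good hη
  have hp0 := hp.ne_zero
  let a : 𝓞 K →+* 𝓞 L := algebraMap (𝓞 K) (𝓞 L)
  let a' : 𝓞 K →+* L := (algebraMap (𝓞 L) L).comp a
  have ha' : Function.Injective a' := RingOfIntegers.coe_injective.comp
    (FaithfulSMul.algebraMap_injective (𝓞 K) (𝓞 L))
  let i := algebraMap L E
  have hU₁0 : U₁ ≠ 0 := by
    intro h
    rw [h, zero_pow hp0, eq_comm, map_eq_zero] at hU₁
    exact hη0 (RingOfIntegers.ext hU₁)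
  have hW₁0 : W₁ ≠ 0 := by
    intro h
    rw [h, zero_pow hp0, eq_comm, map_eq_zero] at hW₁
    exact hηε0 (RingOfIntegers.ext hW₁)
  have hs0 : i (a' s) ≠ 0 := by
    rw [map_ne_zero, map_ne_zero_iff _ ha']; exact good.s0
  have hηL : (η : L) * (η + a' ε) ^ (d - 1) = a' s ^ p * (a' b ^ p + a' τ ^ p * η) := by
    have := congrArg (algebraMap (𝓞 L) L) hη
    simp only [map_mul, map_add, map_pow] at this
    exact this
  have hbL : a' b ^ p = 1 + a' τ ^ p * a' ε := by rw [← map_pow, good.hb]; simp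
  have hW₂ : W₁ ^ p = i (η + a' ε) := by rw [hW₁]; simp [i, a', a]
  have h1 : (U₁ * W₁ ^ (d - 1) / i (a' s)) ^ p = i (a' b) ^ p + (i (a' τ) * U₁) ^ p := by
    rw [div_pow, div_eq_iff (pow_ne_zero _ hs0), mul_pow, ← pow_mul, mul_comm (d - 1) p, pow_mul,
      hW₂, hU₁, mul_pow, hU₁, ← map_pow i, ← map_pow i, ← map_pow i, ← map_pow i, ← map_mul,
      ← map_mul, ← map_add, ← map_mul, hηL, mul_comm]
  obtain ⟨h, hh0, c, hc⟩ := twist_descends (d := d) (ζ := i (a' ζ)) (b := i (a' b)) (τ := i (a' τ))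
    (s := i (a' s)) (U := U₁) (W := W₁) (L := L) hp (by omega) (hζL.map_of_injective i.injective)
    (fun g => g.commutes _) (fun g => g.commutes _) (fun g => g.commutes _)
    (fun g => g.commutes _) hs0 hU₁0 hW₁0
    (fun g => by rw [← map_pow, hU₁]; exact g.commutes _)
    (fun g => by rw [← map_pow, hW₂]; exact g.commutes _) h1 (by
      rw [h1, mul_pow, mul_pow, hU₁, hW₂, ← map_pow i (a' b), hbL]; simp; ring)
  let j : E →+* A := algebraMap E A
  obtain ⟨Δ₀, hΔ₀⟩ := IsAlgClosed.exists_pow_nat_eq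
    (j (twist p (i (a' ζ)) (i (a' b)) (i (a' τ) * U₁) *
      twist p (i (a' ζ)) 1 (i (a' τ) * W₁) ^ (d - 1))) hp.pos
  have hy₀ : (Δ₀ * j h) ^ p = algebraMap L A c := by
    rw [mul_pow, hΔ₀, ← map_pow, ← map_mul, ← hc]; rfl
  let M := IntermediateField.adjoin L {U₀, W₀, Δ₀ * j h}
  have : IsGalois L M := galois_adjoin hp hζL _ (by
    rintro y (rfl | rfl | rfl)
    · exact ⟨_, hU₀.symm⟩
    · exact ⟨_, hW₀.symm⟩
    · exact ⟨_, hy₀.symm⟩)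
  have : FiniteDimensional L M := IntermediateField.finiteDimensional_adjoin fun y _ =>
    Algebra.IsIntegral.isIntegral y
  have : NumberField M := NumberField.of_module_finite L M
  have hEM : E ≤ M := IntermediateField.adjoin.mono _ _ _ (by
    rintro y (rfl | rfl) <;> simp)
  have hmem : Δ₀ ∈ M := by
    have h2 : Δ₀ * j h ∈ M := IntermediateField.subset_adjoin _ _ (by simp)
    have h3 := mul_mem h2 (inv_mem (hEM h.2))
    have h4 : j h = h := rfl
    rwa [h4, mul_inv_cancel_right₀ (by simpa using hh0)] at h3
  let f : E →ₐ[L] M := IntermediateField.inclusion hEM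
  let k := algebraMap L M
  let U₂ : M := f U₁
  let W₂ : M := f W₁
  let Δ₂ : M := ⟨Δ₀, hmem⟩
  have hfi : ∀ x, f (i x) = k x := fun x => f.commutes x
  have hU₂ : U₂ ^ p = k η := by rw [← map_pow, hU₁, hfi]
  have hW₃ : W₂ ^ p = k (η + algebraMap (𝓞 K) (𝓞 L) ε : 𝓞 L) := by rw [← map_pow, hW₁, hfi]
  have iU : IsIntegral ℤ U₂ := .of_pow hp.pos (by
    rw [hU₂]; exact (RingOfIntegers.isIntegral_coe η).map (IsScalarTower.toAlgHom ℤ L M))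
  have iW : IsIntegral ℤ W₂ := .of_pow hp.pos (by
    rw [hW₃]; exact (RingOfIntegers.isIntegral_coe _).map (IsScalarTower.toAlgHom ℤ L M))
  let U : 𝓞 M := ⟨U₂, iU⟩
  let W : 𝓞 M := ⟨W₂, iW⟩
  let T : 𝓞 M := twist p (Setup.inc K L M ζ) (Setup.inc K L M b) (Setup.inc K L M τ * U) *
    twist p (Setup.inc K L M ζ) 1 (Setup.inc K L M τ * W) ^ (d - 1)
  have hT : Δ₂ ^ p = (T : M) := by
    have e : f (twist p (i (a' ζ)) (i (a' b)) (i (a' τ) * U₁) *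
      twist p (i (a' ζ)) 1 (i (a' τ) * W₁) ^ (d - 1)) = (T : M) := by
      have hk : ∀ r, k (a' r) = algebraMap (𝓞 M) M (Setup.inc K L M r) := fun r => rfl
      have hU' : f U₁ = algebraMap (𝓞 M) M U := rfl
      have hW' : f W₁ = algebraMap (𝓞 M) M W := rfl
      rw [← AlgHom.coe_toRingHom, map_mul, map_pow, map_twist, map_twist]
      simp only [AlgHom.coe_toRingHom, map_mul, map_one, hfi, hk, hU', hW']
      simp only [T, map_mul, map_pow, map_twist, map_one]
    rw [← e]
    exact Subtype.ext hΔ₀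
  have iΔ : IsIntegral ℤ Δ₂ := .of_pow hp.pos (by
    rw [hT]; exact RingOfIntegers.isIntegral_coe _)
  let Δ : 𝓞 M := ⟨Δ₂, iΔ⟩
  have S : Setup K L M p d ζ b τ ε u s η U W Δ (f h) :=
    { hp := hp
      hp2 := by omega
      hd2 := hd2
      hdp := hdp
      hζ := hζ
      good := good
      hdeg := hdeg
      hη := hη
      hU := RingOfIntegers.ext hU₂
      hW := RingOfIntegers.ext hW₃
      hΔ := RingOfIntegers.ext hT
      h0 := (map_ne_zero f).2 hh0
      hfix := by
        intro g gU gW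
        have gU' : g U₂ = U₂ := congrArg (algebraMap (𝓞 M) M) gU
        have gW' : g W₂ = W₂ := congrArg (algebraMap (𝓞 M) M) gW
        suffices hE : ∀ x (hx : x ∈ E), g ⟨x, hEM hx⟩ = ⟨x, hEM hx⟩ from hE h h.2
        intro x hx
        induction hx using IntermediateField.adjoin_induction with
        | mem y hy =>
          rcases hy with rfl | rfl
          · exact gU'
          · exact gW'
        | algebraMap y => exact g.commutes y
        | add y z hy hz h1 h2 =>
          have : (⟨y + z, hEM (add_mem hy hz)⟩ : M) = ⟨y, hEM hy⟩ + ⟨z, hEM hz⟩ := rfl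
          rw [this, map_add, h1, h2]
        | inv y hy h1 =>
          have : (⟨y⁻¹, hEM (inv_mem hy)⟩ : M) = (⟨y, hEM hy⟩ : M)⁻¹ := rfl
          rw [this, map_inv₀, h1]
        | mul y z hy hz h1 h2 =>
          have : (⟨y * z, hEM (mul_mem hy hz)⟩ : M) = ⟨y, hEM hy⟩ * ⟨z, hEM hz⟩ := rfl
          rw [this, map_mul, h1, h2]
      hy := ⟨c, Subtype.ext hy₀⟩ }
  exact S.rank

end ClRank

/-! ### Powers and successors in finite fields -/

namespace ClRank
open NumberField Module

/-- In a large finite field with nontrivial `p`-th roots of unity, some `p`-th power `c ^ p`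
avoiding `(-c ^ p) ^ (d - 1) = 1` has a successor which is not a `p`-th power: otherwise the
`p`-th powers would form a proper subfield with at least `|F| / p` elements. -/
lemma exists_pow_succ_not_pow {F : Type*} [Field F] [Finite F] {p d : ℕ} (hp : p.Prime)
    (hp3 : 2 < p) (hd2 : 2 ≤ d) (hdp : d < p) {ζ : F} (hζ1 : ζ ≠ 1) (hζ : ζ ^ p = 1)
    (hcard : p * (3 * p) < Nat.card F) :
    ∃ c : F, (∀ y, 1 + c ^ p ≠ y ^ p) ∧ (-c ^ p) ^ (d - 1) ≠ 1 := by
  classical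
  have := Fintype.ofFinite F
  rw [Nat.card_eq_fintype_card] at hcard
  by_contra! hcon
  let H : Finset F := Finset.univ.image fun y : F => y ^ p
  let V : Finset F := (Polynomial.nthRootsFinset (d - 1) (1 : F)).image fun x => -x
  have hH : ∀ x, x ∈ H ↔ ∃ y, y ^ p = x := fun x => by simp [H]
  have hV : ∀ x, (-x) ^ (d - 1) = 1 → x ∈ V := fun x hx => by
    refine Finset.mem_image.2 ⟨-x, ?_, neg_neg x⟩
    rwa [Polynomial.mem_nthRootsFinset (by omega)]
  have hVc : V.card ≤ d - 1 := by
    refine Finset.card_image_le.trans ?_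
    rw [Polynomial.nthRootsFinset]
    exact (Multiset.toFinset_card_le _).trans (Polynomial.card_nthRoots _ _)
  have hV0 : (0 : F) ∉ V := by
    intro h
    obtain ⟨x, hx, hx0⟩ := Finset.mem_image.1 h
    rw [Polynomial.mem_nthRootsFinset (by omega), neg_eq_zero.1 hx0, zero_pow (by omega)] at hx
    exact zero_ne_one hx
  have hHc : Fintype.card F ≤ p * H.card := by
    rw [← Finset.card_univ]
    refine Finset.card_le_mul_card_image _ p fun a _ => ?_
    have : (Finset.univ.filter fun x : F => x ^ p = a) ⊆ (Polynomial.nthRoots p a).toFinset := by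
      intro x hx
      rw [Multiset.mem_toFinset, Polynomial.mem_nthRoots hp.pos]
      simpa using hx
    exact (Finset.card_le_card this).trans
      ((Multiset.toFinset_card_le _).trans (Polynomial.card_nthRoots _ _))
  have h0 : (0 : F) ∈ H := (hH _).2 ⟨0, zero_pow hp.ne_zero⟩
  have hmul : ∀ a ∈ H, ∀ b ∈ H, a * b ∈ H := by
    intro a ha b hb
    obtain ⟨x, rfl⟩ := (hH a).1 ha
    obtain ⟨y, rfl⟩ := (hH b).1 hb
    exact (hH _).2 ⟨x * y, mul_pow _ _ _⟩
  have hinv : ∀ a ∈ H, a⁻¹ ∈ H := by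
    intro a ha
    obtain ⟨x, rfl⟩ := (hH a).1 ha
    exact (hH _).2 ⟨x⁻¹, inv_pow _ _⟩
  have hodd : Odd p := hp.odd_of_ne_two (by omega)
  have hneg : ∀ a ∈ H, -a ∈ H := by
    intro a ha
    obtain ⟨x, rfl⟩ := (hH a).1 ha
    exact (hH _).2 ⟨-x, hodd.neg_pow x⟩
  have hadd1 : ∀ a ∈ H, ∀ b ∈ H, (∀ v ∈ V, a ≠ v * b) → a + b ∈ H := by
    intro a ha b hb hab
    by_cases hb0 : b = 0
    · rwa [hb0, add_zero]
    have h1 : a * b⁻¹ ∈ H := hmul _ ha _ (hinv _ hb)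
    obtain ⟨c, hc⟩ := (hH _).1 h1
    by_cases h2 : ∀ y, 1 + c ^ p ≠ y ^ p
    · have := hV _ (hcon c h2)
      rw [hc] at this
      exact absurd (by field_simp) (hab _ this)
    · push Not at h2
      obtain ⟨y, hy⟩ := h2
      have : a + b = b * (1 + c ^ p) := by rw [hc]; field_simp; ring
      rw [this, hy]
      exact hmul _ hb _ ((hH _).2 ⟨y, rfl⟩)
  have hadd : ∀ a ∈ H, ∀ b ∈ H, a + b ∈ H := by
    intro a ha b hb
    by_cases hab : a + b = 0
    · rwa [hab]
    let Z : Finset F := {0} ∪ V.image (fun v => -a / v) ∪ V.image (fun v => b / v) ∪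
      V.image (fun v => (a - v * b) / (1 + v))
    have hZ : Z.card ≤ 1 + (d - 1) + (d - 1) + (d - 1) := by
      have hi : ∀ f : F → F, (V.image f).card ≤ d - 1 := fun f => Finset.card_image_le.trans hVc
      refine (Finset.card_union_le _ _).trans (add_le_add ((Finset.card_union_le _ _).trans
        (add_le_add ((Finset.card_union_le _ _).trans (add_le_add (by simp) (hi _))) (hi _))) (hi _))
    have hlt : Z.card < H.card := by
      have : 3 * p < H.card := lt_of_mul_lt_mul_left (hcard.trans_le hHc) (Nat.zero_le p)
      omega
    obtain ⟨k, hkH, hkZ⟩ := Finset.exists_mem_notMem_of_card_lt_card hlt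
    simp only [Z, Finset.mem_union, Finset.mem_singleton, Finset.mem_image, not_or, not_exists,
      not_and] at hkZ
    obtain ⟨⟨⟨hk0, hk1⟩, hk2⟩, hk3⟩ := hkZ
    have hne : ∀ v ∈ V, v ≠ 0 := fun v hv h => hV0 (h ▸ hv)
    have e1 : a + -k ∈ H := hadd1 _ ha _ (hneg _ hkH) fun v hv h => hk1 v hv (by
      rw [h]; field_simp [hne v hv])
    have e2 : b + k ∈ H := hadd1 _ hb _ hkH fun v hv h => hk2 v hv (by
      rw [h]; field_simp [hne v hv])
    have e3 := hadd1 _ e1 _ e2 fun v hv h => by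
      by_cases hv1 : 1 + v = 0
      · apply hab
        rw [eq_neg_of_add_eq_zero_right hv1] at h
        linear_combination h
      · apply hk3 v hv
        rw [div_eq_iff hv1]
        linear_combination h
    convert e3 using 1
    ring
  obtain ⟨a, ha⟩ : ∃ a, a ∉ H := by
    by_contra! hall
    have hs : Function.Surjective fun y : F => y ^ p := fun x => (hH x).1 (hall x)
    have hi := Finite.injective_iff_surjective.2 hs
    exact hζ1 (hi (by simp [hζ]))
  have hinj : Set.InjOn (fun x : F × F => x.1 + a * x.2) (H ×ˢ H : Finset (F × F)) := by
    rintro ⟨x, y⟩ hx ⟨x', y'⟩ hx' h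
    simp only [Finset.coe_product, Set.mem_prod, Finset.mem_coe] at hx hx' h
    by_cases hy : y = y'
    · subst hy
      simpa using h
    · refine absurd ?_ ha
      have h1 : a = (x + -x') * (y' + -y)⁻¹ := by
        have : y' + -y ≠ 0 := fun h0 => hy (by linear_combination -h0)
        field_simp
        linear_combination -h
      rw [h1]
      exact hmul _ (hadd _ hx.1 _ (hneg _ hx'.1)) _ (hinv _ (hadd _ hx'.2 _ (hneg _ hx.2)))
  have hsq : H.card * H.card ≤ Fintype.card F := by
    rw [← Finset.card_product, ← Finset.card_univ]
    exact Finset.card_le_card_of_injOn _ (fun _ _ => Finset.mem_univ _) hinj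
  have : 3 * p < H.card := lt_of_mul_lt_mul_left (hcard.trans_le hHc) (Nat.zero_le p)
  nlinarith [hp.pos]

end ClRank

/-! ### Auxiliary primes and the factor u -/

namespace ClRank
open NumberField Module

variable {K : Type*} [Field K] [NumberField K]

/-- Every ideal class contains an ideal coprime to a given nonzero ideal. -/
lemma coprime_rep (J : Ideal (𝓞 K)) (hJ : J ≠ ⊥) (c : ClassGroup (𝓞 K)) :
    ∃ (I : Ideal (𝓞 K)) (hI : I ≠ ⊥), cl I hI = c ∧ I ⊔ J = ⊤ := by
  obtain ⟨I, hI, hc⟩ := cl_surj c⁻¹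
  have hJI : J * I ≠ ⊥ := mul_ne_zero hJ hI
  have hle0 : J * I ≤ I := fun x hx => Ideal.mul_le_inf hx |>.2
  obtain ⟨a, ha⟩ := IsDedekindDomain.exists_sup_span_eq (I := J * I ⊓ I) (J := I) inf_le_right
    (by rw [inf_eq_left.2 hle0]; exact hJI)
  rw [inf_eq_left.2 hle0] at ha
  obtain ⟨a, ha0, ha⟩ : ∃ a : 𝓞 K, a ≠ 0 ∧ J * I ⊔ Ideal.span {a} = I := by
    by_cases h0 : a = 0
    · subst h0
      rw [Ideal.span_singleton_eq_bot.2 rfl, sup_bot_eq] at ha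
      obtain ⟨x, hx, hx0⟩ := Submodule.exists_mem_ne_zero_of_ne_bot hI
      refine ⟨x, hx0, ?_⟩
      rw [ha, sup_eq_left, Ideal.span_singleton_le_iff_mem]
      exact hx
    · exact ⟨a, h0, ha⟩
  have hle : Ideal.span {a} ≤ I := le_sup_right.trans ha.le
  obtain ⟨I', hI'⟩ := Ideal.dvd_iff_le.2 hle
  have hsp : Ideal.span {a} ≠ ⊥ := by simpa using ha0
  have hI'0 : I' ≠ ⊥ := by
    rintro rfl
    rw [Ideal.mul_bot] at hI'
    exact hsp hI'
  refine ⟨I', hI'0, ?_, ?_⟩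
  · have h1 : cl (I * I') (mul_ne_zero hI hI'0) = 1 := by
      have : ∀ X : Ideal (𝓞 K), ∀ hX : X ≠ ⊥, X = Ideal.span {a} → cl X hX = 1 := by
        rintro X hX rfl
        exact cl_span hX
      exact this _ _ hI'.symm
    rw [cl_mul hI hI'0, hc] at h1
    exact (inv_mul_eq_one.1 h1).symm
  · rw [hI', mul_comm J I, ← Ideal.mul_sup] at ha
    have h2 : I * (J ⊔ I') = I * ⊤ := by rw [ha, Ideal.mul_top]
    rw [sup_comm]
    exact mul_left_cancel₀ (by exact hI) h2

/-- There are primes of large norm avoiding a given nonzero element. -/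
lemma exists_big_prime (x : 𝓞 K) (hx : x ≠ 0) (N : ℕ) : ∃ q : Ideal (𝓞 K), q.IsMaximal ∧
    N ≤ Nat.card (𝓞 K ⧸ q) ∧ x ∉ q := by
  obtain ⟨l, hl, hlp⟩ := Nat.exists_infinite_primes (max N (Ideal.absNorm (Ideal.span {x}) + 1))
  have hn0 : Ideal.absNorm (Ideal.span {x}) ≠ 0 := by
    rw [Ne, Ideal.absNorm_eq_zero_iff]; simpa using hx
  haveI : Fact l.Prime := ⟨hlp⟩
  haveI : (Ideal.span {(l : ℤ)}).IsMaximal := inferInstance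
  obtain ⟨q, hq, hql⟩ := Ideal.exists_maximal_ideal_liesOver_of_isIntegral (S := 𝓞 K)
    (Ideal.span {(l : ℤ)})
  have hlq : (l : 𝓞 K) ∈ q := by
    have := (Ideal.mem_of_liesOver q (Ideal.span {(l : ℤ)}) (l : ℤ)).1
      (Ideal.mem_span_singleton_self _)
    simpa using this
  have hq0 : q ≠ ⊥ := Ring.ne_bot_of_isMaximal_of_not_isField hq (RingOfIntegers.not_isField K)
  haveI : Finite (𝓞 K ⧸ q) := Ring.HasFiniteQuotients.finiteQuotient hq0
  refine ⟨q, hq, ?_, ?_⟩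
  · letI := Ideal.Quotient.field q
    have hch : CharP (𝓞 K ⧸ q) l := by
      obtain ⟨c, hc⟩ := CharP.exists (𝓞 K ⧸ q)
      have h1 : ((l : ℕ) : 𝓞 K ⧸ q) = 0 := by
        rw [← map_natCast (Ideal.Quotient.mk q)]
        exact Ideal.Quotient.eq_zero_iff_mem.2 hlq
      have h2 := (CharP.cast_eq_zero_iff (𝓞 K ⧸ q) c l).1 h1
      rcases (Nat.dvd_prime hlp).1 h2 with rfl | rfl
      · exact absurd rfl (CharP.char_ne_one (𝓞 K ⧸ q) 1)
      · exact hc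
    have := Fintype.ofFinite (𝓞 K ⧸ q)
    obtain ⟨n, -, hn⟩ := FiniteField.card (𝓞 K ⧸ q) l
    rw [Nat.card_eq_fintype_card, hn]
    exact (le_max_left _ _).trans (hl.trans (Nat.le_self_pow n.pos.ne' l))
  · intro hxq
    have h1 := q.mem_of_dvd (Ideal.mem_span_singleton.1 (Ideal.absNorm_mem (Ideal.span {x}))) hxq
    have hco : (Ideal.absNorm (Ideal.span {x})).Coprime l :=
      (Nat.coprime_of_lt_prime hn0
        ((Nat.lt_succ_self _).trans_le ((le_max_right _ _).trans hl)) hlp).symm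
    have h2 := (Nat.isCoprime_iff_coprime.2 hco)
    obtain ⟨α, β, h3⟩ := h2
    have h4 := congrArg (Int.cast : ℤ → 𝓞 K) h3
    push_cast at h4
    refine hq.ne_top ((Ideal.eq_top_iff_one _).2 ?_)
    rw [← h4]
    exact q.add_mem (q.mul_mem_left _ h1) (q.mul_mem_left _ hlq)

lemma lam_notMem {p : ℕ} (hp : p.Prime) {ζ : 𝓞 K} (hζ : IsPrimitiveRoot ζ p) {q : Ideal (𝓞 K)}
    (hpq : (p : 𝓞 K) ∉ q) : 1 - ζ ∉ q := by
  obtain ⟨w, hw, -⟩ := p_eq hp hζ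
  intro h
  apply hpq
  rw [hw]
  exact q.mul_mem_right _ (q.pow_mem_of_mem h _ (by have := hp.two_le; omega))

/-- The finite field statement `exists_pow_succ_not_pow` for a residue field. -/
lemma exists_nonres {p d : ℕ} (hp : p.Prime) (hp3 : 2 < p) (hd2 : 2 ≤ d) (hdp : d < p)
    {ζ : 𝓞 K} (hζ : IsPrimitiveRoot ζ p) {q : Ideal (𝓞 K)} (hq : q.IsMaximal)
    (hpq : (p : 𝓞 K) ∉ q) (hcard : p * (3 * p) < Nat.card (𝓞 K ⧸ q)) :
    ∃ c : 𝓞 K, (∀ y, 1 + c ^ p - y ^ p ∉ q) ∧ (-c ^ p) ^ (d - 1) - 1 ∉ q := by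
  letI := Ideal.Quotient.field q
  haveI : Finite (𝓞 K ⧸ q) := Ring.HasFiniteQuotients.finiteQuotient
    (Ring.ne_bot_of_isMaximal_of_not_isField hq (RingOfIntegers.not_isField K))
  obtain ⟨c, h1, h2⟩ := exists_pow_succ_not_pow (F := 𝓞 K ⧸ q) (d := d)
    (ζ := Ideal.Quotient.mk q ζ) hp hp3 hd2 hdp (by
      intro h
      rw [← map_one (Ideal.Quotient.mk q), eq_comm, Ideal.Quotient.eq] at h
      exact lam_notMem hp hζ hpq h) (by rw [← map_pow, hζ.pow_eq_one, map_one]) hcard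
  obtain ⟨c, rfl⟩ := Ideal.Quotient.mk_surjective c
  refine ⟨c, fun y h => h1 (Ideal.Quotient.mk q y) ?_, fun h => h2 ?_⟩
  · rw [← Ideal.Quotient.eq] at h
    simpa using h
  · rw [← Ideal.Quotient.eq] at h
    simpa using h

/-- Choice of the factor `u`: divisible by ideals representing all classes, and with nonzero
trace to the prime field (after multiplication by `d`) at some prime above `p`. -/
lemma exists_u {p d : ℕ} (hp : p.Prime) (hd2 : 2 ≤ d) (hdp : d < p) : ∃ u : 𝓞 K, u ≠ 0 ∧
    (∃ q : Ideal (𝓞 K), q.IsMaximal ∧ (p : 𝓞 K) ∈ q ∧ ∃ f, Nat.card (𝓞 K ⧸ q) = p ^ f ∧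
      ∑ i ∈ Finset.range f, ((d : 𝓞 K) * u) ^ p ^ i ∉ q) ∧
    (∀ c : ClassGroup (𝓞 K), ∃ (I : Ideal (𝓞 K)) (hI : I ≠ ⊥), cl I hI = c ∧ u ∈ I ∧
      I ⊔ Ideal.span {(p : 𝓞 K)} = ⊤) := by
  classical
  have hp0 : (p : 𝓞 K) ≠ 0 := Nat.cast_ne_zero.2 hp.ne_zero
  have hspan : Ideal.span {(p : 𝓞 K)} ≠ ⊥ := by simpa using hp0
  choose I hI hcl hIp using coprime_rep (K := K) _ hspan
  haveI : Fact p.Prime := ⟨hp⟩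
  haveI : (Ideal.span {(p : ℤ)}).IsMaximal := inferInstance
  obtain ⟨q, hq, hql⟩ := Ideal.exists_maximal_ideal_liesOver_of_isIntegral (S := 𝓞 K)
    (Ideal.span {(p : ℤ)})
  have hpq : (p : 𝓞 K) ∈ q := by
    have := (Ideal.mem_of_liesOver q (Ideal.span {(p : ℤ)}) (p : ℤ)).1
      (Ideal.mem_span_singleton_self _)
    simpa using this
  have hq0 : q ≠ ⊥ := Ring.ne_bot_of_isMaximal_of_not_isField hq (RingOfIntegers.not_isField K)
  haveI : Finite (𝓞 K ⧸ q) := Ring.HasFiniteQuotients.finiteQuotient hq0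
  letI := Ideal.Quotient.field q
  have := Fintype.ofFinite (𝓞 K ⧸ q)
  have hch : CharP (𝓞 K ⧸ q) p := by
    obtain ⟨c, hc⟩ := CharP.exists (𝓞 K ⧸ q)
    have h1 : ((p : ℕ) : 𝓞 K ⧸ q) = 0 := by
      rw [← map_natCast (Ideal.Quotient.mk q)]
      exact Ideal.Quotient.eq_zero_iff_mem.2 hpq
    have h2 := (CharP.cast_eq_zero_iff (𝓞 K ⧸ q) c p).1 h1
    rcases (Nat.dvd_prime hp).1 h2 with rfl | rfl
    · exact absurd rfl (CharP.char_ne_one (𝓞 K ⧸ q) 1)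
    · exact hc
  obtain ⟨f, -, hf⟩ := FiniteField.card (𝓞 K ⧸ q) p
  -- the trace polynomial has degree less than the size of the residue field
  obtain ⟨w, hw⟩ : ∃ w : 𝓞 K ⧸ q, ∑ i ∈ Finset.range f, w ^ p ^ i ≠ 0 := by
    by_contra! hall
    let P : Polynomial (𝓞 K ⧸ q) := ∑ i ∈ Finset.range f, Polynomial.X ^ p ^ i
    have hdeg : P.natDegree ≤ p ^ ((f : ℕ) - 1) := by
      refine Polynomial.natDegree_sum_le_of_forall_le _ _ fun i hi => ?_
      rw [Polynomial.natDegree_X_pow]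
      exact Nat.pow_le_pow_right hp.pos (by rw [Finset.mem_range] at hi; omega)
    have hP0 : P = 0 := by
      refine Polynomial.eq_zero_of_natDegree_lt_card_of_eval_eq_zero' P Finset.univ
        (fun x _ => ?_) ?_
      · simpa [P, Polynomial.eval_finset_sum] using hall x
      · rw [Finset.card_univ, hf]
        exact hdeg.trans_lt (Nat.pow_lt_pow_right hp.one_lt (by have := f.pos; omega))
    have h1 : P.coeff 1 = 1 := by
      simp only [P, Polynomial.finset_sum_coeff, Polynomial.coeff_X_pow]
      rw [Finset.sum_eq_single 0]
      · simp
      · intro i _ hi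
        rw [if_neg]
        exact fun h => hi ((Nat.pow_eq_one.1 h.symm).resolve_left hp.one_lt.ne')
      · intro h
        exact absurd (Finset.mem_range.2 f.pos) h
    rw [hP0] at h1
    simp at h1
  have hdq : (d : 𝓞 K ⧸ q) ≠ 0 := by
    rw [Ne, CharP.cast_eq_zero_iff (𝓞 K ⧸ q) p]
    exact fun h => absurd (Nat.le_of_dvd (by omega) h) (by omega)
  obtain ⟨w', hw'⟩ := Ideal.Quotient.mk_surjective (w / (d : 𝓞 K ⧸ q))
  have hprod : ¬ (∏ c, I c) ≤ q := by
    rw [hq.isPrime.prod_le]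
    rintro ⟨c, -, hc⟩
    have h1 : (⊤ : Ideal (𝓞 K)) ≤ q := by
      rw [← hIp c]
      exact sup_le hc ((Ideal.span_singleton_le_iff_mem _).2 hpq)
    exact hq.ne_top (top_le_iff.1 h1)
  obtain ⟨e, he, heq⟩ := SetLike.not_le_iff_exists.1 hprod
  obtain ⟨t, i, hi, hti⟩ := hq.exists_inv heq
  have hcong : Ideal.Quotient.mk q ((d : 𝓞 K) * (w' * (t * e))) = w := by
    have h1 : Ideal.Quotient.mk q (t * e) = 1 := by
      rw [← map_one (Ideal.Quotient.mk q), Ideal.Quotient.eq, ← hti]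
      simpa using hi
    rw [map_mul, map_mul, h1, hw', map_natCast]
    field_simp
  have hsum : ∑ i ∈ Finset.range f, ((d : 𝓞 K) * (w' * (t * e))) ^ p ^ i ∉ q := by
    intro h
    rw [← Ideal.Quotient.eq_zero_iff_mem, map_sum] at h
    simp only [map_pow, hcong] at h
    exact hw h
  refine ⟨w' * (t * e), ?_, ⟨q, hq, hpq, f, by rw [Nat.card_eq_fintype_card, hf], hsum⟩, ?_⟩
  · intro h0
    apply hsum
    rw [h0, mul_zero]
    refine q.sum_mem fun i _ => ?_
    rw [zero_pow (pow_ne_zero _ hp.ne_zero)]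
    exact q.zero_mem
  · intro c
    refine ⟨I c, hI c, hcl c, ?_, hIp c⟩
    refine Ideal.mul_mem_left _ _ (Ideal.mul_mem_left _ _ ?_)
    exact Ideal.prod_le_inf.trans (Finset.inf_le (Finset.mem_univ c)) he

end ClRank

/-! ### Existence of good parameters -/

namespace ClRank
open NumberField Module

variable {K : Type*} [Field K] [NumberField K]

lemma coprime_of_max {I J : Ideal (𝓞 K)}
    (h : ∀ q : Ideal (𝓞 K), q.IsMaximal → I ≤ q → J ≤ q → False) : IsCoprime I J := by
  rw [Ideal.isCoprime_iff_sup_eq]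
  by_contra hne
  obtain ⟨q, hq, hle⟩ := Ideal.exists_le_maximal _ hne
  exact h q hq (le_sup_left.trans hle) (le_sup_right.trans hle)

lemma split_prime (x : 𝓞 K) (hx : x ≠ 0) {q : Ideal (𝓞 K)} (hq : q.IsMaximal) :
    ∃ (k : ℕ) (J : Ideal (𝓞 K)), Ideal.span {x} = q ^ k * J ∧ ¬ J ≤ q := by
  have h1 : FiniteMultiplicity q (Ideal.span {x}) := FiniteMultiplicity.of_not_isUnit
    (by rw [Ideal.isUnit_iff]; exact hq.ne_top) (by simpa using hx)
  obtain ⟨J, hJ, hn⟩ := h1.exists_eq_pow_mul_and_not_dvd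
  exact ⟨_, J, hJ, fun h => hn (Ideal.dvd_iff_le.2 h)⟩

lemma eq_of_pow_le {q r : Ideal (𝓞 K)} (hq : q.IsMaximal) (hr : r.IsMaximal) {k : ℕ}
    (h : q ^ k ≤ r) : q = r :=
  hq.eq_of_le hr.ne_top (hr.isPrime.le_of_pow_le h)

lemma mem_right_of_span_eq {R : Type*} [CommRing R] {x : R} {I J : Ideal R}
    (h : Ideal.span {x} = I * J) : x ∈ J := by
  have := Ideal.mem_span_singleton_self x
  rw [h] at this
  exact (Ideal.mul_le_inf this).2

lemma pairwise3 {R : Type*} [CommRing R] {A B C : Ideal R} (e1 : IsCoprime A B)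
    (e2 : IsCoprime A C) (e3 : IsCoprime B C) :
    Pairwise (Function.onFun IsCoprime ![A, B, C]) := by
  intro i j hij
  have e1' := e1.symm
  have e2' := e2.symm
  have e3' := e3.symm
  fin_cases i <;> fin_cases j <;> simp_all [Function.onFun]

lemma pairwise4 {R : Type*} [CommRing R] {A B C D : Ideal R} (e1 : IsCoprime A B)
    (e2 : IsCoprime A C) (e3 : IsCoprime A D) (e4 : IsCoprime B C) (e5 : IsCoprime B D)
    (e6 : IsCoprime C D) :
    Pairwise (Function.onFun IsCoprime ![A, B, C, D]) := by
  intro i j hij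
  have e1' := e1.symm
  have e2' := e2.symm
  have e3' := e3.symm
  have e4' := e4.symm
  have e5' := e5.symm
  have e6' := e6.symm
  fin_cases i <;> fin_cases j <;> simp_all [Function.onFun]

set_option maxHeartbeats 1000000 in
/-- Good parameters exist, with `s` arbitrary in a residue class. The element `b` is found by the
Chinese remainder theorem, and determines `ε`; then `s` is prescribed modulo finitely many ideals.
-/
theorem exists_params {p d : ℕ} (hp : p.Prime) (hp3 : 2 < p) (hd2 : 2 ≤ d) (hdp : d < p)
    {ζ : 𝓞 K} (hζ : IsPrimitiveRoot ζ p) : ∃ (b τ ε u s₀ : 𝓞 K) (n₀ : ℕ), n₀ ≠ 0 ∧ τ ≠ 0 ∧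
      ∀ s, (n₀ : 𝓞 K) ∣ s - s₀ → Good p d ζ b τ ε u s := by
  obtain ⟨u, hu0, h8, hCl⟩ := exists_u (K := K) hp hd2 hdp
  have hodd : Odd p := hp.odd_of_ne_two (by omega)
  have hp0 : (p : 𝓞 K) ≠ 0 := Nat.cast_ne_zero.2 hp.ne_zero
  set τ := (1 - ζ) ^ 2 * u with hτ
  have hτ0 : τ ≠ 0 := mul_ne_zero
    (pow_ne_zero _ (sub_ne_zero.2 (hζ.ne_one hp.one_lt).symm)) hu0
  have nebot : ∀ q : Ideal (𝓞 K), q.IsMaximal → q ≠ ⊥ := fun q hq =>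
    Ring.ne_bot_of_isMaximal_of_not_isField hq (RingOfIntegers.not_isField K)
  obtain ⟨r₁, hr₁, hc₁, hx₁⟩ := exists_big_prime ((p : 𝓞 K) * τ) (mul_ne_zero hp0 hτ0)
    (p * (3 * p) + 1)
  obtain ⟨m₁, hm₁, hm₁0⟩ := Submodule.exists_mem_ne_zero_of_ne_bot (nebot r₁ hr₁)
  obtain ⟨r₂, hr₂, hc₂, hx₂⟩ := exists_big_prime ((p : 𝓞 K) * τ * m₁)
    (mul_ne_zero (mul_ne_zero hp0 hτ0) hm₁0) (p * (3 * p) + 1)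
  obtain ⟨m₂, hm₂, hm₂0⟩ := Submodule.exists_mem_ne_zero_of_ne_bot (nebot r₂ hr₂)
  obtain ⟨q₀, hq₀, -, hx₀⟩ := exists_big_prime ((p : 𝓞 K) * τ * (m₁ * m₂))
    (mul_ne_zero (mul_ne_zero hp0 hτ0) (mul_ne_zero hm₁0 hm₂0)) 0
  have h12 : r₁ ≠ r₂ := by rintro rfl; exact hx₂ (r₁.mul_mem_left _ hm₁)
  have h10 : q₀ ≠ r₁ := by rintro rfl; exact hx₀ (q₀.mul_mem_left _ (q₀.mul_mem_right _ hm₁))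
  have h20 : q₀ ≠ r₂ := by rintro rfl; exact hx₀ (q₀.mul_mem_left _ (q₀.mul_mem_left _ hm₂))
  have hx₂' : (p : 𝓞 K) * τ ∉ r₂ := fun h => hx₂ (r₂.mul_mem_right _ h)
  have hx₀' : (p : 𝓞 K) * τ ∉ q₀ := fun h => hx₀ (q₀.mul_mem_right _ h)
  have hpτ : ∀ q : Ideal (𝓞 K), q.IsMaximal → ∀ i j, (p : 𝓞 K) ^ i * τ ^ j ∈ q →
      (p : 𝓞 K) * τ ∈ q := by
    intro q hq i j h
    rcases hq.isPrime.mem_or_mem h with h | h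
    · exact q.mul_mem_right _ (hq.isPrime.mem_of_pow_mem _ h)
    · exact q.mul_mem_left _ (hq.isPrime.mem_of_pow_mem _ h)
  obtain ⟨c₁, hn₁, hv₁⟩ := exists_nonres (d := d) hp hp3 hd2 hdp hζ hr₁
    (fun h => hx₁ (r₁.mul_mem_right _ h)) hc₁
  obtain ⟨c₂, hn₂, -⟩ := exists_nonres (d := d) hp hp3 hd2 hdp hζ hr₂
    (fun h => hx₂' (r₂.mul_mem_right _ h)) hc₂
  -- The element `b` is close to `1` at `pτ` and `q₀`, divisible by `r₁` (for `h6`) and congruent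
  -- to `-c₂` modulo `r₂` (for `h7`).
  obtain ⟨b, hb1, hbr₁, hbr₂⟩ : ∃ b : 𝓞 K,
      b - 1 ∈ Ideal.span {(p : 𝓞 K) ^ 2 * τ ^ (p + 1)} * q₀ ^ (p + 1) ∧ b ∈ r₁ ∧ b + c₂ ∈ r₂ := by
    have hA : ∀ r : Ideal (𝓞 K), r.IsMaximal → (p : 𝓞 K) * τ ∉ r → q₀ ≠ r →
        ∀ q : Ideal (𝓞 K), q.IsMaximal →
          Ideal.span {(p : 𝓞 K) ^ 2 * τ ^ (p + 1)} * q₀ ^ (p + 1) ≤ q → r ≤ q → False := by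
      intro r hr hn hne q hq h1 h2
      obtain rfl := hr.eq_of_le hq.ne_top h2
      rcases hr.isPrime.mul_le.1 h1 with h | h
      · rw [Ideal.span_singleton_le_iff_mem] at h
        exact hn (hpτ r hr _ _ h)
      · exact hne (eq_of_pow_le hq₀ hr h)
    have hco : Pairwise (Function.onFun IsCoprime
        ![Ideal.span {(p : 𝓞 K) ^ 2 * τ ^ (p + 1)} * q₀ ^ (p + 1), r₁, r₂]) := by
      have e1 := coprime_of_max (hA r₁ hr₁ hx₁ h10)
      have e2 := coprime_of_max (hA r₂ hr₂ hx₂' h20)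
      have e3 : IsCoprime r₁ r₂ := coprime_of_max fun q hq a1 a2 =>
        h12 ((hr₁.eq_of_le hq.ne_top a1).trans (hr₂.eq_of_le hq.ne_top a2).symm)
      exact pairwise3 e1 e2 e3
    obtain ⟨b, hb⟩ := Ideal.exists_forall_sub_mem_ideal hco ![1, 0, -c₂]
    refine ⟨b, hb 0, ?_, ?_⟩
    · simpa using hb 1
    · simpa using hb 2
  have hbp : b ^ p - 1 ∈ Ideal.span {(p : 𝓞 K) ^ 2 * τ ^ (p + 1)} * q₀ ^ (p + 1) := by
    refine Ideal.mem_of_dvd _ ?_ hb1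
    simpa using sub_dvd_pow_sub_pow b 1 p
  obtain ⟨e', he', hbe⟩ := Ideal.mem_span_singleton_mul.1 hbp
  set ε := (p : 𝓞 K) ^ 2 * τ * e' with hε
  have hb : b ^ p = 1 + τ ^ p * ε := by rw [hε]; linear_combination -hbe
  have hdb : (p : 𝓞 K) ^ 2 * τ ∣ b - 1 := by
    obtain ⟨z, -, hz⟩ := Ideal.mem_span_singleton_mul.1 hb1
    exact ⟨τ ^ p * z, by rw [← hz]; ring⟩
  have hn₂' : ∀ y, b ^ p - 1 - y ^ p ∉ r₂ := by
    intro y h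
    apply hn₂ (-y)
    have h1 : b ^ p - (-c₂) ^ p ∈ r₂ := r₂.mem_of_dvd (sub_dvd_pow_sub_pow b (-c₂) p)
      (by simpa using hbr₂)
    have h2 := r₂.sub_mem h1 h
    rw [hodd.neg_pow] at h2 ⊢
    convert h2 using 1
    ring
  have hb0 : b ≠ 0 := by
    intro h
    apply hn₂' (-1)
    rw [h, zero_pow hp.ne_zero, hodd.neg_one_pow]
    simp
  have hεr₂ : ε ∉ r₂ := by
    intro h
    apply hn₂' 0
    rw [zero_pow hp.ne_zero, hb]
    simpa using r₂.mul_mem_left (τ ^ p) h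
  have hε0 : ε ≠ 0 := fun h => hεr₂ (h ▸ r₂.zero_mem)
  have hbε : ∀ q : Ideal (𝓞 K), q.IsMaximal → ε ∈ q → b ∈ q → False := by
    intro q hq h1 h2
    refine hq.ne_top ((Ideal.eq_top_iff_one _).2 ?_)
    have h3 := q.sub_mem (q.pow_mem_of_mem h2 p hp.pos) (q.mul_mem_left (τ ^ p) h1)
    rw [hb] at h3
    simpa using h3
  obtain ⟨k, J, hJ, hJq⟩ := split_prime ε hε0 hq₀
  obtain ⟨l, B, hB, hBr⟩ := split_prime b hb0 hr₁
  have hJ0 : J ≠ ⊥ := by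
    rintro rfl
    rw [Ideal.mul_bot, Ideal.span_singleton_eq_bot] at hJ
    exact hε0 hJ
  have hB0 : B ≠ ⊥ := by
    rintro rfl
    rw [Ideal.mul_bot, Ideal.span_singleton_eq_bot] at hB
    exact hb0 hB
  have hJε : ∀ q : Ideal (𝓞 K), J ≤ q → ε ∈ q := fun q h => h (mem_right_of_span_eq hJ)
  have hBb : ∀ q : Ideal (𝓞 K), B ≤ q → b ∈ q := fun q h => h (mem_right_of_span_eq hB)
  set J' := Ideal.span {(p : 𝓞 K) ^ 2 * τ} * J with hJ'
  have hdε : (p : 𝓞 K) ^ 2 * τ ∣ ε := ⟨e', rfl⟩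
  have hJ'ε : ∀ q : Ideal (𝓞 K), q.IsMaximal → J' ≤ q → ε ∈ q := by
    intro q hq h
    rcases hq.isPrime.mul_le.1 h with h | h
    · exact q.mem_of_dvd hdε ((Ideal.span_singleton_le_iff_mem _).1 h)
    · exact hJε q h
  have hεq₀ : ε ∈ q₀ ^ (p + 1) := Ideal.mul_mem_left _ _ he'
  have hεq₀' : ε ∈ q₀ := Ideal.pow_le_self (by omega) hεq₀
  obtain ⟨t₁, i₁, hi₁, ht₁⟩ := hr₁.exists_inv (x := τ ^ d)
    (fun h => hx₁ (r₁.mul_mem_left _ (hr₁.isPrime.mem_of_pow_mem _ h)))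
  obtain ⟨π, hπ, hπ2⟩ : ∃ π ∈ q₀, π ∉ q₀ ^ 2 := by
    by_contra! hall
    have h1 : q₀ ^ 2 = q₀ ^ 1 := le_antisymm (Ideal.pow_le_pow_right (by norm_num))
      (by rw [pow_one]; exact hall)
    have := (Ideal.pow_right_strictAnti q₀ (nebot _ hq₀) hq₀.ne_top).injective h1
    omega
  have hco : Pairwise (Function.onFun IsCoprime ![J', q₀ ^ 2, r₁, r₂ * B]) := by
    have e01 : IsCoprime J' (q₀ ^ 2) := coprime_of_max fun q hq a1 a2 => by
      obtain rfl := eq_of_pow_le hq₀ hq a2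
      rcases hq.isPrime.mul_le.1 a1 with h | h
      · rw [Ideal.span_singleton_le_iff_mem] at h
        exact hx₀' (hpτ q₀ hq 2 1 (by simpa using h))
      · exact hJq h
    have e02 : IsCoprime J' r₁ := coprime_of_max fun q hq a1 a2 => hbε q hq (hJ'ε q hq a1) (a2 hbr₁)
    have e03 : IsCoprime J' (r₂ * B) := coprime_of_max fun q hq a1 a2 => by
      rcases hq.isPrime.mul_le.1 a2 with h | h
      · obtain rfl := hr₂.eq_of_le hq.ne_top h
        exact hεr₂ (hJ'ε r₂ hq a1)
      · exact hbε q hq (hJ'ε q hq a1) (hBb q h)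
    have e12 : IsCoprime (q₀ ^ 2) r₁ := coprime_of_max fun q hq a1 a2 =>
      h10 ((eq_of_pow_le hq₀ hq a1).trans (hr₁.eq_of_le hq.ne_top a2).symm)
    have e13 : IsCoprime (q₀ ^ 2) (r₂ * B) := coprime_of_max fun q hq a1 a2 => by
      obtain rfl := eq_of_pow_le hq₀ hq a1
      rcases hq.isPrime.mul_le.1 a2 with h | h
      · exact h20 (hr₂.eq_of_le hq.ne_top h).symm
      · exact hbε q₀ hq hεq₀' (hBb q₀ h)
    have e23 : IsCoprime r₁ (r₂ * B) := coprime_of_max fun q hq a1 a2 => by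
      obtain rfl := hr₁.eq_of_le hq.ne_top a1
      rcases hq.isPrime.mul_le.1 a2 with h | h
      · exact h12 (hr₂.eq_of_le hq.ne_top h).symm
      · exact hBr h
    exact pairwise4 e01 e02 e03 e12 e13 e23
  -- The element `s` is congruent to `1` at the primes of `pτ` and of `ε` other than `q₀`, exactly
  -- divisible by `q₀`, satisfies `τ ^ d s ≡ c₁ ^ (d - 1)` modulo `r₁`, and is divisible by `r₂`
  -- and by the remaining primes of `b`.
  obtain ⟨s₀, hs₀⟩ := Ideal.exists_forall_sub_mem_ideal hco ![1, π, c₁ ^ (d - 1) * t₁, 0]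
  have hN0 : J' * (q₀ ^ 2 * (r₁ * (r₂ * B))) ≠ ⊥ := by
    have : Ideal.span {(p : 𝓞 K) ^ 2 * τ} ≠ ⊥ := by
      simpa using And.intro hp.ne_zero hτ0
    exact mul_ne_zero (mul_ne_zero this hJ0) (mul_ne_zero (pow_ne_zero _ (nebot _ hq₀))
      (mul_ne_zero (nebot _ hr₁) (mul_ne_zero (nebot _ hr₂) hB0)))
  refine ⟨b, τ, ε, u, s₀, Ideal.absNorm (J' * (q₀ ^ 2 * (r₁ * (r₂ * B)))), ?_, hτ0, ?_⟩
  · rw [Ne, Ideal.absNorm_eq_zero_iff]; exact hN0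
  intro s hs
  have hsN : s - s₀ ∈ J' * (q₀ ^ 2 * (r₁ * (r₂ * B))) :=
    Ideal.mem_of_dvd _ hs (Ideal.absNorm_mem _)
  have hs' : s - 1 ∈ J' ∧ s - π ∈ q₀ ^ 2 ∧ s - c₁ ^ (d - 1) * t₁ ∈ r₁ ∧ s ∈ r₂ * B := by
    have hm1 := Ideal.mul_le_inf hsN
    have hm2 := Ideal.mul_le_inf hm1.2
    have hm3 := Ideal.mul_le_inf hm2.2
    refine ⟨?_, ?_, ?_, ?_⟩
    · simpa using J'.add_mem hm1.1 (hs₀ 0)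
    · simpa using (q₀ ^ 2).add_mem hm2.1 (hs₀ 1)
    · simpa using r₁.add_mem hm3.1 (hs₀ 2)
    · simpa using (r₂ * B).add_mem hm3.2 (hs₀ 3)
  obtain ⟨hsJ, hsq, hsr, hsB⟩ := hs'
  have hsq1 : s ∈ q₀ := by
    have := q₀.add_mem (Ideal.pow_le_self two_ne_zero hsq) hπ
    simpa using this
  have hsq2 : s ∉ q₀ ^ 2 := by
    intro h
    apply hπ2
    have := (q₀ ^ 2).sub_mem h hsq
    simpa using this
  have hsr' : τ ^ d * s - c₁ ^ (d - 1) ∈ r₁ := by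
    have := r₁.sub_mem (r₁.mul_mem_left (τ ^ d) hsr) (r₁.mul_mem_left (c₁ ^ (d - 1)) hi₁)
    convert this using 1
    linear_combination c₁ ^ (d - 1) * ht₁
  refine ⟨hb0, ?_, hε0, hb, hτ, hdε, ?_, hdb, ?_, ?_, ⟨q₀, hq₀, hsq1, hsq2, hεq₀'⟩,
    ⟨r₁, hr₁, hbr₁, c₁, hn₁, hsr'⟩, ⟨r₂, hr₂, (Ideal.mul_le_inf hsB).1, hn₂'⟩, h8, hCl⟩
  · rintro rfl
    exact hsq2 (Ideal.zero_mem _)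
  · obtain ⟨z, -, hz⟩ := Ideal.mem_span_singleton_mul.1 hsJ
    exact ⟨z, hz.symm⟩
  · intro q hq hεq hsq'
    rw [← Ideal.span_singleton_le_iff_mem, hJ] at hεq
    rcases hq.isPrime.mul_le.1 hεq with h | h
    · obtain rfl := eq_of_pow_le hq₀ hq h
      obtain ⟨I, hI⟩ := Ideal.dvd_iff_le.2 ((Ideal.span_singleton_le_iff_mem _).2 hsq1)
      have hIq : ¬ I ^ (p + 1) ≤ q₀ := by
        intro hle
        apply hsq2
        rw [← Ideal.span_singleton_le_iff_mem, hI, sq]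
        exact Ideal.mul_mono_right (hq.isPrime.le_of_pow_le hle)
      obtain ⟨w, hw, hwq⟩ := SetLike.not_le_iff_exists.1 hIq
      refine ⟨w, hwq, ?_⟩
      rw [← Ideal.mem_span_singleton, ← Ideal.span_singleton_pow, hI, mul_pow, mul_comm w]
      exact Ideal.mul_mem_mul hεq₀ hw
    · refine absurd ((Ideal.eq_top_iff_one _).2 ?_) hq.ne_top
      have := q.sub_mem hsq' (h ((Ideal.mul_le_inf hsJ).2))
      simpa using this
  · intro q hq hbq hmem
    rw [← Ideal.span_singleton_le_iff_mem, hB] at hbq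
    rcases hq.isPrime.mul_le.1 hbq with h | h
    · obtain rfl := eq_of_pow_le hr₁ hq h
      apply hv₁
      rw [← Ideal.Quotient.eq] at hsr' hmem ⊢
      simp only [map_mul, map_pow, map_neg, map_one] at hsr' hmem ⊢
      rw [hsr'] at hmem
      rw [neg_pow, ← pow_mul, mul_comm p, pow_mul, hmem, ← mul_pow]
      norm_num
    · have h1 : s ∈ q := h (Ideal.mul_le_inf hsB).2
      have h2 := q.sub_mem (q.pow_mem_of_mem (q.mul_mem_left (τ ^ d) h1) p hp.pos) hmem
      rw [sub_sub_cancel] at h2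
      refine hq.ne_top (Ideal.eq_top_of_isUnit_mem _ h2 (IsUnit.pow _ isUnit_one.neg))

end ClRank

/-! ### Archimedean estimates -/

namespace ClRank

/-- The value at the root `η` of the derivative of the defining polynomial is `O(|s|^p)`. -/
lemma arch_deriv {d p : ℕ} (hd2 : 2 ≤ d) {η ε s z t : ℂ} {E : ℝ} (hE : 1 ≤ E) (hε : ‖ε‖ ≤ E)
    (hz : ‖z‖ ≤ E) (ht : ‖t‖ ≤ E) (hs : 1 ≤ ‖s‖)
    (h : η * (η + ε) ^ (d - 1) = s ^ p * (z + t * η)) :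
    ‖(η + ε) ^ (d - 1) + (d - 1 : ℕ) * η * (η + ε) ^ (d - 2) - s ^ p * t‖ ≤
      (d * 2 ^ (d - 1) * (2 * E) ^ d + E) * ‖s‖ ^ p := by
  obtain ⟨k, rfl⟩ := Nat.exists_eq_add_of_le' hd2
  simp only [show k + 2 - 1 = k + 1 from rfl, Nat.add_sub_cancel] at h ⊢
  set S := ‖s‖ ^ p with hS
  have hS1 : 1 ≤ S := one_le_pow₀ hs
  set m := max ‖η‖ (2 * E) with hm
  have hm0 : 0 < m := lt_of_lt_of_le (by linarith) (le_max_right _ _)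
  have hE2 : (1 : ℝ) ≤ 2 * E := by linarith
  have key : m ^ (k + 1) ≤ (2 * E) ^ (k + 2) * S := by
    rcases le_total ‖η‖ (2 * E) with h1 | h1
    · rw [hm, max_eq_right h1]
      have : (2 * E) ^ (k + 1) ≤ (2 * E) ^ (k + 2) := pow_le_pow_right₀ hE2 (by omega)
      nlinarith [pow_pos (by linarith : 0 < 2 * E) (k + 2)]
    · rw [hm, max_eq_left h1]
      have hη : 0 < ‖η‖ := by linarith
      have h2 : ‖η‖ / 2 ≤ ‖η + ε‖ := by
        have := norm_sub_le (η + ε) ε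
        rw [add_sub_cancel_right] at this
        linarith
      have h3 : ‖η‖ * ‖η + ε‖ ^ (k + 1) = S * ‖z + t * η‖ := by
        have := congrArg norm h
        simpa only [norm_mul, norm_pow] using this
      have h4 : ‖z + t * η‖ ≤ E * (2 * ‖η‖) := by
        have := norm_add_le z (t * η)
        rw [norm_mul] at this
        nlinarith [mul_le_mul_of_nonneg_right ht hη.le]
      have h5 : (‖η‖ / 2) ^ (k + 1) ≤ ‖η + ε‖ ^ (k + 1) := pow_le_pow_left₀ (by positivity) h2 _
      have h6 : ‖η‖ * (‖η‖ / 2) ^ (k + 1) ≤ ‖η‖ * (S * (2 * E)) := by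
        calc _ ≤ ‖η‖ * ‖η + ε‖ ^ (k + 1) := by gcongr
          _ = S * ‖z + t * η‖ := h3
          _ ≤ S * (E * (2 * ‖η‖)) := by gcongr
          _ = _ := by ring
      have h7 := le_of_mul_le_mul_left h6 hη
      rw [div_pow, div_le_iff₀ (by positivity)] at h7
      calc _ ≤ _ := h7
        _ = 2 ^ (k + 2) * E * S := by ring
        _ ≤ 2 ^ (k + 2) * E ^ (k + 2) * S := by
          gcongr
          exact le_self_pow₀ hE (by omega)
        _ = _ := by ring
  have ha : ‖η‖ ≤ m := le_max_left _ _
  have hb : ‖η + ε‖ ≤ 2 * m := by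
    have := norm_add_le η ε
    have : 2 * E ≤ m := le_max_right _ _
    linarith
  calc _ ≤ ‖η + ε‖ ^ (k + 1) + (k + 1 : ℕ) * ‖η‖ * ‖η + ε‖ ^ k + S * ‖t‖ := by
        refine (norm_sub_le _ _).trans ?_
        refine add_le_add ((norm_add_le _ _).trans ?_) ?_
        · simp only [norm_mul, norm_pow, RCLike.norm_natCast]; rfl
        · simp only [norm_mul, norm_pow]; rfl
    _ ≤ (2 * m) ^ (k + 1) + (k + 1 : ℕ) * (2 * m) * (2 * m) ^ k + S * E := by
        gcongr
        linarith
    _ = ((k + 2 : ℕ) : ℝ) * 2 ^ (k + 1) * m ^ (k + 1) + S * E := by push_cast; ring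
    _ ≤ ((k + 2 : ℕ) : ℝ) * 2 ^ (k + 1) * ((2 * E) ^ (k + 2) * S) + S * E := by gcongr
    _ = _ := by ring

/-- In the regime `|x| ≤ 2 Z` one has `|x| ≍ 1 / |T|`. -/
lemma arch_small {d : ℕ} {x z T : ℂ} {Z m : ℝ} (hZ : 1 ≤ Z) (hz : ‖z‖ ≤ Z)
    (hm : 0 < m) (hm1 : m ≤ 1) (hmz : m ≤ ‖z‖)
    (hT : (3 * Z) ^ d * (2 / m) ≤ ‖T‖) (hd : 1 ≤ d)
    (h : (x - z) * (x - 1) ^ (d - 1) = T * x) (hx : ‖x‖ ≤ 2 * Z) :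
    (m / 2) ^ d ≤ ‖T‖ * ‖x‖ ∧ ‖T‖ * ‖x‖ ≤ (3 * Z) ^ d := by
  obtain ⟨k, rfl⟩ := Nat.exists_eq_add_of_le' hd
  simp only [Nat.add_sub_cancel] at h
  have hn : ‖x - z‖ * ‖x - 1‖ ^ k = ‖T‖ * ‖x‖ := by
    have := congrArg norm h
    simpa only [norm_mul, norm_pow] using this
  have h1 : ‖x - z‖ ≤ 3 * Z := (norm_sub_le _ _).trans (by linarith)
  have h2 : ‖x - 1‖ ≤ 3 * Z := (norm_sub_le _ _).trans (by rw [norm_one]; linarith)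
  have hu : ‖T‖ * ‖x‖ ≤ (3 * Z) ^ (k + 1) := by
    rw [← hn, pow_succ']
    gcongr
  refine ⟨?_, hu⟩
  have hx2 : ‖x‖ ≤ m / 2 := by
    have h3 : (3 * Z) ^ (k + 1) * (2 / m) * ‖x‖ ≤ (3 * Z) ^ (k + 1) * 1 := by
      rw [mul_one]
      exact (mul_le_mul_of_nonneg_right hT (norm_nonneg _)).trans hu
    rw [mul_assoc] at h3
    have h4 := le_of_mul_le_mul_left h3 (by positivity)
    rw [div_mul_eq_mul_div, div_le_one hm] at h4
    linarith
  have h3 : m / 2 ≤ ‖x - z‖ := by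
    have := norm_sub_norm_le z x
    rw [norm_sub_rev] at this
    linarith
  have h4 : m / 2 ≤ ‖x - 1‖ := by
    have := norm_sub_norm_le 1 x
    rw [norm_sub_rev, norm_one] at this
    linarith
  rw [← hn, pow_succ']
  gcongr

/-- In the regime `|x| > 2 Z` one has `|x| ^ (d - 1) ≍ |T|`. -/
lemma arch_big {d : ℕ} {x z T : ℂ} {Z : ℝ} (hZ : 1 ≤ Z) (hz : ‖z‖ ≤ Z) (hd : 1 ≤ d)
    (h : (x - z) * (x - 1) ^ (d - 1) = T * x) (hx : 2 * Z < ‖x‖) :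
    ‖T‖ ≤ (3 / 2) ^ d * ‖x‖ ^ (d - 1) ∧ ‖x‖ ^ (d - 1) ≤ 2 ^ d * ‖T‖ := by
  obtain ⟨k, rfl⟩ := Nat.exists_eq_add_of_le' hd
  simp only [Nat.add_sub_cancel] at h ⊢
  have hn : ‖x - z‖ * ‖x - 1‖ ^ k = ‖T‖ * ‖x‖ := by
    have := congrArg norm h
    simpa only [norm_mul, norm_pow] using this
  have hx0 : 0 < ‖x‖ := by linarith
  have h1 : ‖x - z‖ ≤ 3 / 2 * ‖x‖ := (norm_sub_le _ _).trans (by linarith)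
  have h2 : ‖x - 1‖ ≤ 3 / 2 * ‖x‖ := (norm_sub_le _ _).trans (by rw [norm_one]; linarith)
  have h3 : ‖x‖ / 2 ≤ ‖x - z‖ := by have := norm_sub_norm_le x z; linarith
  have h4 : ‖x‖ / 2 ≤ ‖x - 1‖ := by have := norm_sub_norm_le x 1; rw [norm_one] at this; linarith
  constructor
  · refine le_of_mul_le_mul_right ?_ hx0
    rw [← hn]
    calc _ ≤ (3 / 2 * ‖x‖) * (3 / 2 * ‖x‖) ^ k := by gcongr
      _ = _ := by ring
  · have : (‖x‖ / 2) * (‖x‖ / 2) ^ k ≤ ‖T‖ * ‖x‖ := by rw [← hn]; gcongr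
    refine le_of_mul_le_mul_right ?_ hx0
    calc ‖x‖ ^ k * ‖x‖ = 2 ^ (k + 1) * ((‖x‖ / 2) * (‖x‖ / 2) ^ k) := by
          rw [div_pow]; field_simp; ring
      _ ≤ 2 ^ (k + 1) * (‖T‖ * ‖x‖) := by gcongr
      _ = _ := by ring

/-- Two roots of comparable equations lying on the same side of the circle of radius `2Z` have
comparable absolute values. -/
lemma arch_ratio {d : ℕ} {x x' z T T' : ℂ} {Z m ρ : ℝ} (hZ : 1 ≤ Z) (hz : ‖z‖ ≤ Z)
    (hm : 0 < m) (hm1 : m ≤ 1) (hmz : m ≤ ‖z‖) (hd : 2 ≤ d)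
    (hT : (3 * Z) ^ d * (2 / m) ≤ ‖T‖) (hT' : (3 * Z) ^ d * (2 / m) ≤ ‖T'‖)
    (hρ1 : 1 ≤ ρ) (h1 : ‖T‖ ≤ ρ * ‖T'‖) (h2 : ‖T'‖ ≤ ρ * ‖T‖)
    (h : (x - z) * (x - 1) ^ (d - 1) = T * x) (h' : (x' - z) * (x' - 1) ^ (d - 1) = T' * x')
    (hp : ‖x‖ ≤ 2 * Z ↔ ‖x'‖ ≤ 2 * Z) :
    ‖x‖ ≤ (3 * Z) ^ d * ρ * (2 / m) ^ d * ‖x'‖ := by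
  have hTpos : 0 < ‖T‖ := lt_of_lt_of_le (by positivity) hT
  by_cases hx : ‖x‖ ≤ 2 * Z
  · obtain ⟨-, a2⟩ := arch_small hZ hz hm hm1 hmz hT (by omega) h hx
    obtain ⟨b1, -⟩ := arch_small hZ hz hm hm1 hmz hT' (by omega) h' (hp.1 hx)
    have b2 : 1 ≤ (2 / m) ^ d * (ρ * ‖T‖ * ‖x'‖) := by
      calc (1 : ℝ) = (2 / m) ^ d * (m / 2) ^ d := by
            rw [← mul_pow, div_mul_div_comm, mul_comm, div_self (by positivity), one_pow]
        _ ≤ (2 / m) ^ d * (‖T'‖ * ‖x'‖) := by gcongr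
        _ ≤ _ := by gcongr
    refine le_of_mul_le_mul_left ?_ hTpos
    calc _ ≤ (3 * Z) ^ d * 1 := by rw [mul_one]; exact a2
      _ ≤ (3 * Z) ^ d * ((2 / m) ^ d * (ρ * ‖T‖ * ‖x'‖)) := by gcongr
      _ = _ := by ring
  · have hx' : ¬ ‖x'‖ ≤ 2 * Z := fun hh => hx (hp.2 hh)
    rw [not_le] at hx hx'
    obtain ⟨-, a2⟩ := arch_big hZ hz (by omega) h hx
    obtain ⟨b1, -⟩ := arch_big hZ hz (by omega) h' hx'
    have hx'0 : 0 < ‖x'‖ := by linarith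
    have h3 : ‖x‖ ^ (d - 1) ≤ (3 ^ d * ρ * ‖x'‖) ^ (d - 1) := by
      calc _ ≤ 2 ^ d * ‖T‖ := a2
        _ ≤ 2 ^ d * (ρ * ((3 / 2) ^ d * ‖x'‖ ^ (d - 1))) := by
          gcongr
          exact h1.trans (by gcongr)
        _ = (3 ^ d * ρ) * ‖x'‖ ^ (d - 1) := by
          rw [div_pow]; field_simp
        _ ≤ (3 ^ d * ρ) ^ (d - 1) * ‖x'‖ ^ (d - 1) := by
          gcongr
          refine le_self_pow₀ ?_ (by omega)
          exact one_le_mul_of_one_le_of_one_le (one_le_pow₀ (by norm_num)) hρ1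
        _ = _ := (mul_pow _ _ _).symm
    have h4 := le_of_pow_le_pow_left₀ (by omega) (by positivity) h3
    calc _ ≤ 3 ^ d * ρ * ‖x'‖ := h4
      _ = (3 * 1) ^ d * ρ * 1 * ‖x'‖ := by ring
      _ ≤ _ := by
        gcongr
        refine one_le_pow₀ ?_
        rw [le_div_iff₀ hm]
        linarith

end ClRank

/-! ### Discriminants -/

namespace ClRank
open NumberField Module Polynomial

lemma absNorm_span_le {L : Type*} [Field L] [NumberField L] (x : 𝓞 L) {B : ℝ}
    (h : ∀ φ : L →+* ℂ, ‖φ x‖ ≤ B) :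
    (Ideal.absNorm (Ideal.span {x}) : ℝ) ≤ B ^ finrank ℚ L := by
  rw [Ideal.absNorm_span_singleton]
  have h1 := congrArg norm (Algebra.norm_eq_prod_embeddings ℚ ℂ (x : L))
  rw [norm_prod, ← Algebra.coe_norm_int] at h1
  have h2 : ((Algebra.norm ℤ x).natAbs : ℝ) = ‖algebraMap ℚ ℂ ((Algebra.norm ℤ x : ℤ) : ℚ)‖ := by
    simp [Nat.cast_natAbs]
  rw [h2, h1, ← AlgHom.card ℚ L ℂ]
  refine (Finset.prod_le_prod (fun _ _ => norm_nonneg _) (fun φ _ => h φ.toRingHom)).trans ?_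
  rw [Finset.prod_const, Finset.card_univ]

lemma gpoly_deriv {R S : Type*} [CommRing R] [CommRing S] [Algebra R S] {p d : ℕ} (hd2 : 2 ≤ d)
    (b τ ε s : R) (y : S) : aeval y (derivative (gpoly p d b τ ε s)) =
      (y + algebraMap R S ε) ^ (d - 1) + (d - 1 : ℕ) * y * (y + algebraMap R S ε) ^ (d - 2) -
      algebraMap R S s ^ p * algebraMap R S τ ^ p := by
  obtain ⟨k, rfl⟩ := Nat.exists_eq_add_of_le' hd2
  simp [gpoly, derivative_pow]
  ring

/-- The quantity `relDq` through the absolute norm of the different. -/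
lemma relDq_eq {K : Type*} [Field K] [NumberField K] (L : IntermediateField K (AlgebraicClosure K))
    [NumberField L] : relDq K L =
      (Ideal.absNorm (differentIdeal (𝓞 K) (𝓞 L)) : ℝ) ^ ((finrank ℚ K : ℝ)⁻¹) := by
  have h : FiniteDimensional ℚ L := inferInstance
  rw [relDq, dif_pos h]
  rw [Ideal.spanNorm_eq, Ideal.absNorm_relNorm]

/-- The discriminant is bounded by the norm of the derivative of the minimal polynomial at `η`. -/
lemma relDq_le {K : Type*} [Field K] [NumberField K] (L : IntermediateField K (AlgebraicClosure K))
    [NumberField L] (η : 𝓞 L) (hη : IntermediateField.adjoin K {(η : L)} = ⊤) {B : ℝ} (hB : 0 ≤ B)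
    (h : ∀ φ : L →+* ℂ, ‖φ ((aeval η (derivative (minpoly (𝓞 K) η)) : 𝓞 L) : L)‖ ≤ B) :
    relDq K L ≤ B ^ finrank K L := by
  have h1 : Algebra.adjoin K {algebraMap (𝓞 L) L η} = ⊤ := by
    have hInt : IsAlgebraic K (η : L) := Algebra.IsAlgebraic.isAlgebraic _
    rw [← IntermediateField.adjoin_simple_toSubalgebra_of_isAlgebraic hInt, hη]
    rfl
  have h2 := aeval_derivative_mem_differentIdeal (𝓞 K) K L η h1
  have h3 := absNorm_span_le _ h
  have h0 : aeval η (derivative (minpoly (𝓞 K) η)) ≠ 0 := by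
    have hs : IsSeparable K (η : L) := Algebra.IsSeparable.isSeparable K _
    have h4 := hs.aeval_derivative_ne_zero (minpoly.aeval K (η : L))
    intro h5
    apply h4
    rw [minpoly.isIntegrallyClosed_eq_field_fractions K L
      (show IsIntegral (𝓞 K) η from Algebra.IsIntegral.isIntegral η),
      derivative_map, aeval_map_algebraMap, aeval_algebraMap_apply, h5, map_zero]
  have h4 : Ideal.absNorm (differentIdeal (𝓞 K) (𝓞 L)) ≤
      Ideal.absNorm (Ideal.span {aeval η (derivative (minpoly (𝓞 K) η))}) := by
    refine Nat.le_of_dvd ?_ (Ideal.absNorm_dvd_absNorm_of_le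
      ((Ideal.span_singleton_le_iff_mem _).2 h2))
    rw [Nat.pos_iff_ne_zero, Ne, Ideal.absNorm_eq_zero_iff, Ideal.span_singleton_eq_bot]
    exact h0
  have h5 : (Ideal.absNorm (differentIdeal (𝓞 K) (𝓞 L)) : ℝ) ≤ (B ^ finrank K L) ^ finrank ℚ K := by
    rw [← pow_mul, mul_comm, finrank_mul_finrank ℚ K L]
    exact le_trans (by exact_mod_cast h4) h3
  rw [relDq_eq]
  calc _ ≤ ((B ^ finrank K L) ^ finrank ℚ K) ^ ((finrank ℚ K : ℝ)⁻¹) := by gcongr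
    _ = _ := Real.pow_rpow_inv_natCast (by positivity) finrank_pos.ne'

/-- Hermite's theorem: there are finitely many fields of bounded discriminant, so that `Nat.card`
is the true count. -/
lemma finite_relDq (K : Type*) [Field K] [NumberField K] {d : ℕ} (hd : d ≠ 0) (X : ℝ) :
    {L : IntermediateField K (AlgebraicClosure K) | finrank K L = d ∧ relDq K L ≤ X}.Finite := by
  obtain ⟨N, hN⟩ := exists_nat_ge (X ^ finrank ℚ K * (discr K).natAbs ^ d)
  have hfin := NumberField.finite_of_discr_bdd (AlgebraicClosure K) N
  refine Set.Finite.of_finite_image ((hfin.image Subtype.val).subset ?_ : (IntermediateField.restrictScalars ℚ '' _).Finite)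
    (IntermediateField.restrictScalars_injective ℚ).injOn
  rintro _ ⟨L, ⟨hL, hX⟩, rfl⟩
  haveI : FiniteDimensional K L := FiniteDimensional.of_finrank_pos (by omega)
  haveI : NumberField L := NumberField.of_module_finite K L
  have hFD : FiniteDimensional ℚ (IntermediateField.restrictScalars ℚ L) :=
    (inferInstance : FiniteDimensional ℚ L)
  refine ⟨⟨_, hFD⟩, ?_, rfl⟩
  change |discr L| ≤ (N : ℤ)
  rw [Int.abs_eq_natAbs, Nat.cast_le,
    natAbs_discr_eq_absNorm_differentIdeal_mul_natAbs_discr_pow K (𝓞 K) L (𝓞 L), hL]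
  rw [← Nat.cast_le (α := ℝ)]
  refine le_trans ?_ hN
  push_cast
  gcongr
  rw [relDq_eq] at hX
  have := pow_le_pow_left₀ (by positivity) hX (finrank ℚ K)
  rwa [Real.rpow_inv_natCast_pow (by positivity) finrank_pos.ne'] at this

end ClRank

/-! ### Bounded fibres -/

namespace ClRank
open NumberField Module Polynomial

lemma exists_upper {K : Type*} [Field K] [NumberField K] (x : 𝓞 K) :
    ∃ Z : ℝ, 1 ≤ Z ∧ ∀ φ : K →+* ℂ, ‖φ x‖ ≤ Z := by
  refine ⟨1 + ∑ φ : K →+* ℂ, ‖φ x‖, ?_, fun φ => ?_⟩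
  · have : 0 ≤ ∑ φ : K →+* ℂ, ‖φ x‖ := Finset.sum_nonneg fun _ _ => norm_nonneg _
    linarith
  · have := Finset.single_le_sum (f := fun φ : K →+* ℂ => ‖φ x‖) (fun _ _ => norm_nonneg _)
      (Finset.mem_univ φ)
    linarith

lemma exists_lower {K : Type*} [Field K] [NumberField K] {x : 𝓞 K} (hx : x ≠ 0) :
    ∃ m : ℝ, 0 < m ∧ m ≤ 1 ∧ ∀ φ : K →+* ℂ, m ≤ ‖φ x‖ := by
  have h0 : 0 ≤ ∑ φ : K →+* ℂ, ‖φ x‖⁻¹ := Finset.sum_nonneg fun _ _ => by positivity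
  refine ⟨(1 + ∑ φ : K →+* ℂ, ‖φ x‖⁻¹)⁻¹, by positivity, inv_le_one_of_one_le₀ (by linarith),
    fun φ => ?_⟩
  have hpos : 0 < ‖φ x‖ := by simpa using hx
  have := Finset.single_le_sum (f := fun φ : K →+* ℂ => ‖φ x‖⁻¹) (fun _ _ => by positivity)
      (Finset.mem_univ φ)
  rw [inv_le_comm₀ (by positivity) hpos]
  linarith

/-- Algebraic integers of bounded degree with bounded conjugates lie in one finite set,
independent of the field containing them. -/
lemma exists_finset_bdd (K : Type*) [Field K] [NumberField K] (n : ℕ) (B : ℝ) :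
    ∃ W : Finset (AlgebraicClosure K), ∀ (L : IntermediateField K (AlgebraicClosure K))
      [NumberField L], finrank ℚ L = n → ∀ w : 𝓞 L, (∀ φ : L →+* ℂ, ‖φ w‖ ≤ B) →
        ((w : L) : AlgebraicClosure K) ∈ W := by
  classical
  let C := Nat.ceil (max B 1 ^ n * n.choose (n / 2))
  have hfin := bUnion_roots_finite (algebraMap ℤ (AlgebraicClosure K)) n
    (Set.finite_Icc (-C : ℤ) C)
  refine ⟨hfin.toFinset, fun L _ hn w hw => ?_⟩
  rw [Set.Finite.mem_toFinset]
  simp only [Set.mem_iUnion]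
  have hInt : IsIntegral ℤ (w : L) := w.isIntegral_coe
  have hmin := minpoly.isIntegrallyClosed_eq_field_fractions' ℚ hInt
  refine ⟨minpoly ℤ (w : L), ⟨?_, fun i => ?_⟩, ?_⟩
  · rw [← (minpoly.monic hInt).natDegree_map (algebraMap ℤ ℚ), ← hmin, ← hn]
    exact minpoly.natDegree_le _
  · rw [Set.mem_Icc, ← abs_le, ← @Int.cast_le ℝ]
    refine (Eq.trans_le ?_ <| Embeddings.coeff_bdd_of_norm_le hw i).trans ?_
    · rw [hmin, coeff_map, eq_intCast, Int.norm_cast_rat, Int.norm_eq_abs, Int.cast_abs]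
    · rw [hn]; exact Nat.le_ceil _
  · have hne : minpoly ℤ (w : L) ≠ 0 := (minpoly.monic hInt).ne_zero
    rw [Finset.mem_coe, Multiset.mem_toFinset, mem_roots
      ((Polynomial.map_ne_zero_iff (RingHom.injective_int _)).2 hne), IsRoot.def, eval_map,
      ← aeval_def]
    have h := minpoly.aeval ℤ (w : L)
    have h2 := aeval_algebraMap_apply (AlgebraicClosure K) (w : L) (minpoly ℤ (w : L))
    rw [h, map_zero] at h2
    exact h2

/-- The equation `(x - z)(x - 1)^(d-1) = t^p x` satisfied by `x = z + τ^p η`. -/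
lemma x_eq {R : Type*} [CommRing R] {p d : ℕ} (hd : 1 ≤ d) {b τ ε s η : R}
    (hb : b ^ p = 1 + τ ^ p * ε)
    (hη : η * (η + ε) ^ (d - 1) = s ^ p * (b ^ p + τ ^ p * η)) :
    (b ^ p + τ ^ p * η - b ^ p) * (b ^ p + τ ^ p * η - 1) ^ (d - 1) =
      (τ ^ d * s) ^ p * (b ^ p + τ ^ p * η) := by
  have h1 : b ^ p + τ ^ p * η - 1 = τ ^ p * (η + ε) := by rw [hb]; ring
  rw [h1, mul_pow, add_sub_cancel_left]
  obtain ⟨k, rfl⟩ := Nat.exists_eq_add_of_le' hd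
  simp only [Nat.add_sub_cancel] at hη ⊢
  calc _ = (τ ^ p) ^ (k + 1) * (η * (η + ε) ^ k) := by ring
    _ = _ := by rw [hη, mul_pow, ← pow_mul, ← pow_mul, mul_comm p]; ring

lemma x_ne_zero {R : Type*} [CommRing R] [IsDomain R] {p d : ℕ} (hp : p ≠ 0) {b τ ε s η : R}
    (hb : b ^ p = 1 + τ ^ p * ε) (hb0 : b ≠ 0)
    (hη : η * (η + ε) ^ (d - 1) = s ^ p * (b ^ p + τ ^ p * η)) : b ^ p + τ ^ p * η ≠ 0 := by
  intro h
  rw [h, mul_zero, mul_eq_zero] at hη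
  rcases hη with rfl | hη
  · rw [mul_zero, add_zero] at h
    exact hb0 (pow_eq_zero_iff hp |>.1 h)
  · have h1 := eq_zero_of_pow_eq_zero hη
    rw [hb] at h
    have : (1 : R) = 0 := by linear_combination h - τ ^ p * h1
    exact one_ne_zero this

/-- Modulo `x` the left-hand side is `z` up to sign. -/
lemma x_dvd {R : Type*} [CommRing R] {x z T : R} {k : ℕ} (h : (x - z) * (x - 1) ^ k = T * x) :
    x ∣ z := by
  have h1 : IsCoprime x ((x - 1) ^ k) := IsCoprime.pow_right ⟨1, -1, by ring⟩
  have h2 := h1.dvd_of_dvd_mul_right ⟨T, h.trans (mul_comm _ _)⟩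
  simpa using dvd_sub (dvd_refl x) h2

set_option maxHeartbeats 1000000 in
/-- Only boundedly many parameters `s` of comparable size produce a root in a given field. -/
theorem fibre_bound {K : Type*} [Field K] [NumberField K] {p d : ℕ} (hp : p.Prime) (hd2 : 2 ≤ d)
    {b τ ε : 𝓞 K} (hb : b ^ p = 1 + τ ^ p * ε) (hb0 : b ≠ 0) (hτ : τ ≠ 0) {ρ : ℝ} (hρ : 1 ≤ ρ) :
    ∃ (B : ℕ) (A₁ : ℝ), ∀ (L : IntermediateField K (AlgebraicClosure K)), finrank K L = d →
      ∀ A : ℝ, A₁ ≤ A → ∀ F : Finset (𝓞 K),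
      (∀ s ∈ F, (∀ φ : K →+* ℂ, A ≤ ‖φ s‖ ∧ ‖φ s‖ ≤ ρ * A) ∧
        ∃ η : 𝓞 L, η * (η + algebraMap _ _ ε) ^ (d - 1) =
          algebraMap (𝓞 K) (𝓞 L) s ^ p * (algebraMap _ _ b ^ p + algebraMap _ _ τ ^ p * η)) →
      F.card ≤ B := by
  classical
  obtain ⟨Z, hZ1, hZ⟩ := exists_upper (b ^ p)
  obtain ⟨m, hm0, hm1, hm⟩ := exists_lower (pow_ne_zero p hb0)
  obtain ⟨mt, hmt0, hmt1, hmt⟩ := exists_lower hτ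
  set C := (3 * Z) ^ d * ρ ^ p * (2 / m) ^ d with hC
  have hC0 : 0 ≤ C := by positivity
  obtain ⟨W, hW⟩ := exists_finset_bdd K (finrank ℚ K * d) (C * Z)
  refine ⟨(p * W.card) * 2 ^ (finrank ℚ K * d),
    max 1 ((3 * Z) ^ d * (2 / m) / (mt ^ d) ^ p), fun L hL A hA F hF => ?_⟩
  haveI : FiniteDimensional K L := FiniteDimensional.of_finrank_pos (by omega)
  haveI : NumberField L := NumberField.of_module_finite K L
  have hLQ : finrank ℚ L = finrank ℚ K * d := by rw [← hL, finrank_mul_finrank]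
  have hA1 : 1 ≤ A := (le_max_left _ _).trans hA
  have hA2 : (3 * Z) ^ d * (2 / m) ≤ (mt ^ d * A) ^ p := by
    have h1 := (le_max_right _ _).trans hA
    rw [div_le_iff₀ (by positivity)] at h1
    rw [mul_pow (mt ^ d), mul_comm (_ ^ p)]
    refine h1.trans ?_
    gcongr
    exact le_self_pow₀ hA1 hp.ne_zero
  set a := algebraMap (𝓞 K) (𝓞 L) with ha
  have hainj : Function.Injective a := FaithfulSMul.algebraMap_injective _ _
  have hb' : a b ^ p = 1 + a τ ^ p * a ε := by simpa using congrArg a hb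
  have hb0' : a b ≠ 0 := (map_ne_zero_iff a hainj).2 hb0
  have hτ' : a τ ≠ 0 := (map_ne_zero_iff a hainj).2 hτ
  have hF1 : ∀ s ∈ F, ∀ φ : K →+* ℂ, A ≤ ‖φ s‖ ∧ ‖φ s‖ ≤ ρ * A := fun s hs => (hF s hs).1
  have hF2 : ∀ s ∈ F, ∃ η : 𝓞 L, η * (η + a ε) ^ (d - 1) = a s ^ p * (a b ^ p + a τ ^ p * η) :=
    fun s hs => (hF s hs).2
  clear hF
  choose! η hη using hF2
  set x : 𝓞 K → 𝓞 L := fun s => a b ^ p + a τ ^ p * η s with hx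
  have hx0 : ∀ s ∈ F, x s ≠ 0 := fun s hs => x_ne_zero hp.ne_zero hb' hb0' (hη s hs)
  have hxe : ∀ s ∈ F, (x s - a b ^ p) * (x s - 1) ^ (d - 1) = (a τ ^ d * a s) ^ p * x s :=
    fun s hs => x_eq (by omega) hb' (hη s hs)
  have hxC : ∀ s ∈ F, ∀ φ : L →+* ℂ,
      (φ (x s) - φ (a b ^ p : 𝓞 L)) * (φ (x s) - 1) ^ (d - 1) =
        φ ((a τ ^ d * a s) ^ p : 𝓞 L) * φ (x s) := by
    intro s hs φ
    have := congrArg (fun y : 𝓞 L => φ (y : L)) (hxe s hs)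
    simpa using this
  have hTl : ∀ s ∈ F, ∀ φ : L →+* ℂ, (3 * Z) ^ d * (2 / m) ≤ ‖φ ((a τ ^ d * a s) ^ p : 𝓞 L)‖ := by
    intro s hs φ
    have h1 := hmt (φ.comp (algebraMap K L))
    have h2 := (hF1 s hs (φ.comp (algebraMap K L))).1
    have h3 : ‖φ ((a τ ^ d * a s) ^ p : 𝓞 L)‖ = (‖φ.comp (algebraMap K L) τ‖ ^ d *
        ‖φ.comp (algebraMap K L) s‖) ^ p := by
      simp only [map_pow, map_mul, norm_pow, norm_mul]; rfl
    rw [h3]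
    refine hA2.trans ?_
    gcongr
  have hTr : ∀ s ∈ F, ∀ s' ∈ F, ∀ φ : L →+* ℂ, ‖φ ((a τ ^ d * a s) ^ p : 𝓞 L)‖ ≤
      ρ ^ p * ‖φ ((a τ ^ d * a s') ^ p : 𝓞 L)‖ := by
    intro s hs s' hs' φ
    have h1 := (hF1 s hs (φ.comp (algebraMap K L))).2
    have h2 := (hF1 s' hs' (φ.comp (algebraMap K L))).1
    have h3 : ∀ s, ‖φ ((a τ ^ d * a s) ^ p : 𝓞 L)‖ = (‖φ.comp (algebraMap K L) τ‖ ^ d *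
        ‖φ.comp (algebraMap K L) s‖) ^ p := by
      intro s
      simp only [map_pow, map_mul, norm_pow, norm_mul]; rfl
    rw [h3, h3, ← mul_pow]
    refine pow_le_pow_left₀ (by positivity) ?_ p
    calc _ ≤ ‖φ.comp (algebraMap K L) τ‖ ^ d * (ρ * ‖φ.comp (algebraMap K L) s'‖) := by
          gcongr
          exact h1.trans (by gcongr)
      _ = _ := by ring
  have hzφ : ∀ φ : L →+* ℂ, ‖φ (a b ^ p : 𝓞 L)‖ = ‖φ.comp (algebraMap K L) (b ^ p : 𝓞 K)‖ := by
    intro φ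
    simp only [map_pow, norm_pow]; rfl
  -- The archimedean type of a root records the embeddings at which it is small. It suffices to
  -- bound the number of parameters of a given type.
  set pat : 𝓞 K → Finset (L →+* ℂ) := fun s => Finset.univ.filter fun φ => ‖φ (x s)‖ ≤ 2 * Z
    with hpat
  have hcard : (Finset.univ : Finset (Finset (L →+* ℂ))).card = 2 ^ (finrank ℚ K * d) := by
    rw [Finset.card_univ, Fintype.card_finset, Embeddings.card, hLQ]
  rw [← hcard]
  refine Finset.card_le_mul_card_image_of_maps_to (f := pat) (fun _ _ => Finset.mem_univ _) _
    fun P _ => ?_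
  rcases (F.filter fun s => pat s = P).eq_empty_or_nonempty with h0 | ⟨s', hs'⟩
  · rw [h0]; simp
  rw [Finset.mem_filter] at hs'
  -- Writing `b ^ p = x_{s'} q`, the quotient `x_s q = b ^ p x_s / x_{s'}` is integral with
  -- bounded conjugates, as `s` and `s'` have the same type; hence it takes boundedly many values.
  obtain ⟨q, hq⟩ := x_dvd (hxe s' hs'.1)
  have hq0 : q ≠ 0 := by
    rintro rfl
    rw [mul_zero] at hq
    exact pow_ne_zero p hb0' hq
  refine Finset.card_le_mul_card_image_of_maps_to
    (f := fun s => (((x s * q : 𝓞 L) : L) : AlgebraicClosure K)) (t := W) (fun s hs => ?_) _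
    fun w _ => ?_
  · rw [Finset.mem_filter] at hs
    refine hW L hLQ _ fun φ => ?_
    have hpp : ‖φ (x s)‖ ≤ 2 * Z ↔ ‖φ (x s')‖ ≤ 2 * Z := by
      have := Finset.ext_iff.1 (hs.2.trans hs'.2.symm) φ
      simpa [hpat] using this
    have h1 := arch_ratio hZ1 ((hzφ φ).trans_le (hZ _)) hm0 hm1 ((hm _).trans_eq (hzφ φ).symm) hd2
      (hTl s hs.1 φ) (hTl s' hs'.1 φ) (one_le_pow₀ hρ) (hTr s hs.1 s' hs'.1 φ)
      (hTr s' hs'.1 s hs.1 φ) (hxC s hs.1 φ) (hxC s' hs'.1 φ) hpp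
    have h2 : ‖φ (a b ^ p : 𝓞 L)‖ = ‖φ (x s')‖ * ‖φ q‖ := by rw [hq]; simp
    have h3 : ‖φ (x s * q : 𝓞 L)‖ = ‖φ (x s)‖ * ‖φ q‖ := by simp
    rw [h3]
    calc _ ≤ (C * ‖φ (x s')‖) * ‖φ q‖ := by gcongr
      _ = C * ‖φ (a b ^ p : 𝓞 L)‖ := by rw [h2]; ring
      _ ≤ C * Z := by gcongr; exact (hzφ φ).trans_le (hZ _)
  · rcases ((F.filter fun s => pat s = P).filter fun s =>
      (((x s * q : 𝓞 L) : L) : AlgebraicClosure K) = w).eq_empty_or_nonempty with h0 | ⟨s₁, hs₁⟩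
    · rw [h0]; simp
    -- The value `x_s` determines `η`, hence `s ^ p`.
    · refine le_trans (Finset.card_le_card (t := (nthRoots p (s₁ ^ p)).toFinset) fun s hs => ?_)
        ((Multiset.toFinset_card_le _).trans (card_nthRoots p _))
      rw [Finset.mem_filter, Finset.mem_filter] at hs hs₁
      rw [Multiset.mem_toFinset, mem_nthRoots hp.pos]
      have h1 : x s * q = x s₁ * q :=
        RingOfIntegers.ext (Subtype.ext (hs.2.trans hs₁.2.symm))
      have h2 := mul_right_cancel₀ hq0 h1
      have h3 : η s = η s₁ := mul_left_cancel₀ (pow_ne_zero p hτ') (add_left_cancel h2)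
      have h4 : a s ^ p * x s = a s₁ ^ p * x s := by
        rw [← hη s hs.1.1, h3, hη s₁ hs₁.1.1, h2]
      have h5 := mul_right_cancel₀ (hx0 s hs.1.1) h4
      rw [← map_pow, ← map_pow] at h5
      exact hainj h5

end ClRank

/-! ### Counting -/

namespace ClRank
open NumberField Module Polynomial

/-- The field generated by a root of the defining polynomial has degree `d`. -/
lemma exists_field {K : Type*} [Field K] [NumberField K] {p d : ℕ} (hp : p.Prime) (hd2 : 2 ≤ d)
    (hdp : d < p) {ζ b τ ε u s : 𝓞 K} (h : Good p d ζ b τ ε u s) :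
    ∃ L : IntermediateField K (AlgebraicClosure K), finrank K L = d ∧ ∃ η : 𝓞 L,
      IntermediateField.adjoin K {(η : L)} = ⊤ ∧
      η * (η + algebraMap _ _ ε) ^ (d - 1) =
        algebraMap (𝓞 K) (𝓞 L) s ^ p * (algebraMap _ _ b ^ p + algebraMap _ _ τ ^ p * η) := by
  have hmon := gpoly_monic (p := p) hd2 b τ ε s
  obtain ⟨y, hy⟩ := IsAlgClosed.exists_aeval_eq_zero (R := 𝓞 K) (AlgebraicClosure K)
    (gpoly p d b τ ε s) (by
      rw [degree_eq_natDegree hmon.ne_zero, gpoly_natDegree hd2]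
      exact_mod_cast (by omega : d ≠ 0))
  have hyint : IsIntegral (𝓞 K) y := ⟨_, hmon, by rw [← aeval_def]; exact hy⟩
  have hyint2 : IsIntegral K y := hyint.tower_top
  haveI : FiniteDimensional K (IntermediateField.adjoin K {y}) :=
    IntermediateField.adjoin.finiteDimensional hyint2
  haveI : NumberField (IntermediateField.adjoin K {y}) := NumberField.of_module_finite K _
  let g : IntermediateField.adjoin K {y} := IntermediateField.AdjoinSimple.gen K y
  have hg : IsIntegral ℤ g := by
    rw [← isIntegral_algebraMap_iff (FaithfulSMul.algebraMap_injective
      (IntermediateField.adjoin K {y}) (AlgebraicClosure K))]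
    exact isIntegral_trans (R := ℤ) (A := 𝓞 K) _ hyint
  let η : 𝓞 (IntermediateField.adjoin K {y}) := ⟨g, hg⟩
  have htop : IntermediateField.adjoin K {(η : IntermediateField.adjoin K {y})} = ⊤ := by
    have h1 : Algebra.adjoin K {g} = ⊤ := by
      have := (IntermediateField.adjoin.powerBasis hyint2).adjoin_gen_eq_top
      rwa [IntermediateField.adjoin.powerBasis_gen] at this
    exact (IntermediateField.adjoin_simple_eq_top_iff_of_isAlgebraic
      (IsAlgebraic.of_finite K g)).2 h1
  have hrel : η * (η + algebraMap _ _ ε) ^ (d - 1) =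
      algebraMap (𝓞 K) (𝓞 (IntermediateField.adjoin K {y})) s ^ p *
        (algebraMap _ _ b ^ p + algebraMap _ _ τ ^ p * η) := by
    rw [gpoly_aeval, sub_eq_zero] at hy
    exact RingOfIntegers.ext (Subtype.ext hy)
  refine ⟨_, ?_, η, htop, hrel⟩
  rw [← (minpoly_eq hp hd2 hdp h η hrel).2, htop, IntermediateField.finrank_top']

/-- A box of about `A^(p-1)` parameters in a residue class, all of whose conjugates are
comparable to `A`. -/
lemma exists_box {K : Type*} [Field K] [NumberField K] {p : ℕ} (hp : p.Prime) {ζ : 𝓞 K}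
    (hζ : IsPrimitiveRoot ζ p) (s₀ : 𝓞 K) {n₀ : ℕ} (hn₀ : n₀ ≠ 0) :
    ∃ A₀ : ℝ, ∀ A : ℕ, A₀ ≤ A → ∃ F : Finset (𝓞 K), F.card = A ^ (p - 1) ∧ ∀ s ∈ F,
      (n₀ : 𝓞 K) ∣ s - s₀ ∧ ∀ φ : K →+* ℂ, (A : ℝ) ≤ ‖φ s‖ ∧ ‖φ s‖ ≤ (3 * n₀ * p + 1) * A := by
  classical
  obtain ⟨Z, hZ1, hZ⟩ := exists_upper s₀
  refine ⟨Z, fun A hA => ?_⟩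
  -- The shift by `2pA` dominates the combination of roots of unity, whose conjugates are at most
  -- `pA` in absolute value.
  let f : (Fin (p - 1) → Fin A) → 𝓞 K := fun a =>
    s₀ + n₀ * (2 * p * A + ∑ i, ((a i : ℕ) : 𝓞 K) * ζ ^ (i : ℕ))
  have hζK : IsPrimitiveRoot (ζ : K) p := hζ.map_of_injective RingOfIntegers.coe_injective
  have hdeg : (minpoly ℚ (ζ : K)).natDegree = p - 1 := by
    rw [← cyclotomic_eq_minpoly_rat hζK hp.pos, natDegree_cyclotomic, Nat.totient_prime hp]
  have hli : LinearIndependent ℚ fun i : Fin (p - 1) => (ζ : K) ^ (i : ℕ) := by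
    rw [← hdeg]; exact linearIndependent_pow _
  have hf : Function.Injective f := by
    intro a a' h
    have h1 : ∑ i, ((a i : ℕ) : 𝓞 K) * ζ ^ (i : ℕ) = ∑ i, ((a' i : ℕ) : 𝓞 K) * ζ ^ (i : ℕ) := by
      have h2 := add_left_cancel h
      exact add_left_cancel (mul_left_cancel₀ (Nat.cast_ne_zero.2 hn₀) h2)
    have h2 := congrArg (fun y : 𝓞 K => (y : K)) h1
    simp only [map_sum, map_mul, map_natCast, map_pow] at h2
    have h3 : ∑ i, (((a i : ℕ) : ℚ) - ((a' i : ℕ) : ℚ)) • (ζ : K) ^ (i : ℕ) = 0 := by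
      simp only [Algebra.smul_def, map_sub, map_natCast, sub_mul, Finset.sum_sub_distrib]
      rw [sub_eq_zero]; exact h2
    funext i
    have h4 := Fintype.linearIndependent_iff.1 hli _ h3 i
    rw [sub_eq_zero] at h4
    exact Fin.ext (by exact_mod_cast h4)
  refine ⟨Finset.univ.image f, ?_, fun s hs => ?_⟩
  · rw [Finset.card_image_of_injective _ hf]
    simp
  obtain ⟨a, -, rfl⟩ := Finset.mem_image.1 hs
  refine ⟨⟨_, add_sub_cancel_left _ _⟩, fun φ => ?_⟩
  have hφζ : ‖φ (ζ : K)‖ = 1 := by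
    refine Complex.norm_eq_one_of_pow_eq_one (n := p) ?_ hp.ne_zero
    rw [← map_pow, hζK.pow_eq_one, map_one]
  have hsum : ‖∑ i, ((a i : ℕ) : ℂ) * φ (ζ : K) ^ (i : ℕ)‖ ≤ p * A := by
    refine (norm_sum_le_of_le _ (n := fun _ => (A : ℝ)) fun i _ => ?_).trans ?_
    · rw [norm_mul, norm_pow, hφζ, one_pow, mul_one, RCLike.norm_natCast]
      exact_mod_cast (a i).2.le
    · rw [Finset.sum_const, Finset.card_univ, Fintype.card_fin, nsmul_eq_mul]
      gcongr
      exact Nat.sub_le _ _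
  set y := ∑ i, ((a i : ℕ) : ℂ) * φ (ζ : K) ^ (i : ℕ) with hy
  have hfa : φ (f a) = φ s₀ + n₀ * (2 * p * A + y) := by
    simp only [f, hy, map_add, map_mul, map_sum, map_pow, map_natCast, map_ofNat]
  have h2 : ‖(2 * p * A : ℂ)‖ = 2 * p * A := by simp
  have hu : ‖(n₀ * (2 * p * A + y) : ℂ)‖ ≤ n₀ * (3 * p * A) := by
    rw [norm_mul, RCLike.norm_natCast]
    gcongr
    have := norm_add_le (2 * p * A : ℂ) y
    linarith
  have hl : (n₀ * (p * A) : ℝ) ≤ ‖(n₀ * (2 * p * A + y) : ℂ)‖ := by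
    rw [norm_mul, RCLike.norm_natCast]
    gcongr
    have := norm_sub_norm_le (2 * p * A : ℂ) (-y)
    rw [norm_neg, sub_neg_eq_add] at this
    linarith
  have hA0 : (0 : ℝ) ≤ A := Nat.cast_nonneg _
  rw [hfa]
  constructor
  · have h3 := norm_sub_norm_le (n₀ * (2 * p * A + y) : ℂ) (-(φ s₀))
    rw [norm_neg, sub_neg_eq_add, add_comm _ (φ _)] at h3
    have h4 := hZ φ
    have h5 : (2 : ℝ) ≤ n₀ * p := by
      have : 1 * 2 ≤ n₀ * p := Nat.mul_le_mul (Nat.one_le_iff_ne_zero.2 hn₀) hp.two_le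
      exact_mod_cast this
    nlinarith
  · have h3 := norm_add_le (φ s₀) (n₀ * (2 * p * A + y) : ℂ)
    have h4 := hZ φ
    linarith

/-- Passage from a lower bound along the integers to the lower bound in `X`. -/
lemma final_calc {p d : ℕ} (hp : 1 ≤ p) (hd2 : 2 ≤ d) (N : ℝ → ℝ) (hN : ∀ X, 0 ≤ N X) {Q A₀ : ℝ}
    {B : ℕ} (hQ : 1 ≤ Q)
    (h : ∀ A : ℕ, A₀ ≤ A → ∀ X, (Q * (A : ℝ) ^ p) ^ d ≤ X → (A : ℝ) ^ (p - 1) ≤ B * N X) :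
    ∃ c > (0 : ℝ), ∃ X₀ > (0 : ℝ), ∀ X : ℝ, X₀ ≤ X →
      c * X ^ (((p : ℝ) - 1) / (2 * (p : ℝ) * ((d : ℝ) - 1))) / Real.log X ≤ N X := by
  set M := Q * max 2 (A₀ + 1) with hM
  have hM2 : 2 ≤ max 2 (A₀ + 1) := le_max_left _ _
  have hM0 : 0 < M := by positivity
  refine ⟨1 / ((2 * Q) ^ (p - 1) * (B + 1)), by positivity, max (Real.exp 1) (M ^ (p * d)),
    lt_max_of_lt_left (Real.exp_pos _), fun X hX => ?_⟩
  have hXe : Real.exp 1 ≤ X := (le_max_left _ _).trans hX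
  have hXM : M ^ (p * d) ≤ X := (le_max_right _ _).trans hX
  have hX1 : 1 ≤ X := (Real.one_le_exp (by norm_num)).trans hXe
  have hX0 : 0 < X := by linarith
  have hlog : 1 ≤ Real.log X := (Real.le_log_iff_exp_le hX0).2 hXe
  have hpd : p * d ≠ 0 := by positivity
  set y := X ^ (((p * d : ℕ) : ℝ)⁻¹) with hy
  have hyX : y ^ (p * d) = X := Real.rpow_inv_natCast_pow hX0.le hpd
  have hy0 : 0 < y := by positivity
  have hMy : M ≤ y := by
    rw [← hyX] at hXM
    exact le_of_pow_le_pow_left₀ hpd hy0.le hXM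
  have hyQ : max 2 (A₀ + 1) ≤ y / Q := by
    rw [le_div_iff₀ (by linarith), mul_comm]; exact hMy
  have hf1 : (⌊y / Q⌋₊ : ℝ) ≤ y / Q := Nat.floor_le (by positivity)
  have hf2 : y / Q < ⌊y / Q⌋₊ + 1 := Nat.lt_floor_add_one _
  have h1 := h ⌊y / Q⌋₊ (by have := (le_max_right 2 (A₀ + 1)).trans hyQ; linarith) X (by
    calc _ ≤ (Q ^ p * (y / Q) ^ p) ^ d := by
          gcongr
          exact le_self_pow₀ hQ (by omega)
      _ = X := by
          rw [← mul_pow, mul_div_cancel₀ _ (by linarith : Q ≠ 0), ← pow_mul, hyX])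
  have h2 : y / (2 * Q) ≤ ⌊y / Q⌋₊ := by
    have h3 := hM2.trans hyQ
    rw [mul_comm, ← div_div]
    linarith
  have h3 : X ^ (((p : ℝ) - 1) / (2 * (p : ℝ) * ((d : ℝ) - 1))) ≤ y ^ (p - 1) := by
    rw [hy, ← Real.rpow_natCast, ← Real.rpow_mul hX0.le]
    refine Real.rpow_le_rpow_of_exponent_le hX1 ?_
    -- The exponent is right because `p d ≤ 2 p (d - 1)` for `d ≥ 2`.
    rw [Nat.cast_sub hp, Nat.cast_one, inv_mul_eq_div]
    have hpp : (1 : ℝ) ≤ p := by exact_mod_cast hp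
    have hdd : (2 : ℝ) ≤ d := by exact_mod_cast hd2
    push_cast
    apply div_le_div_of_nonneg_left (by linarith) (by positivity)
    nlinarith
  have h4 : (y / (2 * Q)) ^ (p - 1) ≤ (B + 1) * N X := by
    calc _ ≤ (⌊y / Q⌋₊ : ℝ) ^ (p - 1) := by gcongr
      _ ≤ B * N X := h1
      _ ≤ _ := by nlinarith [hN X]
  have hz : 0 ≤ 1 / ((2 * Q) ^ (p - 1) * (B + 1)) *
      X ^ (((p : ℝ) - 1) / (2 * (p : ℝ) * ((d : ℝ) - 1))) := by positivity
  refine (div_le_self hz hlog).trans ?_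
  calc _ ≤ 1 / ((2 * Q) ^ (p - 1) * (B + 1)) * y ^ (p - 1) := by gcongr
    _ = (y / (2 * Q)) ^ (p - 1) / (B + 1) := by rw [div_pow]; field_simp
    _ ≤ N X := (div_le_iff₀ (by positivity)).2 (h4.trans_eq (mul_comm _ _))

end ClRank

namespace ClRank
open NumberField Module Polynomial

/-- The discriminant of the field attached to a parameter `s` of size `A` is `O(A^(p*d))`. -/
lemma relDq_param {K : Type*} [Field K] [NumberField K] {p d : ℕ} (hp : p.Prime) (hd2 : 2 ≤ d)
    (hdp : d < p) {ζ b τ ε u s : 𝓞 K} (h : Good p d ζ b τ ε u s)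
    (L : IntermediateField K (AlgebraicClosure K)) (hL : finrank K L = d) (η : 𝓞 L)
    (htop : IntermediateField.adjoin K {(η : L)} = ⊤)
    (hη : η * (η + algebraMap _ _ ε) ^ (d - 1) =
        algebraMap (𝓞 K) (𝓞 L) s ^ p * (algebraMap _ _ b ^ p + algebraMap _ _ τ ^ p * η))
    {E T : ℝ} (hE : 1 ≤ E) (hε : ∀ φ : K →+* ℂ, ‖φ ε‖ ≤ E) (hb : ∀ φ : K →+* ℂ, ‖φ (b ^ p : 𝓞 K)‖ ≤ E)
    (hτ : ∀ φ : K →+* ℂ, ‖φ (τ ^ p : 𝓞 K)‖ ≤ E) (hs : ∀ φ : K →+* ℂ, 1 ≤ ‖φ s‖ ∧ ‖φ s‖ ≤ T) :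
    relDq K L ≤ ((d * 2 ^ (d - 1) * (2 * E) ^ d + E) * T ^ p) ^ d := by
  haveI : FiniteDimensional K L := FiniteDimensional.of_finrank_pos (by omega)
  haveI : NumberField L := NumberField.of_module_finite K L
  have hT : 0 ≤ T := by
    obtain ⟨φ⟩ := (inferInstance : Nonempty (K →+* ℂ))
    exact (norm_nonneg _).trans (hs φ).2
  have key := relDq_le L η htop (B := (d * 2 ^ (d - 1) * (2 * E) ^ d + E) * T ^ p)
    (by positivity) fun φ => ?_
  · rwa [hL] at key
  rw [(minpoly_eq hp hd2 hdp h η hη).1, gpoly_deriv hd2]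
  set ψ := φ.comp (algebraMap K L) with hψ
  have hc (x : 𝓞 K) : φ ((algebraMap (𝓞 K) (𝓞 L) x : 𝓞 L) : L) = ψ (x : K) := rfl
  have h1 := congrArg (fun y : 𝓞 L => φ (y : L)) hη
  simp only [map_mul, map_add, map_pow, hc] at h1
  have h2 := arch_deriv (p := p) hd2 hE (hε ψ) (hb ψ) (hτ ψ) (hs ψ).1
    (η := φ (η : L)) (by simpa only [map_pow] using h1)
  simp only [map_sub, map_mul, map_add, map_pow, map_natCast, hc] at h2 ⊢
  refine h2.trans ?_
  gcongr
  exact (hs ψ).2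

end ClRank

/-- Let `p ≥ 3` be prime, `2 ≤ d ≤ p-1`, and let `K` be a number field containing a
primitive `p`-th root of unity.  Then there are `c = c(K,p) > 0` and `X₀ > 0` such that
for all `X ≥ X₀`, the number of degree-`d` extensions `L/K` inside a fixed algebraic
closure with `rank_p Cl(L) ≥ 3 + rank_p Cl(K)` and `D(L/K) ≤ X` is at least
`c · X^((p-1)/(2p(d-1))) / log X`. -/
theorem count_deg_d_ext_with_large_p_class_rank
    (p : ℕ) (hp : p.Prime) (hp3 : 3 ≤ p) (d : ℕ) (hd2 : 2 ≤ d) (hdp : d ≤ p - 1)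
    (K : Type*) [Field K] [NumberField K] (ζ : K) (hζ : IsPrimitiveRoot ζ p) :
    ∃ c > (0 : ℝ), ∃ X₀ > (0 : ℝ), ∀ X : ℝ, X₀ ≤ X →
      c * X ^ (((p : ℝ) - 1) / (2 * (p : ℝ) * ((d : ℝ) - 1))) / Real.log X ≤
        (Nat.card {L : IntermediateField K (AlgebraicClosure K) //
            Module.finrank K L = d ∧
            3 + nRank p (ClassGroup (𝓞 K)) ≤ nRank p (ClassGroup (𝓞 L)) ∧
            relDq K L ≤ X} : ℝ) := by
  classical
  have hdp' : d < p := by omega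
  haveI : NeZero p := ⟨hp.ne_zero⟩
  have hζ' := hζ.toInteger_isPrimitiveRoot
  obtain ⟨b, τ, ε, u, s₀, n₀, hn₀, hτ, hgood⟩ := ClRank.exists_params hp hp3 hd2 hdp' hζ'
  have hg₀ := hgood s₀ (by simp)
  have hρ : (1 : ℝ) ≤ 3 * n₀ * p + 1 := by
    have : (0 : ℝ) ≤ 3 * n₀ * p := by positivity
    linarith
  obtain ⟨B, A₁, hfib⟩ := ClRank.fibre_bound hp hd2 hg₀.hb hg₀.b0 hτ hρ
  obtain ⟨A₀, hbox⟩ := ClRank.exists_box hp hζ' s₀ hn₀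
  obtain ⟨E₁, hE₁, hε⟩ := ClRank.exists_upper ε
  obtain ⟨E₂, hE₂, hb⟩ := ClRank.exists_upper (b ^ p)
  obtain ⟨E₃, hE₃, ht⟩ := ClRank.exists_upper (τ ^ p)
  set E := E₁ + E₂ + E₃ with hE
  set D : ℝ := (d * 2 ^ (d - 1) * (2 * E) ^ d + E) with hD
  have hE1 : 1 ≤ E := by linarith
  have hD1 : 1 ≤ D := by
    have : 0 ≤ d * 2 ^ (d - 1) * (2 * E) ^ d := by positivity
    linarith
  set ρ : ℝ := 3 * n₀ * p + 1 with hρdef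
  refine ClRank.final_calc hp.one_le hd2 (fun X => _) (fun X => Nat.cast_nonneg _)
    (Q := D * ρ ^ p) (A₀ := max 1 (max A₁ A₀)) (B := B)
    (one_le_mul_of_one_le_of_one_le hD1 (one_le_pow₀ hρ)) fun A hA X hX => ?_
  obtain ⟨hA1, hA2⟩ := max_le_iff.1 hA
  obtain ⟨hAA₁, hAA₀⟩ := max_le_iff.1 hA2
  obtain ⟨F, hFc, hF⟩ := hbox A hAA₀
  choose! Φ hΦd η hη hrel using fun s (hs : s ∈ F) =>
    ClRank.exists_field hp hd2 hdp' (hgood s (hF s hs).1)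
  set S := {L : IntermediateField K (AlgebraicClosure K) |
            Module.finrank K L = d ∧
            3 + nRank p (ClassGroup (𝓞 K)) ≤ nRank p (ClassGroup (𝓞 L)) ∧
            relDq K L ≤ X} with hS
  -- Finiteness makes `Nat.card` the true count.
  have hSfin : S.Finite := (ClRank.finite_relDq K (d := d) (by omega) X).subset
    fun L hL => ⟨hL.1, hL.2.2⟩
  have hmaps : ∀ s ∈ F, Φ s ∈ hSfin.toFinset := by
    intro s hs
    rw [Set.Finite.mem_toFinset]
    refine ⟨hΦd s hs, ?_, ?_⟩
    · haveI : FiniteDimensional K (Φ s) := FiniteDimensional.of_finrank_pos (by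
        rw [hΦd s hs]; omega)
      haveI : NumberField (Φ s) := NumberField.of_module_finite K (Φ s)
      exact ClRank.rank_of_good hp hp3 hd2 hdp' hζ' (hgood s (hF s hs).1) (hΦd s hs) _ (hrel s hs)
    · refine (ClRank.relDq_param hp hd2 hdp' (hgood s (hF s hs).1) (Φ s) (hΦd s hs) _ (hη s hs)
        (hrel s hs) hE1 (fun φ => (hε φ).trans (by linarith)) (fun φ => (hb φ).trans (by linarith))
        (fun φ => (ht φ).trans (by linarith)) (T := ρ * A)
        fun φ => ⟨hA1.trans ((hF s hs).2 φ).1, ((hF s hs).2 φ).2⟩).trans (le_of_eq_of_le ?_ hX)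
      rw [mul_pow ρ, hD, ← mul_assoc (_ + E)]
  have hcard : F.card ≤ B * hSfin.toFinset.card := by
    refine Finset.card_le_mul_card_image_of_maps_to hmaps B fun L hL => ?_
    rw [Set.Finite.mem_toFinset] at hL
    refine hfib L hL.1 A hAA₁ _ fun s hs => ?_
    obtain ⟨hsF, rfl⟩ := Finset.mem_filter.1 hs
    exact ⟨(hF s hsF).2, η s, hrel s hsF⟩
  rw [hFc] at hcard
  have : hSfin.toFinset.card = Nat.card S := by
    rw [Nat.card_coe_set_eq, Set.ncard_eq_toFinset_card S hSfin]
  rw [this] at hcard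
  exact_mod_cast hcard
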